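/- There exist absolute constants C, c > 0 such that the following holds. For any ε ∈ (0,1] and δ ∈ (0, 1/(C L)], suppose the training data satisfy the separateness assumption with parameter δ and m ≥ C·n²⁴·L¹²·d·(log m)⁵/δ⁸. Set the learning rate η = d·δ/(C·n⁴·L²·m). Then with probability at least 1 − e^{−c·(log m)²} over the random initialization (W⁽⁰⁾, A, B), gradient descent started at W⁽⁰⁾, i.e. W⁽ᵗ⁺¹⁾_ℓ = W⁽ᵗ⁾_ℓ − η·∇_{W_ℓ}F(W⁽ᵗ⁾) for ℓ = 1,…,L, satisfies F(W⁽ᵀ⁾) ≤ ε for T = ⌈C·(n⁶·L²/δ²)·log(n·(log m)²/ε)⌉. -/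

import Mathlib

/-!
The proof shows that, with high probability over the initialization, gradient descent never leaves
a small ball around `W⁽⁰⁾`, and that inside this ball the gradient of the last layer dominates the
loss, so that the loss decays geometrically.

**The initialization event.** `Init` collects finitely many inequalities about `(A, W⁽⁰⁾, B)`. Each
one concerns a single Gaussian matrix applied to vectors that depend only on the other matrices;
for fixed vectors it is a Bernstein or Gaussian tail bound (`SubExp.conc`, `fresh_*`),
and Fubini over the remaining matrices (`secA`, `secB`, `secW`) turns it into a bound on the whole
probability space (`ev_*`). Union bounds over samples, layers and nets of sparse or block-supported
vectors (`whp_*`) give `init_prob`: the event fails with probability at most `exp (-(log m)² / 50)`.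

**Stability near the initialization.** On `Init` every sample satisfies `ChainGood`
(`Init.chainGood`): products `D_b W_b ⋯ D_a W_a` have norm `O(L)` on all vectors and `O(1)` on
sparse ones, map sparse vectors to vectors with small sparse parts, and few pre-activations lie
close to zero. For weights within distance `ω` of `W⁽⁰⁾`, changes of sign are therefore sparse, and
propagating them through the layers bounds the change of the forward vectors (`forward`) and of the
backward products (`chain_near`). This yields a linearization of the output between any two points
of the ball (`two_point`), a descent inequality for the objective (`objF_le`), and the closeness of
the last-layer gradient to the one computed with the initial sign patterns (`gradF_near`).

**The kernel of the last layer.** Normalized features of distinct samples remain almost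
`δ`-separated through all layers (`Init.separated`), because the mean contraction of one ReLU layer
is `1 - O(ρ)` at distance `ρ` and `δ L` is small. By Sheppard's formula the kernel of the last layer
concentrates around `ρᵢⱼ (1/4 + arcsin ρᵢⱼ / (2π))`, where `ρᵢⱼ` are the cosines of the features. Its
arcsine series has nonnegative coefficients, the Hadamard powers of a Gram matrix are positive
semidefinite, and the high powers are nearly the identity when the features are separated; summing
the tail of the series gives a smallest eigenvalue of order `δ / n²` (`ntk_pop`). Hence the squared
gradient is at least of order `δ m / (n² d)` times the squared loss (`Init.kernel`).

**Convergence.** Gradient dominance and the descent inequality give `gd_step`; summing the step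
lengths shows that the iterates stay within radius `omP`, and so the loss decays geometrically
(`gd_decay`, `Init.converge`). The constants are `C = e^1000` and `c = 1/50`.
-/

open MeasureTheory ProbabilityTheory

noncomputable section

namespace DNNPaper

/-! ### Elementary linear algebra on plain function matrices -/

def mulVec {p q : ℕ} (M : Fin p → Fin q → ℝ) (v : Fin q → ℝ) : Fin p → ℝ :=
  fun i => ∑ j, M i j * v j

def mmul {p q r : ℕ} (M : Fin p → Fin q → ℝ) (N : Fin q → Fin r → ℝ) :
    Fin p → Fin r → ℝ :=
  fun i k => ∑ j, M i j * N j k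

def transpose {p q : ℕ} (M : Fin p → Fin q → ℝ) : Fin q → Fin p → ℝ :=
  fun j i => M i j

def dot {p : ℕ} (u v : Fin p → ℝ) : ℝ := ∑ i, u i * v i

def outer {p q : ℕ} (u : Fin p → ℝ) (v : Fin q → ℝ) : Fin p → Fin q → ℝ :=
  fun i j => u i * v j

def idMat (p : ℕ) : Fin p → Fin p → ℝ := fun i j => if i = j then 1 else 0

def diagMat {p : ℕ} (dg : Fin p → ℝ) : Fin p → Fin p → ℝ :=
  fun i j => if i = j then dg i else 0

def relu {p : ℕ} (v : Fin p → ℝ) : Fin p → ℝ := fun k => max (v k) 0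

/-- diagonal entries of the ReLU sign matrix of a pre-activation vector -/
def signOf {p : ℕ} (g : Fin p → ℝ) : Fin p → ℝ := fun k => if 0 ≤ g k then 1 else 0

/-- Euclidean norm -/
def l2 {p : ℕ} (v : Fin p → ℝ) : ℝ := Real.sqrt (∑ k, v k ^ 2)

/-- max-norm -/
def linf {p : ℕ} (v : Fin p → ℝ) : ℝ := ⨆ k, |v k|

/-- number of nonzero entries -/
def l0 {p : ℕ} (v : Fin p → ℝ) : ℕ := (Finset.univ.filter fun k => v k ≠ 0).card

/-- Frobenius norm -/
def frob {p q : ℕ} (M : Fin p → Fin q → ℝ) : ℝ := Real.sqrt (∑ i, ∑ j, M i j ^ 2)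

/-- spectral norm (ℓ₂ operator norm) -/
def spec {p q : ℕ} (M : Fin p → Fin q → ℝ) : ℝ :=
  sSup {r | ∃ v : Fin q → ℝ, l2 v ≤ 1 ∧ r = l2 (mulVec M v)}

/-- trace (Frobenius) inner product -/
def innerF {p q : ℕ} (M N : Fin p → Fin q → ℝ) : ℝ := ∑ i, ∑ j, M i j * N i j

/-- `‖W‖₂ = max_ℓ ‖W_ℓ‖₂` for a tuple of matrices -/
def tupleSpec {m L : ℕ} (W : Fin L → Fin m → Fin m → ℝ) : ℝ := ⨆ ℓ, spec (W ℓ)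

/-! ### The network -/

variable {𝔡 m d L : ℕ}

/-- `Wat W ℓ` is the weight matrix of layer `ℓ ∈ {1,…,L}` (identity outside this range). -/
def Wat (W : Fin L → Fin m → Fin m → ℝ) (ℓ : ℕ) : Fin m → Fin m → ℝ :=
  if h : 1 ≤ ℓ ∧ ℓ ≤ L then W ⟨ℓ - 1, by omega⟩ else idMat m

/-- the forward (post-activation) vectors `h_ℓ`, `ℓ = 0,1,…,L` -/
def hseq (A : Fin m → Fin 𝔡 → ℝ) (W : Fin L → Fin m → Fin m → ℝ) (x : Fin 𝔡 → ℝ) :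
    ℕ → Fin m → ℝ
  | 0 => relu (mulVec A x)
  | ℓ + 1 =>
      if ℓ + 1 ≤ L then relu (mulVec (Wat W (ℓ + 1)) (hseq A W x ℓ)) else hseq A W x ℓ

/-- the pre-activation vectors `g_ℓ`, `ℓ = 0,1,…,L` -/
def gseq (A : Fin m → Fin 𝔡 → ℝ) (W : Fin L → Fin m → Fin m → ℝ) (x : Fin 𝔡 → ℝ) :
    ℕ → Fin m → ℝ
  | 0 => mulVec A x
  | ℓ + 1 => mulVec (Wat W (ℓ + 1)) (hseq A W x ℓ)

/-- `chainProd W Dfun a b = (D_b W_b) (D_{b-1} W_{b-1}) ⋯ (D_a W_a)` where `D_ℓ` is the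
diagonal matrix with entries `Dfun ℓ`; it is the identity when `b < a`, and factors with
index outside `{1,…,L}` are skipped. -/
def chainProd (W : Fin L → Fin m → Fin m → ℝ) (Dfun : ℕ → Fin m → ℝ) (a : ℕ) :
    ℕ → Fin m → Fin m → ℝ
  | 0 => idMat m
  | b + 1 =>
      if a ≤ b + 1 ∧ b + 1 ≤ L then
        mmul (mmul (diagMat (Dfun (b + 1))) (Wat W (b + 1))) (chainProd W Dfun a b)
      else chainProd W Dfun a b

/-- `prodDW A W x a b = D_b W_b D_{b-1} W_{b-1} ⋯ D_a W_a` with the sign matrices of input `x` -/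
def prodDW (A : Fin m → Fin 𝔡 → ℝ) (W : Fin L → Fin m → Fin m → ℝ) (x : Fin 𝔡 → ℝ)
    (a b : ℕ) : Fin m → Fin m → ℝ :=
  chainProd W (fun ℓ => signOf (gseq A W x ℓ)) a b

/-- `Back_ℓ = B D_L W_L ⋯ D_ℓ W_ℓ` (equal to `B` for `ℓ = L+1`) -/
def backMat (B : Fin d → Fin m → ℝ) (A : Fin m → Fin 𝔡 → ℝ)
    (W : Fin L → Fin m → Fin m → ℝ) (x : Fin 𝔡 → ℝ) (ℓ : ℕ) : Fin d → Fin m → ℝ :=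
  mmul B (prodDW A W x ℓ L)

/-- formula gradient w.r.t. `W_ℓ` with an arbitrary (fake) loss vector `v`:
`D_ℓ (Back_{ℓ+1}ᵀ v) h_{ℓ-1}ᵀ` -/
def gradW (B : Fin d → Fin m → ℝ) (A : Fin m → Fin 𝔡 → ℝ)
    (W : Fin L → Fin m → Fin m → ℝ) (x : Fin 𝔡 → ℝ) (v : Fin d → ℝ) (ℓ : ℕ) :
    Fin m → Fin m → ℝ :=
  outer (mulVec (diagMat (signOf (gseq A W x ℓ)))
      (mulVec (transpose (backMat B A W x (ℓ + 1))) v))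
    (hseq A W x (ℓ - 1))

/-- loss vector `B h_L − y` -/
def lossVec (B : Fin d → Fin m → ℝ) (A : Fin m → Fin 𝔡 → ℝ)
    (W : Fin L → Fin m → Fin m → ℝ) (x : Fin 𝔡 → ℝ) (y : Fin d → ℝ) : Fin d → ℝ :=
  fun j => mulVec B (hseq A W x L) j - y j

/-- per-sample ℓ₂ regression loss `F_i` -/
def objFi (B : Fin d → Fin m → ℝ) (A : Fin m → Fin 𝔡 → ℝ)
    (W : Fin L → Fin m → Fin m → ℝ) (x : Fin 𝔡 → ℝ) (y : Fin d → ℝ) : ℝ :=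
  (1 / 2) * l2 (lossVec B A W x y) ^ 2

/-- total objective `F` -/
def objF {n : ℕ} (B : Fin d → Fin m → ℝ) (A : Fin m → Fin 𝔡 → ℝ)
    (W : Fin L → Fin m → Fin m → ℝ) (x : Fin n → Fin 𝔡 → ℝ)
    (y : Fin n → Fin d → ℝ) : ℝ :=
  ∑ i, objFi B A W (x i) (y i)

/-- formula gradient of the total objective w.r.t. `W_ℓ` -/
def gradF {n : ℕ} (B : Fin d → Fin m → ℝ) (A : Fin m → Fin 𝔡 → ℝ)
    (W : Fin L → Fin m → Fin m → ℝ) (x : Fin n → Fin 𝔡 → ℝ)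
    (y : Fin n → Fin d → ℝ) (ℓ : ℕ) : Fin m → Fin m → ℝ :=
  ∑ i, gradW B A W (x i) (lossVec B A W (x i) (y i)) ℓ

/-! ### Random initialization -/

/-- a `p × q` random matrix with i.i.d. `N(0, v)` entries -/
def gaussMat (p q : ℕ) (v : NNReal) : Measure (Fin p → Fin q → ℝ) :=
  Measure.pi fun _ => Measure.pi fun _ => gaussianReal 0 v

/-- joint law of `(A, W)` at random initialization -/
def initAW (𝔡 m L : ℕ) :
    Measure ((Fin m → Fin 𝔡 → ℝ) × (Fin L → Fin m → Fin m → ℝ)) :=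
  (gaussMat m 𝔡 (2 / m)).prod (Measure.pi fun _ : Fin L => gaussMat m m (2 / m))

/-- joint law of `(A, W, B)` at random initialization -/
def initMeasure (𝔡 m d L : ℕ) :
    Measure ((Fin m → Fin 𝔡 → ℝ) ×
      (Fin L → Fin m → Fin m → ℝ) × (Fin d → Fin m → ℝ)) :=
  (gaussMat m 𝔡 (2 / m)).prod
    ((Measure.pi fun _ : Fin L => gaussMat m m (2 / m)).prod (gaussMat d m (1 / d)))

/-! ### Euclidean norms of plain function vectors -/

lemma l2_eq_norm {p : ℕ} (v : Fin p → ℝ) :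
    l2 v = ‖(WithLp.toLp 2 v : EuclideanSpace ℝ (Fin p))‖ := by
  simp [l2, EuclideanSpace.norm_eq]

lemma l2_nonneg {p : ℕ} (v : Fin p → ℝ) : 0 ≤ l2 v := Real.sqrt_nonneg _

lemma l2_sq {p : ℕ} (v : Fin p → ℝ) : l2 v ^ 2 = ∑ k, v k ^ 2 :=
  Real.sq_sqrt (Finset.sum_nonneg fun _ _ => sq_nonneg _)

lemma l2_zero {p : ℕ} : l2 (0 : Fin p → ℝ) = 0 := by simp [l2]

lemma l2_add_le {p : ℕ} (u v : Fin p → ℝ) : l2 (u + v) ≤ l2 u + l2 v := by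
  simp only [l2_eq_norm, WithLp.toLp_add]; exact norm_add_le _ _

lemma l2_sub_le {p : ℕ} (u v : Fin p → ℝ) : l2 (u - v) ≤ l2 u + l2 v := by
  simp only [l2_eq_norm, WithLp.toLp_sub]; exact norm_sub_le _ _

lemma l2_smul {p : ℕ} (c : ℝ) (v : Fin p → ℝ) : l2 (c • v) = |c| * l2 v := by
  simp only [l2_eq_norm, WithLp.toLp_smul]; rw [norm_smul, Real.norm_eq_abs]

lemma l2_neg {p : ℕ} (v : Fin p → ℝ) : l2 (-v) = l2 v := by simp [l2]

lemma l2_sub_comm {p : ℕ} (u v : Fin p → ℝ) : l2 (u - v) = l2 (v - u) := by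
  rw [← l2_neg, neg_sub]

lemma l2_sum_le {p : ℕ} {ι : Type*} (s : Finset ι) (f : ι → Fin p → ℝ) :
    l2 (∑ i ∈ s, f i) ≤ ∑ i ∈ s, l2 (f i) := by
  classical
  induction s using Finset.induction_on with
  | empty => simp [l2_zero]
  | insert a s ha ih =>
    rw [Finset.sum_insert ha, Finset.sum_insert ha]
    exact (l2_add_le _ _).trans (by gcongr)

lemma l2_eq_zero {p : ℕ} {v : Fin p → ℝ} : l2 v = 0 ↔ v = 0 := by
  rw [l2_eq_norm, norm_eq_zero]
  constructor
  · intro h; ext k; have := congrArg (fun w : EuclideanSpace ℝ (Fin p) => w k) h; simpa using this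
  · rintro rfl; rfl

lemma l2_pos {p : ℕ} {v : Fin p → ℝ} (h : v ≠ 0) : 0 < l2 v :=
  lt_of_le_of_ne (l2_nonneg v) fun h' => h (l2_eq_zero.1 h'.symm)

lemma l2_le_of_abs_le {p : ℕ} {u v : Fin p → ℝ} (h : ∀ k, |u k| ≤ |v k|) : l2 u ≤ l2 v :=
  Real.sqrt_le_sqrt (Finset.sum_le_sum fun k _ => sq_le_sq.2 (h k))

/-- Multiplication by a diagonal matrix with entries in `[-1,1]` is a contraction. -/
lemma l2_diag_le {p : ℕ} {D v : Fin p → ℝ} (h : ∀ k, |D k| ≤ 1) : l2 (D * v) ≤ l2 v :=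
  l2_le_of_abs_le fun k => by
    rw [Pi.mul_apply, abs_mul]; exact mul_le_of_le_one_left (abs_nonneg _) (h k)

lemma abs_apply_le_l2 {p : ℕ} (v : Fin p → ℝ) (k : Fin p) : |v k| ≤ l2 v := by
  apply Real.abs_le_sqrt
  exact Finset.single_le_sum (f := fun k => v k ^ 2) (fun _ _ => sq_nonneg _) (Finset.mem_univ k)

lemma dot_comm {p : ℕ} (u v : Fin p → ℝ) : dot u v = dot v u := by
  simp [dot, mul_comm]

lemma dot_add {p : ℕ} (u v w : Fin p → ℝ) : dot u (v + w) = dot u v + dot u w := by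
  simp [dot, mul_add, Finset.sum_add_distrib]

lemma dot_sub {p : ℕ} (u v w : Fin p → ℝ) : dot u (v - w) = dot u v - dot u w := by
  simp [dot, mul_sub, Finset.sum_sub_distrib]

lemma dot_smul {p : ℕ} (c : ℝ) (u v : Fin p → ℝ) : dot u (c • v) = c * dot u v := by
  simp [dot, Finset.mul_sum, mul_left_comm]

lemma add_dot {p : ℕ} (u v w : Fin p → ℝ) : dot (u + v) w = dot u w + dot v w := by
  rw [dot_comm, dot_add, dot_comm w u, dot_comm w v]

lemma sub_dot {p : ℕ} (u v w : Fin p → ℝ) : dot (u - v) w = dot u w - dot v w := by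
  rw [dot_comm, dot_sub, dot_comm w u, dot_comm w v]

lemma smul_dot {p : ℕ} (c : ℝ) (u v : Fin p → ℝ) : dot (c • u) v = c * dot u v := by
  rw [dot_comm, dot_smul, dot_comm]

lemma dot_self {p : ℕ} (u : Fin p → ℝ) : dot u u = l2 u ^ 2 := by
  rw [l2_sq]; simp [dot, sq]

lemma dot_eq_inner {p : ℕ} (u v : Fin p → ℝ) :
    dot u v = inner ℝ (WithLp.toLp 2 u : EuclideanSpace ℝ (Fin p)) (WithLp.toLp 2 v) := by
  simp [dot, PiLp.inner_apply, mul_comm]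

lemma abs_dot_le {p : ℕ} (u v : Fin p → ℝ) : |dot u v| ≤ l2 u * l2 v := by
  rw [dot_eq_inner, l2_eq_norm, l2_eq_norm]; exact abs_real_inner_le_norm _ _

lemma dot_le {p : ℕ} (u v : Fin p → ℝ) : dot u v ≤ l2 u * l2 v :=
  (le_abs_self _).trans (abs_dot_le u v)

lemma l2_sub_sq {p : ℕ} (u v : Fin p → ℝ) :
    l2 (u - v) ^ 2 = l2 u ^ 2 - 2 * dot u v + l2 v ^ 2 := by
  rw [← dot_self, ← dot_self, ← dot_self, dot_sub, sub_dot, sub_dot, dot_comm v u]; ring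

lemma l2_add_sq {p : ℕ} (u v : Fin p → ℝ) :
    l2 (u + v) ^ 2 = l2 u ^ 2 + 2 * dot u v + l2 v ^ 2 := by
  rw [← dot_self, ← dot_self, ← dot_self, dot_add, add_dot, add_dot, dot_comm v u]; ring

lemma dot_diag {p : ℕ} (D u v : Fin p → ℝ) : dot (D * u) v = dot u (D * v) := by
  simp only [dot, Pi.mul_apply]; exact Finset.sum_congr rfl fun _ _ => by ring

/-- Norm bound by duality. -/
lemma l2_le_of_dot {p : ℕ} {w : Fin p → ℝ} {c : ℝ} (hc : 0 ≤ c)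
    (h : dot w w ≤ c * l2 w) : l2 w ≤ c := by
  rw [dot_self] at h
  by_contra hlt
  push Not at hlt
  nlinarith

lemma mulVec_add {p q : ℕ} (M : Fin p → Fin q → ℝ) (u v : Fin q → ℝ) :
    mulVec M (u + v) = mulVec M u + mulVec M v := by
  ext i; simp [mulVec, mul_add, Finset.sum_add_distrib]

lemma mulVec_sub {p q : ℕ} (M : Fin p → Fin q → ℝ) (u v : Fin q → ℝ) :
    mulVec M (u - v) = mulVec M u - mulVec M v := by
  ext i; simp [mulVec, mul_sub, Finset.sum_sub_distrib]

lemma mulVec_smul {p q : ℕ} (M : Fin p → Fin q → ℝ) (c : ℝ) (v : Fin q → ℝ) :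
    mulVec M (c • v) = c • mulVec M v := by
  ext i; simp [mulVec, Finset.mul_sum, mul_left_comm]

lemma mulVec_zero {p q : ℕ} (M : Fin p → Fin q → ℝ) : mulVec M 0 = 0 := by
  ext i; simp [mulVec]

lemma mulVec_sum {p q : ℕ} {ι : Type*} (M : Fin p → Fin q → ℝ) (s : Finset ι)
    (f : ι → Fin q → ℝ) : mulVec M (∑ i ∈ s, f i) = ∑ i ∈ s, mulVec M (f i) := by
  classical
  induction s using Finset.induction_on with
  | empty => simp [mulVec_zero]
  | insert a s ha ih => rw [Finset.sum_insert ha, Finset.sum_insert ha, mulVec_add, ih]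

lemma add_mulVec {p q : ℕ} (M N : Fin p → Fin q → ℝ) (v : Fin q → ℝ) :
    mulVec (M + N) v = mulVec M v + mulVec N v := by
  ext i; simp [mulVec, add_mul, Finset.sum_add_distrib]

lemma sub_mulVec {p q : ℕ} (M N : Fin p → Fin q → ℝ) (v : Fin q → ℝ) :
    mulVec (M - N) v = mulVec M v - mulVec N v := by
  ext i; simp [mulVec, sub_mul, Finset.sum_sub_distrib]

lemma mulVec_mmul {p q r : ℕ} (M : Fin p → Fin q → ℝ) (N : Fin q → Fin r → ℝ) (v : Fin r → ℝ) :
    mulVec (mmul M N) v = mulVec M (mulVec N v) := by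
  ext i
  simp only [mulVec, mmul, Finset.sum_mul, Finset.mul_sum]
  rw [Finset.sum_comm]
  exact Finset.sum_congr rfl fun _ _ => Finset.sum_congr rfl fun _ _ => by ring

lemma mulVec_idMat {p : ℕ} (v : Fin p → ℝ) : mulVec (idMat p) v = v := by
  ext i; simp [mulVec, idMat]

lemma mulVec_diagMat {p : ℕ} (D v : Fin p → ℝ) : mulVec (diagMat D) v = D * v := by
  ext i; simp [mulVec, diagMat]

lemma dot_mulVec_transpose {p q : ℕ} (M : Fin p → Fin q → ℝ) (u : Fin p → ℝ) (v : Fin q → ℝ) :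
    dot (mulVec (transpose M) u) v = dot u (mulVec M v) := by
  simp only [dot, mulVec, transpose, Finset.sum_mul, Finset.mul_sum]
  rw [Finset.sum_comm]
  exact Finset.sum_congr rfl fun _ _ => Finset.sum_congr rfl fun _ _ => by ring

lemma mulVec_eq_dot {p q : ℕ} (M : Fin p → Fin q → ℝ) (v : Fin q → ℝ) (i : Fin p) :
    mulVec M v i = dot (M i) v := rfl

lemma mulVec_outer {p q : ℕ} (u : Fin p → ℝ) (v w : Fin q → ℝ) :
    mulVec (outer u v) w = dot v w • u := by
  ext i; simp [mulVec, outer, dot, Finset.sum_mul]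
  exact Finset.sum_congr rfl fun _ _ => by ring

/-! ### Frobenius norms -/

lemma frob_sq {p q : ℕ} (M : Fin p → Fin q → ℝ) : frob M ^ 2 = ∑ i, ∑ j, M i j ^ 2 :=
  Real.sq_sqrt (Finset.sum_nonneg fun _ _ => Finset.sum_nonneg fun _ _ => sq_nonneg _)

lemma frob_nonneg {p q : ℕ} (M : Fin p → Fin q → ℝ) : 0 ≤ frob M := Real.sqrt_nonneg _

/-- Flattening of a matrix, which reduces Frobenius norms to Euclidean norms. -/
def flat {p q : ℕ} (M : Fin p → Fin q → ℝ) : Fin (p * q) → ℝ :=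
  fun k => M (finProdFinEquiv.symm k).1 (finProdFinEquiv.symm k).2

lemma sum_flat {p q : ℕ} (f : Fin p → Fin q → ℝ) :
    ∑ k : Fin (p * q), f (finProdFinEquiv.symm k).1 (finProdFinEquiv.symm k).2
      = ∑ i, ∑ j, f i j := by
  rw [Equiv.sum_comp finProdFinEquiv.symm (fun x : Fin p × Fin q => f x.1 x.2),
    Fintype.sum_prod_type]

lemma frob_eq_l2 {p q : ℕ} (M : Fin p → Fin q → ℝ) : frob M = l2 (flat M) := by
  unfold frob l2 flat
  rw [sum_flat (fun i j => M i j ^ 2)]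

lemma innerF_eq_dot {p q : ℕ} (M N : Fin p → Fin q → ℝ) : innerF M N = dot (flat M) (flat N) := by
  unfold innerF dot flat
  rw [sum_flat (fun i j => M i j * N i j)]

lemma frob_add_le {p q : ℕ} (M N : Fin p → Fin q → ℝ) : frob (M + N) ≤ frob M + frob N := by
  simp only [frob_eq_l2]; exact l2_add_le (flat M) (flat N)

lemma frob_sub_le {p q : ℕ} (M N : Fin p → Fin q → ℝ) : frob (M - N) ≤ frob M + frob N := by
  simp only [frob_eq_l2]; exact l2_sub_le (flat M) (flat N)

lemma frob_smul {p q : ℕ} (c : ℝ) (M : Fin p → Fin q → ℝ) : frob (c • M) = |c| * frob M := by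
  simp only [frob_eq_l2]; exact l2_smul c (flat M)

lemma frob_zero {p q : ℕ} : frob (0 : Fin p → Fin q → ℝ) = 0 := by simp [frob]

lemma frob_sum_le {p q : ℕ} {ι : Type*} (s : Finset ι) (f : ι → Fin p → Fin q → ℝ) :
    frob (∑ i ∈ s, f i) ≤ ∑ i ∈ s, frob (f i) := by
  classical
  induction s using Finset.induction_on with
  | empty => simp [frob_zero]
  | insert a s ha ih =>
    rw [Finset.sum_insert ha, Finset.sum_insert ha]
    exact (frob_add_le _ _).trans (by gcongr)

lemma frob_outer {p q : ℕ} (u : Fin p → ℝ) (v : Fin q → ℝ) :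
    frob (outer u v) = l2 u * l2 v := by
  unfold frob l2 outer
  rw [← Real.sqrt_mul (Finset.sum_nonneg fun _ _ => sq_nonneg _), Finset.sum_mul_sum]
  simp only [mul_pow]

lemma l2_mulVec_le_frob {p q : ℕ} (M : Fin p → Fin q → ℝ) (v : Fin q → ℝ) :
    l2 (mulVec M v) ≤ frob M * l2 v := by
  refine le_of_abs_le (abs_le_of_sq_le_sq ?_ (mul_nonneg (frob_nonneg _) (l2_nonneg _)))
  rw [l2_sq, mul_pow, frob_sq, Finset.sum_mul]
  refine Finset.sum_le_sum fun i _ => ?_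
  rw [mulVec_eq_dot, ← l2_sq, ← mul_pow]
  exact sq_le_sq.2 ((abs_dot_le _ _).trans (le_abs_self _))

lemma innerF_outer {p q : ℕ} (u : Fin p → ℝ) (v : Fin q → ℝ) (N : Fin p → Fin q → ℝ) :
    innerF (outer u v) N = dot u (mulVec N v) := by
  simp only [innerF, outer, dot, mulVec, Finset.mul_sum]
  exact Finset.sum_congr rfl fun _ _ => Finset.sum_congr rfl fun _ _ => by ring

/-! ### Coordinate restriction -/

/-- Restriction of a vector to a coordinate set (zero elsewhere). -/
def res {p : ℕ} (S : Finset (Fin p)) (v : Fin p → ℝ) : Fin p → ℝ :=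
  fun k => if k ∈ S then v k else 0

lemma res_add {p : ℕ} (S : Finset (Fin p)) (u v : Fin p → ℝ) :
    res S (u + v) = res S u + res S v := by
  ext k; by_cases h : k ∈ S <;> simp [res, h]

lemma l2_res_le {p : ℕ} (S : Finset (Fin p)) (v : Fin p → ℝ) : l2 (res S v) ≤ l2 v :=
  l2_le_of_abs_le fun k => by by_cases h : k ∈ S <;> simp [res, h]

lemma dot_res_self {p : ℕ} (S : Finset (Fin p)) (v : Fin p → ℝ) :
    dot (res S v) (res S v) = dot (res S v) v := by
  simp only [dot, res]
  refine Finset.sum_congr rfl fun k _ => ?_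
  by_cases h : k ∈ S <;> simp [h]

lemma l2_diag_le_res {p : ℕ} {S : Finset (Fin p)} {D v : Fin p → ℝ} (h : ∀ k, |D k| ≤ 1)
    (hS : ∀ k, k ∉ S → D k = 0) : l2 (D * v) ≤ l2 (res S v) := by
  refine l2_le_of_abs_le fun k => ?_
  by_cases hk : k ∈ S
  · simp only [Pi.mul_apply, res, hk, if_true, abs_mul]
    exact mul_le_of_le_one_left (abs_nonneg _) (h k)
  · simp [res, hk, hS k hk]

/-! ### Nets of the unit ball of a coordinate subspace -/

/-- A 1/2-net of the unit ball of cardinality at most `5 ^ dim`, by the volume argument. -/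
lemma exists_net_euclidean (E : Type*) [NormedAddCommGroup E] [NormedSpace ℝ E]
    [FiniteDimensional ℝ E] :
    ∃ N : Finset E, N.card ≤ 5 ^ Module.finrank ℝ E ∧ (∀ v ∈ N, ‖v‖ ≤ 1) ∧
      ∀ z : E, ‖z‖ ≤ 1 → ∃ v ∈ N, ‖z - v‖ ≤ 1 / 2 := by
  classical
  -- a 1-separated subset of the ball of radius 2 of maximal cardinality, scaled by 1/2
  let P : ℕ → Prop := fun k => ∃ s : Finset E, s.card = k ∧ (∀ c ∈ s, ‖c‖ ≤ 2) ∧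
    ∀ c ∈ s, ∀ d ∈ s, c ≠ d → 1 ≤ ‖c - d‖
  have hP0 : P 0 := ⟨∅, by simp, by simp, by simp⟩
  have hb : ∀ k, P k → k ≤ 5 ^ Module.finrank ℝ E := by
    rintro k ⟨s, rfl, h1, h2⟩
    exact Besicovitch.card_le_of_separated s h1 h2
  set K := Nat.findGreatest P (5 ^ Module.finrank ℝ E)
  have hK : P K := Nat.findGreatest_spec (Nat.zero_le _) hP0
  have hmax : ¬ P (K + 1) := fun h => by
    have := Nat.le_findGreatest (hb _ h) h
    change K + 1 ≤ K at this
    omega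
  obtain ⟨s, hs, h1, h2⟩ := hK
  refine ⟨s.image fun c => (1 / 2 : ℝ) • c, ?_, ?_, ?_⟩
  · exact Finset.card_image_le.trans (hs.le.trans (hb _ ⟨s, hs, h1, h2⟩))
  · intro v hv
    obtain ⟨c, hc, rfl⟩ := Finset.mem_image.1 hv
    rw [norm_smul]; have := h1 c hc; norm_num; linarith
  · intro z hz
    by_contra hcon
    push Not at hcon
    have h2z : ‖(2 : ℝ) • z‖ ≤ 2 := by rw [norm_smul]; norm_num; linarith
    have hfar : ∀ c ∈ s, 1 < ‖(2 : ℝ) • z - c‖ := by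
      intro c hc
      have := hcon _ (Finset.mem_image_of_mem _ hc)
      have e : (2 : ℝ) • z - c = (2 : ℝ) • (z - (1 / 2 : ℝ) • c) := by
        rw [smul_sub, smul_smul]; norm_num
      rw [e, norm_smul]; norm_num at this ⊢; linarith
    have hnot : (2 : ℝ) • z ∉ s := fun h => by
      have := hfar _ h
      simp at this; linarith
    refine hmax ⟨insert ((2 : ℝ) • z) s, by rw [Finset.card_insert_of_notMem hnot, hs], ?_, ?_⟩
    · intro c hc
      rcases Finset.mem_insert.1 hc with rfl | hc
      · exact h2z
      · exact h1 c hc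
    · intro c hc d hd hcd
      rcases Finset.mem_insert.1 hc with rfl | hc <;> rcases Finset.mem_insert.1 hd with rfl | hd
      · exact absurd rfl hcd
      · exact (hfar d hd).le
      · rw [norm_sub_rev]; exact (hfar c hc).le
      · exact h2 c hc d hd hcd

/-- `v` vanishes outside the coordinate set `S`. -/
def Supp {p : ℕ} (S : Finset (Fin p)) (v : Fin p → ℝ) : Prop := ∀ k, k ∉ S → v k = 0

lemma Supp.sub {p : ℕ} {S : Finset (Fin p)} {u v : Fin p → ℝ} (hu : Supp S u) (hv : Supp S v) :
    Supp S (u - v) := fun k hk => by simp [hu k hk, hv k hk]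

lemma Supp.smul {p : ℕ} {S : Finset (Fin p)} {v : Fin p → ℝ} (c : ℝ) (hv : Supp S v) :
    Supp S (c • v) := fun k hk => by simp [hv k hk]

lemma supp_res {p : ℕ} (S : Finset (Fin p)) (v : Fin p → ℝ) : Supp S (res S v) :=
  fun k hk => by simp [res, hk]

lemma supp_univ {p : ℕ} (v : Fin p → ℝ) : Supp Finset.univ v := fun k hk => by simp at hk

lemma exists_net {p : ℕ} (S : Finset (Fin p)) :
    ∃ N : Finset (Fin p → ℝ), N.card ≤ 5 ^ S.card ∧ (∀ v ∈ N, l2 v ≤ 1 ∧ Supp S v) ∧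
      ∀ z, Supp S z → l2 z ≤ 1 → ∃ v ∈ N, l2 (z - v) ≤ 1 / 2 := by
  classical
  obtain ⟨N, hN, h1, h2⟩ := exists_net_euclidean (EuclideanSpace ℝ S)
  let ext : EuclideanSpace ℝ S → (Fin p → ℝ) := fun w k => if h : k ∈ S then w ⟨k, h⟩ else 0
  have hl2 : ∀ w, l2 (ext w) = ‖w‖ := by
    intro w
    rw [EuclideanSpace.norm_eq, l2]
    congr 1
    rw [← Finset.sum_subset (Finset.subset_univ S), ← Finset.sum_coe_sort]
    · refine Finset.sum_congr rfl fun k _ => ?_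
      simp [ext]
    · intro k _ hk; simp [ext, hk]
  refine ⟨N.image ext, ?_, ?_, ?_⟩
  · refine Finset.card_image_le.trans (hN.trans ?_)
    simp
  · intro v hv
    obtain ⟨w, hw, rfl⟩ := Finset.mem_image.1 hv
    exact ⟨(hl2 w).le.trans (h1 w hw), fun k hk => by simp [ext, hk]⟩
  · intro z hz hz1
    let w : EuclideanSpace ℝ S := WithLp.toLp 2 fun k => z k
    have hw : ext w = z := by
      ext k; by_cases hk : k ∈ S
      · simp [ext, hk, w]
      · simp [ext, hk, hz k hk]
    obtain ⟨v, hv, hv2⟩ := h2 w (by rw [← hl2, hw]; exact hz1)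
    refine ⟨ext v, Finset.mem_image_of_mem _ hv, ?_⟩
    have : z - ext v = ext (w - v) := by
      rw [← hw]; ext k; by_cases hk : k ∈ S <;> simp [ext, hk]
    rw [this, hl2]; exact hv2

/-- The chosen `1/2`-net of the unit ball of `ℝ^S`. -/
def net {p : ℕ} (S : Finset (Fin p)) : Finset (Fin p → ℝ) := (exists_net S).choose

lemma net_card {p : ℕ} (S : Finset (Fin p)) : (net S).card ≤ 5 ^ S.card :=
  (exists_net S).choose_spec.1

lemma net_l2 {p : ℕ} {S : Finset (Fin p)} {v : Fin p → ℝ} (h : v ∈ net S) : l2 v ≤ 1 :=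
  ((exists_net S).choose_spec.2.1 v h).1

lemma net_supp {p : ℕ} {S : Finset (Fin p)} {v : Fin p → ℝ} (h : v ∈ net S) : Supp S v :=
  ((exists_net S).choose_spec.2.1 v h).2

/-- A seminorm bounded by `c` on the net is bounded by `2c` times the norm on `ℝ^S`. -/
lemma net_bound {p : ℕ} (S : Finset (Fin p)) (f : (Fin p → ℝ) → ℝ)
    (hadd : ∀ u v, f (u + v) ≤ f u + f v) (hsmul : ∀ (c : ℝ) v, f (c • v) = |c| * f v)
    {c : ℝ} (hc : ∀ v ∈ net S, f v ≤ c) {v : Fin p → ℝ} (hv : Supp S v) :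
    f v ≤ 2 * c * l2 v := by
  classical
  have hnn : ∀ v, 0 ≤ f v := fun v => by
    have h0 : f 0 = 0 := by have := hsmul 0 0; simpa using this
    have h1 : f (-v) = f v := by have := hsmul (-1) v; simpa using this
    have := hadd v (-v)
    rw [add_neg_cancel, h0, h1] at this; linarith
  have hf0 : f 0 = 0 := by have := hsmul 0 0; simpa using this
  have hsum : ∀ (t : Finset (Fin p)) (g : Fin p → Fin p → ℝ),
      f (∑ k ∈ t, g k) ≤ ∑ k ∈ t, f (g k) := by
    intro t g
    induction t using Finset.induction_on with
    | empty => simp [hf0]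
    | insert a s ha ih =>
      rw [Finset.sum_insert ha, Finset.sum_insert ha]; exact (hadd _ _).trans (by gcongr)
  have hcrude : ∀ v, l2 v ≤ 1 → f v ≤ ∑ k, f (Pi.single k 1) := by
    intro v hv1
    have e : v = ∑ k, v k • (Pi.single k (1 : ℝ) : Fin p → ℝ) := by
      ext j; simp [Finset.sum_apply, Pi.single_apply]
    calc f v = f (∑ k, v k • (Pi.single k (1 : ℝ) : Fin p → ℝ)) := by rw [← e]
      _ ≤ ∑ k, f (v k • (Pi.single k (1 : ℝ) : Fin p → ℝ)) := hsum _ _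
      _ ≤ _ := by
        refine Finset.sum_le_sum fun k _ => ?_
        rw [hsmul]
        exact mul_le_of_le_one_left (hnn _) ((abs_apply_le_l2 v k).trans hv1)
  let A : Set ℝ := {r | ∃ v, Supp S v ∧ l2 v ≤ 1 ∧ r = f v}
  have hA : BddAbove A := ⟨_, by rintro r ⟨v, -, h, rfl⟩; exact hcrude v h⟩
  have hAne : A.Nonempty := ⟨f 0, 0, fun _ _ => rfl, by rw [l2_zero]; norm_num, rfl⟩
  have hhalf : ∀ w, Supp S w → f w ≤ sSup A * l2 w := by
    intro w hw
    by_cases h0 : w = 0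
    · simp [h0, hf0, l2_zero]
    have hp := l2_pos h0
    have : f ((l2 w)⁻¹ • w) ≤ sSup A := le_csSup hA ⟨_, hw.smul _, by
      rw [l2_smul, abs_of_pos (inv_pos.2 hp), inv_mul_cancel₀ hp.ne'], rfl⟩
    rw [hsmul, abs_of_pos (inv_pos.2 hp), inv_mul_le_iff₀ hp] at this
    linarith
  have hsup : sSup A ≤ c + sSup A / 2 := by
    refine csSup_le hAne ?_
    rintro r ⟨z, hz, hz1, rfl⟩
    obtain ⟨w, hw, hzw⟩ := (exists_net S).choose_spec.2.2 z hz hz1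
    have h1 : f z ≤ f (z - w) + f w := by simpa using hadd (z - w) w
    have h2 := hhalf (z - w) (hz.sub (net_supp hw))
    have h3 := hc w hw
    have hA0 : 0 ≤ sSup A := (hnn 0).trans (le_csSup hA ⟨0, fun _ _ => rfl,
      by rw [l2_zero]; norm_num, rfl⟩)
    nlinarith
  have := hhalf v hv
  have h2 : sSup A ≤ 2 * c := by linarith
  exact this.trans (by have := l2_nonneg v; gcongr)

/-- Bilinear version of `net_bound`: a bilinear form bounded on pairs of net points. -/
lemma net_bound_bilin {p q : ℕ} (S : Finset (Fin p)) (R : Finset (Fin q))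
    (T : (Fin q → ℝ) → (Fin p → ℝ))
    (hadd : ∀ u v, T (u + v) = T u + T v) (hsmul : ∀ (c : ℝ) v, T (c • v) = c • T v)
    {t : ℝ} (ht : ∀ u ∈ net S, ∀ v ∈ net R, |dot u (T v)| ≤ t) {v : Fin q → ℝ} (hv : Supp R v) :
    l2 (res S (T v)) ≤ 4 * t * l2 v := by
  have h1 : ∀ u ∈ net S, |dot u (T v)| ≤ 2 * t * l2 v := fun u hu =>
    net_bound R (fun v => |dot u (T v)|)
      (fun a b => by simp only [hadd, dot_add]; exact abs_add_le _ _)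
      (fun c a => by simp only [hsmul, dot_smul, abs_mul]) (ht u hu) hv
  have h2 : ∀ u, Supp S u → |dot u (T v)| ≤ 2 * (2 * t * l2 v) * l2 u := fun u hu =>
    net_bound S (fun u => |dot u (T v)|)
      (fun a b => by simp only [add_dot]; exact abs_add_le _ _)
      (fun c a => by simp only [smul_dot, abs_mul]) h1 hu
  have h3 := h2 _ (supp_res S (T v))
  by_cases h0 : res S (T v) = 0
  · have h4 : 0 ≤ 2 * t * l2 v := by
      obtain ⟨u, hu, -⟩ := (exists_net S).choose_spec.2.2 0 (fun _ _ => rfl)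
        (by rw [l2_zero]; norm_num)
      exact (abs_nonneg _).trans (h1 u hu)
    rw [h0, l2_zero]; linarith
  have hp := l2_pos h0
  rw [← dot_res_self, dot_self, abs_of_nonneg (sq_nonneg _)] at h3
  nlinarith

set_option linter.unusedSectionVars false

/-! ### Concentration of sums of subexponential row functions -/

lemma sq_le_exp {x : ℝ} (hx : 0 ≤ x) : x ^ 2 ≤ 128 * Real.exp (x / 8) := by
  have := Real.quadratic_le_exp_of_nonneg (x := x / 8) (by positivity)
  nlinarith

lemma exp_le_quad (y : ℝ) : Real.exp y ≤ 1 + y + y ^ 2 * Real.exp |y| := by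
  have h := Complex.norm_exp_sub_sum_le_norm_mul_exp (y : ℂ) 2
  simp only [Finset.sum_range_succ, Finset.sum_range_zero] at h
  norm_num at h
  have e : Complex.exp (y : ℂ) - (1 + (y : ℂ)) = ((Real.exp y - (1 + y) : ℝ) : ℂ) := by
    push_cast; ring
  rw [e, Complex.norm_real, Real.norm_eq_abs] at h
  have h2 := le_abs_self (Real.exp y - (1 + y))
  linarith

section conc
variable {R : Type*} [MeasurableSpace R] {ν : Measure R} [IsProbabilityMeasure ν]
  {X Y : R → ℝ}

/-- `X` is dominated by `1 + Y²` where `Y` has a standard Gaussian-type exponential moment. -/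
structure SubExp (ν : Measure R) (X Y : R → ℝ) : Prop where
  mX : Measurable X
  mY : Measurable Y
  dom : ∀ r, |X r| ≤ 1 + Y r ^ 2
  int : Integrable (fun r => Real.exp (Y r ^ 2 / 4)) ν
  bd : ∫ r, Real.exp (Y r ^ 2 / 4) ∂ν ≤ 3 / 2

lemma SubExp.neg (h : SubExp ν X Y) : SubExp ν (fun r => -X r) Y :=
  ⟨h.mX.neg, h.mY, fun r => by rw [abs_neg]; exact h.dom r, h.int, h.bd⟩

lemma SubExp.abs_le (h : SubExp ν X Y) (r : R) : |X r| ≤ 4 * Real.exp (Y r ^ 2 / 4) := by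
  have := Real.add_one_le_exp (Y r ^ 2 / 4)
  have := h.dom r
  linarith

lemma SubExp.integrable (h : SubExp ν X Y) : Integrable X ν :=
  (h.int.const_mul 4).mono' h.mX.aestronglyMeasurable
    (Filter.Eventually.of_forall fun r => by rw [Real.norm_eq_abs]; exact h.abs_le r)

lemma SubExp.abs_mean_le (h : SubExp ν X Y) : |∫ r, X r ∂ν| ≤ 3 := by
  have hdom : ∀ r, |X r| ≤ 4 * Real.exp (Y r ^ 2 / 4) - 3 := fun r => by
    have := Real.add_one_le_exp (Y r ^ 2 / 4)
    have := h.dom r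
    linarith
  have i2 : Integrable (fun r => 4 * Real.exp (Y r ^ 2 / 4) - 3) ν :=
    (h.int.const_mul 4).sub (integrable_const _)
  calc |∫ r, X r ∂ν| ≤ ∫ r, |X r| ∂ν := abs_integral_le_integral_abs
    _ ≤ ∫ r, (4 * Real.exp (Y r ^ 2 / 4) - 3) ∂ν := integral_mono h.integrable.abs i2 hdom
    _ = 4 * ∫ r, Real.exp (Y r ^ 2 / 4) ∂ν - 3 := by
      rw [integral_sub (h.int.const_mul 4) (integrable_const _), integral_const_mul]; simp
    _ ≤ 3 := by have := h.bd; linarith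

lemma SubExp.mgf_dom (h : SubExp ν X Y) {l : ℝ} (hl0 : 0 ≤ l) (hl : l ≤ 1 / 8) (r : R) :
    Real.exp (l * (X r - ∫ r, X r ∂ν)) ≤
      1 + l * (X r - ∫ r, X r ∂ν) + 360 * l ^ 2 * Real.exp (Y r ^ 2 / 4) := by
  set Z := X r - ∫ r, X r ∂ν
  have hZ : |Z| ≤ 4 + Y r ^ 2 := by
    have := abs_sub (X r) (∫ r, X r ∂ν)
    have := h.dom r; have := h.abs_mean_le; linarith
  have h1 := exp_le_quad (l * Z)
  have h2 : Real.exp |l * Z| ≤ Real.exp (|Z| / 8) := by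
    apply Real.exp_le_exp.2; rw [abs_mul, abs_of_nonneg hl0]
    nlinarith [abs_nonneg Z]
  have h3 := sq_le_exp (abs_nonneg Z)
  rw [sq_abs] at h3
  have h4 : Real.exp (|Z| / 8) * Real.exp (|Z| / 8) ≤ 2.72 * Real.exp (Y r ^ 2 / 4) := by
    rw [← Real.exp_add]
    calc Real.exp (|Z| / 8 + |Z| / 8) ≤ Real.exp (1 + Y r ^ 2 / 4) :=
          Real.exp_le_exp.2 (by linarith)
      _ = Real.exp 1 * Real.exp (Y r ^ 2 / 4) := Real.exp_add _ _
      _ ≤ _ := by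
        have := Real.exp_one_lt_d9
        have := Real.exp_pos (Y r ^ 2 / 4)
        nlinarith
  have h5 : (l * Z) ^ 2 * Real.exp |l * Z| ≤ l ^ 2 * (128 * (2.72 * Real.exp (Y r ^ 2 / 4))) := by
    rw [mul_pow, mul_assoc]
    refine mul_le_mul_of_nonneg_left ?_ (sq_nonneg l)
    calc Z ^ 2 * Real.exp |l * Z| ≤ (128 * Real.exp (|Z| / 8)) * Real.exp (|Z| / 8) := by gcongr
      _ ≤ _ := by rw [mul_assoc]; gcongr
  have := Real.exp_pos (Y r ^ 2 / 4)
  nlinarith [mul_nonneg (sq_nonneg l) this.le]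

lemma SubExp.mgf_int (h : SubExp ν X Y) {l : ℝ} (hl0 : 0 ≤ l) (hl : l ≤ 1 / 8) :
    Integrable (fun r => Real.exp (l * (X r - ∫ r, X r ∂ν))) ν := by
  have i1 : Integrable (fun r => 1 + l * (X r - ∫ r, X r ∂ν)
      + 360 * l ^ 2 * Real.exp (Y r ^ 2 / 4)) ν :=
    ((integrable_const _).add ((h.integrable.sub (integrable_const _)).const_mul l)).add
      (h.int.const_mul _)
  refine i1.mono' ?_ (Filter.Eventually.of_forall fun r => ?_)
  · exact (Real.measurable_exp.comp ((h.mX.sub_const _).const_mul l)).aestronglyMeasurable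
  · rw [Real.norm_eq_abs, abs_of_pos (Real.exp_pos _)]; exact h.mgf_dom hl0 hl r

lemma SubExp.mgf_le (h : SubExp ν X Y) {l : ℝ} (hl0 : 0 ≤ l) (hl : l ≤ 1 / 8) :
    ∫ r, Real.exp (l * (X r - ∫ r, X r ∂ν)) ∂ν ≤ Real.exp (540 * l ^ 2) := by
  have ia : Integrable (fun r => 1 + l * (X r - ∫ r, X r ∂ν)) ν :=
    (integrable_const _).add ((h.integrable.sub (integrable_const _)).const_mul l)
  have ib : Integrable (fun r => 360 * l ^ 2 * Real.exp (Y r ^ 2 / 4)) ν := h.int.const_mul _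
  calc ∫ r, Real.exp (l * (X r - ∫ r, X r ∂ν)) ∂ν
      ≤ ∫ r, (1 + l * (X r - ∫ r, X r ∂ν) + 360 * l ^ 2 * Real.exp (Y r ^ 2 / 4)) ∂ν :=
        integral_mono (h.mgf_int hl0 hl) (ia.add ib) (h.mgf_dom hl0 hl)
    _ = 1 + 360 * l ^ 2 * ∫ r, Real.exp (Y r ^ 2 / 4) ∂ν := by
      have hc : Integrable (fun r => l * (X r - ∫ r, X r ∂ν)) ν :=
        (h.integrable.sub (integrable_const _)).const_mul l
      rw [integral_add ia ib, integral_const_mul, integral_add (integrable_const _) hc,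
        integral_const_mul, integral_sub h.integrable (integrable_const _)]
      simp
    _ ≤ 540 * l ^ 2 + 1 := by have := h.bd; nlinarith [sq_nonneg l]
    _ ≤ _ := Real.add_one_le_exp _

/-- Bernstein-type upper tail for a sum of i.i.d. copies of `X` over a subset of the coordinates,
selected by the `0`-`1` weights `w`. -/
lemma SubExp.conc_w (h : SubExp ν X Y) (p : ℕ) {τ : ℝ} (h0 : 0 ≤ τ) (h1 : τ ≤ 120)
    (w : Fin p → ℝ) (hw : ∀ k, w k = 0 ∨ w k = 1) :
    (Measure.pi fun _ : Fin p => ν) {M | p * τ ≤ ∑ k, w k * (X (M k) - ∫ r, X r ∂ν)} ≤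
      ENNReal.ofReal (Real.exp (-(p * τ ^ 2 / 2160))) := by
  set l := τ / 1080
  have hl0 : 0 ≤ l := by positivity
  have hl : l ≤ 1 / 8 := by simp only [l]; linarith
  have heq : ∀ M : Fin p → R, Real.exp (l * ∑ k, w k * (X (M k) - ∫ r, X r ∂ν)) =
      ∏ k, Real.exp (l * (w k * (X (M k) - ∫ r, X r ∂ν))) := fun M => by
    rw [Finset.mul_sum, Real.exp_sum]
  have hInt : Integrable (fun M : Fin p → R => Real.exp (l * ∑ k, w k * (X (M k) - ∫ r, X r ∂ν)))
      (Measure.pi fun _ : Fin p => ν) := by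
    simp only [heq]
    refine Integrable.fintype_prod (f := fun k r => Real.exp (l * (w k * (X r - ∫ r, X r ∂ν))))
      fun k => ?_
    rcases hw k with hk | hk
    · simp [hk]
    · simpa [hk] using h.mgf_int hl0 hl
  have := measure_ge_le_exp_mul_mgf (μ := Measure.pi fun _ : Fin p => ν)
    (X := fun M => ∑ k, w k * (X (M k) - ∫ r, X r ∂ν)) (p * τ) hl0 hInt
  rw [← ENNReal.ofReal_toReal (measure_ne_top (Measure.pi fun _ : Fin p => ν) _)]
  apply ENNReal.ofReal_le_ofReal
  refine this.trans ?_
  have hm : mgf (fun M => ∑ k, w k * (X (M k) - ∫ r, X r ∂ν)) (Measure.pi fun _ : Fin p => ν) l ≤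
      Real.exp (540 * l ^ 2) ^ p := by
    unfold mgf
    simp only [heq]
    rw [integral_fintype_prod_eq_prod (fun k r => Real.exp (l * (w k * (X r - ∫ r, X r ∂ν))))]
    calc _ ≤ ∏ _k : Fin p, Real.exp (540 * l ^ 2) := by
          refine Finset.prod_le_prod (fun k _ => integral_nonneg fun _ => (Real.exp_pos _).le)
            fun k _ => ?_
          rcases hw k with hk | hk
          · simp only [hk, zero_mul, mul_zero, Real.exp_zero, integral_const, smul_eq_mul, mul_one]
            rw [measureReal_def, measure_univ, ENNReal.toReal_one]
            exact Real.one_le_exp (by positivity)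
          · simpa [hk] using h.mgf_le hl0 hl
      _ = _ := by simp
  calc Real.exp (-l * (p * τ)) * _ ≤ Real.exp (-l * (p * τ)) * Real.exp (540 * l ^ 2) ^ p := by
        gcongr
    _ = _ := by
      rw [← Real.exp_nat_mul, ← Real.exp_add]; congr 1; simp only [l]; ring

lemma SubExp.conc (h : SubExp ν X Y) (p : ℕ) {τ : ℝ} (h0 : 0 ≤ τ) (h1 : τ ≤ 120) :
    (Measure.pi fun _ : Fin p => ν) {M | p * (∫ r, X r ∂ν + τ) ≤ ∑ k, X (M k)} ≤
      ENNReal.ofReal (Real.exp (-(p * τ ^ 2 / 2160))) := by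
  refine (measure_mono fun M hM => ?_).trans (h.conc_w p h0 h1 (fun _ => 1) (fun _ => Or.inr rfl))
  simp only [Set.mem_ofPred_eq, Finset.sum_sub_distrib, Finset.sum_const, Finset.card_univ,
      Fintype.card_fin, nsmul_eq_mul, one_mul] at hM ⊢
  linarith

lemma SubExp.conc_le (h : SubExp ν X Y) (p : ℕ) {a τ : ℝ} (ha : ∫ r, X r ∂ν ≤ a)
    (h0 : 0 ≤ τ) (h1 : τ ≤ 120) :
    (Measure.pi fun _ : Fin p => ν) {M | p * (a + τ) < ∑ k, X (M k)} ≤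
      ENNReal.ofReal (Real.exp (-(p * τ ^ 2 / 2160))) := by
  refine (measure_mono fun M hM => ?_).trans (h.conc p h0 h1)
  simp only [Set.mem_ofPred_eq] at hM ⊢
  refine le_trans ?_ hM.le
  gcongr

lemma SubExp.conc_ge (h : SubExp ν X Y) (p : ℕ) {a τ : ℝ} (ha : a ≤ ∫ r, X r ∂ν)
    (h0 : 0 ≤ τ) (h1 : τ ≤ 120) :
    (Measure.pi fun _ : Fin p => ν) {M | ∑ k, X (M k) < p * (a - τ)} ≤
      ENNReal.ofReal (Real.exp (-(p * τ ^ 2 / 2160))) := by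
  refine (measure_mono fun M hM => ?_).trans (h.neg.conc_le p (a := -a)
    (by rw [integral_neg]; linarith) h0 h1)
  simp only [Set.mem_ofPred_eq, Finset.sum_neg_distrib] at hM ⊢
  linarith

end conc

/-! ### One-dimensional Gaussian facts -/

/-- Law of a Gaussian row: i.i.d. `N(0,v)` coordinates. -/
abbrev gRow (q : ℕ) (v : NNReal) : Measure (Fin q → ℝ) := Measure.pi fun _ => gaussianReal 0 v

lemma measurable_dot {q : ℕ} (z : Fin q → ℝ) : Measurable fun r : Fin q → ℝ => dot r z := by
  unfold dot; fun_prop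

lemma map_dot {q : ℕ} (v : NNReal) (z : Fin q → ℝ) :
    (gRow q v).map (fun r => dot r z) = gaussianReal 0 (v * Real.toNNReal (l2 z ^ 2)) := by
  have hmeas := measurable_dot z
  have : IsProbabilityMeasure ((gRow q v).map (fun r => dot r z)) :=
    Measure.isProbabilityMeasure_map hmeas.aemeasurable
  apply Measure.ext_of_charFun
  ext t
  rw [charFun_gaussianReal, charFun_apply, integral_map hmeas.aemeasurable (by fun_prop)]
  have e : ∀ r : Fin q → ℝ, Complex.exp (((inner ℝ (dot r z) t : ℝ) : ℂ) * Complex.I) =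
      ∏ k, Complex.exp (((inner ℝ (r k) (t * z k) : ℝ) : ℂ) * Complex.I) := by
    intro r
    rw [← Complex.exp_sum]
    congr 1
    rw [← Finset.sum_mul]
    congr 1
    simp only [dot, RCLike.inner_apply, conj_trivial]
    push_cast
    rw [Finset.mul_sum]
    exact Finset.sum_congr rfl fun _ _ => by ring
  simp only [e]
  rw [integral_fintype_prod_eq_prod (fun k (x : ℝ) =>
    Complex.exp (((inner ℝ x (t * z k) : ℝ) : ℂ) * Complex.I))]
  have e2 : ∀ k, ∫ x, Complex.exp (((inner ℝ x (t * z k) : ℝ) : ℂ) * Complex.I)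
      ∂(gaussianReal 0 v) = Complex.exp (-(v * (t * z k) ^ 2 / 2)) := by
    intro k
    rw [← charFun_apply, charFun_gaussianReal]; congr 1; push_cast; ring
  simp only [e2]
  rw [← Complex.exp_sum]
  congr 1
  have : ((Real.toNNReal (l2 z ^ 2) : NNReal) : ℝ) = ∑ k, z k ^ 2 := by
    rw [Real.coe_toNNReal _ (sq_nonneg _), l2_sq]
  have h2 : (((v * Real.toNNReal (l2 z ^ 2) : NNReal) : ℝ) : ℂ) =
      (v : ℂ) * ∑ k, (z k : ℂ) ^ 2 := by
    rw [NNReal.coe_mul, this]; push_cast; rfl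
  rw [h2]
  push_cast
  rw [Finset.sum_neg_distrib, ← Finset.sum_div, mul_zero, zero_mul, zero_sub, Finset.mul_sum,
    Finset.sum_mul]
  congr 2
  exact Finset.sum_congr rfl fun _ _ => by ring

lemma map_dot_std {q : ℕ} {v : NNReal} {z : Fin q → ℝ} (h : v * l2 z ^ 2 = 1) :
    (gRow q v).map (fun r => dot r z) = gaussianReal 0 1 := by
  rw [map_dot]; congr 1
  ext; rw [NNReal.coe_mul, Real.coe_toNNReal _ (sq_nonneg _), h]; rfl

lemma integral_std (f : ℝ → ℝ) : ∫ x, f x ∂(gaussianReal 0 1) =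
    (Real.sqrt (2 * Real.pi))⁻¹ * ∫ x, Real.exp (-(1 / 2) * x ^ 2) * f x := by
  rw [integral_gaussianReal_eq_integral_smul one_ne_zero, ← integral_const_mul]
  refine integral_congr_ae (Filter.Eventually.of_forall fun x => ?_)
  simp only [gaussianPDFReal, NNReal.coe_one, mul_one, sub_zero, smul_eq_mul]
  rw [mul_assoc]; congr 3; ring

lemma integrable_std_iff (f : ℝ → ℝ) : Integrable f (gaussianReal 0 1) ↔
    Integrable (fun x => Real.exp (-(1 / 2) * x ^ 2) * f x) volume := by
  have hpi : Real.sqrt (2 * Real.pi) ≠ 0 := by positivity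
  rw [gaussianReal_of_var_ne_zero _ one_ne_zero, integrable_withDensity_iff_integrable_smul'
    (measurable_gaussianPDF _ _) (Filter.Eventually.of_forall fun _ => gaussianPDF_lt_top)]
  refine Iff.trans ?_ (integrable_const_mul_iff (c := (Real.sqrt (2 * Real.pi))⁻¹)
    (by simpa using hpi) (fun x => Real.exp (-(1 / 2) * x ^ 2) * f x))
  refine integrable_congr (Filter.Eventually.of_forall fun x => ?_)
  simp only [toReal_gaussianPDF, gaussianPDFReal, NNReal.coe_one, mul_one, sub_zero, smul_eq_mul]
  rw [mul_assoc]; congr 3; ring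

lemma std_exp_int : Integrable (fun x : ℝ => Real.exp (x ^ 2 / 4)) (gaussianReal 0 1) := by
  rw [integrable_std_iff]
  refine (integrable_exp_neg_mul_sq (b := 1 / 4) (by norm_num)).congr
    (Filter.Eventually.of_forall fun x => ?_)
  simp only [← Real.exp_add]; congr 1; ring

lemma std_exp_bd : ∫ x : ℝ, Real.exp (x ^ 2 / 4) ∂(gaussianReal 0 1) ≤ 3 / 2 := by
  rw [integral_std]
  have : ∀ x : ℝ, Real.exp (-(1 / 2) * x ^ 2) * Real.exp (x ^ 2 / 4) =
      Real.exp (-(1 / 4) * x ^ 2) := fun x => by rw [← Real.exp_add]; congr 1; ring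
  simp only [this]
  rw [integral_gaussian, ← Real.sqrt_inv, ← Real.sqrt_mul (by positivity)]
  rw [show (2 * Real.pi)⁻¹ * (Real.pi / (1 / 4)) = 2 by field_simp; norm_num]
  rw [Real.sqrt_le_left (by norm_num)]; norm_num

/-- Row functions dominated by `1 + (dot r z)²` are subexponential, for normalized `z`. -/
lemma subExp_dot {q : ℕ} {v : NNReal} {z : Fin q → ℝ} (h : v * l2 z ^ 2 = 1)
    {X : (Fin q → ℝ) → ℝ} (mX : Measurable X) (hX : ∀ r, |X r| ≤ 1 + dot r z ^ 2) :
    SubExp (gRow q v) X (fun r => dot r z) := by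
  have hm := measurable_dot z
  refine ⟨mX, hm, hX, ?_, ?_⟩
  · have := std_exp_int
    rw [← map_dot_std h] at this
    exact (integrable_map_measure (by fun_prop) hm.aemeasurable).1 this
  · have := std_exp_bd
    rw [← map_dot_std h, integral_map hm.aemeasurable (by fun_prop)] at this
    exact this

lemma integral_dot_std {q : ℕ} {v : NNReal} {z : Fin q → ℝ} (h : v * l2 z ^ 2 = 1)
    {f : ℝ → ℝ} (hf : Measurable f) :
    ∫ r, f (dot r z) ∂(gRow q v) = ∫ x, f x ∂(gaussianReal 0 1) := by
  rw [← map_dot_std h, integral_map (measurable_dot z).aemeasurable hf.aestronglyMeasurable]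

lemma integral_sq_std : ∫ x : ℝ, x ^ 2 ∂(gaussianReal 0 1) = 1 := by
  have h := variance_fun_id_gaussianReal (μ := 0) (v := 1)
  rw [variance_of_integral_eq_zero (by fun_prop) integral_id_gaussianReal] at h
  simpa using h

lemma integrable_sq_std : Integrable (fun x : ℝ => x ^ 2) (gaussianReal 0 1) :=
  (memLp_id_gaussianReal (μ := 0) (v := 1) 2).integrable_sq

/-- Gaussian tail for one linear form of a row. -/
lemma tail_std {t : ℝ} (ht : 0 ≤ t) :
    (gaussianReal 0 1) {x | t ≤ x} ≤ ENNReal.ofReal (Real.exp (-(t ^ 2 / 2))) := by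
  have := measure_ge_le_exp_mul_mgf (μ := gaussianReal 0 1) (X := id) t ht
    (by simpa using integrable_exp_mul_gaussianReal (μ := 0) (v := 1) t)
  rw [mgf_id_gaussianReal] at this
  rw [← ENNReal.ofReal_toReal (measure_ne_top (gaussianReal 0 1) _)]
  apply ENNReal.ofReal_le_ofReal
  refine this.trans_eq ?_
  rw [← Real.exp_add]; congr 1; simp; ring

/-- Small-ball estimate for the standard Gaussian. -/
lemma small_ball_std {a : ℝ} (ha : 0 ≤ a) :
    (gaussianReal 0 1).real {x | |x| ≤ a} ≤ a := by
  have hs : {x : ℝ | |x| ≤ a} = Set.Icc (-a) a := by ext x; simp [abs_le]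
  rw [hs, measureReal_def, gaussianReal_apply_eq_integral _ one_ne_zero,
    ENNReal.toReal_ofReal (integral_nonneg fun _ => gaussianPDFReal_nonneg _ _ _)]
  have h1 : ∀ x, gaussianPDFReal 0 1 x ≤ 1 / 2 := by
    intro x
    simp only [gaussianPDFReal, NNReal.coe_one, mul_one, sub_zero]
    have : (2 : ℝ) ≤ Real.sqrt (2 * Real.pi) := by
      apply Real.le_sqrt_of_sq_le; nlinarith [Real.pi_gt_three]
    have h3 : Real.exp (-x ^ 2 / 2) ≤ 1 := Real.exp_le_one_iff.2 (by nlinarith [sq_nonneg x])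
    calc _ ≤ (2 : ℝ)⁻¹ * 1 := by gcongr
      _ = _ := by norm_num
  calc ∫ x in Set.Icc (-a) a, gaussianPDFReal 0 1 x
      ≤ ∫ x in Set.Icc (-a) a, (1 / 2 : ℝ) :=
        setIntegral_mono (integrable_gaussianPDFReal 0 1).integrableOn
          (integrableOn_const (by simp)) h1
    _ = a := by simp [ha]; linarith

/-! ### Two-dimensional Gaussian facts -/

lemma integral_cexp_dot {q : ℕ} (v : NNReal) (z : Fin q → ℝ) :
    ∫ r, Complex.exp (((dot r z : ℝ) : ℂ) * Complex.I) ∂(gRow q v) =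
      Complex.exp (-(((v * l2 z ^ 2 : ℝ) : ℂ) / 2)) := by
  have h := congrArg (fun μ => charFun μ (1 : ℝ)) (map_dot v z)
  simp only [charFun_gaussianReal] at h
  rw [charFun_apply, integral_map (measurable_dot z).aemeasurable (by fun_prop)] at h
  simp only [RCLike.inner_apply, conj_trivial, one_mul] at h
  rw [h]
  congr 1
  rw [NNReal.coe_mul, Real.coe_toNNReal _ (sq_nonneg _)]
  push_cast
  ring

/-- Orthonormal (after scaling by the variance) linear forms of a Gaussian row are jointly
distributed as two independent standard normals. -/
lemma map_dot_pair {q : ℕ} {v : NNReal} {a b : Fin q → ℝ} (ha : v * l2 a ^ 2 = 1)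
    (hb : v * l2 b ^ 2 = 1) (hab : dot a b = 0) :
    (gRow q v).map (fun r => (dot r a, dot r b)) =
      (gaussianReal 0 1).prod (gaussianReal 0 1) := by
  have hi : IndepFun (fun r => dot r a) (fun r => dot r b) (gRow q v) := by
    rw [indepFun_iff_charFun_prod (measurable_dot a).aemeasurable (measurable_dot b).aemeasurable]
    intro t
    rw [map_dot_std ha, map_dot_std hb, charFun_gaussianReal, charFun_gaussianReal, charFun_apply,
      integral_map (by
        have := measurable_dot a; have := measurable_dot b
        fun_prop) (by fun_prop)]
    have e : ∀ r : Fin q → ℝ, (inner ℝ (WithLp.toLp 2 (dot r a, dot r b)) t : ℝ) =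
        dot r (t.fst • a + t.snd • b) := by
      intro r
      rw [dot_add, dot_smul, dot_smul]
      simp [WithLp.prod_inner_apply]
    simp only [e]
    rw [integral_cexp_dot, ← Complex.exp_add]
    congr 1
    rw [l2_add_sq, l2_smul, l2_smul, dot_smul, smul_dot, hab]
    have e1 : (v : ℝ) * ((|t.fst| * l2 a) ^ 2 + 2 * (t.snd * (t.fst * 0)) + (|t.snd| * l2 b) ^ 2)
        = t.fst ^ 2 + t.snd ^ 2 := by
      rw [mul_pow, mul_pow, sq_abs, sq_abs]; linear_combination t.fst ^ 2 * ha + t.snd ^ 2 * hb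
    rw [show (v:ℝ) * _ = _ from by convert e1 using 2]
    push_cast
    simp
    ring
  have := (indepFun_iff_map_prod_eq_prod_map_map (measurable_dot a).aemeasurable
    (measurable_dot b).aemeasurable).1 hi
  rw [this, map_dot_std ha, map_dot_std hb]

/-- The mass that the standard planar Gaussian gives to a cone is proportional to its angle;
the constant is identified in `gauss_cone`. -/
lemma gauss_cone_aux : ∃ I : ENNReal, ∀ (K : Set (ℝ × ℝ)) (Φ : Set ℝ), MeasurableSet K →
    MeasurableSet Φ → Φ ⊆ Set.Ioo (-Real.pi) Real.pi →
    (∀ r φ : ℝ, 0 < r → φ ∈ Set.Ioo (-Real.pi) Real.pi →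
      ((r * Real.cos φ, r * Real.sin φ) ∈ K ↔ φ ∈ Φ)) →
    ((gaussianReal 0 1).prod (gaussianReal 0 1)) K = I * volume Φ := by
  set G : ℝ → ENNReal := fun r => ENNReal.ofReal r *
    ENNReal.ofReal ((Real.sqrt (2 * Real.pi))⁻¹ ^ 2 * Real.exp (-(r ^ 2 / 2))) with hG
  have hGm : Measurable G := by fun_prop
  refine ⟨∫⁻ r in Set.Ioi 0, G r, fun K Φ hK hΦ hsub hiff => ?_⟩
  rw [gaussianReal_of_var_ne_zero 0 one_ne_zero, prod_withDensity (measurable_gaussianPDF 0 1)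
    (measurable_gaussianPDF 0 1), withDensity_apply _ hK, ← lintegral_indicator hK,
    ← Measure.volume_eq_prod, ← lintegral_comp_polarCoord_symm, polarCoord_target]
  have e : ∀ p ∈ Set.Ioi (0:ℝ) ×ˢ Set.Ioo (-Real.pi) Real.pi,
      ENNReal.ofReal p.1 • (K.indicator (fun a : ℝ × ℝ => gaussianPDF 0 1 a.1 * gaussianPDF 0 1 a.2))
        (polarCoord.symm p) = G p.1 * Φ.indicator 1 p.2 := by
    rintro ⟨r, φ⟩ ⟨hr, hφ⟩
    have hk := hiff r φ hr hφ
    simp only [polarCoord_symm_apply]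
    by_cases h : φ ∈ Φ
    · rw [Set.indicator_of_mem (hk.2 h), Set.indicator_of_mem h]
      simp only [Pi.one_apply, mul_one, smul_eq_mul, hG, gaussianPDF, gaussianPDFReal]
      congr 1
      rw [← ENNReal.ofReal_mul (by positivity)]
      congr 1
      simp only [NNReal.coe_one, mul_one, sub_zero]
      rw [mul_mul_mul_comm, ← Real.exp_add, ← sq]
      congr 2
      have := Real.sin_sq_add_cos_sq φ
      linear_combination (-(r^2)/2) * this
    · rw [Set.indicator_of_notMem (fun hh => h (hk.1 hh)), Set.indicator_of_notMem h]
      simp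
  rw [setLIntegral_congr_fun (measurableSet_Ioi.prod measurableSet_Ioo) e, Measure.volume_eq_prod,
    ← Measure.prod_restrict, lintegral_prod_mul hGm.aemeasurable
      ((measurable_one.indicator hΦ).aemeasurable), lintegral_indicator hΦ]
  simp only [Pi.one_apply, lintegral_one]
  rw [Measure.restrict_restrict hΦ, Set.inter_eq_left.2 hsub, Measure.restrict_apply_univ]

/-- The standard Gaussian measure of a planar cone is proportional to its angle. The cone avoids the
negative horizontal axis, where the polar angle jumps. -/
lemma gauss_cone (K : Set (ℝ × ℝ)) (a b : ℝ) (hK : MeasurableSet K) (hab : a ≤ b)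
    (ha : -Real.pi < a) (hb : b < Real.pi)
    (h : ∀ r φ : ℝ, 0 < r → φ ∈ Set.Ioo (-Real.pi) Real.pi →
      ((r * Real.cos φ, r * Real.sin φ) ∈ K ↔ φ ∈ Set.Icc a b)) :
    ((gaussianReal 0 1).prod (gaussianReal 0 1)).real K = (b - a) / (2 * Real.pi) := by
  obtain ⟨I, hI⟩ := gauss_cone_aux
  have h1 := hI Set.univ (Set.Ioo (-Real.pi) Real.pi) MeasurableSet.univ measurableSet_Ioo
    subset_rfl (fun r φ _ hφ => by simp [hφ.1, hφ.2])
  rw [measure_univ, Real.volume_Ioo] at h1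
  have h2 := hI K (Set.Icc a b) hK measurableSet_Icc
    (fun x hx => ⟨ha.trans_le hx.1, hx.2.trans_lt hb⟩) h
  rw [Real.volume_Icc] at h2
  have h1' := congrArg ENNReal.toReal h1
  rw [ENNReal.toReal_mul, ENNReal.toReal_ofReal (by linarith [Real.pi_pos])] at h1'
  rw [measureReal_def, h2, ENNReal.toReal_mul, ENNReal.toReal_ofReal (by linarith)]
  have := Real.pi_pos
  rw [ENNReal.toReal_one] at h1'
  field_simp
  linear_combination (-(b - a)) * h1'

/-! ### Reflection symmetry -/

lemma gRow_neg {q : ℕ} (v : NNReal) : MeasurePreserving (fun r : Fin q → ℝ => -r) (gRow q v)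
    (gRow q v) := by
  have := measurePreserving_pi (fun _ : Fin q => gaussianReal 0 v) (fun _ : Fin q => gaussianReal 0 v)
    (f := fun _ => fun x => -x)
    (fun _ => ⟨measurable_neg, by rw [gaussianReal_map_neg]; simp⟩)
  exact this

lemma neg_dot {q : ℕ} (r z : Fin q → ℝ) : dot (-r) z = -dot r z := by
  simp [dot]

lemma integral_symm {q : ℕ} (v : NNReal) (f : (Fin q → ℝ) → ℝ) :
    ∫ r, f (-r) ∂(gRow q v) = ∫ r, f r ∂(gRow q v) :=
  (gRow_neg v).integral_comp (MeasurableEquiv.neg _).measurableEmbedding f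

lemma ae_dot_ne {q : ℕ} {v : NNReal} {h : Fin q → ℝ} (hv : v ≠ 0) (hh : h ≠ 0) :
    ∀ᵐ r ∂(gRow q v), dot r h ≠ 0 := by
  have : (gRow q v).map (fun r => dot r h) {0} = 0 := by
    rw [map_dot]
    have : v * Real.toNNReal (l2 h ^ 2) ≠ 0 := by
      refine mul_ne_zero hv ?_
      have := l2_pos hh
      simp only [ne_eq, Real.toNNReal_eq_zero, not_le]; positivity
    have := nullSingletonClass_gaussianReal (μ := 0) this
    exact measure_singleton 0
  rw [Measure.map_apply (measurable_dot h) (measurableSet_singleton 0)] at this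
  exact measure_eq_zero_iff_ae_notMem.1 this

/-- indicator of the half line `[0,∞)` -/
def ind (t : ℝ) : ℝ := if 0 ≤ t then 1 else 0

lemma ind_nonneg (t : ℝ) : 0 ≤ ind t := by unfold ind; split_ifs <;> norm_num
lemma ind_le_one (t : ℝ) : ind t ≤ 1 := by unfold ind; split_ifs <;> norm_num
lemma abs_ind_le (t : ℝ) : |ind t| ≤ 1 := by
  rw [abs_of_nonneg (ind_nonneg t)]; exact ind_le_one t
lemma ind_add_neg {t : ℝ} (h : t ≠ 0) : ind t + ind (-t) = 1 := by
  unfold ind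
  rcases lt_or_gt_of_ne h with h | h
  · rw [if_neg (by linarith), if_pos (by linarith)]; norm_num
  · rw [if_pos h.le, if_neg (by linarith)]; norm_num
lemma measurable_ind : Measurable ind :=
  Measurable.ite measurableSet_Ici measurable_const measurable_const

/-- Reflection `r ↦ -r`: an even function has half of its integral on the half-space `dot r h ≥ 0`. -/
lemma integral_half {q : ℕ} {v : NNReal} {h : Fin q → ℝ} (hv : v ≠ 0) (hh : h ≠ 0)
    (X : (Fin q → ℝ) → ℝ) (hX : Integrable X (gRow q v)) (he : ∀ r, X (-r) = X r) :
    ∫ r, ind (dot r h) * X r ∂(gRow q v) = (∫ r, X r ∂(gRow q v)) / 2 := by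
  have hm : Measurable fun r : Fin q → ℝ => ind (dot r h) := measurable_ind.comp (measurable_dot h)
  have hm' : Measurable fun r : Fin q → ℝ => ind (-dot r h) :=
    measurable_ind.comp (measurable_dot h).neg
  have i1 : Integrable (fun r => ind (dot r h) * X r) (gRow q v) :=
    hX.bdd_mul hm.aestronglyMeasurable (c := 1) (Filter.Eventually.of_forall fun r => abs_ind_le _)
  have i2 : Integrable (fun r => ind (-dot r h) * X r) (gRow q v) :=
    hX.bdd_mul hm'.aestronglyMeasurable (c := 1) (Filter.Eventually.of_forall fun r => abs_ind_le _)
  have h1 := integral_symm v (fun r => ind (dot r h) * X r)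
  simp only [neg_dot, he] at h1
  have h2 : ∫ r, X r ∂(gRow q v) =
      ∫ r, (ind (dot r h) * X r + ind (-dot r h) * X r) ∂(gRow q v) := by
    refine integral_congr_ae ?_
    filter_upwards [ae_dot_ne hv hh] with r hr
    rw [← add_mul, ind_add_neg hr, one_mul]
  rw [integral_add i1 i2, h1] at h2
  linarith

lemma integrable_dot_sq {q : ℕ} {v : NNReal} {z : Fin q → ℝ} (hz : v * l2 z ^ 2 = 1) :
    Integrable (fun r => dot r z ^ 2) (gRow q v) :=
  (subExp_dot hz (X := fun r => dot r z ^ 2) ((measurable_dot z).pow_const 2) (fun r => by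
    rw [abs_of_nonneg (sq_nonneg _)]; linarith)).integrable

lemma integral_dot_sq {q : ℕ} {v : NNReal} {z : Fin q → ℝ} (hz : v * l2 z ^ 2 = 1) :
    ∫ r, dot r z ^ 2 ∂(gRow q v) = 1 := by
  have := integral_dot_std hz (f := fun x => x ^ 2) (by fun_prop)
  rw [this, integral_sq_std]

lemma var_ne_zero {q : ℕ} {v : NNReal} {z : Fin q → ℝ} (hz : v * l2 z ^ 2 = 1) : v ≠ 0 := by
  rintro rfl; simp at hz

lemma integral_ind_sq {q : ℕ} {v : NNReal} {h z : Fin q → ℝ} (hh : h ≠ 0)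
    (hz : v * l2 z ^ 2 = 1) :
    ∫ r, ind (dot r h) * dot r z ^ 2 ∂(gRow q v) = 1 / 2 := by
  rw [integral_half (var_ne_zero hz) hh _ (integrable_dot_sq hz) (fun r => by rw [neg_dot, neg_sq]),
    integral_dot_sq hz]

lemma integral_ind {q : ℕ} {v : NNReal} {h : Fin q → ℝ} (hv : v ≠ 0) (hh : h ≠ 0) :
    ∫ r, ind (dot r h) ∂(gRow q v) = 1 / 2 := by
  have := integral_half hv hh (fun _ => 1) (integrable_const _) (fun _ => rfl)
  simpa using this

/-- Sheppard's formula for the probability that two correlated Gaussians are both nonnegative. -/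
lemma sheppard {q : ℕ} {v : NNReal} {a b : Fin q → ℝ} (ha : v * l2 a ^ 2 = 1)
    (hb : v * l2 b ^ 2 = 1) (hc : 0 ≤ dot a b) :
    ∫ r, ind (dot r a) * ind (dot r b) ∂(gRow q v) =
      1 / 4 + Real.arcsin (v * dot a b) / (2 * Real.pi) := by
  have hpi := Real.pi_pos
  set c : ℝ := v * dot a b with hcdef
  have hc0 : 0 ≤ c := mul_nonneg v.2 hc
  have hv := var_ne_zero ha
  have hv' : (0:ℝ) < v := by positivity
  have hdist : v * l2 (a - b) ^ 2 = 2 - 2 * c := by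
    rw [l2_sub_sq]; linear_combination ha + hb
  have hc1 : c ≤ 1 := by nlinarith [sq_nonneg (l2 (a - b))]
  rcases eq_or_lt_of_le hc1 with hc1 | hc1
  · have hab : a = b := by
      have : l2 (a - b) ^ 2 = 0 := by
        rw [hc1] at hdist
        have : (v:ℝ) * l2 (a - b) ^ 2 = 0 := by linarith
        exact (mul_eq_zero.1 this).resolve_left hv'.ne'
      exact sub_eq_zero.1 (l2_eq_zero.1 (by simpa using this))
    subst hab
    have ha0 : a ≠ 0 := by
      rintro rfl; simp [l2_zero] at ha
    have : ∀ r : Fin q → ℝ, ind (dot r a) * ind (dot r a) = ind (dot r a) := by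
      intro r; unfold ind; split_ifs <;> norm_num
    simp only [this]
    rw [integral_ind hv ha0, hc1, Real.arcsin_one]
    field_simp; norm_num
  · set β := Real.arcsin c with hβ
    have hsinβ : Real.sin β = c := Real.sin_arcsin (by linarith) hc1.le
    have hβ0 : 0 ≤ β := Real.arcsin_nonneg.2 hc0
    have hβ1 : β < Real.pi / 2 := Real.arcsin_lt_pi_div_two.2 hc1
    have hcosβ : 0 < Real.cos β := Real.cos_pos_of_mem_Ioo ⟨by linarith, hβ1⟩
    set s := Real.cos β with hs
    have hs2 : s ^ 2 = 1 - c ^ 2 := by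
      have := Real.sin_sq_add_cos_sq β
      rw [hsinβ] at this; linarith
    set e : Fin q → ℝ := s⁻¹ • (b - c • a) with he
    have hae : dot a e = 0 := by
      have : c = v * dot a b := rfl
      rw [he, dot_smul, dot_sub, dot_smul, dot_self]
      have h3 : dot a b - c * l2 a ^ 2 = 0 := by
        rw [this]; linear_combination (- dot a b) * ha
      rw [h3, mul_zero]
    have hee : v * l2 e ^ 2 = 1 := by
      rw [he, l2_smul, mul_pow, sq_abs, l2_sub_sq, l2_smul, mul_pow, sq_abs, dot_smul, dot_comm b a,
        inv_pow]
      rw [mul_left_comm, inv_mul_eq_iff_eq_mul₀ (by positivity), hs2]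
      linear_combination hb + c ^ 2 * ha + 2 * c * hcdef
    have hbe : b = c • a + s • e := by
      rw [he, smul_smul, mul_inv_cancel₀ hcosβ.ne', one_smul]; abel
    set K : Set (ℝ × ℝ) := {p | 0 ≤ p.1 ∧ 0 ≤ c * p.1 + s * p.2} with hK
    have hKm : MeasurableSet K :=
      (measurableSet_le measurable_const measurable_fst).inter
        (measurableSet_le (f := fun _ : ℝ × ℝ => (0:ℝ)) (g := fun p : ℝ × ℝ => c * p.1 + s * p.2)
          measurable_const (by fun_prop))
    have hpm : Measurable (fun r : Fin q → ℝ => (dot r a, dot r e)) :=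
      (measurable_dot a).prodMk (measurable_dot e)
    have h1 : ∀ r : Fin q → ℝ, ind (dot r a) * ind (dot r b) =
        ((fun r => (dot r a, dot r e)) ⁻¹' K).indicator 1 r := by
      intro r
      have hrb : dot r b = c * dot r a + s * dot r e := by
        rw [hbe, dot_add, dot_smul, dot_smul]
      unfold ind
      by_cases h1 : 0 ≤ dot r a <;> by_cases h2 : 0 ≤ dot r b
      · rw [Set.indicator_of_mem (show r ∈ (fun r => (dot r a, dot r e)) ⁻¹' K from ⟨h1, by rw [hrb] at h2; exact h2⟩)]; simp [h1, h2]
      · rw [Set.indicator_of_notMem (show r ∉ (fun r => (dot r a, dot r e)) ⁻¹' K from fun h => h2 (by rw [hrb]; exact h.2))]; simp [h2]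
      · rw [Set.indicator_of_notMem (show r ∉ (fun r => (dot r a, dot r e)) ⁻¹' K from fun h => h1 h.1)]; simp [h1]
      · rw [Set.indicator_of_notMem (show r ∉ (fun r => (dot r a, dot r e)) ⁻¹' K from fun h => h1 h.1)]; simp [h1]
    simp only [h1]
    rw [integral_indicator_one (hpm hKm), measureReal_def, ← Measure.map_apply hpm hKm,
      map_dot_pair ha hee hae, ← measureReal_def,
      gauss_cone K (-β) (Real.pi / 2) hKm (by linarith) (by linarith) (by linarith)]
    · field_simp; ring
    · intro r φ hr hφ
      simp only [hK, Set.mem_ofPred_eq, Set.mem_Icc]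
      have e2 : c * (r * Real.cos φ) + s * (r * Real.sin φ) = r * Real.sin (φ + β) := by
        rw [Real.sin_add, hsinβ]; ring
      rw [e2, mul_nonneg_iff_of_pos_left hr, mul_nonneg_iff_of_pos_left hr]
      constructor
      · rintro ⟨h1, h2⟩
        have hle : φ ≤ Real.pi / 2 := by
          by_contra hcon
          have := Real.cos_neg_of_pi_div_two_lt_of_lt (not_le.1 hcon) (by linarith [hφ.2])
          linarith
        have hge : -(Real.pi / 2) ≤ φ := by
          by_contra hcon
          have := Real.cos_neg_of_pi_div_two_lt_of_lt (x := -φ) (by linarith [not_le.1 hcon])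
            (by linarith [hφ.1])
          rw [Real.cos_neg] at this
          linarith
        refine ⟨?_, hle⟩
        by_contra hcon
        have := Real.sin_neg_of_neg_of_neg_pi_lt (x := φ + β) (by linarith [not_le.1 hcon])
          (by linarith)
        linarith
      · rintro ⟨h1, h2⟩
        exact ⟨Real.cos_nonneg_of_mem_Icc ⟨by linarith, h2⟩,
          Real.sin_nonneg_of_nonneg_of_le_pi (by linarith) (by linarith)⟩

/-! ### Mean separation of two ReLU features -/

/-- Summing the squared ReLU difference over the reflection loses at most half of `(A - B) ^ 2`, and
loses nothing unless the signs differ, which forces `|A + B| ≤ |A - B|`. -/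
lemma relu_pair_symm (A B : ℝ) :
    (A - B) ^ 2 - 1 / 2 * (if |A + B| ≤ |A - B| then (A - B) ^ 2 else 0) ≤
      (max A 0 - max B 0) ^ 2 + (max (-A) 0 - max (-B) 0) ^ 2 := by
  rcases le_total 0 A with hA | hA <;> rcases le_total 0 B with hB | hB
  · rw [max_eq_left hA, max_eq_left hB, max_eq_right (by linarith), max_eq_right (by linarith)]
    split_ifs <;> nlinarith [sq_nonneg (A - B)]
  · have : |A + B| ≤ |A - B| := by
      rw [abs_of_nonneg (by linarith : (0:ℝ) ≤ A - B), abs_le]; constructor <;> linarith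
    rw [if_pos this, max_eq_left hA, max_eq_right hB, max_eq_right (by linarith),
      max_eq_left (by linarith)]
    nlinarith [sq_nonneg (A + B)]
  · have : |A + B| ≤ |A - B| := by
      rw [abs_of_nonpos (by linarith : A - B ≤ 0), abs_le]; constructor <;> linarith
    rw [if_pos this, max_eq_right hA, max_eq_left hB, max_eq_left (by linarith),
      max_eq_right (by linarith)]
    nlinarith [sq_nonneg (A + B)]
  · rw [max_eq_right hA, max_eq_right hB, max_eq_left (by linarith), max_eq_left (by linarith)]
    split_ifs <;> nlinarith [sq_nonneg (A - B)]

lemma abs_relu_sub_le (A B : ℝ) : |max A 0 - max B 0| ≤ |A - B| := by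
  have := abs_max_sub_max_le_abs A B 0
  exact this

lemma cube_le_exp (x : ℝ) : x ^ 2 * |x| ≤ 8 * Real.exp (x ^ 2 / 4) := by
  -- with `y = x²/4`: `|x|³ = 8 y^{3/2} ≤ 8 (1 + y + y²/2)`
  have h := Real.quadratic_le_exp_of_nonneg (show 0 ≤ x ^ 2 / 4 by positivity)
  rw [← sq_abs] at *
  have hx := abs_nonneg x
  set t := |x|
  nlinarith [mul_nonneg hx (sq_nonneg (t - 2)), sq_nonneg (t ^ 2 - 2 * t), sq_nonneg (t - 2),
    sq_nonneg (t ^ 2 - 4)]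

/-- Two-dimensional estimate: the event of opposite signs is rare when `ρ` is small. -/
lemma opp_sign_int {ρ : ℝ} (hρ : 0 ≤ ρ) :
    ∫ p : ℝ × ℝ, (if |p.2| ≤ ρ * |p.1| then p.1 ^ 2 else 0)
      ∂((gaussianReal 0 1).prod (gaussianReal 0 1)) ≤ 12 * ρ := by
  have hms : MeasurableSet {p : ℝ × ℝ | |p.2| ≤ ρ * |p.1|} :=
    measurableSet_le (by fun_prop) (by fun_prop)
  have hInt : Integrable (fun p : ℝ × ℝ => if |p.2| ≤ ρ * |p.1| then p.1 ^ 2 else 0)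
      ((gaussianReal 0 1).prod (gaussianReal 0 1)) := by
    have h0 : Integrable (fun p : ℝ × ℝ => p.1 ^ 2) ((gaussianReal 0 1).prod (gaussianReal 0 1)) :=
      integrable_sq_std.comp_fst _
    refine h0.mono ((Measurable.ite hms (by fun_prop) (by fun_prop)).aestronglyMeasurable)
      (Filter.Eventually.of_forall fun p => ?_)
    split_ifs
    · simp
    · simp; positivity
  rw [integral_prod _ hInt]
  have h1 : ∀ x : ℝ, ∫ y, (if |y| ≤ ρ * |x| then x ^ 2 else 0) ∂(gaussianReal 0 1) ≤
      8 * ρ * Real.exp (x ^ 2 / 4) := by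
    intro x
    have e : (fun y : ℝ => if |y| ≤ ρ * |x| then x ^ 2 else 0) =
        {y : ℝ | |y| ≤ ρ * |x|}.indicator (fun _ => x ^ 2) := by
      ext y; rw [Set.indicator_apply]; rfl
    rw [e, integral_indicator_const _ (measurableSet_le (by fun_prop) (by fun_prop)), smul_eq_mul]
    have h2 := small_ball_std (mul_nonneg hρ (abs_nonneg x))
    have h3 := cube_le_exp x
    nlinarith [sq_nonneg x]
  calc _ ≤ ∫ x, 8 * ρ * Real.exp (x ^ 2 / 4) ∂(gaussianReal 0 1) :=
        integral_mono hInt.integral_prod_left (std_exp_int.const_mul _) h1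
    _ ≤ 12 * ρ := by
        rw [integral_const_mul]; nlinarith [std_exp_bd]

/-- The mean squared distance of two ReLU features of unit vectors at distance `ρ`, relative to `ρ ^ 2`:
the loss against the linear value `1/2` is at most of relative order `ρ`, since the signs differ only
with probability of order `ρ`. -/
lemma sep_mean {q : ℕ} {v : NNReal} {a b e : Fin q → ℝ} {ρ : ℝ} (hρ : 0 < ρ)
    (ha : v * l2 a ^ 2 = 1) (hb : v * l2 b ^ 2 = 1) (hc : 0 ≤ dot a b)
    (he : v * l2 e ^ 2 = 1) (hab : a - b = ρ • e) :
    1 / 4 ≤ ∫ r, ((max (dot r a) 0 - max (dot r b) 0) / ρ) ^ 2 ∂(gRow q v) ∧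
    1 / 2 * (1 - 6 * ρ) ≤ ∫ r, ((max (dot r a) 0 - max (dot r b) 0) / ρ) ^ 2 ∂(gRow q v) := by
  have hv := var_ne_zero ha
  have hv' : (0:ℝ) < v := by positivity
  have hz : ∀ r : Fin q → ℝ, dot r a - dot r b = ρ * dot r e := by
    intro r; rw [← dot_sub, hab, dot_smul]
  have hma := measurable_dot a
  have hmb := measurable_dot b
  have hme := measurable_dot e
  set σ : ℝ := Real.sqrt (v * l2 (a + b) ^ 2) with hσ
  have hadd : v * l2 (a + b) ^ 2 = 2 + 2 * (v * dot a b) := by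
    rw [l2_add_sq]; linear_combination ha + hb
  have hσ2 : σ ^ 2 = v * l2 (a + b) ^ 2 := Real.sq_sqrt (by positivity)
  have hσ1 : 1 ≤ σ := by
    rw [hσ]; apply Real.le_sqrt_of_sq_le
    rw [hadd]; have := mul_nonneg hv'.le hc; linarith
  have hσ0 : 0 < σ := by linarith
  set g : Fin q → ℝ := σ⁻¹ • (a + b) with hg
  have hgg : v * l2 g ^ 2 = 1 := by
    rw [hg, l2_smul, mul_pow, sq_abs, inv_pow, mul_left_comm, ← hσ2,
      inv_mul_cancel₀ (by positivity)]
  have heg : dot e g = 0 := by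
    have h1 : dot (a - b) (a + b) = 0 := by
      rw [sub_dot, dot_add, dot_add, dot_self, dot_self, dot_comm b a]
      have : (v:ℝ) * (l2 a ^ 2 - l2 b ^ 2) = 0 := by linarith
      have := (mul_eq_zero.1 this).resolve_left hv'.ne'
      linarith
    rw [hab, smul_dot] at h1
    rw [hg, dot_smul, (mul_eq_zero.1 h1).resolve_left hρ.ne', mul_zero]
  have hs : ∀ r : Fin q → ℝ, dot r a + dot r b = σ * dot r g := by
    intro r; rw [← dot_add, hg, dot_smul, ← mul_assoc, mul_inv_cancel₀ hσ0.ne', one_mul]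
  set X : (Fin q → ℝ) → ℝ := fun r => ((max (dot r a) 0 - max (dot r b) 0) / ρ) ^ 2 with hX
  have hXm : Measurable X := by fun_prop
  have hXle : ∀ r, X r ≤ dot r e ^ 2 := by
    intro r
    have h1 := abs_relu_sub_le (dot r a) (dot r b)
    rw [hz, abs_mul, abs_of_pos hρ] at h1
    rw [hX]; simp only
    rw [← sq_abs, ← sq_abs (dot r e), abs_div, abs_of_pos hρ]
    have : |max (dot r a) 0 - max (dot r b) 0| / ρ ≤ |dot r e| := by
      rw [div_le_iff₀ hρ]; linarith
    gcongr
  have hXi : Integrable X (gRow q v) :=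
    (subExp_dot he hXm (fun r => by
      rw [abs_of_nonneg (sq_nonneg _)]; linarith [hXle r])).integrable
  have hXn : Integrable (fun r => X (-r)) (gRow q v) :=
    (subExp_dot he (X := fun r => X (-r)) (hXm.comp measurable_neg) (fun r => by
      rw [abs_of_nonneg (sq_nonneg _)]
      have := hXle (-r)
      rw [neg_dot, neg_sq] at this; linarith)).integrable
  have h2X : ∫ r, (X r + X (-r)) ∂(gRow q v) = 2 * ∫ r, X r ∂(gRow q v) := by
    rw [integral_add hXi hXn, integral_symm v X]; ring
  set Y : (Fin q → ℝ) → ℝ := fun r => if |dot r g| ≤ ρ * |dot r e| then dot r e ^ 2 else 0 with hY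
  have hYm : Measurable Y :=
    Measurable.ite (measurableSet_le ((measurable_dot g).abs) (by fun_prop)) (by fun_prop)
      (by fun_prop)
  have hY1 : ∀ r, Y r ≤ dot r e ^ 2 := by
    intro r; simp only [hY]; split_ifs
    · exact le_rfl
    · positivity
  have hY0 : ∀ r, 0 ≤ Y r := by
    intro r; simp only [hY]; split_ifs <;> positivity
  have hYi : Integrable Y (gRow q v) :=
    (subExp_dot he hYm (fun r => by rw [abs_of_nonneg (hY0 r)]; linarith [hY1 r])).integrable
  have hpt : ∀ r, dot r e ^ 2 - 1 / 2 * Y r ≤ X r + X (-r) := by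
    intro r
    have h1 := relu_pair_symm (dot r a) (dot r b)
    rw [hs, hz] at h1
    have h2 : (if |σ * dot r g| ≤ |ρ * dot r e| then (ρ * dot r e) ^ 2 else 0) ≤ ρ ^ 2 * Y r := by
      simp only [hY]
      split_ifs with h3 h4 h4
      · rw [mul_pow]
      · exfalso; apply h4
        rw [abs_mul, abs_mul, abs_of_pos hσ0, abs_of_pos hρ] at h3
        nlinarith [abs_nonneg (dot r g)]
      · positivity
      · simp
    simp only [hX, neg_dot]
    rw [div_pow, div_pow, ← add_div, le_div_iff₀ (by positivity)]
    nlinarith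
  have hEY1 : ∫ r, Y r ∂(gRow q v) ≤ 1 := by
    rw [← integral_dot_sq he]; exact integral_mono hYi (integrable_dot_sq he) hY1
  have hEY2 : ∫ r, Y r ∂(gRow q v) ≤ 12 * ρ := by
    have := opp_sign_int hρ.le
    rw [← map_dot_pair he hgg heg, integral_map (hme.prodMk (measurable_dot g)).aemeasurable] at this
    · exact this
    · exact (Measurable.ite (measurableSet_le (by fun_prop) (by fun_prop)) (by fun_prop)
        (by fun_prop)).aestronglyMeasurable
  have hlow : 1 - 1 / 2 * ∫ r, Y r ∂(gRow q v) ≤ 2 * ∫ r, X r ∂(gRow q v) := by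
    have h1 := integral_sub (integrable_dot_sq he) (hYi.const_mul (1 / 2))
    rw [integral_dot_sq he, integral_const_mul] at h1
    rw [← h2X, ← h1]
    exact integral_mono ((integrable_dot_sq he).sub (hYi.const_mul _)) (hXi.add hXn) hpt
  constructor <;> linarith

/-! ### Concentration for one fresh Gaussian matrix -/

lemma relu_eq_signOf {p : ℕ} (g : Fin p → ℝ) : relu g = signOf g * g := by
  ext k
  simp only [relu, signOf, Pi.mul_apply]
  split_ifs with h
  · rw [max_eq_left h, one_mul]
  · rw [max_eq_right (not_le.1 h).le, zero_mul]

lemma signOf_eq_ind {p : ℕ} (g : Fin p → ℝ) (k : Fin p) : signOf g k = ind (g k) := rfl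

lemma ind_sq (t : ℝ) : ind t ^ 2 = ind t := by unfold ind; split_ifs <;> norm_num

/-- The factor that turns `z` into a vector whose linear form is standard normal on a row with
variance `2/m`. -/
def nrm {q : ℕ} (m : ℕ) (z : Fin q → ℝ) : ℝ := Real.sqrt (m / 2) / l2 z

lemma nrm_sq {q m : ℕ} (z : Fin q → ℝ) : nrm m z ^ 2 = (m / 2) / l2 z ^ 2 := by
  rw [nrm, div_pow, Real.sq_sqrt (by positivity)]

lemma nrm_pos {q m : ℕ} (hm : 0 < m) {z : Fin q → ℝ} (hz : z ≠ 0) : 0 < nrm m z := by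
  have := l2_pos hz
  have hm' : (0:ℝ) < m := by exact_mod_cast hm
  unfold nrm; positivity

lemma nrm_std {q m : ℕ} (hm : 0 < m) {z : Fin q → ℝ} (hz : z ≠ 0) :
    ((2 / m : NNReal) : ℝ) * l2 (nrm m z • z) ^ 2 = 1 := by
  have h0 := l2_pos hz
  have hm' : (0:ℝ) < m := by exact_mod_cast hm
  rw [l2_smul, mul_pow, sq_abs, nrm_sq]
  push_cast
  field_simp

/-- The sign pattern of `M h` keeps half of the energy of `M z`, even when `z` depends on `h`: by the
symmetry `r ↦ -r` of the rows, the mean is exactly `l2 z ^ 2`. -/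
lemma fresh_diag {q m : ℕ} (hm : 0 < m) {h : Fin q → ℝ} (hh : h ≠ 0) (z : Fin q → ℝ) {τ : ℝ}
    (h0 : 0 ≤ τ) (h1 : τ ≤ 120) :
    gaussMat m q (2 / m) {M | (1 + τ) * l2 z ^ 2 <
        l2 (signOf (mulVec M h) * mulVec M z) ^ 2} ≤
      ENNReal.ofReal (Real.exp (-(m * τ ^ 2 / 8640))) := by
  rcases eq_or_ne z 0 with rfl | hz
  · simp [mulVec_zero, l2_zero]
  have hm' : (0:ℝ) < m := by exact_mod_cast hm
  have hl := l2_pos hz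
  have hstd := nrm_std hm hz
  have hS := subExp_dot hstd (X := fun r => ind (dot r h) * dot r (nrm m z • z) ^ 2)
    ((measurable_ind.comp (measurable_dot h)).mul ((measurable_dot _).pow_const 2)) (fun r => by
      rw [abs_of_nonneg (mul_nonneg (ind_nonneg _) (sq_nonneg _))]
      nlinarith [ind_le_one (dot r h), sq_nonneg (dot r (nrm m z • z)), ind_nonneg (dot r h)])
  refine (measure_mono fun M hM => ?_).trans ((hS.conc_le m (a := 1 / 2) (τ := τ / 2)
    (integral_ind_sq hh hstd).le (by positivity) (by linarith)).trans_eq ?_)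
  · simp only [Set.mem_ofPred_eq] at hM ⊢
    rw [l2_sq (signOf (mulVec M h) * mulVec M z)] at hM
    have e : ∑ k, ind (dot (M k) h) * dot (M k) (nrm m z • z) ^ 2 =
        nrm m z ^ 2 * ∑ k, (signOf (mulVec M h) * mulVec M z) k ^ 2 := by
      rw [Finset.mul_sum]
      refine Finset.sum_congr rfl fun k _ => ?_
      rw [dot_smul, Pi.mul_apply, signOf_eq_ind, mul_pow, mul_pow, ind_sq, mulVec_eq_dot,
        mulVec_eq_dot]
      ring
    rw [e, nrm_sq, div_mul_eq_mul_div, lt_div_iff₀ (by positivity)]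
    nlinarith
  · congr 2; ring

lemma fresh_norm_ge {q m : ℕ} (hm : 0 < m) (z : Fin q → ℝ) {τ : ℝ}
    (h0 : 0 ≤ τ) (h1 : τ ≤ 120) :
    gaussMat m q (2 / m) {M | l2 (relu (mulVec M z)) ^ 2 < (1 - τ) * l2 z ^ 2} ≤
      ENNReal.ofReal (Real.exp (-(m * τ ^ 2 / 8640))) := by
  rcases eq_or_ne z 0 with rfl | hz
  · have : ∀ x : ℝ, ¬ x ^ 2 < 0 := fun x => not_lt.2 (sq_nonneg x)
    simp [l2_zero, this]
  have hm' : (0:ℝ) < m := by exact_mod_cast hm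
  have hl := l2_pos hz
  have hstd := nrm_std hm hz
  have hS := subExp_dot hstd (X := fun r => ind (dot r z) * dot r (nrm m z • z) ^ 2)
    ((measurable_ind.comp (measurable_dot z)).mul ((measurable_dot _).pow_const 2)) (fun r => by
      rw [abs_of_nonneg (mul_nonneg (ind_nonneg _) (sq_nonneg _))]
      nlinarith [ind_le_one (dot r z), sq_nonneg (dot r (nrm m z • z)), ind_nonneg (dot r z)])
  refine (measure_mono fun M hM => ?_).trans ((hS.conc_ge m (a := 1 / 2) (τ := τ / 2)
    (integral_ind_sq hz hstd).ge (by positivity) (by linarith)).trans_eq ?_)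
  · simp only [Set.mem_ofPred_eq] at hM ⊢
    rw [l2_sq, relu_eq_signOf] at hM
    have e : ∑ k, ind (dot (M k) z) * dot (M k) (nrm m z • z) ^ 2 =
        nrm m z ^ 2 * ∑ k, (signOf (mulVec M z) * mulVec M z) k ^ 2 := by
      rw [Finset.mul_sum]
      refine Finset.sum_congr rfl fun k _ => ?_
      rw [dot_smul, Pi.mul_apply, signOf_eq_ind, mul_pow, mul_pow, ind_sq, mulVec_eq_dot]
      ring
    rw [e, nrm_sq, div_mul_eq_mul_div, div_lt_iff₀ (by positivity)]
    nlinarith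
  · congr 2; ring

lemma fresh_op {q m : ℕ} (hm : 0 < m) (z : Fin q → ℝ) :
    gaussMat m q (2 / m) {M | 202 * l2 z ^ 2 < l2 (mulVec M z) ^ 2} ≤
      ENNReal.ofReal (Real.exp (-(4 * m))) := by
  rcases eq_or_ne z 0 with rfl | hz
  · simp [mulVec_zero, l2_zero]
  have hm' : (0:ℝ) < m := by exact_mod_cast hm
  have hl := l2_pos hz
  have hstd := nrm_std hm hz
  have hS := subExp_dot hstd (X := fun r => dot r (nrm m z • z) ^ 2)
    ((measurable_dot _).pow_const 2) (fun r => by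
      rw [abs_of_nonneg (sq_nonneg _)]; linarith)
  refine (measure_mono fun M hM => ?_).trans ((hS.conc_le m (a := 1) (τ := 100)
    (integral_dot_sq hstd).le (by positivity) (by norm_num)).trans ?_)
  · simp only [Set.mem_ofPred_eq] at hM ⊢
    rw [l2_sq (mulVec M z)] at hM
    have e : ∑ k, dot (M k) (nrm m z • z) ^ 2 = nrm m z ^ 2 * ∑ k, (mulVec M z) k ^ 2 := by
      rw [Finset.mul_sum]
      refine Finset.sum_congr rfl fun k _ => ?_
      rw [dot_smul, mul_pow, mulVec_eq_dot]
    rw [e, nrm_sq, div_mul_eq_mul_div, lt_div_iff₀ (by positivity)]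
    nlinarith
  · apply ENNReal.ofReal_le_ofReal; apply Real.exp_le_exp.2; linarith

/-- Few coordinates of a Gaussian vector lie in a window of relative width `β` around zero. -/
lemma fresh_count {q m : ℕ} (hm : 0 < m) {z : Fin q → ℝ} (hz : z ≠ 0) {β : ℝ}
    (h0 : 0 ≤ β) (h1 : β ≤ 120) :
    gaussMat m q (2 / m) {M | 2 * β * m <
        ((Finset.univ.filter fun k => |mulVec M z k| * Real.sqrt m ≤ β * l2 z).card : ℝ)} ≤
      ENNReal.ofReal (Real.exp (-(m * β ^ 2 / 2160))) := by
  have hm' : (0:ℝ) < m := by exact_mod_cast hm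
  have hl := l2_pos hz
  have hstd := nrm_std hm hz
  have hms : MeasurableSet {x : ℝ | |x| ≤ β} := measurableSet_le (by fun_prop) (by fun_prop)
  set f : ℝ → ℝ := fun x => if |x| ≤ β then 1 else 0 with hf
  have hfm : Measurable f := Measurable.ite hms measurable_const measurable_const
  have hf0 : ∀ x, 0 ≤ f x := fun x => by simp only [hf]; split_ifs <;> norm_num
  have hf1 : ∀ x, f x ≤ 1 := fun x => by simp only [hf]; split_ifs <;> norm_num
  have hS := subExp_dot hstd (X := fun r => f (dot r (nrm m z • z)))
    (hfm.comp (measurable_dot _)) (fun r => by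
      rw [abs_of_nonneg (hf0 _)]; nlinarith [hf1 (dot r (nrm m z • z))])
  have hmean : ∫ r, f (dot r (nrm m z • z)) ∂(gRow q (2 / m)) ≤ β := by
    rw [integral_dot_std hstd hfm]
    have : f = {x : ℝ | |x| ≤ β}.indicator 1 := by ext x; simp [hf, Set.indicator_apply]
    rw [this, integral_indicator_one hms]
    exact small_ball_std h0
  refine (measure_mono fun M hM => ?_).trans (hS.conc_le m (a := β) (τ := β) hmean h0 h1)
  simp only [Set.mem_ofPred_eq] at hM ⊢
  have : ((Finset.univ.filter fun k => |mulVec M z k| * Real.sqrt m ≤ β * l2 z).card : ℝ) ≤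
      ∑ k, f (dot (M k) (nrm m z • z)) := by
    rw [Finset.card_filter, Nat.cast_sum]
    refine Finset.sum_le_sum fun k _ => ?_
    split_ifs with h
    · have : f (dot (M k) (nrm m z • z)) = 1 := by
        simp only [hf]
        rw [if_pos]
        rw [dot_smul, abs_mul, abs_of_pos (nrm_pos hm hz), nrm, div_mul_eq_mul_div,
          div_le_iff₀ hl]
        refine le_trans ?_ h
        rw [mul_comm, mulVec_eq_dot]
        have : Real.sqrt (m / 2) ≤ Real.sqrt m := Real.sqrt_le_sqrt (by linarith)
        gcongr
      rw [this]; simp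
    · simpa using hf0 _
  nlinarith

/-- One random ReLU layer almost preserves the distance of two unit vectors at an acute angle. -/
lemma fresh_sep {q m : ℕ} (hm : 0 < m) {u w : Fin q → ℝ} (hu : l2 u = 1) (hw : l2 w = 1)
    (huw : 0 ≤ dot u w) {τ : ℝ} (h0 : 0 ≤ τ) (h1 : τ ≤ 120) :
    gaussMat m q (2 / m) {M | l2 (relu (mulVec M u) - relu (mulVec M w)) ^ 2 <
        l2 (u - w) ^ 2 * (max (1 / 2) (1 - 6 * l2 (u - w)) - τ)} ≤
      ENNReal.ofReal (Real.exp (-(m * τ ^ 2 / 8640))) := by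
  set ρ := l2 (u - w) with hρdef
  rcases eq_or_ne (u - w) 0 with h | h
  · have : ∀ x : ℝ, ¬ x ^ 2 < 0 := fun x => not_lt.2 (sq_nonneg x)
    have e : ρ = 0 := by rw [hρdef, h, l2_zero]
    simp [e, this]
  have hρ : 0 < ρ := l2_pos h
  have hm' : (0:ℝ) < m := by exact_mod_cast hm
  have hu0 : u ≠ 0 := by rintro rfl; simp [l2_zero] at hu
  have hw0 : w ≠ 0 := by rintro rfl; simp [l2_zero] at hw
  have hsu := nrm_std hm hu0
  have hsw := nrm_std hm hw0
  have hse := nrm_std hm h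
  have hnu : nrm m u = Real.sqrt (m / 2) := by rw [nrm, hu, div_one]
  have hnw : nrm m w = Real.sqrt (m / 2) := by rw [nrm, hw, div_one]
  have hne : nrm m (u - w) = Real.sqrt (m / 2) / ρ := rfl
  have hc := sep_mean hρ hsu hsw
    (by rw [dot_smul, smul_dot, hnu, hnw]; positivity) hse (by
      rw [hnu, hnw, hne, smul_smul, mul_div_cancel₀ _ hρ.ne', smul_sub])
  have hma := measurable_dot (nrm m u • u)
  have hmb := measurable_dot (nrm m w • w)
  have hS := subExp_dot hse (X := fun r => ((max (dot r (nrm m u • u)) 0 -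
      max (dot r (nrm m w • w)) 0) / ρ) ^ 2) (by fun_prop) (fun r => by
      rw [abs_of_nonneg (sq_nonneg _)]
      have h1 := abs_relu_sub_le (dot r (nrm m u • u)) (dot r (nrm m w • w))
      have h2 : dot r (nrm m u • u) - dot r (nrm m w • w) = ρ * dot r (nrm m (u - w) • (u - w)) := by
        rw [dot_smul, dot_smul, dot_smul, hnu, hnw, hne, dot_sub]; field_simp
      rw [h2, abs_mul, abs_of_pos hρ] at h1
      rw [← sq_abs, ← sq_abs (dot r (nrm m (u - w) • (u - w))), abs_div, abs_of_pos hρ]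
      have h3 : |max (dot r (nrm m u • u)) 0 - max (dot r (nrm m w • w)) 0| / ρ ≤
          |dot r (nrm m (u - w) • (u - w))| := by
        rw [div_le_iff₀ hρ]; linarith
      have := pow_le_pow_left₀ (by positivity) h3 2
      linarith)
  refine (measure_mono fun M hM => ?_).trans ((hS.conc_ge m
    (a := 1 / 2 * max (1 / 2) (1 - 6 * ρ)) (τ := τ / 2)
    (by
      rcases le_total (1 / 2) (1 - 6 * ρ) with h | h
      · rw [max_eq_right h]; exact hc.2
      · rw [max_eq_left h]; linarith [hc.1]) (by positivity) (by linarith)).trans_eq ?_)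
  · simp only [Set.mem_ofPred_eq] at hM ⊢
    have e : ∑ k, ((max (dot (M k) (nrm m u • u)) 0 -
      max (dot (M k) (nrm m w • w)) 0) / ρ) ^ 2 = (m / 2) / ρ ^ 2 *
        l2 (relu (mulVec M u) - relu (mulVec M w)) ^ 2 := by
      rw [l2_sq (relu (mulVec M u) - relu (mulVec M w)), Finset.mul_sum]
      refine Finset.sum_congr rfl fun k _ => ?_
      rw [dot_smul, dot_smul, hnu, hnw]
      have hs : Real.sqrt (m / 2) ^ 2 = m / 2 := Real.sq_sqrt (by positivity)
      have e3 : ∀ x : ℝ, max (Real.sqrt (m / 2) * x) 0 = Real.sqrt (m / 2) * max x 0 := by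
        intro x; rw [mul_max_of_nonneg _ _ (Real.sqrt_nonneg _), mul_zero]
      rw [e3, e3, Pi.sub_apply, relu, relu, mulVec_eq_dot, mulVec_eq_dot, ← mul_sub, div_pow,
        mul_pow, hs]
      ring
    rw [e, div_mul_eq_mul_div, div_lt_iff₀ (by positivity)]
    nlinarith
  · congr 2; ring

/-- The number of coordinates where both features are active concentrates around the value given by
Sheppard's formula for the orthant probability. -/
lemma fresh_sheppard {q m : ℕ} (hm : 0 < m) {u w : Fin q → ℝ} (hu : l2 u = 1) (hw : l2 w = 1)
    (huw : 0 ≤ dot u w) {τ : ℝ} (h0 : 0 ≤ τ) (h1 : τ ≤ 120) :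
    gaussMat m q (2 / m) {M | τ * m < |∑ k, ind (mulVec M u k) * ind (mulVec M w k) -
        m * (1 / 4 + Real.arcsin (dot u w) / (2 * Real.pi))|} ≤
      ENNReal.ofReal (2 * Real.exp (-(m * τ ^ 2 / 2160))) := by
  have hm' : (0:ℝ) < m := by exact_mod_cast hm
  have hu0 : u ≠ 0 := by rintro rfl; simp [l2_zero] at hu
  have hw0 : w ≠ 0 := by rintro rfl; simp [l2_zero] at hw
  have hsu := nrm_std hm hu0
  have hsw := nrm_std hm hw0
  have hnu : nrm m u = Real.sqrt (m / 2) := by rw [nrm, hu, div_one]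
  have hnw : nrm m w = Real.sqrt (m / 2) := by rw [nrm, hw, div_one]
  have hpos : 0 < Real.sqrt (m / 2) := by positivity
  have hdot : dot (nrm m u • u) (nrm m w • w) = m / 2 * dot u w := by
    have hs : Real.sqrt (m / 2) ^ 2 = m / 2 := Real.sq_sqrt (by positivity)
    rw [dot_smul, smul_dot, hnu, hnw]; linear_combination (dot u w) * hs
  have hmean := sheppard hsu hsw (by rw [hdot]; positivity)
  rw [hdot] at hmean
  have e1 : ((2 / m : NNReal) : ℝ) * (m / 2 * dot u w) = dot u w := by
    push_cast; field_simp
  rw [e1] at hmean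
  have hi : ∀ c t : ℝ, 0 < c → ind (c * t) = ind t := by
    intro c t hc; unfold ind; simp only [mul_nonneg_iff_of_pos_left hc]
  have hX : ∀ r : Fin q → ℝ, ind (dot r (nrm m u • u)) * ind (dot r (nrm m w • w)) =
      ind (dot r u) * ind (dot r w) := by
    intro r; rw [dot_smul, dot_smul, hnu, hnw, hi _ _ hpos, hi _ _ hpos]
  simp only [hX] at hmean
  have hS := subExp_dot hsu (X := fun r => ind (dot r u) * ind (dot r w))
    ((measurable_ind.comp (measurable_dot u)).mul (measurable_ind.comp (measurable_dot w)))
    (fun r => by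
      rw [abs_mul]
      nlinarith [abs_ind_le (dot r u), abs_ind_le (dot r w), abs_nonneg (ind (dot r u)),
        abs_nonneg (ind (dot r w))])
  have hsub : {M : Fin m → Fin q → ℝ | τ * m < |∑ k, ind (mulVec M u k) * ind (mulVec M w k) -
        m * (1 / 4 + Real.arcsin (dot u w) / (2 * Real.pi))|} ⊆
      {M | m * ((1 / 4 + Real.arcsin (dot u w) / (2 * Real.pi)) + τ) <
        ∑ k, ind (dot (M k) u) * ind (dot (M k) w)} ∪
      {M | ∑ k, ind (dot (M k) u) * ind (dot (M k) w) <
        m * ((1 / 4 + Real.arcsin (dot u w) / (2 * Real.pi)) - τ)} := by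
    intro M hM
    simp only [Set.mem_ofPred_eq, mulVec_eq_dot] at hM
    rcases lt_abs.1 hM with h | h
    · left; simp only [Set.mem_ofPred_eq]; linarith
    · right; simp only [Set.mem_ofPred_eq]; linarith
  refine (measure_mono hsub).trans ((measure_union_le _ _).trans ?_)
  refine (add_le_add (hS.conc_le m hmean.le h0 h1) (hS.conc_ge m hmean.ge h0 h1)).trans_eq ?_
  rw [← ENNReal.ofReal_add (Real.exp_pos _).le (Real.exp_pos _).le, two_mul]

/-- Gram concentration for the rows of a matrix with variance `1/d`, over the subset of rows
selected by `w`. -/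
lemma fresh_gram {d m : ℕ} (hd : 0 < d) (u : Fin d → ℝ) (w : Fin m → ℝ)
    (hw : ∀ k, w k = 0 ∨ w k = 1) {τ : ℝ} (h0 : 0 ≤ τ) (h1 : τ ≤ 120) :
    gaussMat m d (1 / d) {M | τ * m * (l2 u ^ 2 / d) <
        |∑ k, w k * (dot (M k) u ^ 2 - l2 u ^ 2 / d)|} ≤
      ENNReal.ofReal (2 * Real.exp (-(m * τ ^ 2 / 2160))) := by
  rcases eq_or_ne u 0 with rfl | hu
  · simp [dot, l2_zero]
  have hd' : (0:ℝ) < d := by exact_mod_cast hd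
  have hl := l2_pos hu
  set c := Real.sqrt d / l2 u with hc
  have hc2 : c ^ 2 = d / l2 u ^ 2 := by rw [hc, div_pow, Real.sq_sqrt hd'.le]
  have hstd : ((1 / d : NNReal) : ℝ) * l2 (c • u) ^ 2 = 1 := by
    rw [l2_smul, mul_pow, sq_abs, hc2]; push_cast; field_simp
  have hS := subExp_dot hstd (X := fun r => dot r (c • u) ^ 2)
    ((measurable_dot _).pow_const 2) (fun r => by rw [abs_of_nonneg (sq_nonneg _)]; linarith)
  have hmean := integral_dot_sq hstd
  have A1 := hS.conc_w m h0 h1 w hw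
  have A2 := hS.neg.conc_w m h0 h1 w hw
  rw [integral_neg] at A2
  rw [hmean] at A1 A2
  have key : ∀ M : Fin m → Fin d → ℝ, ∑ k, w k * (dot (M k) (c • u) ^ 2 - 1) =
      c ^ 2 * ∑ k, w k * (dot (M k) u ^ 2 - l2 u ^ 2 / d) := by
    intro M
    rw [Finset.mul_sum]
    refine Finset.sum_congr rfl fun k _ => ?_
    rw [dot_smul, hc2]; rw [mul_pow, hc2]; field_simp
  have key2 : ∀ M : Fin m → Fin d → ℝ, ∑ k, w k * (-dot (M k) (c • u) ^ 2 - -1) =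
      -(∑ k, w k * (dot (M k) (c • u) ^ 2 - 1)) := by
    intro M
    rw [← Finset.sum_neg_distrib]
    exact Finset.sum_congr rfl fun k _ => by ring
  have hsub : {M : Fin m → Fin d → ℝ | τ * m * (l2 u ^ 2 / d) <
        |∑ k, w k * (dot (M k) u ^ 2 - l2 u ^ 2 / d)|} ⊆
      {M | m * τ ≤ ∑ k, w k * (dot (M k) (c • u) ^ 2 - 1)} ∪
      {M | m * τ ≤ ∑ k, w k * (-dot (M k) (c • u) ^ 2 - -1)} := by
    intro M hM
    simp only [Set.mem_ofPred_eq] at hM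
    have hcp : 0 < c ^ 2 := by rw [hc2]; positivity
    have e : c ^ 2 * (τ * m * (l2 u ^ 2 / d)) = m * τ := by rw [hc2]; field_simp
    rcases lt_abs.1 hM with h | h
    · left
      simp only [Set.mem_ofPred_eq]
      rw [key, ← e]; gcongr
    · right
      simp only [Set.mem_ofPred_eq]
      rw [key2, key, ← e, ← mul_neg]; gcongr
  refine (measure_mono hsub).trans ((measure_union_le _ _).trans ?_)
  refine (add_le_add A1 A2).trans_eq ?_
  rw [← ENNReal.ofReal_add (Real.exp_pos _).le (Real.exp_pos _).le, two_mul]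

lemma map_lin {p q : ℕ} (v : NNReal) (u : Fin p → ℝ) (z : Fin q → ℝ) :
    (gaussMat p q v).map (fun M => dot u (mulVec M z)) =
      gaussianReal 0 (v * Real.toNNReal (l2 z ^ 2) * Real.toNNReal (l2 u ^ 2)) := by
  have h1 : (gaussMat p q v).map (fun M k => dot (M k) z) =
      gRow p (v * Real.toNNReal (l2 z ^ 2)) := by
    unfold gaussMat
    have := fun _ : Fin p => Measure.isProbabilityMeasure_map (μ := gRow q v)
      (measurable_dot z).aemeasurable
    rw [Measure.pi_map_pi (μ := fun _ : Fin p => gRow q v) (f := fun _ r => dot r z)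
      (fun _ => (measurable_dot z).aemeasurable), map_dot]
  rw [← map_dot, ← h1, Measure.map_map (measurable_dot u)]
  · congr 1
    ext M
    simp only [Function.comp]
    rw [dot_comm]; rfl
  · exact measurable_pi_lambda _ fun k => (measurable_dot z).comp (measurable_pi_apply k)

/-- Gaussian tail of the bilinear form `uᵀ M z`. -/
lemma fresh_lin {p q : ℕ} (v : NNReal) (u : Fin p → ℝ) (z : Fin q → ℝ) {t V : ℝ} (ht : 0 ≤ t)
    (hV : 0 < V) (h : v * l2 z ^ 2 * l2 u ^ 2 ≤ V) :
    gaussMat p q v {M | t < |dot u (mulVec M z)|} ≤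
      ENNReal.ofReal (2 * Real.exp (-(t ^ 2 / (2 * V)))) := by
  set σ2 : NNReal := v * Real.toNNReal (l2 z ^ 2) * Real.toNNReal (l2 u ^ 2) with hσ2
  have hσv : (σ2 : ℝ) ≤ V := by
    rw [hσ2]; push_cast
    rw [Real.coe_toNNReal _ (sq_nonneg _), Real.coe_toNNReal _ (sq_nonneg _)]; exact h
  have hmeas : Measurable fun M : Fin p → Fin q → ℝ => dot u (mulVec M z) := by
    unfold dot mulVec; fun_prop
  have e : gaussMat p q v {M | t < |dot u (mulVec M z)|} = gaussianReal 0 σ2 {x | t < |x|} := by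
    rw [hσ2, ← map_lin, Measure.map_apply hmeas (measurableSet_lt measurable_const (by fun_prop))]
    rfl
  rw [e]
  have tail : ∀ s : Set ℝ, s = {x | t ≤ x} ∨ s = {x | t ≤ -x} →
      gaussianReal 0 σ2 s ≤ ENNReal.ofReal (Real.exp (-(t ^ 2 / (2 * V)))) := by
    have h1 : gaussianReal 0 σ2 {x | t ≤ x} ≤ ENNReal.ofReal (Real.exp (-(t ^ 2 / (2 * V)))) := by
      have := measure_ge_le_exp_mul_mgf (μ := gaussianReal 0 σ2) (X := id) t
        (t := t / V) (by positivity)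
        (by simpa using integrable_exp_mul_gaussianReal (μ := 0) (v := σ2) (t / V))
      rw [mgf_id_gaussianReal] at this
      rw [← ENNReal.ofReal_toReal (measure_ne_top (gaussianReal 0 σ2) _)]
      apply ENNReal.ofReal_le_ofReal
      refine this.trans ?_
      rw [← Real.exp_add]; apply Real.exp_le_exp.2
      have h3 : (σ2 : ℝ) * (t / V) ^ 2 / 2 ≤ V * (t / V) ^ 2 / 2 := by gcongr
      have h4 : -(t / V) * t + V * (t / V) ^ 2 / 2 = -(t ^ 2 / (2 * V)) := by field_simp; ring
      linarith
    rintro s (rfl | rfl)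
    · exact h1
    · have h2 : (gaussianReal 0 σ2).map (fun x => -x) = gaussianReal 0 σ2 := by
        rw [gaussianReal_map_neg, neg_zero]
      rw [← h2, Measure.map_apply measurable_neg] at h1
      · exact h1
      · exact measurableSet_le measurable_const measurable_id
  have hsub : {x : ℝ | t < |x|} ⊆ {x | t ≤ x} ∪ {x | t ≤ -x} := by
    intro x hx
    simp only [Set.mem_ofPred_eq] at hx
    rcases lt_abs.1 hx with h | h
    · left; exact h.le
    · right; exact h.le
  refine (measure_mono hsub).trans ((measure_union_le _ _).trans ?_)
  refine (add_le_add (tail _ (Or.inl rfl)) (tail _ (Or.inr rfl))).trans_eq ?_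
  rw [← ENNReal.ofReal_add (Real.exp_pos _).le (Real.exp_pos _).le, ← two_mul]

/-! ### Layer transport -/

/-- `tr W D a b z` is `D_b W_b ⋯ D_{a+1} W_{a+1} z` (equal to `z` when `b ≤ a`), with diagonal
matrices represented by the vectors of their entries. -/
def tr {m : ℕ} (W : ℕ → Fin m → Fin m → ℝ) (D : ℕ → Fin m → ℝ) (a : ℕ) :
    ℕ → (Fin m → ℝ) → Fin m → ℝ
  | 0, z => z
  | b + 1, z => if a ≤ b then D (b + 1) * mulVec (W (b + 1)) (tr W D a b z) else tr W D a b z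

section tr

variable {m : ℕ} (W : ℕ → Fin m → Fin m → ℝ) (D : ℕ → Fin m → ℝ)

lemma tr_of_le {a b : ℕ} (h : b ≤ a) (z : Fin m → ℝ) : tr W D a b z = z := by
  induction b with
  | zero => rfl
  | succ b ih => rw [tr, if_neg (by omega), ih (by omega)]

lemma tr_self (a : ℕ) (z : Fin m → ℝ) : tr W D a a z = z := tr_of_le W D le_rfl z

lemma tr_succ {a b : ℕ} (h : a ≤ b) (z : Fin m → ℝ) :
    tr W D a (b + 1) z = D (b + 1) * mulVec (W (b + 1)) (tr W D a b z) := by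
  rw [tr, if_pos h]

lemma tr_add (a b : ℕ) (y z : Fin m → ℝ) :
    tr W D a b (y + z) = tr W D a b y + tr W D a b z := by
  induction b with
  | zero => rfl
  | succ b ih => simp only [tr]; split_ifs <;> simp [ih, mulVec_add, mul_add]

lemma tr_smul (a b : ℕ) (c : ℝ) (z : Fin m → ℝ) :
    tr W D a b (c • z) = c • tr W D a b z := by
  induction b with
  | zero => rfl
  | succ b ih => simp only [tr]; split_ifs <;> simp [ih, mulVec_smul]

lemma tr_zero (a b : ℕ) : tr W D a b (0 : Fin m → ℝ) = 0 := by
  have := tr_smul W D a b 0 0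
  simpa using this

lemma tr_sub (a b : ℕ) (y z : Fin m → ℝ) :
    tr W D a b (y - z) = tr W D a b y - tr W D a b z := by
  have := tr_add W D a b (y - z) z
  rw [sub_add_cancel] at this
  rw [this]; abel

lemma tr_sum {ι : Type*} (a b : ℕ) (s : Finset ι) (f : ι → Fin m → ℝ) :
    tr W D a b (∑ i ∈ s, f i) = ∑ i ∈ s, tr W D a b (f i) := by
  classical
  induction s using Finset.induction_on with
  | empty => simp [tr_zero]
  | insert i s hi ih => rw [Finset.sum_insert hi, Finset.sum_insert hi, tr_add, ih]

lemma tr_congr {W W' : ℕ → Fin m → Fin m → ℝ} {D D' : ℕ → Fin m → ℝ} {a b : ℕ}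
    (hW : ∀ k, a < k → k ≤ b → W k = W' k) (hD : ∀ k, a < k → k ≤ b → D k = D' k)
    (z : Fin m → ℝ) : tr W D a b z = tr W' D' a b z := by
  induction b with
  | zero => rfl
  | succ b ih =>
    have := ih (fun k h1 h2 => hW k h1 (by omega)) (fun k h1 h2 => hD k h1 (by omega))
    simp only [tr]
    split_ifs with h
    · rw [this, hW _ (by omega) le_rfl, hD _ (by omega) le_rfl]
    · exact this

/-- Duhamel expansion of a perturbed recursion around the unperturbed transport. -/
lemma tr_expand {v f : ℕ → Fin m → ℝ} {q : Fin m → ℝ} {a B : ℕ} (h0 : v a = q + f a)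
    (hs : ∀ b, a ≤ b → b < B → v (b + 1) = D (b + 1) * mulVec (W (b + 1)) (v b) + f (b + 1))
    {b : ℕ} (hab : a ≤ b) (hb : b ≤ B) :
    v b = tr W D a b q + ∑ k ∈ Finset.Icc a b, tr W D k b (f k) := by
  induction b, hab using Nat.le_induction with
  | base => simp [h0, tr_self]
  | succ b hab ih =>
    rw [hs b hab (by omega), ih (by omega), ← Finset.insert_Icc_right_eq_Icc_add_one (by omega),
      Finset.sum_insert (by simp), tr_self, tr_succ W D hab, mulVec_add, mul_add, mulVec_sum,
      Finset.mul_sum]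
    have : ∑ k ∈ Finset.Icc a b, tr W D k (b + 1) (f k) =
        ∑ k ∈ Finset.Icc a b, D (b + 1) * mulVec (W (b + 1)) (tr W D k b (f k)) :=
      Finset.sum_congr rfl fun k hk => tr_succ W D (Finset.mem_Icc.1 hk).2 _
    rw [this]; abel

lemma mulVec_chainProd {L : ℕ} (W : Fin L → Fin m → Fin m → ℝ) {a b : ℕ} (hb : b ≤ L)
    (z : Fin m → ℝ) : mulVec (chainProd W D (a + 1) b) z = tr (Wat W) D a b z := by
  induction b with
  | zero => simp [chainProd, mulVec_idMat, tr]
  | succ b ih =>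
    rw [chainProd, tr]
    by_cases h : a ≤ b
    · rw [if_pos ⟨by omega, hb⟩, if_pos h, mulVec_mmul, mulVec_mmul, ih (by omega), mulVec_diagMat]
    · rw [if_neg (by omega), if_neg h, ih (by omega)]

end tr

/-! ### Dependence of the network on single layers, and measurability -/

section dep

variable {𝔡 m d L : ℕ}

lemma Wat_of (W : Fin L → Fin m → Fin m → ℝ) (k : Fin L) : Wat W (k + 1) = W k := by
  rw [Wat, dif_pos ⟨by omega, k.2⟩]; rfl

lemma Wat_update_self (W : Fin L → Fin m → Fin m → ℝ) (k : Fin L) (M : Fin m → Fin m → ℝ) :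
    Wat (Function.update W k M) (k + 1) = M := by rw [Wat_of, Function.update_self]

lemma Wat_update_ne (W : Fin L → Fin m → Fin m → ℝ) (k : Fin L) (M : Fin m → Fin m → ℝ) {ℓ : ℕ}
    (h : ℓ ≠ k + 1) : Wat (Function.update W k M) ℓ = Wat W ℓ := by
  unfold Wat
  split_ifs with h1
  · rw [Function.update_of_ne]
    intro e; apply h; rw [← e]; simp; omega
  · rfl

lemma hseq_succ (A : Fin m → Fin 𝔡 → ℝ) (W : Fin L → Fin m → Fin m → ℝ) (x : Fin 𝔡 → ℝ) {ℓ : ℕ}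
    (h : ℓ + 1 ≤ L) : hseq A W x (ℓ + 1) = relu (mulVec (Wat W (ℓ + 1)) (hseq A W x ℓ)) := by
  rw [hseq, if_pos h]

lemma hseq_eq_relu (A : Fin m → Fin 𝔡 → ℝ) (W : Fin L → Fin m → Fin m → ℝ) (x : Fin 𝔡 → ℝ) {ℓ : ℕ}
    (h : ℓ ≤ L) : hseq A W x ℓ = relu (gseq A W x ℓ) := by
  cases ℓ with
  | zero => rfl
  | succ ℓ => rw [hseq_succ A W x h, gseq]

lemma hseq_update (A : Fin m → Fin 𝔡 → ℝ) (W : Fin L → Fin m → Fin m → ℝ) (x : Fin 𝔡 → ℝ)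
    (k : Fin L) (M : Fin m → Fin m → ℝ) {ℓ : ℕ} (h : ℓ ≤ k) :
    hseq A (Function.update W k M) x ℓ = hseq A W x ℓ := by
  induction ℓ with
  | zero => rfl
  | succ ℓ ih => simp only [hseq]; rw [ih (by omega), Wat_update_ne _ _ _ (by omega)]

lemma gseq_update (A : Fin m → Fin 𝔡 → ℝ) (W : Fin L → Fin m → Fin m → ℝ) (x : Fin 𝔡 → ℝ)
    (k : Fin L) (M : Fin m → Fin m → ℝ) {ℓ : ℕ} (h : ℓ ≤ k) :
    gseq A (Function.update W k M) x ℓ = gseq A W x ℓ := by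
  cases ℓ with
  | zero => rfl
  | succ ℓ =>
    simp only [gseq]; rw [hseq_update _ _ _ _ _ (by omega), Wat_update_ne _ _ _ (by omega)]

/-- Transport with the sign patterns of the network itself. -/
def T0 (A : Fin m → Fin 𝔡 → ℝ) (W : Fin L → Fin m → Fin m → ℝ) (x : Fin 𝔡 → ℝ) (a b : ℕ)
    (z : Fin m → ℝ) : Fin m → ℝ :=
  tr (Wat W) (fun ℓ => signOf (gseq A W x ℓ)) a b z

lemma T0_update (A : Fin m → Fin 𝔡 → ℝ) (W : Fin L → Fin m → Fin m → ℝ) (x : Fin 𝔡 → ℝ)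
    (k : Fin L) (M : Fin m → Fin m → ℝ) (a : ℕ) {b : ℕ} (h : b ≤ k) (z : Fin m → ℝ) :
    T0 A (Function.update W k M) x a b z = T0 A W x a b z := by
  apply tr_congr
  · intro j _ hj; exact Wat_update_ne _ _ _ (by omega)
  · intro j _ hj; rw [gseq_update _ _ _ _ _ (by omega)]

lemma measurable_mulVec {α : Type*} [MeasurableSpace α] {p q : ℕ} {M : α → Fin p → Fin q → ℝ}
    {v : α → Fin q → ℝ} (hM : Measurable M) (hv : Measurable v) :
    Measurable fun z => mulVec (M z) (v z) := by
  unfold mulVec; fun_prop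

lemma measurable_relu {p : ℕ} : Measurable (relu : (Fin p → ℝ) → _) := by
  unfold relu; fun_prop

lemma measurable_signOf {p : ℕ} : Measurable (signOf : (Fin p → ℝ) → _) :=
  measurable_pi_lambda _ fun k => measurable_ind.comp (measurable_pi_apply k)

lemma measurable_l2 {p : ℕ} : Measurable (l2 : (Fin p → ℝ) → ℝ) := by
  unfold l2; fun_prop

lemma measurable_dot2 {α : Type*} [MeasurableSpace α] {q : ℕ} {u v : α → Fin q → ℝ}
    (hM : Measurable u) (hv : Measurable v) : Measurable fun z => dot (u z) (v z) := by
  unfold dot; fun_prop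

variable {α : Type*} [MeasurableSpace α] {A : α → Fin m → Fin 𝔡 → ℝ}
  {W : α → Fin L → Fin m → Fin m → ℝ}

lemma measurable_Wat (hW : Measurable W) (ℓ : ℕ) : Measurable fun z => Wat (W z) ℓ := by
  unfold Wat
  split_ifs
  · fun_prop
  · fun_prop

lemma measurable_hseq (hA : Measurable A) (hW : Measurable W) (x : Fin 𝔡 → ℝ) (ℓ : ℕ) :
    Measurable fun z => hseq (A z) (W z) x ℓ := by
  induction ℓ with
  | zero => exact measurable_relu.comp (measurable_mulVec hA measurable_const)
  | succ ℓ ih =>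
    simp only [hseq]
    split_ifs
    · exact measurable_relu.comp (measurable_mulVec (measurable_Wat hW _) ih)
    · exact ih

lemma measurable_gseq (hA : Measurable A) (hW : Measurable W) (x : Fin 𝔡 → ℝ) (ℓ : ℕ) :
    Measurable fun z => gseq (A z) (W z) x ℓ := by
  cases ℓ with
  | zero => exact measurable_mulVec hA measurable_const
  | succ ℓ => exact measurable_mulVec (measurable_Wat hW _) (measurable_hseq hA hW x ℓ)

lemma measurable_T0 (hA : Measurable A) (hW : Measurable W) (x : Fin 𝔡 → ℝ) (a b : ℕ)
    (v : Fin m → ℝ) : Measurable fun z => T0 (A z) (W z) x a b v := by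
  unfold T0
  induction b with
  | zero => exact measurable_const
  | succ b ih =>
    simp only [tr]
    split_ifs
    · exact (measurable_signOf.comp (measurable_gseq hA hW x _)).mul
        (measurable_mulVec (measurable_Wat hW _) ih)
    · exact ih

end dep

/-! ### Conditioning on all but one of the random matrices -/

section sec

variable {𝔡 m d L : ℕ}

/-- Sample space of the initialization `(A, W, B)`. -/
abbrev Om (𝔡 m d L : ℕ) : Type :=
  (Fin m → Fin 𝔡 → ℝ) × (Fin L → Fin m → Fin m → ℝ) × (Fin d → Fin m → ℝ)

instance (p q : ℕ) (v : NNReal) : IsProbabilityMeasure (gaussMat p q v) := by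
  unfold gaussMat; infer_instance

instance : IsProbabilityMeasure (initMeasure 𝔡 m d L) := by
  unfold initMeasure; infer_instance

/-- Fubini: a bound on the sections in `A`, uniform in the other matrices, bounds the probability. -/
lemma secA {S : Set (Om 𝔡 m d L)} (hS : MeasurableSet S) {c : ENNReal}
    (h : ∀ W B, gaussMat m 𝔡 (2 / m) {M | (M, W, B) ∈ S} ≤ c) : initMeasure 𝔡 m d L S ≤ c := by
  unfold initMeasure
  rw [Measure.prod_apply_symm hS]
  calc _ ≤ ∫⁻ _, c ∂((Measure.pi fun _ : Fin L => gaussMat m m (2 / m)).prod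
        (gaussMat d m (1 / d))) := lintegral_mono fun y => h y.1 y.2
    _ = c := by simp

lemma secB {S : Set (Om 𝔡 m d L)} (hS : MeasurableSet S) {c : ENNReal}
    (h : ∀ A W, gaussMat d m (1 / d) {M | (A, W, M) ∈ S} ≤ c) : initMeasure 𝔡 m d L S ≤ c := by
  unfold initMeasure
  rw [Measure.prod_apply hS]
  calc _ ≤ ∫⁻ _, c ∂(gaussMat m 𝔡 (2 / m)) := lintegral_mono fun A => by
        rw [Measure.prod_apply (measurable_prodMk_left hS)]
        calc _ ≤ ∫⁻ _, c ∂(Measure.pi fun _ : Fin L => gaussMat m m (2 / m)) :=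
              lintegral_mono fun W => h A W
          _ = c := by simp
    _ = c := by simp

lemma pi_sec {L : ℕ} {X : Type*} [MeasurableSpace X] (μ : Measure X) [IsProbabilityMeasure μ]
    {S : Set (Fin L → X)} (hS : MeasurableSet S) (k : Fin L) {c : ENNReal}
    (h : ∀ W, μ {M | Function.update W k M ∈ S} ≤ c) : (Measure.pi fun _ => μ) S ≤ c := by
  have hm : Measurable (S.indicator (1 : (Fin L → X) → ENNReal)) :=
    measurable_one.indicator hS
  rw [← lintegral_indicator_one hS, lintegral_eq_lmarginal_univ (fun _ => μ.nonempty_of_neZero.some),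
    ← Finset.insert_erase (Finset.mem_univ k), lmarginal_insert' _ hm (Finset.notMem_erase _ _)]
  refine (lmarginal_mono (g := fun _ => c) (fun W => ?_) _).trans_eq ?_
  · have hms : MeasurableSet {M | Function.update W k M ∈ S} :=
      (measurable_update W) hS
    refine le_trans (le_of_eq ?_) (h W)
    rw [← lintegral_indicator_one hms]
    rfl
  · simp [lmarginal]

/-- Fubini: a bound on the sections in the layer `k` alone, uniform in all other matrices, bounds the
probability. -/
lemma secW {S : Set (Om 𝔡 m d L)} (hS : MeasurableSet S) (k : Fin L) {c : ENNReal}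
    (h : ∀ A W B, gaussMat m m (2 / m) {M | (A, Function.update W k M, B) ∈ S} ≤ c) :
    initMeasure 𝔡 m d L S ≤ c := by
  unfold initMeasure
  rw [Measure.prod_apply hS]
  calc _ ≤ ∫⁻ _, c ∂(gaussMat m 𝔡 (2 / m)) := lintegral_mono fun A => by
        rw [Measure.prod_apply_symm (measurable_prodMk_left hS)]
        calc _ ≤ ∫⁻ _, c ∂(gaussMat d m (1 / d)) := lintegral_mono fun B =>
              pi_sec (gaussMat m m (2 / m))
                (measurable_prodMk_right (measurable_prodMk_left hS)) k fun W => h A W B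
          _ = c := by simp
    _ = c := by simp

end sec

/-! ### Probabilities of the elementary failure events at initialization -/

lemma map_transpose (p q : ℕ) (v : NNReal) :
    (gaussMat p q v).map transpose = gaussMat q p v := by
  have hmt : Measurable (transpose : (Fin p → Fin q → ℝ) → _) := by unfold transpose; fun_prop
  refine (Measure.pi_eq_generateFrom
    (C := fun _ : Fin q =>
      Set.image (Set.pi Set.univ) (Set.pi Set.univ fun _ : Fin p => {s : Set ℝ | MeasurableSet s}))
    (fun _ => generateFrom_pi) (fun _ => isPiSystem_pi) (fun _ =>
      ⟨fun _ => Set.univ, fun _ => ⟨fun _ => Set.univ, fun _ _ => by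
        simp only [Set.mem_ofPred_eq]; exact MeasurableSet.univ, Set.pi_univ _⟩, fun _ => measure_lt_top _ _, Set.iUnion_const _⟩) ?_).symm
  intro s hs
  choose t ht hts using hs
  have ht' : ∀ j i, MeasurableSet (t j i) := fun j i => ht j i (Set.mem_univ i)
  have e : (transpose : (Fin p → Fin q → ℝ) → _) ⁻¹' (Set.pi Set.univ s) =
      Set.pi Set.univ fun i => Set.pi Set.univ fun j => t j i := by
    ext M
    simp only [Set.mem_preimage, Set.mem_pi, Set.mem_univ, forall_true_left, ← hts, transpose]
    exact forall_comm
  have hms : MeasurableSet (Set.pi Set.univ s) := by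
    refine MeasurableSet.univ_pi fun j => ?_
    rw [← hts]; exact MeasurableSet.univ_pi fun i => ht' j i
  rw [Measure.map_apply hmt hms, e, gaussMat, Measure.pi_pi]
  simp only [Measure.pi_pi, ← hts]
  exact Finset.prod_comm

section events

variable {𝔡 m d L : ℕ}

lemma ms_ne {α : Type*} [MeasurableSpace α] {p : ℕ} {f : α → Fin p → ℝ} (hf : Measurable f) :
    MeasurableSet {z | f z ≠ 0} := (measurableSet_singleton 0).compl.preimage hf

lemma ms_and {α : Type*} [MeasurableSpace α] {p q : α → Prop} (hp : MeasurableSet {z | p z})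
    (hq : MeasurableSet {z | q z}) : MeasurableSet {z | p z ∧ q z} := hp.inter hq

lemma mA : Measurable fun z : Om 𝔡 m d L => z.1 := measurable_fst
lemma mW : Measurable fun z : Om 𝔡 m d L => z.2.1 := measurable_fst.comp measurable_snd
lemma mB : Measurable fun z : Om 𝔡 m d L => z.2.2 := measurable_snd.comp measurable_snd

/-- Normalization to a unit vector (zero stays zero). -/
def unit {p : ℕ} (z : Fin p → ℝ) : Fin p → ℝ := (l2 z)⁻¹ • z

lemma l2_unit {p : ℕ} {z : Fin p → ℝ} (hz : z ≠ 0) : l2 (unit z) = 1 := by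
  have := l2_pos hz
  rw [unit, l2_smul, abs_of_pos (inv_pos.2 this), inv_mul_cancel₀ this.ne']

lemma smul_unit {p : ℕ} (z : Fin p → ℝ) : l2 z • unit z = z := by
  rcases eq_or_ne z 0 with rfl | hz
  · simp [unit]
  · rw [unit, smul_smul, mul_inv_cancel₀ (l2_pos hz).ne', one_smul]

lemma measurable_unit {p : ℕ} : Measurable (unit : (Fin p → ℝ) → _) := by
  have := measurable_l2 (p := p)
  unfold unit; fun_prop

lemma relu_smul {p : ℕ} {c : ℝ} (hc : 0 ≤ c) (z : Fin p → ℝ) : relu (c • z) = c • relu z := by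
  ext k; simp only [relu, Pi.smul_apply, smul_eq_mul]
  rw [mul_max_of_nonneg _ _ hc, mul_zero]

lemma relu_nonneg {p : ℕ} (z : Fin p → ℝ) (k : Fin p) : 0 ≤ relu z k := le_max_right _ _

lemma hseq_nonneg (A : Fin m → Fin 𝔡 → ℝ) (W : Fin L → Fin m → Fin m → ℝ) (x : Fin 𝔡 → ℝ)
    (ℓ : ℕ) (k : Fin m) : 0 ≤ hseq A W x ℓ k := by
  induction ℓ with
  | zero => exact relu_nonneg _ _
  | succ ℓ ih => simp only [hseq]; split_ifs; exacts [relu_nonneg _ _, ih]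

lemma dot_nonneg {p : ℕ} {u v : Fin p → ℝ} (hu : ∀ k, 0 ≤ u k) (hv : ∀ k, 0 ≤ v k) :
    0 ≤ dot u v := Finset.sum_nonneg fun k _ => mul_nonneg (hu k) (hv k)

lemma unit_dot_nonneg {p : ℕ} {u v : Fin p → ℝ} (h : 0 ≤ dot u v) : 0 ≤ dot (unit u) (unit v) := by
  rw [unit, unit, dot_smul, smul_dot]
  have := l2_nonneg u
  have := l2_nonneg v
  positivity

/-- One layer applied to the transport of `v`, which depends on the layers up to `k` only, so that
`W_{k+1}` is fresh. -/
lemma ev_diag (hm : 0 < m) (x : Fin 𝔡 → ℝ) (a : ℕ) (k : Fin L) (v : Fin m → ℝ) {τ : ℝ}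
    (h0 : 0 ≤ τ) (h1 : τ ≤ 120) :
    initMeasure 𝔡 m d L {z | hseq z.1 z.2.1 x k ≠ 0 ∧ (1 + τ) * l2 (T0 z.1 z.2.1 x a k v) ^ 2 <
        l2 (signOf (gseq z.1 z.2.1 x (k + 1)) *
          mulVec (Wat z.2.1 (k + 1)) (T0 z.1 z.2.1 x a k v)) ^ 2} ≤
      ENNReal.ofReal (Real.exp (-(m * τ ^ 2 / 8640))) := by
  refine secW ?_ k ?_
  · refine ms_and (ms_ne (measurable_hseq mA mW x k)) (measurableSet_lt ?_ ?_)
    · exact ((measurable_l2.comp (measurable_T0 mA mW x a k v)).pow_const 2).const_mul _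
    · exact (measurable_l2.comp ((measurable_signOf.comp (measurable_gseq mA mW x _)).mul
        (measurable_mulVec (measurable_Wat mW _) (measurable_T0 mA mW x a k v)))).pow_const 2
  · intro A W B
    by_cases hh : hseq A W x k = 0
    · simp [hseq_update, hh]
    · refine le_trans (measure_mono fun M hM => ?_) (fresh_diag hm hh (T0 A W x a k v) h0 h1)
      simp only [Set.mem_ofPred_eq, gseq, Wat_update_self, T0_update _ _ _ _ _ _ le_rfl,
        hseq_update _ _ _ _ _ le_rfl] at hM ⊢
      exact hM.2

lemma ev_lin (hm : 0 < m) (x : Fin 𝔡 → ℝ) (a : ℕ) (k : Fin L) (u v : Fin m → ℝ) (hu : l2 u ≤ 1)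
    {t : ℝ} (h0 : 0 ≤ t) :
    initMeasure 𝔡 m d L {z | l2 (T0 z.1 z.2.1 x a k v) ≤ 2 ∧
        t < |dot u (mulVec (Wat z.2.1 (k + 1)) (T0 z.1 z.2.1 x a k v))|} ≤
      ENNReal.ofReal (2 * Real.exp (-(t ^ 2 * m / 16))) := by
  have hm' : (0:ℝ) < m := by exact_mod_cast hm
  refine secW ?_ k ?_
  · refine ms_and (measurableSet_le (measurable_l2.comp (measurable_T0 mA mW x a k v))
      measurable_const) (measurableSet_lt measurable_const ?_)
    exact (measurable_dot2 measurable_const (measurable_mulVec (measurable_Wat mW _)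
      (measurable_T0 mA mW x a k v))).abs
  · intro A W B
    by_cases hh : l2 (T0 A W x a k v) ≤ 2
    · refine le_trans (measure_mono fun M hM => ?_) ((fresh_lin (2 / m) u (T0 A W x a k v) h0
        (V := 8 / m) (by positivity) ?_).trans_eq ?_)
      · simp only [Set.mem_ofPred_eq, Wat_update_self, T0_update _ _ _ _ _ _ le_rfl] at hM ⊢
        exact hM.2
      · push_cast
        have e1 : l2 (T0 A W x a k v) ^ 2 ≤ 4 := by nlinarith [l2_nonneg (T0 A W x a k v)]
        have e2 : l2 u ^ 2 ≤ 1 := by nlinarith [l2_nonneg u]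
        calc 2 / (m:ℝ) * l2 (T0 A W x a k v) ^ 2 * l2 u ^ 2 ≤ 2 / (m:ℝ) * 4 * 1 := by gcongr
          _ = 8 / m := by ring
      · congr 3; field_simp; ring
    · simp [T0_update, hh]

lemma ev_linB (hd : 0 < d) (f : (Fin m → Fin 𝔡 → ℝ) → (Fin L → Fin m → Fin m → ℝ) → Fin m → ℝ)
    (hf : Measurable fun z : Om 𝔡 m d L => f z.1 z.2.1) (w : Fin d → ℝ)
    (hw : l2 w ≤ 1) {t : ℝ} (h0 : 0 ≤ t) :
    initMeasure 𝔡 m d L {z | l2 (f z.1 z.2.1) ≤ 2 ∧ t < |dot w (mulVec z.2.2 (f z.1 z.2.1))|} ≤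
      ENNReal.ofReal (2 * Real.exp (-(t ^ 2 * d / 8))) := by
  have hd' : (0:ℝ) < d := by exact_mod_cast hd
  refine secB ?_ ?_
  · refine ms_and (measurableSet_le (measurable_l2.comp hf)
      measurable_const) (measurableSet_lt measurable_const ?_)
    exact (measurable_dot2 measurable_const (measurable_mulVec mB hf)).abs
  · intro A W
    by_cases hh : l2 (f A W) ≤ 2
    · refine le_trans (measure_mono fun M hM => ?_) ((fresh_lin (1 / d) w (f A W) h0
        (V := 4 / d) (by positivity) ?_).trans_eq ?_)
      · simp only [Set.mem_ofPred_eq] at hM ⊢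
        exact hM.2
      · push_cast
        have e1 : l2 (f A W) ^ 2 ≤ 4 := by nlinarith [l2_nonneg (f A W)]
        have e2 : l2 w ^ 2 ≤ 1 := by nlinarith [l2_nonneg w]
        calc 1 / (d:ℝ) * l2 (f A W) ^ 2 * l2 w ^ 2 ≤ 1 / (d:ℝ) * 4 * 1 := by gcongr
          _ = 4 / d := by ring
      · congr 3; field_simp; ring
    · simp [hh]

lemma ev_op (hm : 0 < m) (k : Fin L) (v : Fin m → ℝ) :
    initMeasure 𝔡 m d L {z | 202 * l2 v ^ 2 < l2 (mulVec (Wat z.2.1 (k + 1)) v) ^ 2} ≤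
      ENNReal.ofReal (Real.exp (-(4 * m))) := by
  refine secW ?_ k ?_
  · exact measurableSet_lt measurable_const ((measurable_l2.comp
      (measurable_mulVec (measurable_Wat mW _) measurable_const)).pow_const 2)
  · intro A W B
    simp only [Set.mem_ofPred_eq, Wat_update_self]
    exact fresh_op hm v

/-- A layer of the network seen as one fresh Gaussian matrix: `W_{k+1}` acts on the vectors
`h_k(x_i)`, which do not depend on it. Any bound valid for one Gaussian matrix acting on fixed
vectors holds for that layer. -/
lemma ev_layer {n : ℕ} (x : Fin n → Fin 𝔡 → ℝ) (k : Fin L)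
    (P : (Fin n → Fin m → ℝ) → (Fin m → Fin m → ℝ) → Prop)
    (hP : MeasurableSet {z : (Fin n → Fin m → ℝ) × (Fin m → Fin m → ℝ) | P z.1 z.2})
    {c : ENNReal} (h : ∀ H : Fin n → Fin m → ℝ, (∀ i j, 0 ≤ H i j) →
      gaussMat m m (2 / m) {M | P H M} ≤ c) :
    initMeasure 𝔡 m d L
      {z | P (fun i => hseq z.1 z.2.1 (x i) k) (Wat z.2.1 (k + 1))} ≤ c := by
  refine secW ?_ k ?_
  · have : Measurable fun z : Om 𝔡 m d L =>
        ((fun i => hseq z.1 z.2.1 (x i) k), Wat z.2.1 (k + 1)) :=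
      (measurable_pi_lambda _ fun i => measurable_hseq mA mW (x i) k).prodMk (measurable_Wat mW _)
    exact this hP
  · intro A W B
    simp only [Set.mem_ofPred_eq, Wat_update_self, hseq_update _ _ _ _ _ le_rfl]
    exact h _ fun i j => hseq_nonneg _ _ _ _ _

/-- For 0-1 weights `f` determined by `A` and `W`, the weighted sum of the squared entries of `Bᵀ u`
concentrates around its conditional mean. -/
lemma ev_gram (hd : 0 < d) (u : Fin d → ℝ)
    (f : (Fin m → Fin 𝔡 → ℝ) → (Fin L → Fin m → Fin m → ℝ) → Fin m → ℝ)
    (hf : Measurable fun z : Om 𝔡 m d L => f z.1 z.2.1) (hf1 : ∀ A W k, f A W k = 0 ∨ f A W k = 1)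
    {τ : ℝ} (h0 : 0 ≤ τ) (h1 : τ ≤ 120) :
    initMeasure 𝔡 m d L {z | τ * m * (l2 u ^ 2 / d) <
        |∑ k, f z.1 z.2.1 k * (dot (transpose z.2.2 k) u ^ 2 - l2 u ^ 2 / d)|} ≤
      ENNReal.ofReal (2 * Real.exp (-(m * τ ^ 2 / 2160))) := by
  have hmt : Measurable (transpose : (Fin d → Fin m → ℝ) → _) := by unfold transpose; fun_prop
  refine secB ?_ ?_
  · refine measurableSet_lt measurable_const (Measurable.abs ?_)
    refine Finset.measurable_sum _ fun k _ => ?_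
    refine ((measurable_pi_apply k).comp hf).mul (Measurable.sub_const (Measurable.pow_const ?_ 2) _)
    exact measurable_dot2 ((measurable_pi_apply k).comp (hmt.comp mB)) measurable_const
  · intro A W
    have := fresh_gram (m := m) hd u (f A W) (hf1 A W) h0 h1
    rw [← map_transpose, Measure.map_apply hmt] at this
    · exact this
    · refine measurableSet_lt measurable_const (Measurable.abs ?_)
      refine Finset.measurable_sum _ fun k _ => ?_
      refine Measurable.const_mul (Measurable.sub_const (Measurable.pow_const ?_ 2) _) _
      exact measurable_dot2 (measurable_pi_apply k) measurable_const

lemma union_bd {Ω ι : Type*} [MeasurableSpace Ω] {μ : Measure Ω} (F : Finset ι) (S : ι → Set Ω)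
    {p N : ℝ} (h : ∀ i ∈ F, μ (S i) ≤ ENNReal.ofReal p) (hN : (F.card : ℝ) ≤ N) :
    μ {z | ∃ i ∈ F, z ∈ S i} ≤ ENNReal.ofReal (N * p) := by
  have e : {z | ∃ i ∈ F, z ∈ S i} = ⋃ i ∈ F, S i := by ext; simp
  rw [e]
  refine (measure_biUnion_finset_le F S).trans ((Finset.sum_le_sum h).trans ?_)
  rw [Finset.sum_const, nsmul_eq_mul, ENNReal.ofReal_mul (le_trans (by positivity) hN)]
  gcongr
  rw [← ENNReal.ofReal_natCast]
  exact ENNReal.ofReal_le_ofReal hN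

end events

/-! ### Stability of the network near a good initialization -/

section stab

variable {𝔡 m d L : ℕ}

/-- The properties of the initialization, for one input `x`, on which the perturbation analysis
rests: operator norms of single layers, of the transport on dense and on `s`-sparse vectors, of
the transport followed by one more layer and restricted to `s` coordinates, norms of the forward
vectors, and the number of small preactivations. -/
structure ChainGood (A : Fin m → Fin 𝔡 → ℝ) (W : Fin L → Fin m → Fin m → ℝ)
    (B : Fin d → Fin m → ℝ) (x : Fin 𝔡 → ℝ) (s : ℕ) (P K σ ν κ β : ℝ) : Prop where
  op : ∀ k, 1 ≤ k → k ≤ L → ∀ v, l2 (mulVec (Wat W k) v) ≤ 30 * l2 v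
  opB : ∀ v, l2 (mulVec B v) ≤ κ * l2 v
  dense : ∀ a b v, b ≤ L → l2 (T0 A W x a b v) ≤ P * l2 v
  sparse : ∀ a b v (S : Finset (Fin m)), b ≤ L → S.card ≤ s → Supp S v →
    l2 (T0 A W x a b v) ≤ 4 * l2 v
  wsp : ∀ a b (S R : Finset (Fin m)) e, b + 1 ≤ L → S.card ≤ s → R.card ≤ s → Supp R e →
    l2 (res S (mulVec (Wat W (b + 1)) (T0 A W x a b e))) ≤ σ * l2 e
  wde : ∀ a b (S : Finset (Fin m)) r, b + 1 ≤ L → S.card ≤ s →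
    l2 (res S (mulVec (Wat W (b + 1)) (T0 A W x a b r))) ≤ K * l2 r
  bsp : ∀ a (R : Finset (Fin m)) e, R.card ≤ s → Supp R e →
    l2 (mulVec B (T0 A W x a L e)) ≤ ν * l2 e
  hlo : ∀ ℓ, ℓ ≤ L → 1 / 2 ≤ l2 (hseq A W x ℓ)
  hhi : ∀ ℓ, ℓ ≤ L → l2 (hseq A W x ℓ) ≤ 2
  count : ∀ ℓ, 1 ≤ ℓ → ℓ ≤ L →
    ((Finset.univ.filter fun k => |gseq A W x ℓ k| * Real.sqrt m ≤ β / 2).card : ℝ) ≤ 2 * β * m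
  hP : 1 ≤ P
  hK : 1 ≤ K
  hσ : 0 ≤ σ
  hν : 0 ≤ ν
  hκ : 0 ≤ κ
  hβ : 0 < β
  hs : 6 * β * m ≤ s
  hσL : 4 * ((L + 1) * σ) ≤ 1

variable {A : Fin m → Fin 𝔡 → ℝ} {W : Fin L → Fin m → Fin m → ℝ}
  {B : Fin d → Fin m → ℝ} {x : Fin 𝔡 → ℝ} {s : ℕ} {P K σ ν κ β : ℝ}

lemma sum_Icc_le {a b : ℕ} (hb : b ≤ L) {f : ℕ → ℝ} {c : ℝ} (hc : 0 ≤ c)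
    (h : ∀ k, a ≤ k → k ≤ b → f k ≤ c) : ∑ k ∈ Finset.Icc a b, f k ≤ (L + 1) * c := by
  calc ∑ k ∈ Finset.Icc a b, f k ≤ ∑ k ∈ Finset.Icc a b, c :=
        Finset.sum_le_sum fun k hk => h k (Finset.mem_Icc.1 hk).1 (Finset.mem_Icc.1 hk).2
    _ = ((b + 1 - a : ℕ) : ℝ) * c := by rw [Finset.sum_const, Nat.card_Icc, nsmul_eq_mul]
    _ ≤ (L + 1) * c := by
        gcongr
        have : b + 1 - a ≤ L + 1 := by omega
        exact_mod_cast this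

lemma res_sum {p : ℕ} {ι : Type*} (S : Finset (Fin p)) (t : Finset ι) (f : ι → Fin p → ℝ) :
    res S (∑ i ∈ t, f i) = ∑ i ∈ t, res S (f i) := by
  ext k; by_cases h : k ∈ S <;> simp [res, h, Finset.sum_apply]

/-- The sequence `v` starts at `q` in layer `a`, is transported through the layers with the initial
sign patterns, and receives in every layer an injection `f + R` with `f` sparse and `R` small. -/
structure Inj (A : Fin m → Fin 𝔡 → ℝ) (W : Fin L → Fin m → Fin m → ℝ) (x : Fin 𝔡 → ℝ) (s : ℕ)
    (q : Fin m → ℝ) (v f R : ℕ → Fin m → ℝ) (S : ℕ → Finset (Fin m)) (a b : ℕ) (E ρ : ℝ) :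
    Prop where
  init : v a = q + (f a + R a)
  step : ∀ c, a ≤ c → c < b → v (c + 1) =
    signOf (gseq A W x (c + 1)) * mulVec (Wat W (c + 1)) (v c) + (f (c + 1) + R (c + 1))
  card : ∀ c, a ≤ c → c ≤ b → (S c).card ≤ s
  supp : ∀ c, a ≤ c → c ≤ b → Supp (S c) (f c)
  fle : ∀ c, a ≤ c → c ≤ b → l2 (f c) ≤ E
  Rle : ∀ c, a ≤ c → c ≤ b → l2 (R c) ≤ ρ

namespace Inj

variable {q : Fin m → ℝ} {v f R : ℕ → Fin m → ℝ} {S : ℕ → Finset (Fin m)} {a b : ℕ} {E ρ : ℝ}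

lemma expand (h : Inj A W x s q v f R S a b E ρ) (hab : a ≤ b) :
    v b = T0 A W x a b q + ∑ k ∈ Finset.Icc a b, (T0 A W x k b (f k) + T0 A W x k b (R k)) := by
  rw [tr_expand (Wat W) (fun ℓ => signOf (gseq A W x ℓ)) (f := fun k => f k + R k) h.init h.step hab
    le_rfl]
  simp only [T0, tr_add]

lemma E_nonneg (h : Inj A W x s q v f R S a b E ρ) (hab : a ≤ b) : 0 ≤ E :=
  (l2_nonneg _).trans (h.fle a le_rfl hab)

lemma ρ_nonneg (h : Inj A W x s q v f R S a b E ρ) (hab : a ≤ b) : 0 ≤ ρ :=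
  (l2_nonneg _).trans (h.Rle a le_rfl hab)

lemma norm_le (g : ChainGood A W B x s P K σ ν κ β) (h : Inj A W x s q v f R S a b E ρ)
    (hab : a ≤ b) (hb : b ≤ L) : l2 (v b) ≤ P * l2 q + (L + 1) * (4 * E + P * ρ) := by
  have hE := h.E_nonneg hab
  have hρ := h.ρ_nonneg hab
  have hP := g.hP
  rw [h.expand hab]
  refine (l2_add_le _ _).trans (add_le_add (g.dense _ _ _ hb) ((l2_sum_le _ _).trans
    (sum_Icc_le hb (by positivity) fun k h1 h2 => (l2_add_le _ _).trans (add_le_add ?_ ?_))))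
  · refine (g.sparse _ _ _ _ hb (h.card k h1 h2) (h.supp k h1 h2)).trans ?_
    linarith [h.fle k h1 h2]
  · refine (g.dense _ _ _ hb).trans ?_
    gcongr; exact h.Rle k h1 h2

lemma res_le (g : ChainGood A W B x s P K σ ν κ β) (h : Inj A W x s q v f R S a b E ρ)
    (hab : a ≤ b) (hb : b + 1 ≤ L) {U : Finset (Fin m)} (hU : U.card ≤ s) :
    l2 (res U (mulVec (Wat W (b + 1)) (v b))) ≤ K * l2 q + (L + 1) * (σ * E + K * ρ) := by
  have hE := h.E_nonneg hab
  have hρ := h.ρ_nonneg hab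
  have hK := g.hK
  have hσ := g.hσ
  rw [h.expand hab, mulVec_add, res_add, mulVec_sum, res_sum]
  refine (l2_add_le _ _).trans (add_le_add (g.wde _ _ _ _ hb hU) ((l2_sum_le _ _).trans
    (sum_Icc_le (b := b) (by omega) (by positivity) fun k h1 h2 => ?_)))
  rw [mulVec_add, res_add]
  refine (l2_add_le _ _).trans (add_le_add ?_ ?_)
  · refine (g.wsp _ _ _ _ _ hb hU (h.card k h1 h2) (h.supp k h1 h2)).trans ?_
    gcongr; exact h.fle k h1 h2
  · refine (g.wde _ _ _ _ hb hU).trans ?_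
    gcongr; exact h.Rle k h1 h2

lemma out_le (g : ChainGood A W B x s P K σ ν κ β) (h : Inj A W x s q v f R S a L E ρ)
    (hab : a ≤ L) :
    l2 (mulVec B (v L) - mulVec B (T0 A W x a L q)) ≤ (L + 1) * (ν * E + κ * (P * ρ)) := by
  have hE := h.E_nonneg hab
  have hρ := h.ρ_nonneg hab
  have hP := g.hP
  have hν := g.hν
  have hκ := g.hκ
  rw [h.expand hab, mulVec_add, add_sub_cancel_left, mulVec_sum]
  refine (l2_sum_le _ _).trans (sum_Icc_le (b := L) le_rfl (by positivity) fun k h1 h2 => ?_)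
  rw [mulVec_add]
  refine (l2_add_le _ _).trans (add_le_add ?_ ?_)
  · refine (g.bsp _ _ _ (h.card k h1 h2) (h.supp k h1 h2)).trans ?_
    gcongr; exact h.fle k h1 h2
  · refine (g.opB _).trans ?_
    gcongr
    refine (g.dense _ _ _ le_rfl).trans ?_
    gcongr; exact h.Rle k h1 h2

end Inj

/-- Per-layer operator-norm closeness of two weight tuples. -/
def Close (W W1 : Fin L → Fin m → Fin m → ℝ) (ω : ℝ) : Prop :=
  ∀ k, 1 ≤ k → k ≤ L → ∀ v, l2 (mulVec (Wat W1 k - Wat W k) v) ≤ ω * l2 v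

/-- Diagonals that agree with the initial sign patterns off at most `s` coordinates per layer. -/
structure NearD (A : Fin m → Fin 𝔡 → ℝ) (W : Fin L → Fin m → Fin m → ℝ) (x : Fin 𝔡 → ℝ) (s : ℕ)
    (D : ℕ → Fin m → ℝ) (S : ℕ → Finset (Fin m)) : Prop where
  nonneg : ∀ k j, 0 ≤ D k j
  le_one : ∀ k j, D k j ≤ 1
  eq : ∀ k j, 1 ≤ k → k ≤ L → j ∉ S k → D k j = signOf (gseq A W x k) j
  card : ∀ k, 1 ≤ k → k ≤ L → (S k).card ≤ s

lemma signOf_nonneg {p : ℕ} (g : Fin p → ℝ) (k : Fin p) : 0 ≤ signOf g k := ind_nonneg _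
lemma signOf_le_one {p : ℕ} (g : Fin p → ℝ) (k : Fin p) : signOf g k ≤ 1 := ind_le_one _

lemma NearD.abs_le {D : ℕ → Fin m → ℝ} {S : ℕ → Finset (Fin m)} (h : NearD A W x s D S) (k : ℕ)
    (j : Fin m) : |D k j| ≤ 1 := by
  rw [abs_of_nonneg (h.nonneg k j)]; exact h.le_one k j

lemma NearD.abs_sub_le {D : ℕ → Fin m → ℝ} {S : ℕ → Finset (Fin m)} (h : NearD A W x s D S) (k : ℕ)
    (j : Fin m) : |(D k - signOf (gseq A W x k)) j| ≤ 1 := by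
  rw [Pi.sub_apply, _root_.abs_le]
  constructor <;> linarith [h.nonneg k j, h.le_one k j, signOf_nonneg (gseq A W x k) j,
    signOf_le_one (gseq A W x k) j]

lemma NearD.sub_zero {D : ℕ → Fin m → ℝ} {S : ℕ → Finset (Fin m)} (h : NearD A W x s D S) {k : ℕ}
    (h1 : 1 ≤ k) (h2 : k ≤ L) (j : Fin m) (hj : j ∉ S k) : (D k - signOf (gseq A W x k)) j = 0 := by
  rw [Pi.sub_apply, h.eq k j h1 h2 hj, sub_self]

/-- Bound for the norm of a perturbed transport. -/
def KV (L : ℕ) (P K : ℝ) : ℝ := 2 * P + 16 * K * (L + 1)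

/-- Perturbed transports `D_b W_b ⋯ W_{a+1} D_a z` stay close to the initial ones. -/
lemma chain_near (g : ChainGood A W B x s P K σ ν κ β) {W1 : Fin L → Fin m → Fin m → ℝ} {ω : ℝ}
    (hω : 0 ≤ ω) (hc : Close W W1 ω) {D : ℕ → Fin m → ℝ} {S : ℕ → Finset (Fin m)}
    (hD : NearD A W x s D S) (hsm : (L + 1) * (ω * KV L P K) ≤ 1) {a : ℕ} (ha1 : 1 ≤ a) (ha : a ≤ L)
    (z : Fin m → ℝ) :
    (∀ b, a ≤ b → b ≤ L → l2 (tr (Wat W1) D a b (D a * z)) ≤ KV L P K * l2 z) ∧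
    l2 (mulVec B (tr (Wat W1) D a L (D a * z)) -
      mulVec B (T0 A W x a L (signOf (gseq A W x a) * z))) ≤
      (L + 1) * (ν * (4 * K) + κ * (P * (ω * KV L P K))) * l2 z := by
  have hP := g.hP
  have hK := g.hK
  have hKV : 0 ≤ KV L P K := by unfold KV; positivity
  have hz := l2_nonneg z
  set V := KV L P K with hV
  set v : ℕ → Fin m → ℝ := fun b => tr (Wat W1) D a b (D a * z) with hv
  set f : ℕ → Fin m → ℝ := fun k => if k = a then (D a - signOf (gseq A W x a)) * z else
    (D k - signOf (gseq A W x k)) * mulVec (Wat W k) (v (k - 1)) with hf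
  set R : ℕ → Fin m → ℝ := fun k => if k = a then 0 else
    D k * mulVec (Wat W1 k - Wat W k) (v (k - 1)) with hR
  have fa : f a = (D a - signOf (gseq A W x a)) * z := by simp [hf]
  have fs : ∀ b, a ≤ b → f (b + 1) =
      (D (b + 1) - signOf (gseq A W x (b + 1))) * mulVec (Wat W (b + 1)) (v b) := fun b hb => by
    simp only [hf]; rw [if_neg (by omega), Nat.add_sub_cancel]
  have Ra : R a = 0 := by simp [hR]
  have Rs : ∀ b, a ≤ b → R (b + 1) = D (b + 1) * mulVec (Wat W1 (b + 1) - Wat W (b + 1)) (v b) :=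
    fun b hb => by simp only [hR]; rw [if_neg (by omega), Nat.add_sub_cancel]
  have hq : l2 (signOf (gseq A W x a) * z) ≤ l2 z :=
    l2_diag_le fun k => by rw [abs_of_nonneg (signOf_nonneg _ _)]; exact signOf_le_one _ _
  have hfl : ∀ k, a ≤ k → k ≤ L → Supp (S k) (f k) := by
    intro k h1 h2 j hj
    rcases eq_or_ne k a with rfl | hk
    · rw [fa, Pi.mul_apply, hD.sub_zero (by omega) h2 j hj, zero_mul]
    · obtain ⟨c, rfl⟩ : ∃ c, k = c + 1 := ⟨k - 1, by omega⟩
      rw [fs c (by omega), Pi.mul_apply, hD.sub_zero (by omega) h2 j hj, zero_mul]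
  have main : ∀ b, a ≤ b → b ≤ L →
      Inj A W x s (signOf (gseq A W x a) * z) v f R S a b (4 * K * l2 z) (ω * (V * l2 z)) ∧
        l2 (v b) ≤ V * l2 z := by
    intro b hab
    have fin : ∀ b, a ≤ b → b ≤ L →
        Inj A W x s (signOf (gseq A W x a) * z) v f R S a b (4 * K * l2 z) (ω * (V * l2 z)) →
        l2 (v b) ≤ V * l2 z := by
      intro b hab hb h
      refine (h.norm_le g hab hb).trans ?_
      have e1 : (L + 1) * (P * (ω * (V * l2 z))) ≤ P * l2 z := by
        calc (L + 1) * (P * (ω * (V * l2 z))) = P * (((L + 1) * (ω * V)) * l2 z) := by ring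
          _ ≤ P * (1 * l2 z) := by gcongr
          _ = P * l2 z := by ring
      have e2 : P * l2 (signOf (gseq A W x a) * z) ≤ P * l2 z := by gcongr
      have e3 : V * l2 z = 2 * (P * l2 z) + 16 * K * (L + 1) * l2 z := by rw [hV, KV]; ring
      have e4 : (L + 1) * (4 * (4 * K * l2 z) + P * (ω * (V * l2 z))) =
          16 * K * (L + 1) * l2 z + (L + 1) * (P * (ω * (V * l2 z))) := by ring
      linarith
    induction b, hab using Nat.le_induction with
    | base =>
      intro hb
      have : Inj A W x s (signOf (gseq A W x a) * z) v f R S a a (4 * K * l2 z)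
          (ω * (V * l2 z)) := by
        refine ⟨?_, fun c h1 h2 => by omega, fun c h1 h2 => ?_, fun c h1 h2 => hfl c h1 (by omega),
          fun c h1 h2 => ?_, fun c h1 h2 => ?_⟩
        · simp only [hv]; rw [tr_self, fa, Ra]; ring
        · exact hD.card c (by omega) (by omega)
        · obtain rfl : c = a := by omega
          rw [fa]
          refine (l2_diag_le (hD.abs_sub_le c)).trans ?_
          nlinarith
        · obtain rfl : c = a := by omega
          rw [Ra, l2_zero]; positivity
      exact ⟨this, fin a le_rfl hb this⟩
    | succ b hab ih =>
      intro hb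
      obtain ⟨ih1, ih2⟩ := ih (by omega)
      have : Inj A W x s (signOf (gseq A W x a) * z) v f R S a (b + 1) (4 * K * l2 z)
          (ω * (V * l2 z)) := by
        refine ⟨ih1.init, fun c h1 h2 => ?_, fun c h1 h2 => hD.card c (by omega) (by omega),
          fun c h1 h2 => hfl c h1 (by omega), fun c h1 h2 => ?_, fun c h1 h2 => ?_⟩
        · rw [fs c h1, Rs c h1, sub_mulVec]
          simp only [hv]
          rw [tr_succ _ _ h1]; ring
        · rcases Nat.lt_or_ge c (b + 1) with h | h
          · exact ih1.fle c h1 (by omega)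
          obtain rfl : c = b + 1 := by omega
          rw [fs b hab]
          refine (l2_diag_le_res (hD.abs_sub_le _) (hD.sub_zero (by omega) hb)).trans
            ((ih1.res_le g hab hb (hD.card _ (by omega) hb)).trans ?_)
          have e1 : (L + 1) * (K * (ω * (V * l2 z))) ≤ K * l2 z := by
            calc (L + 1) * (K * (ω * (V * l2 z))) = K * (((L + 1) * (ω * V)) * l2 z) := by ring
              _ ≤ K * (1 * l2 z) := by gcongr
              _ = K * l2 z := by ring
          have e2 : K * l2 (signOf (gseq A W x a) * z) ≤ K * l2 z := by gcongr
          have e3 : (L + 1) * (σ * (4 * K * l2 z)) ≤ K * l2 z := by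
            calc (L + 1) * (σ * (4 * K * l2 z)) = (4 * ((L + 1) * σ)) * (K * l2 z) := by ring
              _ ≤ 1 * (K * l2 z) := by gcongr; exact g.hσL
              _ = K * l2 z := by ring
          nlinarith [mul_nonneg (zero_le_one.trans hK) hz]
        · rcases Nat.lt_or_ge c (b + 1) with h | h
          · exact ih1.Rle c h1 (by omega)
          obtain rfl : c = b + 1 := by omega
          rw [Rs b hab]
          refine (l2_diag_le (hD.abs_le _)).trans ((hc _ (by omega) hb _).trans ?_)
          gcongr
      exact ⟨this, fin _ (by omega) hb this⟩
  refine ⟨fun b h1 h2 => (main b h1 h2).2, ((main L ha le_rfl).1.out_le g ha).trans_eq ?_⟩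
  ring

end stab

/-! ### Forward stability and the two-point expansion -/

section fwd

variable {𝔡 m d L : ℕ}

/-- Slope of the ReLU between `g` and `g'`; where the two agree, the sign pattern of `g0`. -/
def secD {p : ℕ} (g0 g g' : Fin p → ℝ) : Fin p → ℝ := fun j =>
  if g' j = g j then signOf g0 j else (relu g' j - relu g j) / (g' j - g j)

lemma secD_mul {p : ℕ} (g0 g g' : Fin p → ℝ) : secD g0 g g' * (g' - g) = relu g' - relu g := by
  ext j
  simp only [Pi.mul_apply, Pi.sub_apply, secD]
  split_ifs with h
  · simp [relu, h]
  · rw [div_mul_cancel₀]; exact sub_ne_zero.2 h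

lemma secD_nonneg {p : ℕ} (g0 g g' : Fin p → ℝ) (j : Fin p) : 0 ≤ secD g0 g g' j := by
  unfold secD
  split_ifs with h
  · exact signOf_nonneg _ _
  · rcases lt_or_gt_of_ne h with h | h
    · apply div_nonneg_of_nonpos
      · have : max (g' j) 0 ≤ max (g j) 0 := max_le_max h.le le_rfl
        simp only [relu]; linarith
      · linarith
    · apply div_nonneg
      · have : max (g j) 0 ≤ max (g' j) 0 := max_le_max h.le le_rfl
        simp only [relu]; linarith
      · linarith

lemma secD_le_one {p : ℕ} (g0 g g' : Fin p → ℝ) (j : Fin p) : secD g0 g g' j ≤ 1 := by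
  unfold secD
  split_ifs with h
  · exact signOf_le_one _ _
  · have key : |relu g' j - relu g j| ≤ |g' j - g j| := by
      simpa [relu] using abs_max_sub_max_le_abs (g' j) (g j) 0
    refine (le_abs_self _).trans ?_
    rw [abs_div]
    exact div_le_one_of_le₀ key (abs_nonneg _)

lemma secD_eq {p : ℕ} {g0 g g' : Fin p → ℝ} {j : Fin p} (h1 : signOf g j = signOf g0 j)
    (h2 : signOf g' j = signOf g0 j) : secD g0 g g' j = signOf g0 j := by
  unfold secD
  split_ifs with h
  · rfl
  · rw [← h1] at h2 ⊢
    simp only [signOf, relu] at h2 ⊢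
    have h' : g' j - g j ≠ 0 := sub_ne_zero.2 h
    by_cases a : 0 ≤ g j <;> by_cases b : 0 ≤ g' j
    · rw [if_pos a, max_eq_left a, max_eq_left b, div_self h']
    · simp [a, b] at h2
    · simp [a, b] at h2
    · rw [if_neg a, max_eq_right (by linarith), max_eq_right (by linarith)]; simp

variable {A : Fin m → Fin 𝔡 → ℝ} {W : Fin L → Fin m → Fin m → ℝ}
  {B : Fin d → Fin m → ℝ} {x : Fin 𝔡 → ℝ} {s : ℕ} {P K σ ν κ β : ℝ}

/-- Coordinates where the activation patterns at `W1` and `W` differ. -/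
def flips (A : Fin m → Fin 𝔡 → ℝ) (W W1 : Fin L → Fin m → Fin m → ℝ) (x : Fin 𝔡 → ℝ) (ℓ : ℕ) :
    Finset (Fin m) :=
  Finset.univ.filter fun j => signOf (gseq A W1 x ℓ) j ≠ signOf (gseq A W x ℓ) j

lemma not_mem_flips {W1 : Fin L → Fin m → Fin m → ℝ} {ℓ : ℕ} {j : Fin m} :
    j ∉ flips A W W1 x ℓ ↔ signOf (gseq A W1 x ℓ) j = signOf (gseq A W x ℓ) j := by
  simp [flips]

/-- Bound for the displacement of the forward vectors. -/
def HB (L : ℕ) (P K ω : ℝ) : ℝ := (L + 1) * ω * (16 * K * (L + 1) + 3 * P)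

/-- The radius `ω` is small compared with the other parameters. -/
structure Small (L : ℕ) (P K β ω : ℝ) : Prop where
  nn : 0 ≤ ω
  kv : (L + 1) * (ω * KV L P K) ≤ 1
  hb : HB L P K ω ≤ 1
  fl : 4 * (31 * HB L P K ω) ^ 2 ≤ β ^ 3

lemma flip_abs {p : ℕ} {g g' : Fin p → ℝ} {j : Fin p} (h : signOf g' j ≠ signOf g j) :
    |g j| ≤ |g' j - g j| := by
  simp only [signOf] at h
  by_cases a : 0 ≤ g j <;> by_cases b : 0 ≤ g' j
  · simp [a, b] at h
  · rw [abs_of_nonneg a, abs_of_nonpos (by linarith)]; linarith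
  · rw [abs_of_neg (not_le.1 a), abs_of_nonneg (by linarith)]; linarith
  · simp [a, b] at h

/-- Few sign changes under a small perturbation, as few preactivations are close to zero. -/
lemma flips_card {p : ℕ} {g g' : Fin p → ℝ} {β' c : ℝ} (hβ : 0 < β')
    (hc : ((Finset.univ.filter fun k => |g k| * Real.sqrt p ≤ β' / 2).card : ℝ) ≤ 2 * β' * p)
    (hΔ : l2 (g' - g) ≤ c) (h3 : 4 * c ^ 2 ≤ β' ^ 3) :
    ((Finset.univ.filter fun j => signOf g' j ≠ signOf g j).card : ℝ) ≤ 3 * β' * p := by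
  set U := Finset.univ.filter fun k => |g k| * Real.sqrt p ≤ β' / 2
  set V := Finset.univ.filter fun k => β' / 2 < |g' k - g k| * Real.sqrt p
  have hsub : (Finset.univ.filter fun j => signOf g' j ≠ signOf g j) ⊆ U ∪ V := by
    intro j hj
    have hj := flip_abs (Finset.mem_filter.1 hj).2
    simp only [U, V, Finset.mem_union, Finset.mem_filter, Finset.mem_univ, true_and]
    rcases le_or_gt (|g j| * Real.sqrt p) (β' / 2) with h | h
    · exact Or.inl h
    · exact Or.inr (h.trans_le (by gcongr))
  have hV : (V.card : ℝ) * (β' ^ 2 / 4) ≤ p * c ^ 2 := by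
    have h1 : (V.card : ℝ) * (β' ^ 2 / 4) ≤ ∑ k ∈ V, p * (g' k - g k) ^ 2 := by
      rw [← nsmul_eq_mul]
      apply Finset.card_nsmul_le_sum
      intro k hk
      have hk := (Finset.mem_filter.1 hk).2
      have : (β' / 2) ^ 2 ≤ (|g' k - g k| * Real.sqrt p) ^ 2 := by gcongr
      rw [mul_pow, sq_abs, Real.sq_sqrt (by positivity)] at this
      nlinarith
    refine h1.trans ?_
    rw [← Finset.mul_sum]
    have h2 : ∑ k ∈ V, (g' k - g k) ^ 2 ≤ l2 (g' - g) ^ 2 := by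
      rw [l2_sq]
      exact Finset.sum_le_sum_of_subset_of_nonneg (Finset.subset_univ _) fun _ _ _ => by positivity
    have h3 : l2 (g' - g) ^ 2 ≤ c ^ 2 := pow_le_pow_left₀ (l2_nonneg _) hΔ 2
    gcongr
    linarith
  have hV2 : (V.card : ℝ) ≤ β' * p := by
    have h5 : (V.card : ℝ) * β' ^ 2 ≤ (β' * p) * β' ^ 2 := by
      have : (p : ℝ) * (4 * c ^ 2) ≤ p * β' ^ 3 := by gcongr
      nlinarith
    exact le_of_mul_le_mul_right h5 (by positivity)
  have h6 : ((Finset.univ.filter fun j => signOf g' j ≠ signOf g j).card : ℝ) ≤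
      U.card + V.card := by
    exact_mod_cast (Finset.card_le_card hsub).trans (Finset.card_union_le _ _)
  linarith

lemma HB_nonneg (g : ChainGood A W B x s P K σ ν κ β) {ω : ℝ} (hω : 0 ≤ ω) : 0 ≤ HB L P K ω := by
  have := g.hP; have := g.hK
  unfold HB; positivity

lemma three_le_HB (g : ChainGood A W B x s P K σ ν κ β) {ω : ℝ} (hω : 0 ≤ ω) :
    3 * ω ≤ HB L P K ω := by
  have h1 := g.hP; have h2 := g.hK
  unfold HB
  have hL : (0:ℝ) ≤ L := by positivity
  have : (1:ℝ) * ω * (16 * 0 * (L + 1) + 3 * 1) ≤ (L + 1) * ω * (16 * K * (L + 1) + 3 * P) := by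
    gcongr <;> linarith
  linarith

/-- Change of the preactivations from `W` to `W1`. -/
lemma gseq_sub (W1 : Fin L → Fin m → Fin m → ℝ) (b : ℕ) :
    gseq A W1 x (b + 1) - gseq A W x (b + 1) =
      mulVec (Wat W (b + 1)) (hseq A W1 x b - hseq A W x b) +
        mulVec (Wat W1 (b + 1) - Wat W (b + 1)) (hseq A W1 x b) := by
  simp only [gseq]
  rw [mulVec_sub, sub_mulVec]; abel

/-- Forward vectors and activation patterns are stable within distance `ω`. -/
lemma forward (g : ChainGood A W B x s P K σ ν κ β) {W1 : Fin L → Fin m → Fin m → ℝ} {ω : ℝ}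
    (hS : Small L P K β ω) (hc : Close W W1 ω) :
    (∀ b, b ≤ L → l2 (hseq A W1 x b - hseq A W x b) ≤ HB L P K ω) ∧
    ∀ b, 1 ≤ b → b ≤ L → 2 * (flips A W W1 x b).card ≤ s := by
  have hP := g.hP
  have hK := g.hK
  have hω := hS.nn
  have hH0 := HB_nonneg g hω
  set v : ℕ → Fin m → ℝ := fun b => hseq A W1 x b - hseq A W x b with hv
  set D : ℕ → Fin m → ℝ := fun b => secD (gseq A W x b) (gseq A W x b) (gseq A W1 x b) with hD
  have Dnn : ∀ b j, 0 ≤ D b j := fun b j => secD_nonneg _ _ _ _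
  have Dle : ∀ b j, D b j ≤ 1 := fun b j => secD_le_one _ _ _ _
  have Dabs : ∀ b j, |D b j| ≤ 1 := fun b j => by rw [abs_of_nonneg (Dnn b j)]; exact Dle b j
  have Dsub : ∀ b j, |(D b - signOf (gseq A W x b)) j| ≤ 1 := fun b j => by
    rw [Pi.sub_apply, abs_le]
    constructor <;> linarith [Dnn b j, Dle b j, signOf_nonneg (gseq A W x b) j,
      signOf_le_one (gseq A W x b) j]
  have Dz : ∀ b j, j ∉ flips A W W1 x b → (D b - signOf (gseq A W x b)) j = 0 := fun b j hj => by
    rw [Pi.sub_apply, sub_eq_zero]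
    exact secD_eq rfl (not_mem_flips.1 hj)
  set f : ℕ → Fin m → ℝ := fun k => if k = 0 then 0 else
    (D k - signOf (gseq A W x k)) * mulVec (Wat W k) (v (k - 1)) with hf
  set R : ℕ → Fin m → ℝ := fun k => if k = 0 then 0 else
    D k * mulVec (Wat W1 k - Wat W k) (hseq A W1 x (k - 1)) with hR
  set S : ℕ → Finset (Fin m) := fun k => if k = 0 then ∅ else flips A W W1 x k with hSS
  have v0 : v 0 = 0 := by simp [hv, hseq]
  have vs : ∀ b, b + 1 ≤ L → v (b + 1) =
      signOf (gseq A W x (b + 1)) * mulVec (Wat W (b + 1)) (v b) + (f (b + 1) + R (b + 1)) := by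
    intro b hb
    have h1 : v (b + 1) = D (b + 1) * (gseq A W1 x (b + 1) - gseq A W x (b + 1)) := by
      simp only [hv, hD]
      rw [secD_mul, hseq_eq_relu _ _ _ hb, hseq_eq_relu _ _ _ hb]
    rw [h1, gseq_sub]
    simp only [hf, hR, Nat.add_eq_zero_iff, one_ne_zero, and_false, if_false, Nat.add_sub_cancel]
    ring
  have hfS : ∀ k, Supp (S k) (f k) := by
    intro k j hj
    rcases eq_or_ne k 0 with rfl | hk
    · simp [hf]
    · simp only [hSS, if_neg hk] at hj
      simp only [hf, if_neg hk, Pi.mul_apply, Dz k j hj, zero_mul]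
  set E := 4 * K * (L + 1) * ω with hE
  have fin : ∀ b, b ≤ L → Inj A W x s 0 v f R S 0 b E (3 * ω) → l2 (v b) ≤ HB L P K ω := by
    intro b hb h
    refine (h.norm_le g (by omega) hb).trans_eq ?_
    rw [l2_zero, HB, hE]; ring
  have card : ∀ b, b + 1 ≤ L → l2 (v b) ≤ HB L P K ω → l2 (hseq A W1 x b) ≤ 3 ∧
      2 * (flips A W W1 x (b + 1)).card ≤ s := by
    intro b hb h
    have h3 : l2 (hseq A W1 x b) ≤ 3 := by
      have e : hseq A W1 x b = hseq A W x b + v b := by simp [hv]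
      rw [e]
      refine (l2_add_le _ _).trans ?_
      linarith [g.hhi b (by omega), hS.hb]
    refine ⟨h3, ?_⟩
    have h4 : l2 (gseq A W1 x (b + 1) - gseq A W x (b + 1)) ≤ 31 * HB L P K ω := by
      rw [gseq_sub]
      refine (l2_add_le _ _).trans ?_
      have e1 := g.op (b + 1) (by omega) hb (v b)
      have e2 := hc (b + 1) (by omega) hb (hseq A W1 x b)
      have e3 : ω * l2 (hseq A W1 x b) ≤ ω * 3 := by gcongr
      have e4 := three_le_HB g hω
      linarith
    have h5 := flips_card g.hβ (g.count (b + 1) (by omega) hb) h4 hS.fl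
    have h6 : (2 * (flips A W W1 x (b + 1)).card : ℝ) ≤ s := by
      have := g.hs
      unfold flips
      linarith
    exact_mod_cast h6
  have main : ∀ b, b ≤ L → Inj A W x s 0 v f R S 0 b E (3 * ω) := by
    intro b
    induction b with
    | zero =>
      intro hb
      refine ⟨by simp [v0, hf, hR], fun c h1 h2 => by omega, fun c h1 h2 => ?_,
        fun c _ _ => hfS c, fun c h1 h2 => ?_, fun c h1 h2 => ?_⟩
      · obtain rfl : c = 0 := by omega
        simp [hSS]
      · obtain rfl : c = 0 := by omega
        simp only [hf, if_true, l2_zero, hE]; positivity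
      · obtain rfl : c = 0 := by omega
        simp only [hR, if_true, l2_zero]; positivity
    | succ b ih =>
      intro hb
      have ih1 := ih (by omega)
      obtain ⟨h3, hcard⟩ := card b hb (fin b (by omega) ih1)
      have hcard' : (flips A W W1 x (b + 1)).card ≤ s := by omega
      have hSb : S (b + 1) = flips A W W1 x (b + 1) := by simp [hSS]
      refine ⟨ih1.init, fun c _ h2 => vs c (by omega), fun c h1 h2 => ?_,
        fun c _ _ => hfS c, fun c h1 h2 => ?_, fun c h1 h2 => ?_⟩
      · rcases Nat.lt_or_ge c (b + 1) with h | h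
        · exact ih1.card c h1 (by omega)
        obtain rfl : c = b + 1 := by omega
        rwa [hSb]
      · rcases Nat.lt_or_ge c (b + 1) with h | h
        · exact ih1.fle c h1 (by omega)
        obtain rfl : c = b + 1 := by omega
        have e : f (b + 1) = (D (b + 1) - signOf (gseq A W x (b + 1))) *
            mulVec (Wat W (b + 1)) (v b) := by simp [hf]
        rw [e]
        refine (l2_diag_le_res (Dsub _) (Dz _)).trans
            ((ih1.res_le g (by omega) hb hcard').trans ?_)
        rw [l2_zero]
        have e3 : (L + 1) * (σ * E) ≤ E / 4 := by
          calc (L + 1) * (σ * E) = (4 * ((L + 1) * σ)) * (E / 4) := by ring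
            _ ≤ 1 * (E / 4) := by gcongr; exact g.hσL
            _ = E / 4 := by ring
        have e4 : (L + 1) * (K * (3 * ω)) = 3 * (E / 4) := by rw [hE]; ring
        linarith
      · rcases Nat.lt_or_ge c (b + 1) with h | h
        · exact ih1.Rle c h1 (by omega)
        obtain rfl : c = b + 1 := by omega
        have e : R (b + 1) = D (b + 1) * mulVec (Wat W1 (b + 1) - Wat W (b + 1))
            (hseq A W1 x b) := by simp [hR]
        rw [e]
        refine (l2_diag_le (Dabs _)).trans ((hc _ (by omega) hb _).trans ?_)
        nlinarith
  refine ⟨fun b hb => fin b hb (main b hb), fun b h1 h2 => ?_⟩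
  obtain ⟨c, rfl⟩ : ∃ c, b = c + 1 := ⟨b - 1, by omega⟩
  exact (card c h2 (fin c (by omega) (main c (by omega)))).2

lemma h1_le (g : ChainGood A W B x s P K σ ν κ β) {W1 : Fin L → Fin m → Fin m → ℝ} {ω : ℝ}
    (hS : Small L P K β ω) (hc : Close W W1 ω) {b : ℕ} (hb : b ≤ L) : l2 (hseq A W1 x b) ≤ 3 := by
  have e : hseq A W1 x b = hseq A W x b + (hseq A W1 x b - hseq A W x b) := by abel
  rw [e]
  refine (l2_add_le _ _).trans ?_
  linarith [g.hhi b hb, hS.hb, (forward g hS hc).1 b hb]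

end fwd

/-! ### Linearization of the network output and of the loss -/

section lin

variable {𝔡 m d L : ℕ} {A : Fin m → Fin 𝔡 → ℝ} {W W1 W2 : Fin L → Fin m → Fin m → ℝ}
  {B : Fin d → Fin m → ℝ} {x : Fin 𝔡 → ℝ} {s : ℕ} {P K σ ν κ β ω : ℝ}

/-- Relative error of the linearization. -/
def RH (L : ℕ) (P K ν κ ω : ℝ) : ℝ := (L + 1) * (ν * (4 * K) + κ * (P * (ω * KV L P K)))

/-- Term of layer `k + 1` in the first-order expansion of the output at `W1`. -/
def linTerm (B : Fin d → Fin m → ℝ) (A : Fin m → Fin 𝔡 → ℝ) (W1 : Fin L → Fin m → Fin m → ℝ)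
    (x : Fin 𝔡 → ℝ) (N : Fin m → Fin m → ℝ) (k : ℕ) : Fin d → ℝ :=
  mulVec B (tr (Wat W1) (fun ℓ => signOf (gseq A W1 x ℓ)) (k + 1) L
    (signOf (gseq A W1 x (k + 1)) * mulVec N (hseq A W1 x k)))

lemma nearD_sign (g : ChainGood A W B x s P K σ ν κ β) (hS : Small L P K β ω)
    (hc1 : Close W W1 ω) :
    NearD A W x s (fun ℓ => signOf (gseq A W1 x ℓ)) (flips A W W1 x) :=
  ⟨fun _ _ => signOf_nonneg _ _, fun _ _ => signOf_le_one _ _,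
    fun _ _ _ _ hj => not_mem_flips.1 hj,
    fun k h1 h2 => by have := (forward g hS hc1).2 k h1 h2; omega⟩

lemma nearD_sec (g : ChainGood A W B x s P K σ ν κ β) (hS : Small L P K β ω)
    (hc1 : Close W W1 ω) (hc2 : Close W W2 ω) :
    NearD A W x s (fun ℓ => secD (gseq A W x ℓ) (gseq A W1 x ℓ) (gseq A W2 x ℓ))
      (fun ℓ => flips A W W1 x ℓ ∪ flips A W W2 x ℓ) := by
  refine ⟨fun _ _ => secD_nonneg _ _ _ _, fun _ _ => secD_le_one _ _ _ _,
    fun _ _ _ _ hj => ?_, fun k h1 h2 => ?_⟩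
  · rw [Finset.notMem_union] at hj
    exact secD_eq (not_mem_flips.1 hj.1) (not_mem_flips.1 hj.2)
  · have := (forward g hS hc1).2 k h1 h2
    have := (forward g hS hc2).2 k h1 h2
    have := Finset.card_union_le (flips A W W1 x k) (flips A W W2 x k)
    omega

lemma hseq_diff_expand (W W1 W2 : Fin L → Fin m → Fin m → ℝ) :
    hseq A W2 x L - hseq A W1 x L = ∑ k : Fin L, tr (Wat W2)
      (fun ℓ => secD (gseq A W x ℓ) (gseq A W1 x ℓ) (gseq A W2 x ℓ)) (k + 1) L
      (secD (gseq A W x (k + 1)) (gseq A W1 x (k + 1)) (gseq A W2 x (k + 1)) *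
        mulVec (W2 k - W1 k) (hseq A W1 x k)) := by
  set D : ℕ → Fin m → ℝ :=
    fun ℓ => secD (gseq A W x ℓ) (gseq A W1 x ℓ) (gseq A W2 x ℓ) with hD
  set f : ℕ → Fin m → ℝ := fun k => if k = 0 then 0 else
    D k * mulVec (Wat W2 k - Wat W1 k) (hseq A W1 x (k - 1)) with hf
  have h := tr_expand (Wat W2) D (v := fun b => hseq A W2 x b - hseq A W1 x b) (f := f) (q := 0)
    (a := 0) (B := L) (by simp [hseq, hf]) (by
      intro b _ hb
      have h1 : hseq A W2 x (b + 1) - hseq A W1 x (b + 1) =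
          D (b + 1) * (gseq A W2 x (b + 1) - gseq A W1 x (b + 1)) := by
        simp only [hD]
        rw [secD_mul, hseq_eq_relu _ _ _ hb, hseq_eq_relu _ _ _ hb]
      rw [h1]
      simp only [hf, Nat.add_eq_zero_iff, one_ne_zero, and_false, if_false, Nat.add_sub_cancel,
        gseq]
      rw [mulVec_sub, sub_mulVec]
      ring) (b := L) (by omega) le_rfl
  rw [tr_zero, zero_add] at h
  rw [h]
  have hI : Finset.Icc 0 L = Finset.range (L + 1) := by ext; simp
  rw [hI, Finset.sum_range_succ', Finset.sum_range]
  have f0 : f 0 = 0 := by simp [hf]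
  rw [f0, tr_zero, add_zero]
  refine Finset.sum_congr rfl fun k _ => ?_
  simp only [hf, Nat.add_eq_zero_iff, one_ne_zero, and_false, if_false, Nat.add_sub_cancel,
    Wat_of]
  rfl

lemma l2_z_le (g : ChainGood A W B x s P K σ ν κ β) (hS : Small L P K β ω)
    (hc1 : Close W W1 ω) (N : Fin m → Fin m → ℝ) {k : ℕ} (hk : k ≤ L) :
    l2 (mulVec N (hseq A W1 x k)) ≤ 3 * frob N := by
  refine (l2_mulVec_le_frob _ _).trans ?_
  have := h1_le g hS hc1 hk
  have := frob_nonneg N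
  nlinarith

/-- The output difference between two points near the initialization, to first order. -/
lemma two_point (g : ChainGood A W B x s P K σ ν κ β) (hS : Small L P K β ω)
    (hc1 : Close W W1 ω) (hc2 : Close W W2 ω) :
    l2 (mulVec B (hseq A W2 x L - hseq A W1 x L) -
        ∑ k : Fin L, linTerm B A W1 x (W2 k - W1 k) k) ≤
      6 * RH L P K ν κ ω * ∑ k : Fin L, frob (W2 k - W1 k) ∧
    l2 (mulVec B (hseq A W2 x L - hseq A W1 x L)) ≤
      3 * κ * KV L P K * ∑ k : Fin L, frob (W2 k - W1 k) := by
  have hP := g.hP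
  have hK := g.hK
  have hκ := g.hκ
  have hν := g.hν
  have hω := hS.nn
  have hKV : 0 ≤ KV L P K := by unfold KV; positivity
  have hRH : 0 ≤ RH L P K ν κ ω := by unfold RH; positivity
  rw [hseq_diff_expand W W1 W2, mulVec_sum, ← Finset.sum_sub_distrib]
  constructor
  · refine (l2_sum_le _ _).trans ?_
    rw [Finset.mul_sum]
    refine Finset.sum_le_sum fun k _ => ?_
    have a1 := (chain_near g hω hc2 (nearD_sec g hS hc1 hc2) hS.kv (a := k + 1) (by omega) k.2
      (mulVec (W2 k - W1 k) (hseq A W1 x k))).2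
    have a2 := (chain_near g hω hc1 (nearD_sign g hS hc1) hS.kv (a := k + 1) (by omega) k.2
      (mulVec (W2 k - W1 k) (hseq A W1 x k))).2
    have a3 := l2_z_le g hS hc1 (W2 k - W1 k) (k := k) (by omega)
    rw [← RH] at a1 a2
    rw [linTerm]
    have tri : ∀ p q r : Fin d → ℝ, l2 (p - q) ≤ l2 (p - r) + l2 (q - r) := fun p q r => by
      have e : p - q = (p - r) - (q - r) := by abel
      rw [e]; exact l2_sub_le _ _
    refine (tri _ _ _).trans ((add_le_add a1 a2).trans ?_)
    nlinarith [mul_le_mul_of_nonneg_left a3 hRH]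
  · refine (l2_sum_le _ _).trans ?_
    rw [Finset.mul_sum]
    refine Finset.sum_le_sum fun k _ => ?_
    have a1 := (chain_near g hω hc2 (nearD_sec g hS hc1 hc2) hS.kv (a := k + 1) (by omega) k.2
      (mulVec (W2 k - W1 k) (hseq A W1 x k))).1 L k.2 le_rfl
    have a3 := l2_z_le g hS hc1 (W2 k - W1 k) (k := k) (by omega)
    refine (g.opB _).trans ?_
    calc κ * _ ≤ κ * (KV L P K * (3 * frob (W2 k - W1 k))) :=
          mul_le_mul_of_nonneg_left (a1.trans (mul_le_mul_of_nonneg_left a3 hKV)) hκ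
      _ = _ := by ring

/-- The formula gradient is the adjoint of the first-order expansion. -/
lemma innerF_gradW (u : Fin d → ℝ) (N : Fin m → Fin m → ℝ) (k : ℕ) :
    innerF (gradW B A W1 x u (k + 1)) N = dot u (linTerm B A W1 x N k) := by
  rw [gradW, innerF_outer, mulVec_diagMat, linTerm, Nat.add_sub_cancel, dot_diag]
  rw [dot_mulVec_transpose, backMat, mulVec_mmul, prodDW, mulVec_chainProd _ _ le_rfl]

end lin

section desc

variable {𝔡 m d L n : ℕ} {A : Fin m → Fin 𝔡 → ℝ} {W W1 W2 : Fin L → Fin m → Fin m → ℝ}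
  {B : Fin d → Fin m → ℝ} {x : Fin n → Fin 𝔡 → ℝ} {y : Fin n → Fin d → ℝ} {s : ℕ}
  {P K σ ν κ β ω : ℝ}

lemma innerF_sum {p q : ℕ} {ι : Type*} (t : Finset ι) (M : ι → Fin p → Fin q → ℝ)
    (N : Fin p → Fin q → ℝ) : innerF (∑ i ∈ t, M i) N = ∑ i ∈ t, innerF (M i) N := by
  simp only [innerF, Finset.sum_apply, Finset.sum_mul]
  conv_lhs => enter [2, i]; rw [Finset.sum_comm]
  rw [Finset.sum_comm]

lemma dot_sum_right {p : ℕ} {ι : Type*} (t : Finset ι) (u : Fin p → ℝ) (v : ι → Fin p → ℝ) :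
    dot u (∑ i ∈ t, v i) = ∑ i ∈ t, dot u (v i) := by
  simp only [dot, Finset.sum_apply, Finset.mul_sum]
  rw [Finset.sum_comm]

lemma sum_l2_loss_le (B : Fin d → Fin m → ℝ) (A : Fin m → Fin 𝔡 → ℝ)
    (W : Fin L → Fin m → Fin m → ℝ) (x : Fin n → Fin 𝔡 → ℝ) (y : Fin n → Fin d → ℝ) :
    (∑ i, l2 (lossVec B A W (x i) (y i))) ^ 2 ≤ n * (2 * objF B A W x y) := by
  refine (sq_sum_le_card_mul_sum_sq).trans_eq ?_
  rw [Finset.card_univ, Fintype.card_fin, objF]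
  simp only [objFi]
  rw [← Finset.mul_sum]
  ring

/-- Second-order upper bound for the objective between two points near the initialization. -/
lemma objF_le (g : ∀ i, ChainGood A W B (x i) s P K σ ν κ β) (hS : Small L P K β ω)
    (hc1 : Close W W1 ω) (hc2 : Close W W2 ω) :
    objF B A W2 x y ≤ objF B A W1 x y +
      ∑ k : Fin L, innerF (gradF B A W1 x y (k + 1)) (W2 k - W1 k) +
      (6 * RH L P K ν κ ω * ∑ k : Fin L, frob (W2 k - W1 k)) *
        (∑ i, l2 (lossVec B A W1 (x i) (y i))) +
      n / 2 * (3 * κ * KV L P K * ∑ k : Fin L, frob (W2 k - W1 k)) ^ 2 := by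
  set M := ∑ k : Fin L, frob (W2 k - W1 k) with hM
  have key : ∀ i, objFi B A W2 (x i) (y i) ≤ objFi B A W1 (x i) (y i) +
      ∑ k : Fin L, innerF (gradW B A W1 (x i) (lossVec B A W1 (x i) (y i)) (k + 1)) (W2 k - W1 k) +
      (6 * RH L P K ν κ ω * M) * l2 (lossVec B A W1 (x i) (y i)) +
      1 / 2 * (3 * κ * KV L P K * M) ^ 2 := by
    intro i
    obtain ⟨t1, t2⟩ := two_point (g i) hS hc1 hc2
    set l := lossVec B A W1 (x i) (y i) with hl
    set D := mulVec B (hseq A W2 (x i) L - hseq A W1 (x i) L) with hD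
    have e1 : lossVec B A W2 (x i) (y i) = l + D := by
      ext j
      simp only [hl, hD, lossVec, mulVec_sub, Pi.add_apply, Pi.sub_apply]; ring
    have e2 : ∑ k : Fin L, innerF (gradW B A W1 (x i) l (k + 1)) (W2 k - W1 k) =
        dot l (∑ k : Fin L, linTerm B A W1 (x i) (W2 k - W1 k) k) := by
      rw [dot_sum_right]
      exact Finset.sum_congr rfl fun k _ => innerF_gradW l _ k
    rw [objFi, objFi, e1, e2, l2_add_sq, ← hl]
    have e3 : dot l D ≤ dot l (∑ k : Fin L, linTerm B A W1 (x i) (W2 k - W1 k) k) +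
        (6 * RH L P K ν κ ω * M) * l2 l := by
      have h1 := dot_le l (D - ∑ k : Fin L, linTerm B A W1 (x i) (W2 k - W1 k) k)
      rw [dot_sub] at h1
      have h2 := mul_le_mul_of_nonneg_left t1 (l2_nonneg l)
      linarith
    have e4 : l2 D ^ 2 ≤ (3 * κ * KV L P K * M) ^ 2 := pow_le_pow_left₀ (l2_nonneg _) t2 2
    linarith
  unfold objF
  refine (Finset.sum_le_sum fun i _ => key i).trans_eq ?_
  rw [Finset.sum_add_distrib, Finset.sum_add_distrib, Finset.sum_add_distrib,
    ← Finset.mul_sum, Finset.sum_const, Finset.card_univ, Fintype.card_fin, nsmul_eq_mul]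
  congr 1
  · congr 2
    rw [Finset.sum_comm]
    refine Finset.sum_congr rfl fun k _ => ?_
    rw [gradF, innerF_sum]
  · ring

/-- Last-layer gradient with the activation patterns and features of the initialization. -/
def grad0 (B : Fin d → Fin m → ℝ) (A : Fin m → Fin 𝔡 → ℝ) (W : Fin L → Fin m → Fin m → ℝ)
    (x : Fin n → Fin 𝔡 → ℝ) (l : Fin n → Fin d → ℝ) : Fin m → Fin m → ℝ :=
  ∑ i, outer (signOf (gseq A W (x i) L) * mulVec (transpose B) (l i)) (hseq A W (x i) (L - 1))

lemma outer_sub_outer {p q : ℕ} (u u' : Fin p → ℝ) (v v' : Fin q → ℝ) :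
    outer u v - outer u' v' = outer (u - u') v + outer u' (v - v') := by
  ext i j; simp only [outer, Pi.sub_apply, Pi.add_apply]; ring

/-- The last-layer gradient at a nearby point, compared with the initial activation patterns. -/
lemma gradF_near (hL : 1 ≤ L) (g : ∀ i, ChainGood A W B (x i) s P K σ ν κ β)
    (hS : Small L P K β ω) (hc1 : Close W W1 ω) :
    frob (gradF B A W1 x y L - grad0 B A W x (fun i => lossVec B A W1 (x i) (y i))) ≤
      (3 * ν + κ * HB L P K ω) * ∑ i, l2 (lossVec B A W1 (x i) (y i)) := by
  obtain ⟨L', rfl⟩ : ∃ L', L = L' + 1 := ⟨L - 1, by omega⟩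
  rw [gradF, grad0, ← Finset.sum_sub_distrib, Finset.mul_sum]
  refine (frob_sum_le _ _).trans (Finset.sum_le_sum fun i _ => ?_)
  have hκ := (g i).hκ
  have hν := (g i).hν
  set l := lossVec B A W1 (x i) (y i)
  set S := flips A W W1 (x i) (L' + 1) with hSS
  have hcard : S.card ≤ s := by
    have := (forward (g i) hS hc1).2 (L' + 1) (by omega) le_rfl
    rw [← hSS] at this
    omega
  have hback : mulVec (transpose (backMat B A W1 (x i) (L' + 1 + 1))) l =
      mulVec (transpose B) l := by
    have : ∀ b, b ≤ L' + 1 →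
        prodDW A W1 (x i) (L' + 1 + 1) b = idMat m := by
      intro b
      induction b with
      | zero => intro _; rfl
      | succ b ih =>
        intro hb
        rw [prodDW, chainProd, if_neg (by omega)]; exact ih (by omega)
    rw [backMat, this _ le_rfl]
    congr 2
    ext j k
    simp [mmul, idMat]
  rw [gradW, mulVec_diagMat, hback, Nat.add_sub_cancel, outer_sub_outer]
  refine (frob_add_le _ _).trans ?_
  rw [frob_outer, frob_outer, ← sub_mul]
  set b := mulVec (transpose B) l with hb
  have hl := l2_nonneg l
  have hBt : l2 b ≤ κ * l2 l := by
    refine l2_le_of_dot (by positivity) ?_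
    rw [hb, dot_mulVec_transpose, ← hb]
    have := (dot_le l (mulVec B b)).trans (mul_le_mul_of_nonneg_left ((g i).opB b) hl)
    linarith
  have hnd := nearD_sign (g i) hS hc1
  set E := signOf (gseq A W1 (x i) (L' + 1)) - signOf (gseq A W (x i) (L' + 1)) with hE
  have hEz : ∀ j, j ∉ S → E j = 0 := hnd.sub_zero (k := L' + 1) (by omega) le_rfl
  have hEb : l2 (E * b) ≤ ν * l2 l := by
    refine l2_le_of_dot (by positivity) ?_
    rw [dot_diag, hb, dot_mulVec_transpose, ← hb]
    have h1 := (g i).bsp (L' + 1) S (E * (E * b)) hcard fun j hj => by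
      simp [Pi.mul_apply, hEz j hj]
    rw [T0, tr_self] at h1
    have h2 : l2 (E * (E * b)) ≤ l2 (E * b) := l2_diag_le (hnd.abs_sub_le (L' + 1))
    have h3 := (dot_le l (mulVec B (E * (E * b)))).trans (mul_le_mul_of_nonneg_left
      (h1.trans (mul_le_mul_of_nonneg_left h2 hν)) hl)
    linarith
  have h4 : l2 (signOf (gseq A W (x i) (L' + 1)) * b) ≤ κ * l2 l := by
    refine (l2_diag_le fun k => ?_).trans hBt
    rw [abs_of_nonneg (signOf_nonneg _ _)]; exact signOf_le_one _ _
  have h5 := h1_le (g i) hS hc1 (b := L') (by omega)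
  have h6 := (forward (g i) hS hc1).1 L' (by omega)
  have e1 := mul_le_mul hEb h5 (l2_nonneg _) (by positivity)
  have e2 := mul_le_mul h4 h6 (l2_nonneg _) (by positivity)
  linarith

end desc

/-! ### Convergence of gradient descent on a good initialization -/

section gd

variable {𝔡 m d L n : ℕ} {A : Fin m → Fin 𝔡 → ℝ} {W W1 W2 : Fin L → Fin m → Fin m → ℝ}
  {B : Fin d → Fin m → ℝ} {x : Fin n → Fin 𝔡 → ℝ} {y : Fin n → Fin d → ℝ} {s : ℕ}
  {P K σ ν κ β ω : ℝ}

lemma close_of_frob {ρ : ℝ} (h : ∀ k : Fin L, frob (W1 k - W k) ≤ ρ) : Close W W1 ρ := by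
  intro k h1 h2 v
  obtain ⟨j, rfl⟩ : ∃ j, k = j + 1 := ⟨k - 1, by omega⟩
  rw [Wat_of W1 ⟨j, h2⟩, Wat_of W ⟨j, h2⟩]
  refine (l2_mulVec_le_frob _ _).trans ?_
  have := l2_nonneg v
  gcongr
  exact h _

lemma innerF_self {p q : ℕ} (M : Fin p → Fin q → ℝ) : innerF M M = frob M ^ 2 := by
  rw [frob_sq, innerF]
  exact Finset.sum_congr rfl fun _ _ => Finset.sum_congr rfl fun _ _ => by ring

lemma objF_nonneg (B : Fin d → Fin m → ℝ) (A : Fin m → Fin 𝔡 → ℝ)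
    (W : Fin L → Fin m → Fin m → ℝ) (x : Fin n → Fin 𝔡 → ℝ) (y : Fin n → Fin d → ℝ) :
    0 ≤ objF B A W x y := Finset.sum_nonneg fun i _ => by unfold objFi; positivity

/-- Crude upper bound for the gradient. -/
lemma gradF_le (g : ∀ i, ChainGood A W B (x i) s P K σ ν κ β) (hS : Small L P K β ω)
    (hc1 : Close W W1 ω) (k : Fin L) (hκ : 0 ≤ κ) (hKV : 0 ≤ KV L P K) :
    frob (gradF B A W1 x y (k + 1)) ≤
      3 * κ * KV L P K * ∑ i, l2 (lossVec B A W1 (x i) (y i)) := by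
  set N := gradF B A W1 x y (k + 1) with hN
  have hNn := frob_nonneg N
  have hs0 : 0 ≤ ∑ i, l2 (lossVec B A W1 (x i) (y i)) :=
    Finset.sum_nonneg fun _ _ => l2_nonneg _
  have h : frob N ^ 2 ≤ (3 * κ * KV L P K * ∑ i, l2 (lossVec B A W1 (x i) (y i))) * frob N := by
    rw [← innerF_self]
    conv_lhs => rw [hN, gradF, innerF_sum, ← gradF, ← hN]
    rw [Finset.mul_sum, Finset.sum_mul]
    refine Finset.sum_le_sum fun i _ => ?_
    rw [innerF_gradW]
    refine (dot_le _ _).trans ?_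
    have a1 := (chain_near (g i) hS.nn hc1 (nearD_sign (g i) hS hc1) hS.kv (a := k + 1)
      (by omega) k.2 (mulVec N (hseq A W1 (x i) k))).1 L k.2 le_rfl
    have a3 := l2_z_le (g i) hS hc1 N (k := k) (by omega)
    have a4 : l2 (linTerm B A W1 (x i) N k) ≤ κ * (KV L P K * (3 * frob N)) :=
      ((g i).opB _).trans
        (mul_le_mul_of_nonneg_left (a1.trans (mul_le_mul_of_nonneg_left a3 hKV)) hκ)
    have := mul_le_mul_of_nonneg_left a4 (l2_nonneg (lossVec B A W1 (x i) (y i)))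
    linarith
  by_contra hlt
  push Not at hlt
  have : 0 < frob N := lt_of_le_of_lt (by positivity) hlt
  nlinarith

/-- Total gradient norm. -/
def gNorm (B : Fin d → Fin m → ℝ) (A : Fin m → Fin 𝔡 → ℝ)
    (W : Fin L → Fin m → Fin m → ℝ) (x : Fin n → Fin 𝔡 → ℝ) (y : Fin n → Fin d → ℝ) : ℝ :=
  Real.sqrt (∑ k : Fin L, frob (gradF B A W x y (k + 1)) ^ 2)

lemma gNorm_sq : gNorm B A W x y ^ 2 = ∑ k : Fin L, frob (gradF B A W x y (k + 1)) ^ 2 :=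
  Real.sq_sqrt (Finset.sum_nonneg fun _ _ => by positivity)

lemma gNorm_nonneg : 0 ≤ gNorm B A W x y := Real.sqrt_nonneg _

lemma frob_le_gNorm (k : Fin L) : frob (gradF B A W x y (k + 1)) ≤ gNorm B A W x y := by
  refine Real.le_sqrt_of_sq_le ?_
  exact Finset.single_le_sum (f := fun k : Fin L => frob (gradF B A W x y (k + 1)) ^ 2)
    (fun _ _ => by positivity) (Finset.mem_univ k)

lemma sum_frob_le : ∑ k : Fin L, frob (gradF B A W x y (k + 1)) ≤
    Real.sqrt L * gNorm B A W x y := by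
  rw [gNorm, ← Real.sqrt_mul (by positivity)]
  refine Real.le_sqrt_of_sq_le ?_
  refine (sq_sum_le_card_mul_sum_sq).trans_eq ?_
  simp

lemma sum_loss_le : ∑ i, l2 (lossVec B A W (x i) (y i)) ≤
    Real.sqrt n * Real.sqrt (2 * objF B A W x y) := by
  rw [← Real.sqrt_mul (by positivity)]
  exact Real.le_sqrt_of_sq_le (sum_l2_loss_le B A W x y)

/-- The gradient dominates the loss near the initialization. -/
lemma gNorm_ge (hL : 1 ≤ L) (g : ∀ i, ChainGood A W B (x i) s P K σ ν κ β)
    (hS : Small L P K β ω) (hc1 : Close W W1 ω) {r r0 : ℝ} (hκ : 0 ≤ κ) (hν : 0 ≤ ν)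
    (hH : 0 ≤ HB L P K ω)
    (h0 : ∀ l : Fin n → Fin d → ℝ, r0 * Real.sqrt (∑ i, l2 (l i) ^ 2) ≤ frob (grad0 B A W x l))
    (hr : r + (3 * ν + κ * HB L P K ω) * Real.sqrt n ≤ r0) :
    r * Real.sqrt (2 * objF B A W1 x y) ≤ gNorm B A W1 x y := by
  have h1 := h0 fun i => lossVec B A W1 (x i) (y i)
  have e : ∑ i, l2 (lossVec B A W1 (x i) (y i)) ^ 2 = 2 * objF B A W1 x y := by
    simp only [objF, objFi]; rw [← Finset.mul_sum]; ring
  simp only [e] at h1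
  have h2 := gradF_near (y := y) hL g hS hc1
  have h3 : frob (gradF B A W1 x y L) ≤ gNorm B A W1 x y := by
    obtain ⟨L', rfl⟩ : ∃ L', L = L' + 1 := ⟨L - 1, by omega⟩
    exact frob_le_gNorm (Fin.last L')
  set G0 := grad0 B A W x (fun i => lossVec B A W1 (x i) (y i))
  have h4 : frob G0 ≤ frob (gradF B A W1 x y L) + frob (gradF B A W1 x y L - G0) := by
    have := frob_sub_le (gradF B A W1 x y L) (gradF B A W1 x y L - G0)
    rwa [sub_sub_cancel] at this
  have h5 := mul_le_mul_of_nonneg_left (sum_loss_le (B := B) (A := A) (W := W1) (x := x) (y := y))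
    (show 0 ≤ 3 * ν + κ * HB L P K ω by positivity)
  have h6 := mul_le_mul_of_nonneg_right hr (Real.sqrt_nonneg (2 * objF B A W1 x y))
  nlinarith

/-- One step of gradient descent. -/
lemma gd_step (g : ∀ i, ChainGood A W B (x i) s P K σ ν κ β)
    (hS : Small L P K β ω) (hc1 : Close W W1 ω) (hc2 : Close W W2 ω) {r η : ℝ} (hη : 0 ≤ η)
    (hRH : 0 ≤ RH L P K ν κ ω) (hκ : 0 ≤ κ) (hKV : 0 ≤ KV L P K)
    (hstep : ∀ k : Fin L, W2 k = W1 k - η • gradF B A W1 x y (k + 1))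
    (hG : r * Real.sqrt (2 * objF B A W1 x y) ≤ gNorm B A W1 x y)
    (h1 : 6 * RH L P K ν κ ω * Real.sqrt L * Real.sqrt n ≤ r / 40)
    (h2 : n / 2 * (3 * κ * KV L P K) ^ 2 * η * L ≤ 1 / 40) :
    2 * objF B A W2 x y ≤ 2 * objF B A W1 x y - 1.9 * η * gNorm B A W1 x y ^ 2 := by
  have hd : ∀ k : Fin L, W2 k - W1 k = (-η) • gradF B A W1 x y (k + 1) := fun k => by
    rw [hstep k, neg_smul]; abel
  have hM : ∑ k : Fin L, frob (W2 k - W1 k) ≤ η * (Real.sqrt L * gNorm B A W1 x y) := by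
    simp only [hd, frob_smul, abs_neg, abs_of_nonneg hη]
    rw [← Finset.mul_sum]
    exact mul_le_mul_of_nonneg_left sum_frob_le hη
  have hM0 : 0 ≤ ∑ k : Fin L, frob (W2 k - W1 k) := Finset.sum_nonneg fun _ _ => frob_nonneg _
  have hin : ∑ k : Fin L, innerF (gradF B A W1 x y (k + 1)) (W2 k - W1 k) =
      - (η * gNorm B A W1 x y ^ 2) := by
    rw [gNorm_sq, Finset.mul_sum, ← Finset.sum_neg_distrib]
    refine Finset.sum_congr rfl fun k _ => ?_
    rw [hd, ← innerF_self]
    simp only [innerF, Pi.smul_apply, smul_eq_mul, Finset.mul_sum, ← Finset.sum_neg_distrib]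
    exact Finset.sum_congr rfl fun _ _ => Finset.sum_congr rfl fun _ _ => by ring
  have key := objF_le (y := y) g hS hc1 hc2
  rw [hin] at key
  set M := ∑ k : Fin L, frob (W2 k - W1 k)
  set G := gNorm B A W1 x y with hGd
  have hG0 : 0 ≤ G := gNorm_nonneg
  set a := Real.sqrt (2 * objF B A W1 x y)
  have ha : 0 ≤ a := Real.sqrt_nonneg _
  have hs0 : 0 ≤ ∑ i, l2 (lossVec B A W1 (x i) (y i)) :=
    Finset.sum_nonneg fun _ _ => l2_nonneg _
  have hsl := sum_loss_le (B := B) (A := A) (W := W1) (x := x) (y := y)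
  have t1 : (6 * RH L P K ν κ ω * M) * (∑ i, l2 (lossVec B A W1 (x i) (y i))) ≤
      η * G ^ 2 / 40 := by
    calc (6 * RH L P K ν κ ω * M) * (∑ i, l2 (lossVec B A W1 (x i) (y i)))
        ≤ (6 * RH L P K ν κ ω * (η * (Real.sqrt L * G))) * (Real.sqrt n * a) := by gcongr
      _ = (6 * RH L P K ν κ ω * Real.sqrt L * Real.sqrt n) * (η * G * a) := by ring
      _ ≤ (r / 40) * (η * G * a) := by gcongr
      _ = η * G * (r * a) / 40 := by ring
      _ ≤ η * G * G / 40 := by gcongr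
      _ = _ := by ring
  have t2 : n / 2 * (3 * κ * KV L P K * M) ^ 2 ≤ η * G ^ 2 / 40 := by
    calc n / 2 * (3 * κ * KV L P K * M) ^ 2
        ≤ n / 2 * (3 * κ * KV L P K * (η * (Real.sqrt L * G))) ^ 2 := by gcongr
      _ = (n / 2 * (3 * κ * KV L P K) ^ 2 * η * Real.sqrt L ^ 2) * (η * G ^ 2) := by ring
      _ = (n / 2 * (3 * κ * KV L P K) ^ 2 * η * L) * (η * G ^ 2) := by
          rw [Real.sq_sqrt (by positivity)]
      _ ≤ 1 / 40 * (η * G ^ 2) := by gcongr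
      _ = _ := by ring
  linarith

/-- Movement and decay in one step, from the descent inequality and gradient dominance. -/
lemma potential_step {a b G r η : ℝ} (ha : 0 ≤ a) (hη : 0 ≤ η) (hr : 0 < r)
    (hG : r * a ≤ G) (h : b ^ 2 ≤ a ^ 2 - 1.9 * η * G ^ 2) (h3 : 2 * η * r ^ 2 ≤ 1) :
    0.95 * r * (η * G) ≤ a - b := by
  have hG0 : 0 ≤ G := le_trans (by positivity) hG
  have h1 : 0 ≤ a - 0.95 * r * (η * G) := by
    have h2 : (0.95 * r * (η * G)) ^ 2 ≤ a ^ 2 := by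
      have e1 : (0.95 * r * (η * G)) ^ 2 = 0.9025 / 2 * (2 * η * r ^ 2) * (η * G ^ 2) := by ring
      have e2 : 0 ≤ η * G ^ 2 := by positivity
      nlinarith [sq_nonneg b]
    linarith [(le_abs_self _).trans (abs_le_of_sq_le_sq h2 ha)]
  have h2 : b ^ 2 ≤ (a - 0.95 * r * (η * G)) ^ 2 := by
    have : a * r * (η * G) ≤ G * (η * G) := by
      have : 0 ≤ η * G := by positivity
      nlinarith
    nlinarith [sq_nonneg (0.95 * r * (η * G))]
  linarith [(le_abs_self _).trans (abs_le_of_sq_le_sq h2 h1)]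

/-- Gradient descent from a good initialization converges linearly. -/
theorem gd_decay (hL : 1 ≤ L) (g : ∀ i, ChainGood A W B (x i) s P K σ ν κ β) (hn : 0 < n)
    (hS : Small L P K β ω) {r r0 η Φ : ℝ} (hr0 : 0 < r) (hη : 0 ≤ η)
    (h0 : ∀ l : Fin n → Fin d → ℝ, r0 * Real.sqrt (∑ i, l2 (l i) ^ 2) ≤ frob (grad0 B A W x l))
    (hr : r + (3 * ν + κ * HB L P K ω) * Real.sqrt n ≤ r0)
    (h1 : 6 * RH L P K ν κ ω * Real.sqrt L * Real.sqrt n ≤ r / 40)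
    (h2 : n / 2 * (3 * κ * KV L P K) ^ 2 * η * L ≤ 1 / 40)
    (h3 : 2 * η * r ^ 2 ≤ 1) (hΦ : 0 ≤ Φ) (hF0 : 2 * objF B A W x y ≤ Φ ^ 2)
    (h4 : η * (3 * κ * KV L P K * (Real.sqrt n * Φ)) ≤ ω / 2) (h5 : Φ ≤ 0.95 * r * (ω / 2))
    {Wseq : ℕ → Fin L → Fin m → Fin m → ℝ} (hW0 : Wseq 0 = W)
    (hWs : ∀ t ℓ, Wseq (t + 1) ℓ = Wseq t ℓ - η • gradF B A (Wseq t) x y (ℓ + 1)) (t : ℕ) :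
    2 * objF B A (Wseq t) x y ≤ Real.exp (-(1.9 * r ^ 2 * η * t)) * Φ ^ 2 := by
  have g0 := g ⟨0, hn⟩
  have hP := g0.hP
  have hK := g0.hK
  have hκ := g0.hκ
  have hν := g0.hν
  have hω := hS.nn
  have hKV : 0 ≤ KV L P K := by unfold KV; positivity
  have hRH : 0 ≤ RH L P K ν κ ω := by unfold RH; positivity
  have hH := HB_nonneg g0 hω
  have main : ∀ t, (∀ k : Fin L, 0.95 * r * frob (Wseq t k - W k) ≤
      Φ - Real.sqrt (2 * objF B A (Wseq t) x y)) ∧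
      2 * objF B A (Wseq t) x y ≤ Real.exp (-(1.9 * r ^ 2 * η * t)) * Φ ^ 2 := by
    intro t
    induction t with
    | zero =>
      rw [hW0]
      refine ⟨fun k => ?_, by simpa using hF0⟩
      rw [sub_self, frob_zero, mul_zero, sub_nonneg]
      exact Real.sqrt_le_iff.2 ⟨hΦ, hF0⟩
    | succ t ih =>
      obtain ⟨i1, i2⟩ := ih
      set a := Real.sqrt (2 * objF B A (Wseq t) x y) with ha
      have ha0 : 0 ≤ a := Real.sqrt_nonneg _
      have hFn := objF_nonneg B A (Wseq t) x y
      have hasq : a ^ 2 = 2 * objF B A (Wseq t) x y := Real.sq_sqrt (by positivity)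
      have hhalf : ∀ k : Fin L, frob (Wseq t k - W k) ≤ ω / 2 := fun k => by
        have := i1 k
        have h6 : 0.95 * r * frob (Wseq t k - W k) ≤ 0.95 * r * (ω / 2) := by linarith
        exact le_of_mul_le_mul_left h6 (by positivity)
      have hc1 : Close W (Wseq t) ω := close_of_frob fun k => (hhalf k).trans (by linarith)
      have haΦ : a ≤ Φ := by
        have := i1 ⟨0, hL⟩
        have h7 : 0 ≤ 0.95 * r * frob (Wseq t ⟨0, hL⟩ - W ⟨0, hL⟩) := by
          have := frob_nonneg (Wseq t ⟨0, hL⟩ - W ⟨0, hL⟩)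
          positivity
        linarith
      have hmv : ∀ k : Fin L, frob (Wseq (t + 1) k - W k) ≤
          frob (Wseq t k - W k) + η * frob (gradF B A (Wseq t) x y (k + 1)) := fun k => by
        have e : Wseq (t + 1) k - W k = (Wseq t k - W k) - η • gradF B A (Wseq t) x y (k + 1) := by
          rw [hWs]; abel
        rw [e]
        refine (frob_sub_le _ _).trans ?_
        rw [frob_smul, abs_of_nonneg hη]
      have hc2 : Close W (Wseq (t + 1)) ω := close_of_frob fun k => by
        refine (hmv k).trans ?_
        have e1 := gradF_le (y := y) g hS hc1 k hκ hKV
        have e2 : ∑ i, l2 (lossVec B A (Wseq t) (x i) (y i)) ≤ Real.sqrt n * Φ :=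
          sum_loss_le.trans (mul_le_mul_of_nonneg_left haΦ (Real.sqrt_nonneg _))
        have e3 := mul_le_mul_of_nonneg_left (e1.trans (mul_le_mul_of_nonneg_left e2
          (show 0 ≤ 3 * κ * KV L P K by positivity))) hη
        linarith [hhalf k]
      have hG := gNorm_ge (y := y) hL g hS hc1 hκ hν hH h0 hr
      have hst := gd_step (y := y) g hS hc1 hc2 hη hRH hκ hKV (hWs t) hG h1 h2
      have hFn2 := objF_nonneg B A (Wseq (t + 1)) x y
      have hps := potential_step (b := Real.sqrt (2 * objF B A (Wseq (t + 1)) x y)) ha0 hη hr0 hG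
        (by rw [Real.sq_sqrt (by positivity), hasq]; exact hst) h3
      refine ⟨fun k => ?_, ?_⟩
      · have e1 := mul_le_mul_of_nonneg_left (hmv k) (show 0 ≤ 0.95 * r by positivity)
        have e2 := mul_le_mul_of_nonneg_left (mul_le_mul_of_nonneg_left
          (frob_le_gNorm (B := B) (A := A) (W := Wseq t) (x := x) (y := y) k) hη)
          (show 0 ≤ 0.95 * r by positivity)
        have := i1 k
        linarith
      · have e1 : (r * a) ^ 2 ≤ gNorm B A (Wseq t) x y ^ 2 :=
          pow_le_pow_left₀ (by positivity) hG 2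
        have e2 : 2 * objF B A (Wseq (t + 1)) x y ≤
            (1 - 1.9 * r ^ 2 * η) * (2 * objF B A (Wseq t) x y) := by
          rw [mul_pow, hasq] at e1
          nlinarith [mul_le_mul_of_nonneg_left e1 hη]
        have e3 : 1 - 1.9 * r ^ 2 * η ≤ Real.exp (-(1.9 * r ^ 2 * η)) := by
          have := Real.add_one_le_exp (-(1.9 * r ^ 2 * η)); linarith
        calc _ ≤ _ := e2
          _ ≤ Real.exp (-(1.9 * r ^ 2 * η)) * (Real.exp (-(1.9 * r ^ 2 * η * t)) * Φ ^ 2) :=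
            mul_le_mul e3 i2 (by positivity) (Real.exp_nonneg _)
          _ = _ := by
            rw [← mul_assoc, ← Real.exp_add]; congr 2; push_cast; ring
  exact (main t).2

end gd

/-! ### The smallest eigenvalue of the limiting kernel -/

section ntk

/-- Coefficients of `(1 - x) ^ (-1/2)`. -/
def cj : ℕ → ℝ
  | 0 => 1
  | j + 1 => cj j * ((2 * j + 1) / (2 * j + 2))

/-- Coefficients of the arcsine series. -/
def aj (j : ℕ) : ℝ := cj j / (2 * j + 1)

lemma cj_pos (j : ℕ) : 0 < cj j := by
  induction j with
  | zero => simp [cj]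
  | succ j ih => rw [cj]; positivity

lemma aj_pos (j : ℕ) : 0 < aj j := div_pos (cj_pos j) (by positivity)

lemma cj_eq_choose (j : ℕ) : Ring.choose ((1 / 2 : ℝ) + j - 1) j = cj j := by
  rw [← Ring.multichoose_eq]
  have h : ∀ j, (Nat.factorial j : ℝ) * Ring.multichoose (1 / 2 : ℝ) j = Nat.factorial j * cj j := by
    intro j
    rw [← nsmul_eq_mul, Ring.factorial_nsmul_multichoose_eq_ascPochhammer,
      Polynomial.ascPochhammer_smeval_eq_eval]
    induction j with
    | zero => simp [cj]
    | succ j ih =>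
      rw [ascPochhammer_succ_eval, ih, cj, Nat.factorial_succ]
      push_cast
      field_simp
      ring
  exact mul_left_cancel₀ (by positivity) (h j)

lemma hasSum_cj {x : ℝ} (h0 : 0 ≤ x) (h1 : x < 1) :
    HasSum (fun j => cj j * x ^ j) (1 / Real.sqrt (1 - x)) := by
  have h := (Real.one_div_one_sub_rpow_hasFPowerSeriesOnBall_zero (1 / 2)).hasSum (y := x) (by
    simp only [Metric.mem_eball, edist_zero_right]
    rw [← ofReal_norm, Real.norm_of_nonneg h0]
    simpa using h1)
  rw [zero_add, ← Real.sqrt_eq_rpow] at h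
  have e : (fun j => cj j * x ^ j) = fun j => (FormalMultilinearSeries.ofScalars ℝ
      fun n => Ring.choose ((1 / 2 : ℝ) + n - 1) n) j fun _ => x := by
    funext j
    rw [FormalMultilinearSeries.ofScalars_apply_eq, cj_eq_choose, smul_eq_mul]
  rw [e]
  exact h

/-- The sequence `cj j ^ 2 * j` increases to `1 / π`; its value at `10` already exceeds `0.557 ^ 2`. -/
lemma cj_sq_ge {j : ℕ} (hj : 10 ≤ j) : 0.557 ^ 2 ≤ cj j ^ 2 * j := by
  induction j, hj using Nat.le_induction with
  | base => norm_num [cj]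
  | succ j hj ih =>
    refine ih.trans ?_
    rw [cj]
    push_cast
    have h : (cj j * ((2 * j + 1) / (2 * j + 2))) ^ 2 * ((j:ℝ) + 1) =
        cj j ^ 2 * ((2 * j + 1) ^ 2 / (4 * (j + 1))) := by field_simp; ring
    rw [h]
    gcongr
    rw [le_div_iff₀ (by positivity)]
    nlinarith

/-- A lower bound for the arcsine coefficients whose tail sums telescope. -/
lemma aj_ge {j : ℕ} (hj : 10 ≤ j) :
    0.557 * (1 / Real.sqrt j - 1 / Real.sqrt (j + 1)) ≤ aj j := by
  have hj0 : (0:ℝ) < j := by exact_mod_cast (by omega : 0 < j)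
  have hs : 0 < Real.sqrt j := Real.sqrt_pos.2 hj0
  have hs1 : 0 < Real.sqrt (j + 1) := Real.sqrt_pos.2 (by positivity)
  have h1 : 0.557 ≤ cj j * Real.sqrt j := by
    refine le_of_sq_le_sq ?_ (by have := cj_pos j; positivity)
    rw [mul_pow, Real.sq_sqrt hj0.le]; exact cj_sq_ge hj
  have h2 : 0.557 / Real.sqrt j ≤ cj j := by rwa [div_le_iff₀ hs]
  have h3 : 1 / Real.sqrt j - 1 / Real.sqrt (j + 1) ≤ 1 / Real.sqrt j / (2 * j + 1) := by
    have e1 : Real.sqrt j ^ 2 = j := Real.sq_sqrt hj0.le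
    have e2 : Real.sqrt (j + 1) ^ 2 = j + 1 := Real.sq_sqrt (by positivity)
    have e3 : 2 * (j:ℝ) / (2 * j + 1) ≤ Real.sqrt j / Real.sqrt (j + 1) := by
      rw [div_le_div_iff₀ (by positivity) hs1]
      refine le_of_sq_le_sq ?_ (by positivity)
      rw [mul_pow, mul_pow (Real.sqrt j), e1, e2]
      nlinarith
    have e4 : 1 / Real.sqrt j - 1 / Real.sqrt (j + 1) =
        1 / Real.sqrt j * (1 - Real.sqrt j / Real.sqrt (j + 1)) := by field_simp
    rw [e4, div_eq_mul_one_div (1 / Real.sqrt j)]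
    gcongr
    have e5 : 1 / (2 * (j:ℝ) + 1) = 1 - 2 * j / (2 * j + 1) := by field_simp; ring
    linarith
  calc 0.557 * (1 / Real.sqrt j - 1 / Real.sqrt (j + 1)) ≤ 0.557 * (1 / Real.sqrt j / (2 * j + 1)) := by
        gcongr
    _ = (0.557 / Real.sqrt j) / (2 * j + 1) := by ring
    _ ≤ aj j := by unfold aj; gcongr

lemma aj_sum_ge {J J' : ℕ} (hJ : 10 ≤ J) (h : J ≤ J') :
    0.557 * (1 / Real.sqrt J - 1 / Real.sqrt J') ≤ ∑ j ∈ Finset.Ico J J', aj j := by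
  induction J', h using Nat.le_induction with
  | base => simp
  | succ k hk ih =>
    rw [Finset.sum_Ico_succ_top hk]
    have := aj_ge (j := k) (by omega)
    push_cast
    linarith

variable {m n : ℕ}

/-- Hadamard powers of a Gram matrix are positive semidefinite. -/
lemma gram_pow_nonneg (u : Fin n → Fin m → ℝ) (p : ℕ) (v : Fin n → ℝ) :
    0 ≤ ∑ i, ∑ j, v i * v j * dot (u i) (u j) ^ p := by
  induction p generalizing v with
  | zero =>
    have : ∑ i, ∑ j, v i * v j * dot (u i) (u j) ^ 0 = (∑ i, v i) ^ 2 := by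
      rw [sq, Finset.sum_mul_sum]; simp
    rw [this]; positivity
  | succ p ih =>
    have : ∑ i, ∑ j, v i * v j * dot (u i) (u j) ^ (p + 1) =
        ∑ k, ∑ i, ∑ j, (v i * u i k) * (v j * u j k) * dot (u i) (u j) ^ p := by
      rw [Finset.sum_comm' (t' := Finset.univ) (s' := fun _ => Finset.univ) (by simp)]
      conv_rhs => rw [Finset.sum_comm]
      conv_lhs => rw [Finset.sum_comm]
      refine Finset.sum_congr rfl fun i _ => ?_
      conv_rhs => rw [Finset.sum_comm]
      refine Finset.sum_congr rfl fun j _ => ?_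
      rw [pow_succ]
      conv_lhs => enter [2, 2]; rw [dot]
      rw [Finset.mul_sum, Finset.mul_sum]
      exact Finset.sum_congr rfl fun k _ => by ring
    rw [this]
    exact Finset.sum_nonneg fun k _ => ih _

/-- A matrix with constant diagonal and small nonnegative off-diagonal entries. -/
lemma offdiag (M : Fin n → Fin n → ℝ) {D k : ℝ} (hD : ∀ i, M i i = D)
    (h0 : ∀ i j, i ≠ j → 0 ≤ M i j) (hk : ∀ i j, i ≠ j → M i j ≤ k) (hk0 : 0 ≤ k)
    (v : Fin n → ℝ) :
    (D - n / 2 * k) * ∑ i, v i ^ 2 ≤ ∑ i, ∑ j, v i * v j * M i j := by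
  have key : ∀ i j, (if i = j then D * v i ^ 2 else 0) - k / 2 * (|v i| * |v j| - v i * v j) ≤
      v i * v j * M i j := by
    intro i j
    have e : v i * v j ≤ |v i| * |v j| := by rw [← abs_mul]; exact le_abs_self _
    split_ifs with h
    · subst h; rw [hD, ← abs_mul, abs_of_nonneg (mul_self_nonneg _)]; apply le_of_eq; ring
    · have a := h0 i j h
      have b := hk i j h
      rcases le_total 0 (v i * v j) with c | c
      · nlinarith [mul_nonneg c a]
      · rw [← abs_mul, abs_of_nonpos c]; nlinarith
  have h1 := Finset.sum_le_sum fun i (_ : i ∈ Finset.univ) =>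
    Finset.sum_le_sum fun j (_ : j ∈ Finset.univ) => key i j
  refine le_trans ?_ h1
  simp only [Finset.sum_sub_distrib, Finset.sum_ite_eq, Finset.mem_univ, if_true,
    ← Finset.mul_sum]
  rw [← Finset.sum_mul, ← Finset.sum_mul]
  have h2 : (∑ i, |v i|) * (∑ i, |v i|) ≤ n * ∑ i, v i ^ 2 := by
    have := sq_sum_le_card_mul_sum_sq (s := (Finset.univ : Finset (Fin n))) (f := fun i => |v i|)
    simpa [sq] using this
  nlinarith [mul_self_nonneg (∑ i, v i), mul_le_mul_of_nonneg_left h2 hk0,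
    mul_nonneg hk0 (mul_self_nonneg (∑ i, v i))]

/-- The arcsine kernel dominates every partial sum of its power series. -/
lemma arcsin_ge (u : Fin n → Fin m → ℝ) (h0 : ∀ i j, 0 ≤ dot (u i) (u j))
    (h1 : ∀ i j, dot (u i) (u j) ≤ 1) (v : Fin n → ℝ) (J : ℕ) :
    ∑ p ∈ Finset.range J, aj p * ∑ i, ∑ j, v i * v j * dot (u i) (u j) ^ (2 * p + 2) ≤
      ∑ i, ∑ j, v i * v j * (dot (u i) (u j) * Real.arcsin (dot (u i) (u j))) := by
  set c : Fin n → Fin n → ℝ := fun i j => dot (u i) (u j) with hc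
  set q : ℕ → ℝ := fun p => ∑ i, ∑ j, v i * v j * c i j ^ (2 * p + 2) with hq
  have hq0 : ∀ p, 0 ≤ q p := fun p => gram_pow_nonneg u _ v
  -- compare the two sides along the scaling `t ↦ arcsin (t c)`, through their derivatives
  set Φ : ℝ → ℝ := fun t => ∑ i, ∑ j, v i * v j * (c i j * Real.arcsin (t * c i j)) -
    ∑ p ∈ Finset.range J, aj p * t ^ (2 * p + 1) * q p with hΦ
  have hlt : ∀ t ∈ Set.Ioo (0:ℝ) 1, ∀ i j, t * c i j < 1 ∧ 0 ≤ t * c i j := fun t ht i j =>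
    ⟨by nlinarith [ht.1, ht.2, h1 i j, h0 i j], mul_nonneg ht.1.le (h0 i j)⟩
  have hder : ∀ t ∈ Set.Ioo (0:ℝ) 1, HasDerivAt Φ
      (∑ i, ∑ j, v i * v j * (c i j * (1 / Real.sqrt (1 - (t * c i j) ^ 2) * c i j)) -
        ∑ p ∈ Finset.range J, cj p * t ^ (2 * p) * q p) t := by
    intro t ht
    apply HasDerivAt.sub
    · refine HasDerivAt.fun_sum fun i _ => HasDerivAt.fun_sum fun j _ => ?_
      refine HasDerivAt.const_mul _ (HasDerivAt.const_mul _ ?_)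
      have a := hlt t ht i j
      refine (Real.hasDerivAt_arcsin (by linarith) (by linarith)).comp t ?_
      simpa using (hasDerivAt_id t).mul_const (c i j)
    · refine HasDerivAt.fun_sum fun p _ => HasDerivAt.mul_const ?_ _
      have := (hasDerivAt_pow (2 * p + 1) t).const_mul (aj p)
      convert this using 1
      rw [aj]; push_cast
      field_simp
  have hmono : MonotoneOn Φ (Set.Icc 0 1) := by
    apply monotoneOn_of_deriv_nonneg (convex_Icc 0 1)
    · apply Continuous.continuousOn
      simp only [hΦ]
      fun_prop
    · rw [interior_Icc]
      exact fun t ht => (hder t ht).differentiableAt.differentiableWithinAt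
    · rw [interior_Icc]
      intro t ht
      rw [(hder t ht).deriv, sub_nonneg]
      have hs : HasSum (fun p => cj p * t ^ (2 * p) * q p)
          (∑ i, ∑ j, v i * v j * (c i j * (1 / Real.sqrt (1 - (t * c i j) ^ 2) * c i j))) := by
        have : ∀ p, cj p * t ^ (2 * p) * q p =
            ∑ i, ∑ j, v i * v j * (c i j * ((cj p * ((t * c i j) ^ 2) ^ p) * c i j)) := by
          intro p
          simp only [hq, Finset.mul_sum]
          refine Finset.sum_congr rfl fun i _ => Finset.sum_congr rfl fun j _ => ?_
          rw [← pow_mul]; ring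
        simp only [this]
        refine hasSum_sum fun i _ => hasSum_sum fun j _ => ?_
        have a := hlt t ht i j
        exact ((((hasSum_cj (by positivity) (by nlinarith)).mul_right _).mul_left _).mul_left _)
      exact sum_le_hasSum _ (fun p _ => mul_nonneg (mul_nonneg (cj_pos p).le (by
        have := ht.1; positivity)) (hq0 p)) hs
  have h := hmono (Set.left_mem_Icc.2 zero_le_one) (Set.right_mem_Icc.2 zero_le_one) zero_le_one
  simp only [hΦ, zero_mul, Real.arcsin_zero, mul_zero, Finset.sum_const_zero, one_mul, one_pow,
    mul_one] at h
  simp only [ne_eq, Nat.add_eq_zero_iff, one_ne_zero, and_false, not_false_eq_true, zero_pow,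
    mul_zero, zero_mul, Finset.sum_const_zero, sub_zero] at h
  linarith

end ntk

section ntkpop

variable {m n : ℕ}

lemma unit_dot_eq {u w : Fin m → ℝ} (hu : l2 u = 1) (hw : l2 w = 1) :
    dot u w = 1 - l2 (u - w) ^ 2 / 2 := by
  have := l2_sub_sq u w
  rw [hu, hw] at this
  linarith

/-- The Hadamard powers `G ^ (2p+2)` of the Gram matrix are nearly the identity once
`p ≥ a / δ ^ 2`. -/
lemma gram_pow_ge (u : Fin n → Fin m → ℝ) {δ : ℝ} (hδ : 0 ≤ δ) (h1 : ∀ i, l2 (u i) = 1)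
    (h0 : ∀ i j, 0 ≤ dot (u i) (u j)) (hs : ∀ i j, i ≠ j → δ ≤ l2 (u i - u j))
    (v : Fin n → ℝ) (p : ℕ) {a : ℝ} (ha : a ≤ p * δ ^ 2) :
    (1 - n / 2 * Real.exp (-a)) * ∑ i, v i ^ 2 ≤
      ∑ i, ∑ j, v i * v j * dot (u i) (u j) ^ (2 * p + 2) := by
  refine offdiag (fun i j => dot (u i) (u j) ^ (2 * p + 2)) (D := 1) ?_ ?_ ?_ (Real.exp_pos _).le v
  · intro i; simp only [dot_self, h1]; simp
  · intro i j _; exact pow_nonneg (h0 i j) _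
  · intro i j hij
    have e1 : dot (u i) (u j) ≤ Real.exp (-(δ ^ 2 / 2)) := by
      rw [unit_dot_eq (h1 i) (h1 j)]
      have := Real.add_one_le_exp (-(δ ^ 2 / 2))
      nlinarith [hs i j hij]
    calc dot (u i) (u j) ^ (2 * p + 2) ≤ Real.exp (-(δ ^ 2 / 2)) ^ (2 * p + 2) :=
          pow_le_pow_left₀ (h0 i j) e1 _
      _ = Real.exp ((2 * p + 2 : ℕ) * (-(δ ^ 2 / 2))) := (Real.exp_nat_mul _ _).symm
      _ ≤ Real.exp (-a) := by
        apply Real.exp_le_exp.2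
        push_cast
        nlinarith [sq_nonneg δ]

/-- Two-threshold lower bound for the arcsine kernel. -/
lemma arcsin_two (u : Fin n → Fin m → ℝ) {δ : ℝ} (hδ : 0 < δ) (hδ1 : δ ≤ 1 / 100)
    (h1 : ∀ i, l2 (u i) = 1)
    (h0 : ∀ i j, 0 ≤ dot (u i) (u j)) (hs : ∀ i j, i ≠ j → δ ≤ l2 (u i - u j))
    (v : Fin n → ℝ) {a b θ θ' : ℝ} (ha : 1 ≤ a) (hab : a ≤ b) (hθ : 0 ≤ θ) (hθ' : θ ≤ θ')
    (e1 : n / 2 * Real.exp (-a) ≤ 1 - θ) (e2 : n / 2 * Real.exp (-b) ≤ 1 - θ') :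
    0.557 * (θ * (δ / Real.sqrt (a + δ ^ 2)) + (θ' - θ) * (δ / Real.sqrt (b + δ ^ 2))) *
      ∑ i, v i ^ 2 ≤
      ∑ i, ∑ j, v i * v j * (dot (u i) (u j) * Real.arcsin (dot (u i) (u j))) := by
  set S := ∑ i, ∑ j, v i * v j * (dot (u i) (u j) * Real.arcsin (dot (u i) (u j))) with hS
  set V := ∑ i, v i ^ 2 with hV
  have hV0 : 0 ≤ V := Finset.sum_nonneg fun i _ => sq_nonneg _
  have hδ2 : 0 < δ ^ 2 := by positivity
  have hle1 : ∀ i j, dot (u i) (u j) ≤ 1 := fun i j => by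
    rw [unit_dot_eq (h1 i) (h1 j)]; nlinarith [sq_nonneg (l2 (u i - u j))]
  set q : ℕ → ℝ := fun p => ∑ i, ∑ j, v i * v j * dot (u i) (u j) ^ (2 * p + 2) with hq
  have hq0 : ∀ p, 0 ≤ q p := fun p => gram_pow_nonneg u _ v
  set J1 := ⌈a / δ ^ 2⌉₊ with hJ1
  set J2 := ⌈b / δ ^ 2⌉₊ with hJ2
  have hJ12 : J1 ≤ J2 := Nat.ceil_mono (by gcongr)
  have hJ10 : 10 ≤ J1 := by
    have : (10:ℝ) ≤ J1 := by
      refine le_trans ?_ (Nat.le_ceil _)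
      rw [le_div_iff₀ hδ2]; nlinarith
    exact_mod_cast this
  have key : ∀ (c t : ℝ) (p : ℕ), ⌈c / δ ^ 2⌉₊ ≤ p → n / 2 * Real.exp (-c) ≤ 1 - t →
      t * V ≤ q p := by
    intro c t p hp ht
    have hp' : c / δ ^ 2 ≤ p := (Nat.le_ceil _).trans (by exact_mod_cast hp)
    rw [div_le_iff₀ hδ2] at hp'
    refine le_trans ?_ (gram_pow_ge u hδ.le h1 h0 hs v p hp')
    gcongr; linarith
  have hsq : ∀ c : ℝ, 1 ≤ c → δ / Real.sqrt (c + δ ^ 2) ≤ 1 / Real.sqrt (⌈c / δ ^ 2⌉₊ : ℝ) := by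
    intro c hc
    have hcp : 0 < c / δ ^ 2 := by positivity
    have hpos : (0:ℝ) < (⌈c / δ ^ 2⌉₊ : ℝ) := lt_of_lt_of_le hcp (Nat.le_ceil _)
    have hup : (⌈c / δ ^ 2⌉₊ : ℝ) ≤ c / δ ^ 2 + 1 := (Nat.ceil_lt_add_one hcp.le).le
    have e : Real.sqrt (c + δ ^ 2) = δ * Real.sqrt (c / δ ^ 2 + 1) := by
      rw [show c + δ ^ 2 = δ ^ 2 * (c / δ ^ 2 + 1) by field_simp, Real.sqrt_mul (by positivity),
        Real.sqrt_sq hδ.le]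
    rw [e, div_mul_eq_div_div, div_self hδ.ne']
    exact one_div_le_one_div_of_le (Real.sqrt_pos.2 hpos) (Real.sqrt_le_sqrt hup)
  have step : ∀ J3 : ℕ, 0.557 * (θ * (1 / Real.sqrt J1) + (θ' - θ) * (1 / Real.sqrt J2) -
      θ' * (1 / Real.sqrt ((J3 + J2 : ℕ) : ℝ))) * V ≤ S := by
    intro J3
    have h23 : J2 ≤ J3 + J2 := Nat.le_add_left _ _
    have c1 : ∑ p ∈ Finset.range (J3 + J2), aj p * q p ≤ S := arcsin_ge u h0 hle1 v _
    have c2 : ∑ p ∈ Finset.Ico J1 (J3 + J2), aj p * q p ≤ ∑ p ∈ Finset.range (J3 + J2), aj p * q p := by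
      apply Finset.sum_le_sum_of_subset_of_nonneg
      · intro p hp; simp at hp ⊢; omega
      · intro p _ _; exact mul_nonneg (aj_pos p).le (hq0 p)
    have c3 := Finset.sum_Ico_consecutive (fun p => aj p * q p) hJ12 h23
    have c4 : (∑ p ∈ Finset.Ico J1 J2, aj p) * (θ * V) ≤ ∑ p ∈ Finset.Ico J1 J2, aj p * q p := by
      rw [Finset.sum_mul]
      refine Finset.sum_le_sum fun p hp => mul_le_mul_of_nonneg_left ?_ (aj_pos p).le
      exact key a θ p (Finset.mem_Ico.1 hp).1 e1
    have c5 : (∑ p ∈ Finset.Ico J2 (J3 + J2), aj p) * (θ' * V) ≤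
        ∑ p ∈ Finset.Ico J2 (J3 + J2), aj p * q p := by
      rw [Finset.sum_mul]
      refine Finset.sum_le_sum fun p hp => mul_le_mul_of_nonneg_left ?_ (aj_pos p).le
      exact key b θ' p (Finset.mem_Ico.1 hp).1 e2
    have c6 := mul_le_mul_of_nonneg_right (aj_sum_ge hJ10 hJ12) (mul_nonneg hθ hV0)
    have c7 := mul_le_mul_of_nonneg_right (aj_sum_ge (hJ10.trans hJ12) h23)
      (mul_nonneg (hθ.trans hθ') hV0)
    nlinarith
  have lim : 0.557 * (θ * (1 / Real.sqrt J1) + (θ' - θ) * (1 / Real.sqrt J2)) * V ≤ S := by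
    refine le_of_tendsto' (x := Filter.atTop) ?_ step
    have t1 : Filter.Tendsto (fun J3 : ℕ => 1 / Real.sqrt ((J3 + J2 : ℕ) : ℝ)) Filter.atTop
        (nhds 0) := by
      have t2 : Filter.Tendsto (fun J3 : ℕ => Real.sqrt (J3 : ℝ)) Filter.atTop Filter.atTop :=
        Real.tendsto_sqrt_atTop.comp tendsto_natCast_atTop_atTop
      have t3 := t2.comp (Filter.tendsto_add_atTop_nat J2)
      simpa [Function.comp_def] using tendsto_inv_atTop_zero.comp t3
    have t4 := ((t1.const_mul θ').const_sub
      (θ * (1 / Real.sqrt J1) + (θ' - θ) * (1 / Real.sqrt J2))).const_mul 0.557 |>.mul_const V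
    simpa using t4
  refine le_trans ?_ lim
  have f1 := mul_le_mul_of_nonneg_left (hsq a ha) hθ
  have f2 := mul_le_mul_of_nonneg_left (hsq b (ha.trans hab)) (sub_nonneg.2 hθ')
  exact mul_le_mul_of_nonneg_right (mul_le_mul_of_nonneg_left (add_le_add f1 f2) (by norm_num)) hV0

/-- The smallest eigenvalue of the limiting kernel of the last layer. -/
lemma ntk_pop (u : Fin n → Fin m → ℝ) {δ : ℝ} (hδ : 0 < δ) (hδ1 : δ ≤ 1 / 100) (hn : 0 < n)
    (h1 : ∀ i, l2 (u i) = 1)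
    (h0 : ∀ i j, 0 ≤ dot (u i) (u j)) (hs : ∀ i j, i ≠ j → δ ≤ l2 (u i - u j))
    (v : Fin n → ℝ) :
    1.1 * (δ / (2 * n ^ 2)) * ∑ i, v i ^ 2 ≤ ∑ i, ∑ j, v i * v j *
      (dot (u i) (u j) * (1 / 4 + Real.arcsin (dot (u i) (u j)) / (2 * Real.pi))) := by
  have hV0 : 0 ≤ ∑ i, v i ^ 2 := Finset.sum_nonneg fun i _ => sq_nonneg _
  have hle1 : ∀ i j, dot (u i) (u j) ≤ 1 := fun i j => by
    rw [unit_dot_eq (h1 i) (h1 j)]; nlinarith [sq_nonneg (l2 (u i - u j))]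
  have hpi := Real.pi_pos
  have hpi1 := Real.pi_gt_d2
  have hpi2 := Real.pi_lt_d2
  have hn1 : (1:ℝ) ≤ n := by exact_mod_cast hn
  rcases le_or_gt n 2 with hn2 | hn3
  · have hn2' : (n:ℝ) ≤ 2 := by exact_mod_cast hn2
    have hk0 : 0 ≤ 1 / 2 - δ / (2 * Real.pi) := by
      rw [sub_nonneg, div_le_iff₀ (by positivity)]; nlinarith
    have h := offdiag (fun i j => dot (u i) (u j) *
      (1 / 4 + Real.arcsin (dot (u i) (u j)) / (2 * Real.pi))) (D := 1 / 2)
      (k := 1 / 2 - δ / (2 * Real.pi)) ?_ ?_ ?_ hk0 v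
    · refine le_trans ?_ h
      gcongr
      have hd : δ / (2 * Real.pi) = δ * (1 / (2 * Real.pi)) := by ring
      have hp1 : 0.1585 ≤ 1 / (2 * Real.pi) := by rw [le_div_iff₀ (by positivity)]; linarith
      have hp2 : 1 / (2 * Real.pi) ≤ 0.16 := by rw [div_le_iff₀ (by positivity)]; linarith
      rw [hd] at *
      have hd0 : 0.1585 * δ ≤ δ * (1 / (2 * Real.pi)) := by nlinarith
      interval_cases n
      · norm_num; norm_num at hd0; nlinarith
      · norm_num; norm_num at hd0; nlinarith
    · intro i
      simp only [dot_self, h1]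
      simp only [one_pow, Real.arcsin_one, one_mul]
      field_simp; norm_num
    · intro i j _
      have := Real.arcsin_nonneg.2 (h0 i j)
      have := h0 i j
      positivity
    · intro i j hij
      have a1 : dot (u i) (u j) ≤ Real.cos δ := by
        rw [unit_dot_eq (h1 i) (h1 j)]
        have := Real.one_sub_sq_div_two_le_cos (x := δ)
        nlinarith [hs i j hij]
      have a2 : Real.arcsin (dot (u i) (u j)) ≤ Real.pi / 2 - δ := by
        rw [← Real.sin_pi_div_two_sub] at a1
        have := Real.monotone_arcsin a1
        rwa [Real.arcsin_sin (by linarith) (by linarith)] at this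
      have a3 := Real.arcsin_nonneg.2 (h0 i j)
      calc dot (u i) (u j) * (1 / 4 + Real.arcsin (dot (u i) (u j)) / (2 * Real.pi))
          ≤ 1 * (1 / 4 + (Real.pi / 2 - δ) / (2 * Real.pi)) := by
            gcongr
            exact hle1 i j
        _ = 1 / 2 - δ / (2 * Real.pi) := by field_simp; ring
  · have hn3' : (3:ℝ) ≤ n := by exact_mod_cast hn3
    have hquarter := gram_pow_nonneg u 1 v
    have split : ∑ i, ∑ j, v i * v j *
        (dot (u i) (u j) * (1 / 4 + Real.arcsin (dot (u i) (u j)) / (2 * Real.pi))) =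
        1 / 4 * ∑ i, ∑ j, v i * v j * dot (u i) (u j) ^ 1 + 1 / (2 * Real.pi) *
        ∑ i, ∑ j, v i * v j * (dot (u i) (u j) * Real.arcsin (dot (u i) (u j))) := by
      simp only [Finset.mul_sum, ← Finset.sum_add_distrib]
      refine Finset.sum_congr rfl fun i _ => Finset.sum_congr rfl fun j _ => ?_
      ring
    rw [split]
    suffices h : 3.4576 * (δ / n ^ 2) * ∑ i, v i ^ 2 ≤
        ∑ i, ∑ j, v i * v j * (dot (u i) (u j) * Real.arcsin (dot (u i) (u j))) by
      have hp1 : 1.1 / 3.4576 * (1 / 2) ≤ 1 / (2 * Real.pi) := by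
        rw [le_div_iff₀ (by positivity)]
        nlinarith [Real.pi_lt_d4]
      have hX : 0 ≤ 3.4576 * (δ / n ^ 2) * ∑ i, v i ^ 2 := by positivity
      have h5 := mul_le_mul hp1 h hX (by positivity)
      refine le_trans (le_of_eq ?_) (h5.trans (le_add_of_nonneg_left (by positivity)))
      ring
    have hsum : Real.exp (-1) ≤ 0.36788 := by
      rw [Real.exp_neg]
      rw [inv_le_comm₀ (Real.exp_pos _) (by norm_num)]
      have := Real.exp_one_gt_d9
      norm_num at this ⊢; linarith
    rcases Nat.lt_or_ge n 4 with hn4 | hn4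
    · have : n = 3 := by omega
      subst this
      have h3 : Real.exp (-3) ≤ 0.0498 := by
        have : Real.exp (-3) = Real.exp (-1) ^ 3 := by rw [← Real.exp_nat_mul]; norm_num
        rw [this]
        calc Real.exp (-1) ^ 3 ≤ 0.36788 ^ 3 := by gcongr
          _ ≤ 0.0498 := by norm_num
      refine le_trans ?_ (arcsin_two u hδ hδ1 h1 h0 hs v (a := 1) (b := 3) (θ := 0.448) (θ' := 0.925)
        le_rfl (by norm_num) (by norm_num) (by norm_num) (by push_cast; linarith)
        (by push_cast; linarith))
      refine mul_le_mul_of_nonneg_right ?_ hV0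
      have s1 : Real.sqrt (1 + δ ^ 2) ≤ 1.001 := by
        rw [Real.sqrt_le_left (by norm_num)]; nlinarith
      have s2 : Real.sqrt (3 + δ ^ 2) ≤ 1.74 := by
        rw [Real.sqrt_le_left (by norm_num)]; nlinarith
      have s3 : δ / 1.001 ≤ δ / Real.sqrt (1 + δ ^ 2) := by
        gcongr
      have s4 : δ / 1.74 ≤ δ / Real.sqrt (3 + δ ^ 2) := by
        gcongr
      norm_num at s3 s4 ⊢
      linarith
    · have hn4' : (4:ℝ) ≤ n := by exact_mod_cast hn4
      have h4 : Real.exp (-4) ≤ 0.01832 := by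
        have : Real.exp (-4) = Real.exp (-1) ^ 4 := by rw [← Real.exp_nat_mul]; norm_num
        rw [this]
        calc Real.exp (-1) ^ 4 ≤ 0.36788 ^ 4 := by gcongr
          _ ≤ 0.01832 := by norm_num
      have hex : n / 2 * Real.exp (-n) ≤ 1 - 0.96 := by
        have e1 : Real.exp (-(n:ℝ)) = Real.exp (-4) * (Real.exp (n - 4))⁻¹ := by
          rw [← Real.exp_neg, ← Real.exp_add]; ring_nf
        have e2 : (n:ℝ) / 4 ≤ Real.exp (n - 4) := by
          have := Real.add_one_le_exp ((n:ℝ) - 4); linarith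
        have e3 : (n:ℝ) / 4 * (Real.exp (n - 4))⁻¹ ≤ 1 := by
          rw [← div_eq_mul_inv]; exact div_le_one_of_le₀ e2 (Real.exp_pos _).le
        rw [e1]
        have e4 := Real.exp_pos (-4)
        nlinarith
      refine le_trans ?_ (arcsin_two u hδ hδ1 h1 h0 hs v (a := n) (b := n) (θ := 0.96) (θ' := 0.96)
        (by linarith) le_rfl (by norm_num) le_rfl hex hex)
      refine mul_le_mul_of_nonneg_right ?_ hV0
      have s1 : Real.sqrt (n + δ ^ 2) ≤ n * 0.501 := by
        rw [Real.sqrt_le_left (by positivity)]; nlinarith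
      have s2 : δ / (n * 0.501) ≤ δ / Real.sqrt (n + δ ^ 2) := by
        gcongr
      have s3 : 3.4576 * (δ / n ^ 2) ≤ 0.9 * (δ / n) := by
        rw [pow_two, div_mul_eq_div_div, div_eq_mul_one_div _ (n:ℝ)]
        have : 1 / (n:ℝ) ≤ 1 / 4 := by gcongr
        have : 0 ≤ δ / n := by positivity
        nlinarith
      have s4 : δ / (n * 0.501) = δ / n / 0.501 := by rw [div_mul_eq_div_div]
      rw [s4] at s2
      have : 0 < δ / n := by positivity
      norm_num at s2 s3 ⊢
      linarith
end ntkpop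

/-! ### Nets of sparse and of block-supported vectors -/

section nets

/-- Net points of all coordinate subspaces of dimension `s`. -/
def Vs (m s : ℕ) : Finset (Fin m → ℝ) := by
  classical exact (Finset.powersetCard s Finset.univ).biUnion net

/-- The residue class of `j` modulo `N`, as a set of coordinates. -/
def blk (m N j : ℕ) : Finset (Fin m) := Finset.univ.filter fun k => (k : ℕ) % N = j

/-- Net points of the coordinate subspaces given by residue classes modulo `N`. -/
def Vb (m N : ℕ) : Finset (Fin m → ℝ) := by
  classical exact (Finset.range N).biUnion fun j => net (blk m N j)

variable {m s N : ℕ}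

lemma mem_Vs {S : Finset (Fin m)} (hS : S.card = s) {v : Fin m → ℝ} (hv : v ∈ net S) :
    v ∈ Vs m s := by
  classical
  exact Finset.mem_biUnion.2 ⟨S, Finset.mem_powersetCard.2 ⟨Finset.subset_univ _, hS⟩, hv⟩

lemma mem_Vb {j : ℕ} (hj : j < N) {v : Fin m → ℝ} (hv : v ∈ net (blk m N j)) : v ∈ Vb m N := by
  classical
  exact Finset.mem_biUnion.2 ⟨j, Finset.mem_range.2 hj, hv⟩

lemma l2_Vs {v : Fin m → ℝ} (hv : v ∈ Vs m s) : l2 v ≤ 1 := by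
  classical
  obtain ⟨S, -, h⟩ := Finset.mem_biUnion.1 hv
  exact net_l2 h

lemma l2_Vb {v : Fin m → ℝ} (hv : v ∈ Vb m N) : l2 v ≤ 1 := by
  classical
  obtain ⟨S, -, h⟩ := Finset.mem_biUnion.1 hv
  exact net_l2 h

lemma exp_log_nat (hm : 0 < m) : Real.exp (Real.log m) = m :=
  Real.exp_log (by exact_mod_cast hm)

lemma card_Vs (hm : 5 ≤ m) : ((Vs m s).card : ℝ) ≤ Real.exp (2 * (s * Real.log m)) := by
  classical
  have h1 : (Vs m s).card ≤ (Finset.powersetCard s (Finset.univ : Finset (Fin m))).card * 5 ^ s :=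
    Finset.card_biUnion_le_card_mul _ _ _ fun S hS => by
      have := net_card S; rwa [(Finset.mem_powersetCard.1 hS).2] at this
  rw [Finset.card_powersetCard, Finset.card_univ, Fintype.card_fin] at h1
  have h2 : (Vs m s).card ≤ m ^ s * m ^ s :=
    h1.trans (Nat.mul_le_mul (Nat.choose_le_pow _ _) (Nat.pow_le_pow_left hm s))
  have e : Real.exp (2 * (s * Real.log m)) = (m:ℝ) ^ s * m ^ s := by
    rw [two_mul, Real.exp_add, Real.exp_nat_mul, exp_log_nat (by omega)]
  rw [e]; exact_mod_cast h2

lemma card_blk (m N j : ℕ) : (blk m N j).card ≤ m / N + 1 := by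
  rw [← Finset.card_range (m / N + 1)]
  refine Finset.card_le_card_of_injOn (fun k => (k : ℕ) / N) ?_ ?_
  · intro k hk
    rw [Finset.coe_range, Set.mem_Iio, Nat.lt_succ_iff]
    exact Nat.div_le_div_right k.2.le
  · intro a ha b hb hab
    simp only [blk, Finset.coe_filter, Finset.mem_univ, true_and, Set.mem_ofPred_eq] at ha hb
    simp only at hab
    apply Fin.ext
    rw [← Nat.div_add_mod (a:ℕ) N, ← Nat.div_add_mod (b:ℕ) N, ha, hb, hab]

lemma five_pow_le (k : ℕ) : (5:ℝ) ^ k ≤ Real.exp (2 * k) := by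
  have h : (5:ℝ) ≤ Real.exp 2 := by
    have h1 := Real.exp_one_gt_d9
    have h2 : Real.exp 2 = Real.exp 1 * Real.exp 1 := by rw [← Real.exp_add]; norm_num
    rw [h2]; nlinarith
  calc (5:ℝ) ^ k ≤ Real.exp 2 ^ k := by gcongr
    _ = Real.exp (2 * k) := by rw [← Real.exp_nat_mul]; ring_nf

lemma card_Vb (hN : 0 < N) (hm : 5 * N ≤ m) :
    ((Vb m N).card : ℝ) ≤ Real.exp (Real.log m + 2 * (m / N)) := by
  classical
  have h1 : (Vb m N).card ≤ (Finset.range N).card * 5 ^ (m / N + 1) :=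
    Finset.card_biUnion_le_card_mul _ _ _ fun j _ =>
      (net_card _).trans (Nat.pow_le_pow_right (by norm_num) (card_blk m N j))
  rw [Finset.card_range] at h1
  have h2 : (Vb m N).card ≤ m * 5 ^ (m / N) := by
    calc _ ≤ _ := h1
      _ = (5 * N) * 5 ^ (m / N) := by ring
      _ ≤ _ := Nat.mul_le_mul_right _ hm
  rw [Real.exp_add, exp_log_nat (by omega)]
  calc ((Vb m N).card : ℝ) ≤ m * 5 ^ (m / N) := by exact_mod_cast h2
    _ ≤ m * Real.exp (2 * (m / N : ℕ)) := by gcongr; exact five_pow_le _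
    _ ≤ m * Real.exp (2 * (m / N)) := by gcongr; exact Nat.cast_div_le

/-- Every vector is the orthogonal sum of its `N` residue-class blocks. -/
lemma sum_blk (hN : 0 < N) (v : Fin m → ℝ) :
    v = ∑ j ∈ Finset.range N, res (blk m N j) v := by
  ext k
  rw [Finset.sum_apply, Finset.sum_eq_single ((k:ℕ) % N)]
  · simp [res, blk]
  · intro j _ hj; simp [res, blk, hj.symm]
  · intro h; exact absurd (Finset.mem_range.2 (Nat.mod_lt _ hN)) h

lemma sum_blk_l2 (hN : 0 < N) (v : Fin m → ℝ) :
    ∑ j ∈ Finset.range N, l2 (res (blk m N j) v) ≤ Real.sqrt N * l2 v := by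
  have h1 : ∑ j ∈ Finset.range N, l2 (res (blk m N j) v) ^ 2 = l2 v ^ 2 := by
    simp only [l2_sq]
    rw [Finset.sum_comm]
    refine Finset.sum_congr rfl fun k _ => ?_
    rw [Finset.sum_eq_single ((k:ℕ) % N)]
    · simp [res, blk]
    · intro j _ hj; simp [res, blk, hj.symm]
    · intro h; exact absurd (Finset.mem_range.2 (Nat.mod_lt _ hN)) h
  have h2 := sq_sum_le_card_mul_sum_sq (s := Finset.range N) (f := fun j => l2 (res (blk m N j) v))
  rw [h1, Finset.card_range] at h2
  refine le_of_sq_le_sq (h2.trans_eq ?_) (mul_nonneg (Real.sqrt_nonneg _) (l2_nonneg _))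
  rw [mul_pow, Real.sq_sqrt (Nat.cast_nonneg _)]

/-- A seminorm bounded by `c` on the block nets is bounded by `2 c √N` times the norm. -/
lemma blk_bound (hN : 0 < N) (f : (Fin m → ℝ) → ℝ) (hadd : ∀ u v, f (u + v) ≤ f u + f v)
    {c : ℝ} (hc : 0 ≤ c) (h : ∀ j < N, ∀ v, Supp (blk m N j) v → f v ≤ c * l2 v) (h0 : f 0 ≤ 0)
    (v : Fin m → ℝ) : f v ≤ c * Real.sqrt N * l2 v := by
  have h1 : ∀ t : Finset ℕ, f (∑ j ∈ t, res (blk m N j) v) ≤ ∑ j ∈ t, f (res (blk m N j) v) := by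
    intro t
    classical
    induction t using Finset.induction_on with
    | empty => simpa using h0
    | insert i t hi ih =>
      rw [Finset.sum_insert hi, Finset.sum_insert hi]
      exact (hadd _ _).trans (by linarith)
  conv_lhs => rw [sum_blk hN v]
  refine (h1 _).trans ?_
  calc ∑ j ∈ Finset.range N, f (res (blk m N j) v)
      ≤ ∑ j ∈ Finset.range N, c * l2 (res (blk m N j) v) :=
        Finset.sum_le_sum fun j hj => h j (Finset.mem_range.1 hj) _ (supp_res _ _)
    _ ≤ c * (Real.sqrt N * l2 v) := by
        rw [← Finset.mul_sum]; gcongr; exact sum_blk_l2 hN v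
    _ = _ := by ring

end nets

/-- Elementary arithmetic of union bounds. -/
lemma num_bd {N p a b Λ : ℝ} (hN0 : 0 ≤ N) (hN : N ≤ Real.exp a) (hp : p ≤ 2 * Real.exp (-b))
    (h : a + 1 + Λ ≤ b) : N * p ≤ Real.exp (-Λ) := by
  have h2 : (2:ℝ) ≤ Real.exp 1 := by have := Real.add_one_le_exp 1; linarith
  calc N * p ≤ N * (2 * Real.exp (-b)) := by gcongr
    _ ≤ Real.exp a * (Real.exp 1 * Real.exp (-b)) := by gcongr
    _ = Real.exp (a + (1 + -b)) := by rw [Real.exp_add, Real.exp_add]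
    _ ≤ Real.exp (-Λ) := Real.exp_le_exp.2 (by linarith)

/-! ### Union bounds over the nets -/

/-- Numerical relations between the sizes: `s` is the sparsity level, `β` the anti-concentration
scale, `τ` and `γ` the relative accuracies for norms and for the kernel. -/
structure Par (n m d L s : ℕ) (β τ γ : ℝ) : Prop where
  hL : 1 ≤ L
  hn : 1 ≤ n
  hd : 1 ≤ d
  lm : 1000 ≤ Real.log m
  nL : 1000000 * (n:ℝ) ^ 2 * ((L:ℝ) + 1) ^ 2 ≤ m
  ls : Real.log m ≤ s
  sm : 1000000 * (L:ℝ) ^ 2 * (s * Real.log m) ≤ m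
  ds : d ≤ s * Real.log m
  bm : 5000 * Real.log m ^ 2 ≤ m * β ^ 2
  b0 : 0 < β
  b1 : β ≤ 1
  tm : 100000 * Real.log m ^ 2 ≤ m * τ ^ 2
  t0 : 0 < τ
  t1 : τ ≤ 1
  tl : ((L:ℝ) + 1) * τ ≤ 1 / 200
  gm : 10000 * (Real.log m ^ 2 + d) ≤ m * γ ^ 2
  g0 : 0 < γ
  g1 : γ ≤ 1

/-- The modulus of the residue-class blocks. -/
def Nb (L : ℕ) : ℕ := 160000 * L ^ 2

/-- The exponent of the failure probabilities. -/
def Lam (m : ℕ) : ℝ := Real.log m ^ 2 / 40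

/-- Union bound: `exp a` events of probability at most `2 exp (-b)` each. -/
lemma whp {Ω ι : Type*} [MeasurableSpace Ω] {μ : Measure Ω} (F : Finset ι) (Q : ι → Ω → Prop)
    {p a b Λ : ℝ} (h : ∀ i ∈ F, μ {z | ¬ Q i z} ≤ ENNReal.ofReal p)
    (hN : (F.card : ℝ) ≤ Real.exp a) (hp : p ≤ 2 * Real.exp (-b)) (hab : a + 1 + Λ ≤ b) :
    μ {z | ¬ ∀ i ∈ F, Q i z} ≤ ENNReal.ofReal (Real.exp (-Λ)) := by
  have e : {z | ¬ ∀ i ∈ F, Q i z} = {z | ∃ i ∈ F, z ∈ {z | ¬ Q i z}} := by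
    ext z; simp
  rw [e]
  exact (union_bd F (fun i => {z | ¬ Q i z}) h le_rfl).trans
    (ENNReal.ofReal_le_ofReal (num_bd (Nat.cast_nonneg _) hN hp hab))

lemma two_exp (b : ℝ) : Real.exp b ≤ 2 * Real.exp b := by linarith [Real.exp_pos b]

section

variable {𝔡 n m d L s : ℕ} {β τ γ : ℝ}

namespace Par

lemma m0 (h : Par n m d L s β τ γ) : 0 < m := by
  have h1 : 1 ≤ n ^ 2 * (L + 1) ^ 2 := Nat.one_le_iff_ne_zero.2 (by have := h.hn; positivity)
  have h2 : (1000000 * n ^ 2 * (L + 1) ^ 2 : ℕ) ≤ m := by exact_mod_cast h.nL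
  nlinarith

lemma nLm (h : Par n m d L s β τ γ) : 1000000 * n ^ 2 * (L + 1) ^ 2 ≤ m := by exact_mod_cast h.nL

lemma el (h : Par n m d L s β τ γ) : Real.exp (Real.log m) = m := exp_log_nat h.m0

lemma N0 (h : Par n m d L s β τ γ) : 0 < Nb L := by unfold Nb; have := h.hL; positivity

lemma lm2 (h : Par n m d L s β τ γ) : Real.log m ^ 2 ≤ s * Real.log m := by
  have := h.lm; have := h.ls; nlinarith

lemma sm' (h : Par n m d L s β τ γ) : (s * Real.log m) * 100000 ≤ m / (L:ℝ) ^ 2 := by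
  have hL : (0:ℝ) < L := by exact_mod_cast h.hL
  rw [le_div_iff₀ (by positivity)]
  have h0 : 0 ≤ s * Real.log m := le_trans (sq_nonneg _) h.lm2
  have h1 : 0 ≤ s * Real.log m * (L:ℝ) ^ 2 := by positivity
  linarith [h.sm]

lemma lmm (h : Par n m d L s β τ γ) : 1000 * Real.log m ≤ Real.log m ^ 2 := by
  have := h.lm; nlinarith

lemma mL (h : Par n m d L s β τ γ) : m / (L:ℝ) ^ 2 ≤ m := by
  have hL : (1:ℝ) ≤ L := by exact_mod_cast h.hL
  exact div_le_self (Nat.cast_nonneg _) (one_le_pow₀ hL)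

lemma mNb (_ : Par n m d L s β τ γ) : (m:ℝ) / Nb L = m / (L:ℝ) ^ 2 / 160000 := by
  unfold Nb; push_cast; rw [div_div]; congr 1; ring

lemma cS (h : Par n m d L s β τ γ) :
    ((Vs m s).card : ℝ) ≤ Real.exp (2 * (s * Real.log m)) := by
  refine card_Vs ?_
  have := h.nLm
  have h1 : 1 ≤ n ^ 2 * (L + 1) ^ 2 := Nat.one_le_iff_ne_zero.2 (by have := h.hn; positivity)
  nlinarith

lemma cB (h : Par n m d L s β τ γ) :
    ((Vb m (Nb L)).card : ℝ) ≤ Real.exp (Real.log m + 2 * (m / Nb L)) := by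
  refine card_Vb h.N0 ?_
  have := h.nLm
  have h1 : 1 ≤ n ^ 2 := Nat.one_le_iff_ne_zero.2 (by have := h.hn; positivity)
  unfold Nb
  have h2 : L ^ 2 ≤ (L + 1) ^ 2 := Nat.pow_le_pow_left (by omega) 2
  calc 5 * (160000 * L ^ 2) ≤ 1000000 * 1 * (L + 1) ^ 2 := by omega
    _ ≤ 1000000 * n ^ 2 * (L + 1) ^ 2 := by gcongr
    _ ≤ m := this

lemma cnL (h : Par n m d L s β τ γ) : (n:ℝ) * ((L + 1) * L) ≤ Real.exp (Real.log m) := by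
  rw [h.el]
  refine le_trans ?_ h.nL
  have hn : (1:ℝ) ≤ n := by exact_mod_cast h.hn
  have hL : (1:ℝ) ≤ L := by exact_mod_cast h.hL
  have h1 : (n:ℝ) ≤ n ^ 2 := by nlinarith
  have h2 : ((L:ℝ) + 1) * L ≤ (L + 1) ^ 2 := by nlinarith
  have h3 : (n:ℝ) * ((L + 1) * L) ≤ n ^ 2 * (L + 1) ^ 2 := by gcongr
  nlinarith [sq_nonneg ((n:ℝ) * (L + 1))]

lemma cnn (h : Par n m d L s β τ γ) : (n:ℝ) * (n * (L + 1)) ≤ Real.exp (Real.log m) := by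
  rw [h.el]
  refine le_trans ?_ h.nL
  have hL : (1:ℝ) ≤ L := by exact_mod_cast h.hL
  have h2 : ((L:ℝ) + 1) ≤ (L + 1) ^ 2 := by nlinarith
  have h3 : (n:ℝ) * (n * (L + 1)) ≤ n ^ 2 * (L + 1) ^ 2 := by
    calc (n:ℝ) * (n * (L + 1)) = n ^ 2 * (L + 1) := by ring
      _ ≤ _ := by gcongr
  nlinarith [sq_nonneg ((n:ℝ) * (L + 1))]

end Par

lemma cnet (p : ℕ) : ((net (Finset.univ : Finset (Fin p))).card : ℝ) ≤ Real.exp (2 * p) := by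
  have h := net_card (Finset.univ : Finset (Fin p))
  rw [Finset.card_univ, Fintype.card_fin] at h
  exact le_trans (by exact_mod_cast h) (five_pow_le p)

lemma whp_diag (h : Par n m d L s β τ γ) (x : Fin n → Fin 𝔡 → ℝ)
    (V : Finset (Fin m → ℝ)) {Q : ℝ} (hV : (V.card : ℝ) ≤ Real.exp Q)
    (hQ : Q ≤ m / (L:ℝ) ^ 2 / 10000) :
    initMeasure 𝔡 m d L {z | ¬ ∀ q ∈ (Finset.univ : Finset (Fin n)) ×ˢ Finset.range (L + 1) ×ˢ
      (Finset.univ : Finset (Fin L)) ×ˢ V,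
      hseq z.1 z.2.1 (x q.1) q.2.2.1 ≠ 0 →
        l2 (signOf (gseq z.1 z.2.1 (x q.1) (q.2.2.1 + 1)) * mulVec (Wat z.2.1 (q.2.2.1 + 1))
          (T0 z.1 z.2.1 (x q.1) q.2.1 q.2.2.1 q.2.2.2)) ^ 2 ≤
        (1 + 1 / (L:ℝ)) * l2 (T0 z.1 z.2.1 (x q.1) q.2.1 q.2.2.1 q.2.2.2) ^ 2} ≤
      ENNReal.ofReal (Real.exp (-Lam m)) := by
  have hL : (1:ℝ) ≤ L := by exact_mod_cast h.hL
  refine whp _ _ (p := Real.exp (-(m * (1 / (L:ℝ)) ^ 2 / 8640))) (a := Real.log m + Q)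
    (b := m * (1 / (L:ℝ)) ^ 2 / 8640) (fun q _ => ?_) ?_ (two_exp _) ?_
  · refine le_trans (measure_mono fun z hz => ?_) (ev_diag h.m0 (x q.1) q.2.1 q.2.2.1 q.2.2.2
      (τ := 1 / L) (by positivity) (by rw [div_le_iff₀ (by linarith)]; linarith))
    simp only [Set.mem_ofPred_eq] at hz ⊢
    push Not at hz
    exact hz
  · simp only [Finset.card_product, Finset.card_univ, Fintype.card_fin, Finset.card_range]
    push_cast
    rw [Real.exp_add]
    calc (n:ℝ) * ((L + 1) * (L * V.card)) = n * ((L + 1) * L) * V.card := by ring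
      _ ≤ _ := mul_le_mul h.cnL hV (Nat.cast_nonneg _) (Real.exp_pos _).le
  · have e : (m:ℝ) * (1 / (L:ℝ)) ^ 2 / 8640 = m / (L:ℝ) ^ 2 / 8640 := by ring
    rw [e]
    have := h.sm'; have := h.lm2; have := h.lmm; have := h.lm
    unfold Lam
    linarith

/-- Union bound for the bilinear forms `uᵀ W_{k+1} T v` with `u` in the sparse net and `v` in a net `V`. -/
lemma whp_lin (h : Par n m d L s β τ γ) (x : Fin n → Fin 𝔡 → ℝ)
    (V : Finset (Fin m → ℝ)) {Q t : ℝ} (hV : (V.card : ℝ) ≤ Real.exp Q) (ht : 0 ≤ t)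
    (hQ : Q + 4 * (s * Real.log m) ≤ t ^ 2 * m / 16) :
    initMeasure 𝔡 m d L {z | ¬ ∀ q ∈ (Finset.univ : Finset (Fin n)) ×ˢ Finset.range (L + 1) ×ˢ
      (Finset.univ : Finset (Fin L)) ×ˢ V ×ˢ Vs m s,
      l2 (T0 z.1 z.2.1 (x q.1) q.2.1 q.2.2.1 q.2.2.2.1) ≤ 2 →
        |dot q.2.2.2.2 (mulVec (Wat z.2.1 (q.2.2.1 + 1))
          (T0 z.1 z.2.1 (x q.1) q.2.1 q.2.2.1 q.2.2.2.1))| ≤ t} ≤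
      ENNReal.ofReal (Real.exp (-Lam m)) := by
  refine whp _ _ (p := 2 * Real.exp (-(t ^ 2 * m / 16)))
    (a := Real.log m + (Q + 2 * (s * Real.log m)))
    (b := t ^ 2 * m / 16) (fun q hq => ?_) ?_ le_rfl ?_
  · simp only [Finset.mem_product] at hq
    refine le_trans (measure_mono fun z hz => ?_) (ev_lin h.m0 (x q.1) q.2.1 q.2.2.1 q.2.2.2.2
      q.2.2.2.1 (l2_Vs hq.2.2.2.2) ht)
    simp only [Set.mem_ofPred_eq] at hz ⊢
    push Not at hz
    exact hz
  · simp only [Finset.card_product, Finset.card_univ, Fintype.card_fin, Finset.card_range]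
    push_cast
    rw [Real.exp_add, Real.exp_add Q]
    calc (n:ℝ) * ((L + 1) * (L * (V.card * (Vs m s).card))) =
        n * ((L + 1) * L) * (V.card * (Vs m s).card) := by ring
      _ ≤ _ := mul_le_mul h.cnL (mul_le_mul hV h.cS (Nat.cast_nonneg _) (Real.exp_pos _).le)
          (by positivity) (Real.exp_pos _).le
  · have := h.lm2; have := h.lmm; have := h.lm
    unfold Lam
    linarith

/-- Union bound for the output matrix acting on transports of sparse vectors. -/
lemma whp_outS (h : Par n m d L s β τ γ) (x : Fin n → Fin 𝔡 → ℝ)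
    {t : ℝ} (ht : 0 ≤ t) (hQ : 8 * (s * Real.log m) ≤ t ^ 2 * d / 8) :
    initMeasure 𝔡 m d L {z | ¬ ∀ q ∈ (Finset.univ : Finset (Fin n)) ×ˢ Finset.range (L + 1) ×ˢ
      Vs m s ×ˢ net (Finset.univ : Finset (Fin d)),
      l2 (T0 z.1 z.2.1 (x q.1) q.2.1 L q.2.2.1) ≤ 2 →
        |dot q.2.2.2 (mulVec z.2.2 (T0 z.1 z.2.1 (x q.1) q.2.1 L q.2.2.1))| ≤ t} ≤
      ENNReal.ofReal (Real.exp (-Lam m)) := by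
  have hL : (1:ℝ) ≤ L := by exact_mod_cast h.hL
  refine whp _ _ (p := 2 * Real.exp (-(t ^ 2 * d / 8)))
    (a := Real.log m + (2 * (s * Real.log m) + 2 * d))
    (b := t ^ 2 * d / 8) (fun q hq => ?_) ?_ le_rfl ?_
  · simp only [Finset.mem_product] at hq
    refine le_trans (measure_mono fun z hz => ?_) (ev_linB h.hd
      (fun A W => T0 A W (x q.1) q.2.1 L q.2.2.1) (measurable_T0 mA mW _ _ _ _) q.2.2.2
      (net_l2 hq.2.2.2) ht)
    simp only [Set.mem_ofPred_eq] at hz ⊢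
    push Not at hz
    exact hz
  · simp only [Finset.card_product, Finset.card_univ, Fintype.card_fin, Finset.card_range]
    push_cast
    rw [Real.exp_add, Real.exp_add (2 * (s * Real.log m))]
    calc (n:ℝ) * ((L + 1) * ((Vs m s).card * (net (Finset.univ : Finset (Fin d))).card)) ≤
        n * ((L + 1) * L) * ((Vs m s).card * (net (Finset.univ : Finset (Fin d))).card) := by
          rw [← mul_assoc]; gcongr; nlinarith
      _ ≤ _ := mul_le_mul h.cnL (mul_le_mul h.cS (cnet d) (Nat.cast_nonneg _) (Real.exp_pos _).le)
          (by positivity) (Real.exp_pos _).le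
  · have := h.lm2; have := h.lmm; have := h.lm; have := h.ds
    unfold Lam
    linarith

lemma whp_outA (h : Par n m d L s β τ γ)
    {t : ℝ} (ht : 0 ≤ t) (hQ : 5 * (m : ℝ) ≤ t ^ 2 * d / 8) :
    initMeasure 𝔡 m d L {z | ¬ ∀ q ∈ net (Finset.univ : Finset (Fin m)) ×ˢ
      net (Finset.univ : Finset (Fin d)), |dot q.2 (mulVec z.2.2 q.1)| ≤ t} ≤
      ENNReal.ofReal (Real.exp (-Lam m)) := by
  refine whp _ _ (p := 2 * Real.exp (-(t ^ 2 * d / 8)))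
    (a := 2 * m + 2 * d)
    (b := t ^ 2 * d / 8) (fun q hq => ?_) ?_ le_rfl ?_
  · simp only [Finset.mem_product] at hq
    refine le_trans (measure_mono fun z hz => ?_) (ev_linB h.hd
      (fun _ _ => q.1) measurable_const q.2 (net_l2 hq.2) ht)
    simp only [Set.mem_ofPred_eq] at hz ⊢
    push Not at hz
    exact ⟨(net_l2 hq.1).trans (by norm_num), hz⟩
  · simp only [Finset.card_product]
    push_cast
    rw [Real.exp_add]
    exact mul_le_mul (cnet m) (cnet d) (Nat.cast_nonneg _) (Real.exp_pos _).le
  · have := h.lm2; have := h.lmm; have := h.lm; have := h.ds; have := h.sm'; have := h.mL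
    unfold Lam
    linarith

lemma whp_op (h : Par n m d L s β τ γ) :
    initMeasure 𝔡 m d L {z | ¬ ∀ q ∈ (Finset.univ : Finset (Fin L)) ×ˢ
      net (Finset.univ : Finset (Fin m)),
      l2 (mulVec (Wat z.2.1 (q.1 + 1)) q.2) ^ 2 ≤ 202 * l2 q.2 ^ 2} ≤
      ENNReal.ofReal (Real.exp (-Lam m)) := by
  have hn : (1:ℝ) ≤ n := by exact_mod_cast h.hn
  have hL : (1:ℝ) ≤ L := by exact_mod_cast h.hL
  refine whp _ _ (p := Real.exp (-(4 * m))) (a := Real.log m + 2 * m)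
    (b := 4 * m) (fun q hq => ?_) ?_ (two_exp _) ?_
  · refine le_trans (measure_mono fun z hz => ?_) (ev_op h.m0 q.1 q.2)
    simp only [Set.mem_ofPred_eq] at hz ⊢
    push Not at hz
    exact hz
  · simp only [Finset.card_product, Finset.card_univ, Fintype.card_fin]
    push_cast
    rw [Real.exp_add]
    refine mul_le_mul (le_trans ?_ h.cnL) (cnet m) (Nat.cast_nonneg _) (Real.exp_pos _).le
    have h1 : (1:ℝ) ≤ n * (L + 1) := by nlinarith
    calc (L:ℝ) = 1 * L := (one_mul _).symm
      _ ≤ n * (L + 1) * L := by gcongr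
      _ = _ := by ring
  · have := h.lm2; have := h.lmm; have := h.lm; have := h.ds; have := h.sm'; have := h.mL
    unfold Lam
    linarith

lemma whp_count (h : Par n m d L s β τ γ) (x : Fin n → Fin 𝔡 → ℝ) :
    initMeasure 𝔡 m d L {z | ¬ ∀ q ∈ (Finset.univ : Finset (Fin n)) ×ˢ
      (Finset.univ : Finset (Fin L)),
      hseq z.1 z.2.1 (x q.1) q.2 ≠ 0 → ((Finset.univ.filter fun k =>
        |gseq z.1 z.2.1 (x q.1) (q.2 + 1) k| * Real.sqrt m ≤
          β * l2 (hseq z.1 z.2.1 (x q.1) q.2)).card : ℝ) ≤ 2 * β * m} ≤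
      ENNReal.ofReal (Real.exp (-Lam m)) := by
  have hn : (1:ℝ) ≤ n := by exact_mod_cast h.hn
  have hL : (1:ℝ) ≤ L := by exact_mod_cast h.hL
  refine whp _ _ (p := Real.exp (-(m * β ^ 2 / 2160))) (a := Real.log m)
    (b := m * β ^ 2 / 2160) (fun q hq => ?_) ?_ (two_exp _) ?_
  · refine le_trans (measure_mono fun z hz => ?_) (ev_layer x q.2
      (fun H M => H q.1 ≠ 0 ∧ 2 * β * m < ((Finset.univ.filter fun k =>
        |mulVec M (H q.1) k| * Real.sqrt m ≤ β * l2 (H q.1)).card : ℝ)) ?_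
        (c := ENNReal.ofReal (Real.exp (-(m * β ^ 2 / 2160)))) ?_)
    · have hz := Classical.not_imp.1 hz
      exact ⟨hz.1, lt_of_not_ge hz.2⟩
    · have mH : Measurable fun z : (Fin n → Fin m → ℝ) × (Fin m → Fin m → ℝ) => z.1 q.1 := by
        fun_prop
      have mM : Measurable fun z : (Fin n → Fin m → ℝ) × (Fin m → Fin m → ℝ) =>
          mulVec z.2 (z.1 q.1) := measurable_mulVec measurable_snd mH
      refine ms_and (ms_ne mH) (measurableSet_lt measurable_const ?_)
      simp only [Finset.card_filter, Nat.cast_sum]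
      refine Finset.measurable_sum _ fun k _ => ?_
      have : Measurable fun z : (Fin n → Fin m → ℝ) × (Fin m → Fin m → ℝ) =>
          if |mulVec z.2 (z.1 q.1) k| * Real.sqrt m ≤ β * l2 (z.1 q.1) then (1:ℝ) else 0 := by
        refine Measurable.ite (measurableSet_le ?_ ?_) measurable_const measurable_const
        · exact (((measurable_pi_apply k).comp mM).abs).mul_const _
        · exact (measurable_l2.comp mH).const_mul _
      convert this using 2
      split_ifs <;> simp
    · intro H _
      by_cases hh : H q.1 = 0
      · simp [hh]
      · refine le_trans (measure_mono fun M hM => ?_) (fresh_count h.m0 hh h.b0.le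
          (h.b1.trans (by norm_num)))
        exact hM.2
  · simp only [Finset.card_product, Finset.card_univ, Fintype.card_fin]
    push_cast
    refine le_trans ?_ h.cnL
    gcongr
    nlinarith
  · have := h.lm2; have := h.lmm; have := h.lm; have := h.bm
    unfold Lam
    linarith

end

/-! ### Norms, separation, kernel and output at initialization -/

lemma fresh_norm {q m : ℕ} (hm : 0 < m) {z : Fin q → ℝ} (hz : z ≠ 0) {τ : ℝ}
    (h0 : 0 ≤ τ) (h1 : τ ≤ 120) :
    gaussMat m q (2 / m) {M | ¬ ((1 - τ) * l2 z ^ 2 ≤ l2 (relu (mulVec M z)) ^ 2 ∧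
      l2 (relu (mulVec M z)) ^ 2 ≤ (1 + τ) * l2 z ^ 2)} ≤
      ENNReal.ofReal (2 * Real.exp (-(m * τ ^ 2 / 8640))) := by
  have hsub : {M : Fin m → Fin q → ℝ | ¬ ((1 - τ) * l2 z ^ 2 ≤ l2 (relu (mulVec M z)) ^ 2 ∧
      l2 (relu (mulVec M z)) ^ 2 ≤ (1 + τ) * l2 z ^ 2)} ⊆
      {M | l2 (relu (mulVec M z)) ^ 2 < (1 - τ) * l2 z ^ 2} ∪
      {M | (1 + τ) * l2 z ^ 2 < l2 (signOf (mulVec M z) * mulVec M z) ^ 2} := by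
    intro M hM
    simp only [Set.mem_ofPred_eq, Set.mem_union, ← relu_eq_signOf] at hM ⊢
    by_contra hc
    simp only [not_or, not_lt] at hc
    exact hM hc
  refine (measure_mono hsub).trans ((measure_union_le _ _).trans ?_)
  rw [two_mul, ENNReal.ofReal_add (Real.exp_pos _).le (Real.exp_pos _).le]
  exact add_le_add (fresh_norm_ge hm z h0 h1) (fresh_diag hm hz z h0 h1)

lemma signOf_zero_one {p : ℕ} (v : Fin p → ℝ) (k : Fin p) : signOf v k = 0 ∨ signOf v k = 1 := by
  unfold signOf; split_ifs <;> simp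

section

variable {𝔡 n m d L s : ℕ} {β τ γ : ℝ}

lemma Par.tL (h : Par n m d L s β τ γ) :
    Real.log m + 1 + Lam m ≤ m * τ ^ 2 / 8640 := by
  have := h.lmm; have := h.lm; have := h.tm
  unfold Lam
  linarith

lemma Par.cn (h : Par n m d L s β τ γ) : (n:ℝ) ≤ Real.exp (Real.log m) := by
  refine le_trans ?_ h.cnn
  have hn : (1:ℝ) ≤ n := by exact_mod_cast h.hn
  have hL : (1:ℝ) ≤ L := by exact_mod_cast h.hL
  nlinarith [mul_le_mul hn hL zero_le_one (by linarith)]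

lemma whp_norm0 (h : Par n m d L s β τ γ) (x : Fin n → Fin 𝔡 → ℝ)
    (hx : ∀ i, l2 (x i) = 1) :
    initMeasure 𝔡 m d L {z | ¬ ∀ i ∈ (Finset.univ : Finset (Fin n)),
      1 - τ ≤ l2 (hseq z.1 z.2.1 (x i) 0) ^ 2 ∧ l2 (hseq z.1 z.2.1 (x i) 0) ^ 2 ≤ 1 + τ} ≤
      ENNReal.ofReal (Real.exp (-Lam m)) := by
  refine whp _ _ (p := 2 * Real.exp (-(m * τ ^ 2 / 8640))) (a := Real.log m)
    (b := m * τ ^ 2 / 8640) (fun i _ => ?_) ?_ le_rfl h.tL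
  · refine secA ?_ fun W B => ?_
    · have mh : Measurable fun z : Om 𝔡 m d L => l2 (hseq z.1 z.2.1 (x i) 0) ^ 2 :=
        (measurable_l2.comp (measurable_hseq mA mW (x i) 0)).pow_const 2
      exact (ms_and (measurableSet_le measurable_const mh)
        (measurableSet_le mh measurable_const)).compl
    · have hx0 : x i ≠ 0 := by
        intro h0; have := hx i; rw [h0, l2_zero] at this; norm_num at this
      have := fresh_norm h.m0 hx0 h.t0.le (h.t1.trans (by norm_num))
      simp only [hx i, one_pow, mul_one] at this
      exact this
  · simpa using h.cn

lemma whp_norm (h : Par n m d L s β τ γ) (x : Fin n → Fin 𝔡 → ℝ) :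
    initMeasure 𝔡 m d L {z | ¬ ∀ q ∈ (Finset.univ : Finset (Fin n)) ×ˢ
      (Finset.univ : Finset (Fin L)), hseq z.1 z.2.1 (x q.1) q.2 ≠ 0 →
      (1 - τ) * l2 (hseq z.1 z.2.1 (x q.1) q.2) ^ 2 ≤
          l2 (hseq z.1 z.2.1 (x q.1) (q.2 + 1)) ^ 2 ∧
        l2 (hseq z.1 z.2.1 (x q.1) (q.2 + 1)) ^ 2 ≤
          (1 + τ) * l2 (hseq z.1 z.2.1 (x q.1) q.2) ^ 2} ≤
      ENNReal.ofReal (Real.exp (-Lam m)) := by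
  have hn : (1:ℝ) ≤ n := by exact_mod_cast h.hn
  have hL : (1:ℝ) ≤ L := by exact_mod_cast h.hL
  refine whp _ _ (p := 2 * Real.exp (-(m * τ ^ 2 / 8640))) (a := Real.log m)
    (b := m * τ ^ 2 / 8640) (fun q _ => ?_) ?_ le_rfl h.tL
  · refine le_trans (measure_mono fun z hz => ?_) (ev_layer x q.2
      (fun H M => H q.1 ≠ 0 ∧ ¬ ((1 - τ) * l2 (H q.1) ^ 2 ≤ l2 (relu (mulVec M (H q.1))) ^ 2 ∧
        l2 (relu (mulVec M (H q.1))) ^ 2 ≤ (1 + τ) * l2 (H q.1) ^ 2)) ?_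
        (c := ENNReal.ofReal (2 * Real.exp (-(m * τ ^ 2 / 8640)))) ?_)
    · have hz := Classical.not_imp.1 hz
      simp only [hseq_succ _ _ _ q.2.2] at hz
      exact hz
    · have mH : Measurable fun z : (Fin n → Fin m → ℝ) × (Fin m → Fin m → ℝ) => z.1 q.1 := by
        fun_prop
      have mM : Measurable fun z : (Fin n → Fin m → ℝ) × (Fin m → Fin m → ℝ) =>
          l2 (relu (mulVec z.2 (z.1 q.1))) ^ 2 :=
        (measurable_l2.comp (measurable_relu.comp
          (measurable_mulVec measurable_snd mH))).pow_const 2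
      have mh := (measurable_l2.comp mH).pow_const 2
      exact ms_and (ms_ne mH) (ms_and (measurableSet_le (mh.const_mul _) mM)
        (measurableSet_le mM (mh.const_mul _))).compl
    · intro H _
      by_cases hh : H q.1 = 0
      · simp [hh]
      · refine le_trans (measure_mono fun M hM => ?_) (fresh_norm h.m0 hh h.t0.le
          (h.t1.trans (by norm_num)))
        exact hM.2
  · simp only [Finset.card_product, Finset.card_univ, Fintype.card_fin]
    push_cast
    refine le_trans ?_ h.cnL
    gcongr
    nlinarith

lemma whp_sep0 (h : Par n m d L s β τ γ) (x : Fin n → Fin 𝔡 → ℝ)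
    (hx : ∀ i, l2 (x i) = 1) (hx0 : ∀ i j, 0 ≤ dot (x i) (x j)) :
    initMeasure 𝔡 m d L {z | ¬ ∀ q ∈ (Finset.univ : Finset (Fin n)) ×ˢ
      (Finset.univ : Finset (Fin n)),
      l2 (x q.1 - x q.2) ^ 2 * (max (1 / 2) (1 - 6 * l2 (x q.1 - x q.2)) - τ) ≤
        l2 (hseq z.1 z.2.1 (x q.1) 0 - hseq z.1 z.2.1 (x q.2) 0) ^ 2} ≤
      ENNReal.ofReal (Real.exp (-Lam m)) := by
  have hn : (1:ℝ) ≤ n := by exact_mod_cast h.hn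
  have hL : (1:ℝ) ≤ L := by exact_mod_cast h.hL
  refine whp _ _ (p := Real.exp (-(m * τ ^ 2 / 8640))) (a := Real.log m)
    (b := m * τ ^ 2 / 8640) (fun q _ => ?_) ?_ (two_exp _) h.tL
  · simp only [not_le]
    refine secA ?_ fun W B => ?_
    · have mh : Measurable fun z : Om 𝔡 m d L =>
          l2 (hseq z.1 z.2.1 (x q.1) 0 - hseq z.1 z.2.1 (x q.2) 0) ^ 2 :=
        (measurable_l2.comp ((measurable_hseq mA mW (x q.1) 0).sub
          (measurable_hseq mA mW (x q.2) 0))).pow_const 2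
      exact measurableSet_lt mh measurable_const
    · exact fresh_sep h.m0 (hx q.1) (hx q.2) (hx0 _ _) h.t0.le (h.t1.trans (by norm_num))
  · simp only [Finset.card_product, Finset.card_univ, Fintype.card_fin]
    push_cast
    refine le_trans ?_ h.cnn
    gcongr
    nlinarith

lemma whp_sep (h : Par n m d L s β τ γ) (x : Fin n → Fin 𝔡 → ℝ) :
    initMeasure 𝔡 m d L {z | ¬ ∀ q ∈ (Finset.univ : Finset (Fin n)) ×ˢ
      (Finset.univ : Finset (Fin n)) ×ˢ (Finset.univ : Finset (Fin L)),
      (hseq z.1 z.2.1 (x q.1) q.2.2 ≠ 0 ∧ hseq z.1 z.2.1 (x q.2.1) q.2.2 ≠ 0) →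
      l2 (unit (hseq z.1 z.2.1 (x q.1) q.2.2) - unit (hseq z.1 z.2.1 (x q.2.1) q.2.2)) ^ 2 *
        (max (1 / 2) (1 - 6 * l2 (unit (hseq z.1 z.2.1 (x q.1) q.2.2) -
          unit (hseq z.1 z.2.1 (x q.2.1) q.2.2))) - τ) ≤
        l2 (relu (mulVec (Wat z.2.1 (q.2.2 + 1)) (unit (hseq z.1 z.2.1 (x q.1) q.2.2))) -
          relu (mulVec (Wat z.2.1 (q.2.2 + 1)) (unit (hseq z.1 z.2.1 (x q.2.1) q.2.2)))) ^ 2} ≤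
      ENNReal.ofReal (Real.exp (-Lam m)) := by
  have hn : (1:ℝ) ≤ n := by exact_mod_cast h.hn
  have hL : (1:ℝ) ≤ L := by exact_mod_cast h.hL
  refine whp _ _ (p := Real.exp (-(m * τ ^ 2 / 8640))) (a := Real.log m)
    (b := m * τ ^ 2 / 8640) (fun q _ => ?_) ?_ (two_exp _) h.tL
  · refine le_trans (measure_mono fun z hz => ?_) (ev_layer x q.2.2
      (fun H M => (H q.1 ≠ 0 ∧ H q.2.1 ≠ 0) ∧
        l2 (relu (mulVec M (unit (H q.1))) - relu (mulVec M (unit (H q.2.1)))) ^ 2 <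
        l2 (unit (H q.1) - unit (H q.2.1)) ^ 2 *
          (max (1 / 2) (1 - 6 * l2 (unit (H q.1) - unit (H q.2.1))) - τ)) ?_
        (c := ENNReal.ofReal (Real.exp (-(m * τ ^ 2 / 8640)))) ?_)
    · have hz := Classical.not_imp.1 hz
      exact ⟨hz.1, lt_of_not_ge hz.2⟩
    · have mH : ∀ i, Measurable fun z : (Fin n → Fin m → ℝ) × (Fin m → Fin m → ℝ) => z.1 i := by
        intro i; fun_prop
      have mu := fun i => measurable_unit.comp (mH i)
      have mM : ∀ i, Measurable fun z : (Fin n → Fin m → ℝ) × (Fin m → Fin m → ℝ) =>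
          relu (mulVec z.2 (unit (z.1 i))) := fun i =>
        measurable_relu.comp (measurable_mulVec measurable_snd (mu i))
      have m1 := measurable_l2.comp ((mu q.1).sub (mu q.2.1))
      refine ms_and (ms_and (ms_ne (mH _)) (ms_ne (mH _)))
        (measurableSet_lt ((measurable_l2.comp ((mM q.1).sub (mM q.2.1))).pow_const 2)
          ((m1.pow_const 2).mul
            ((measurable_const.max (measurable_const.sub (m1.const_mul 6))).sub_const τ)))
    · intro H hH
      by_cases hh : H q.1 ≠ 0 ∧ H q.2.1 ≠ 0
      · refine le_trans (measure_mono fun M hM => ?_) (fresh_sep h.m0 (l2_unit hh.1) (l2_unit hh.2)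
          (unit_dot_nonneg (dot_nonneg (hH _) (hH _))) h.t0.le (h.t1.trans (by norm_num)))
        exact hM.2
      · have : {M : Fin m → Fin m → ℝ | (H q.1 ≠ 0 ∧ H q.2.1 ≠ 0) ∧
          l2 (relu (mulVec M (unit (H q.1))) - relu (mulVec M (unit (H q.2.1)))) ^ 2 <
          l2 (unit (H q.1) - unit (H q.2.1)) ^ 2 *
          (max (1 / 2) (1 - 6 * l2 (unit (H q.1) - unit (H q.2.1))) - τ)} = ∅ := by
          ext M; simp only [Set.mem_ofPred_eq, Set.mem_empty_iff_false, iff_false]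
          exact fun hM => hh hM.1
        rw [this, measure_empty]; exact zero_le
  · simp only [Finset.card_product, Finset.card_univ, Fintype.card_fin]
    push_cast
    refine le_trans ?_ h.cnn
    gcongr
    linarith

lemma whp_sheppard (h : Par n m d L s β τ γ) (x : Fin n → Fin 𝔡 → ℝ) :
    initMeasure 𝔡 m d L {z | ¬ ∀ q ∈ (Finset.univ : Finset (Fin n)) ×ˢ
      (Finset.univ : Finset (Fin n)) ×ˢ (Finset.univ : Finset (Fin L)),
      (hseq z.1 z.2.1 (x q.1) q.2.2 ≠ 0 ∧ hseq z.1 z.2.1 (x q.2.1) q.2.2 ≠ 0) →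
      |∑ k, ind (mulVec (Wat z.2.1 (q.2.2 + 1)) (unit (hseq z.1 z.2.1 (x q.1) q.2.2)) k) *
          ind (mulVec (Wat z.2.1 (q.2.2 + 1)) (unit (hseq z.1 z.2.1 (x q.2.1) q.2.2)) k) -
        m * (1 / 4 + Real.arcsin (dot (unit (hseq z.1 z.2.1 (x q.1) q.2.2))
          (unit (hseq z.1 z.2.1 (x q.2.1) q.2.2))) / (2 * Real.pi))| ≤ γ * m} ≤
      ENNReal.ofReal (Real.exp (-Lam m)) := by
  have hn : (1:ℝ) ≤ n := by exact_mod_cast h.hn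
  have hL : (1:ℝ) ≤ L := by exact_mod_cast h.hL
  have hd : (1:ℝ) ≤ d := by exact_mod_cast h.hd
  refine whp _ _ (p := 2 * Real.exp (-(m * γ ^ 2 / 2160))) (a := Real.log m)
    (b := m * γ ^ 2 / 2160) (fun q _ => ?_) ?_ le_rfl ?_
  · refine le_trans (measure_mono fun z hz => ?_) (ev_layer x q.2.2
      (fun H M => (H q.1 ≠ 0 ∧ H q.2.1 ≠ 0) ∧
        γ * m < |∑ k, ind (mulVec M (unit (H q.1)) k) * ind (mulVec M (unit (H q.2.1)) k) -
        m * (1 / 4 + Real.arcsin (dot (unit (H q.1)) (unit (H q.2.1))) / (2 * Real.pi))|) ?_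
        (c := ENNReal.ofReal (2 * Real.exp (-(m * γ ^ 2 / 2160)))) ?_)
    · have hz := Classical.not_imp.1 hz
      exact ⟨hz.1, lt_of_not_ge hz.2⟩
    · have mH : ∀ i, Measurable fun z : (Fin n → Fin m → ℝ) × (Fin m → Fin m → ℝ) => z.1 i := by
        intro i; fun_prop
      have mu := fun i => measurable_unit.comp (mH i)
      have mM : ∀ i, Measurable fun z : (Fin n → Fin m → ℝ) × (Fin m → Fin m → ℝ) =>
          mulVec z.2 (unit (z.1 i)) := fun i => measurable_mulVec measurable_snd (mu i)
      have mI : ∀ i k, Measurable fun z : (Fin n → Fin m → ℝ) × (Fin m → Fin m → ℝ) =>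
          ind (mulVec z.2 (unit (z.1 i)) k) := fun i k =>
        measurable_ind.comp ((measurable_pi_apply k).comp (mM i))
      refine ms_and (ms_and (ms_ne (mH _)) (ms_ne (mH _)))
        (measurableSet_lt measurable_const (Measurable.abs ?_))
      refine Measurable.sub (Finset.measurable_sum _ fun k _ => (mI _ k).mul (mI _ k))
        (Measurable.const_mul (Measurable.const_add (Measurable.div_const ?_ _) _) _)
      exact Real.measurable_arcsin.comp (measurable_dot2 (mu _) (mu _))
    · intro H hH
      by_cases hh : H q.1 ≠ 0 ∧ H q.2.1 ≠ 0
      · refine le_trans (measure_mono fun M hM => ?_) (fresh_sheppard h.m0 (l2_unit hh.1)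
          (l2_unit hh.2) (unit_dot_nonneg (dot_nonneg (hH _) (hH _))) h.g0.le
          (h.g1.trans (by norm_num)))
        exact hM.2
      · have : {M : Fin m → Fin m → ℝ | (H q.1 ≠ 0 ∧ H q.2.1 ≠ 0) ∧
          γ * m < |∑ k, ind (mulVec M (unit (H q.1)) k) * ind (mulVec M (unit (H q.2.1)) k) -
          m * (1 / 4 + Real.arcsin (dot (unit (H q.1)) (unit (H q.2.1))) / (2 * Real.pi))|} = ∅ := by
          ext M; simp only [Set.mem_ofPred_eq, Set.mem_empty_iff_false, iff_false]
          exact fun hM => hh hM.1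
        rw [this, measure_empty]; exact zero_le
  · simp only [Finset.card_product, Finset.card_univ, Fintype.card_fin]
    push_cast
    refine le_trans ?_ h.cnn
    gcongr
    linarith
  · have := h.lmm; have := h.lm; have := h.gm
    unfold Lam
    linarith

lemma whp_gram (h : Par n m d L s β τ γ) (x : Fin n → Fin 𝔡 → ℝ) :
    initMeasure 𝔡 m d L {z | ¬ ∀ q ∈ (Finset.univ : Finset (Fin n)) ×ˢ
      (Finset.univ : Finset (Fin n)) ×ˢ net (Finset.univ : Finset (Fin d)) ×ˢ
        net (Finset.univ : Finset (Fin d)) ×ˢ ({1, -1} : Finset ℝ),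
      |∑ k, (signOf (gseq z.1 z.2.1 (x q.1) L) * signOf (gseq z.1 z.2.1 (x q.2.1) L)) k *
        (dot (transpose z.2.2 k) (q.2.2.1 + q.2.2.2.2 • q.2.2.2.1) ^ 2 -
          l2 (q.2.2.1 + q.2.2.2.2 • q.2.2.2.1) ^ 2 / d)| ≤
        γ * m * (l2 (q.2.2.1 + q.2.2.2.2 • q.2.2.2.1) ^ 2 / d)} ≤
      ENNReal.ofReal (Real.exp (-Lam m)) := by
  have hn : (1:ℝ) ≤ n := by exact_mod_cast h.hn
  have hL : (1:ℝ) ≤ L := by exact_mod_cast h.hL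
  have hd : (1:ℝ) ≤ d := by exact_mod_cast h.hd
  refine whp _ _ (p := 2 * Real.exp (-(m * γ ^ 2 / 2160)))
    (a := Real.log m + (2 * d + 2 * d))
    (b := m * γ ^ 2 / 2160) (fun q _ => ?_) ?_ le_rfl ?_
  · simp only [not_le]
    refine ev_gram h.hd (q.2.2.1 + q.2.2.2.2 • q.2.2.2.1)
      (fun A W => signOf (gseq A W (x q.1) L) * signOf (gseq A W (x q.2.1) L)) ?_ ?_ h.g0.le
      (h.g1.trans (by norm_num))
    · exact (measurable_signOf.comp (measurable_gseq mA mW _ _)).mul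
        (measurable_signOf.comp (measurable_gseq mA mW _ _))
    · intro A W k
      simp only [Pi.mul_apply]
      rcases signOf_zero_one (gseq A W (x q.1) L) k with e | e <;>
      rcases signOf_zero_one (gseq A W (x q.2.1) L) k with e' | e' <;> simp [e, e']
  · simp only [Finset.card_product, Finset.card_univ, Fintype.card_fin]
    push_cast
    rw [Real.exp_add, Real.exp_add]
    have h2 : ((({1, -1} : Finset ℝ).card : ℕ) : ℝ) ≤ L + 1 := by
      have : (({1, -1} : Finset ℝ).card : ℝ) ≤ 2 := by exact_mod_cast Finset.card_le_two
      linarith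
    set N := ((net (Finset.univ : Finset (Fin d))).card : ℝ) with hN
    calc (n:ℝ) * (n * (N * (N * ((({1, -1} : Finset ℝ).card : ℕ) : ℝ)))) ≤
        n * (n * (N * (N * (L + 1)))) := by gcongr
      _ = n * (n * (L + 1)) * (N * N) := by ring
      _ ≤ _ := mul_le_mul h.cnn (mul_le_mul (cnet d) (cnet d) (Nat.cast_nonneg _)
        (Real.exp_pos _).le) (by positivity) (Real.exp_pos _).le
  · have := h.lmm; have := h.lm; have := h.gm
    unfold Lam
    linarith

lemma whp_out (h : Par n m d L s β τ γ) (x : Fin n → Fin 𝔡 → ℝ) :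
    initMeasure 𝔡 m d L {z | ¬ ∀ q ∈ (Finset.univ : Finset (Fin n)) ×ˢ
      net (Finset.univ : Finset (Fin d)), l2 (hseq z.1 z.2.1 (x q.1) L) ≤ 2 →
        |dot q.2 (mulVec z.2.2 (hseq z.1 z.2.1 (x q.1) L))| ≤ Real.log m / 2} ≤
      ENNReal.ofReal (Real.exp (-Lam m)) := by
  have hd : (1:ℝ) ≤ d := by exact_mod_cast h.hd
  have hl : 0 ≤ Real.log m / 2 := by have := h.lm; linarith
  refine whp _ _ (p := 2 * Real.exp (-((Real.log m / 2) ^ 2 * d / 8)))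
    (a := Real.log m + 2 * d)
    (b := (Real.log m / 2) ^ 2 * d / 8) (fun q hq => ?_) ?_ le_rfl ?_
  · simp only [Finset.mem_product] at hq
    refine le_trans (measure_mono fun z hz => ?_) (ev_linB h.hd
      (fun A W => hseq A W (x q.1) L) (measurable_hseq mA mW _ _) q.2 (net_l2 hq.2) hl)
    have hz := Classical.not_imp.1 hz
    exact ⟨hz.1, lt_of_not_ge hz.2⟩
  · simp only [Finset.card_product, Finset.card_univ, Fintype.card_fin]
    push_cast
    rw [Real.exp_add]
    exact mul_le_mul h.cn (cnet d) (Nat.cast_nonneg _) (Real.exp_pos _).le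
  · have h1 := h.lmm; have h2 := h.lm
    have h3 : Real.log m ^ 2 * 1 ≤ Real.log m ^ 2 * d := by gcongr
    have h4 : 1000000 ≤ Real.log m ^ 2 := by nlinarith
    have h5 : 1000000 * (d:ℝ) ≤ Real.log m ^ 2 * d := by gcongr
    unfold Lam
    have e : (Real.log m / 2) ^ 2 * d / 8 = Real.log m ^ 2 * d / 32 := by ring
    rw [e]
    linarith

end

/-! ### The good event at initialization -/

section

variable {𝔡 n m d L s : ℕ} {β τ γ : ℝ}

/-- The intersection of all the high-probability events. -/
structure Init (A : Fin m → Fin 𝔡 → ℝ) (W : Fin L → Fin m → Fin m → ℝ) (B : Fin d → Fin m → ℝ)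
    (x : Fin n → Fin 𝔡 → ℝ) (s : ℕ) (β τ γ : ℝ) : Prop where
  diagS : ∀ q ∈ (Finset.univ : Finset (Fin n)) ×ˢ Finset.range (L + 1) ×ˢ
      (Finset.univ : Finset (Fin L)) ×ˢ Vs m s,
      hseq A W (x q.1) q.2.2.1 ≠ 0 →
        l2 (signOf (gseq A W (x q.1) (q.2.2.1 + 1)) * mulVec (Wat W (q.2.2.1 + 1))
          (T0 A W (x q.1) q.2.1 q.2.2.1 q.2.2.2)) ^ 2 ≤
        (1 + 1 / (L:ℝ)) * l2 (T0 A W (x q.1) q.2.1 q.2.2.1 q.2.2.2) ^ 2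
  diagB : ∀ q ∈ (Finset.univ : Finset (Fin n)) ×ˢ Finset.range (L + 1) ×ˢ
      (Finset.univ : Finset (Fin L)) ×ˢ Vb m (Nb L),
      hseq A W (x q.1) q.2.2.1 ≠ 0 →
        l2 (signOf (gseq A W (x q.1) (q.2.2.1 + 1)) * mulVec (Wat W (q.2.2.1 + 1))
          (T0 A W (x q.1) q.2.1 q.2.2.1 q.2.2.2)) ^ 2 ≤
        (1 + 1 / (L:ℝ)) * l2 (T0 A W (x q.1) q.2.1 q.2.2.1 q.2.2.2) ^ 2
  linS : ∀ q ∈ (Finset.univ : Finset (Fin n)) ×ˢ Finset.range (L + 1) ×ˢ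
      (Finset.univ : Finset (Fin L)) ×ˢ Vs m s ×ˢ Vs m s,
      l2 (T0 A W (x q.1) q.2.1 q.2.2.1 q.2.2.2.1) ≤ 2 →
        |dot q.2.2.2.2 (mulVec (Wat W (q.2.2.1 + 1))
          (T0 A W (x q.1) q.2.1 q.2.2.1 q.2.2.2.1))| ≤ Real.sqrt (128 * (s * Real.log m) / m)
  linB : ∀ q ∈ (Finset.univ : Finset (Fin n)) ×ˢ Finset.range (L + 1) ×ˢ
      (Finset.univ : Finset (Fin L)) ×ˢ Vb m (Nb L) ×ˢ Vs m s,
      l2 (T0 A W (x q.1) q.2.1 q.2.2.1 q.2.2.2.1) ≤ 2 →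
        |dot q.2.2.2.2 (mulVec (Wat W (q.2.2.1 + 1))
          (T0 A W (x q.1) q.2.1 q.2.2.1 q.2.2.2.1))| ≤ 1 / (10 * (L:ℝ))
  outS : ∀ q ∈ (Finset.univ : Finset (Fin n)) ×ˢ Finset.range (L + 1) ×ˢ
      Vs m s ×ˢ net (Finset.univ : Finset (Fin d)),
      l2 (T0 A W (x q.1) q.2.1 L q.2.2.1) ≤ 2 →
        |dot q.2.2.2 (mulVec B (T0 A W (x q.1) q.2.1 L q.2.2.1))| ≤
          Real.sqrt (64 * (s * Real.log m) / d)
  outA : ∀ q ∈ net (Finset.univ : Finset (Fin m)) ×ˢ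
      net (Finset.univ : Finset (Fin d)), |dot q.2 (mulVec B q.1)| ≤ Real.sqrt (40 * m / d)
  op : ∀ q ∈ (Finset.univ : Finset (Fin L)) ×ˢ net (Finset.univ : Finset (Fin m)),
      l2 (mulVec (Wat W (q.1 + 1)) q.2) ^ 2 ≤ 202 * l2 q.2 ^ 2
  count : ∀ q ∈ (Finset.univ : Finset (Fin n)) ×ˢ (Finset.univ : Finset (Fin L)),
      hseq A W (x q.1) q.2 ≠ 0 → ((Finset.univ.filter fun k =>
        |gseq A W (x q.1) (q.2 + 1) k| * Real.sqrt m ≤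
          β * l2 (hseq A W (x q.1) q.2)).card : ℝ) ≤ 2 * β * m
  norm0 : ∀ i ∈ (Finset.univ : Finset (Fin n)),
      1 - τ ≤ l2 (hseq A W (x i) 0) ^ 2 ∧ l2 (hseq A W (x i) 0) ^ 2 ≤ 1 + τ
  norm : ∀ q ∈ (Finset.univ : Finset (Fin n)) ×ˢ
      (Finset.univ : Finset (Fin L)), hseq A W (x q.1) q.2 ≠ 0 →
      (1 - τ) * l2 (hseq A W (x q.1) q.2) ^ 2 ≤ l2 (hseq A W (x q.1) (q.2 + 1)) ^ 2 ∧
        l2 (hseq A W (x q.1) (q.2 + 1)) ^ 2 ≤ (1 + τ) * l2 (hseq A W (x q.1) q.2) ^ 2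
  sep0 : ∀ q ∈ (Finset.univ : Finset (Fin n)) ×ˢ (Finset.univ : Finset (Fin n)),
      l2 (x q.1 - x q.2) ^ 2 * (max (1 / 2) (1 - 6 * l2 (x q.1 - x q.2)) - τ) ≤
        l2 (hseq A W (x q.1) 0 - hseq A W (x q.2) 0) ^ 2
  sep : ∀ q ∈ (Finset.univ : Finset (Fin n)) ×ˢ
      (Finset.univ : Finset (Fin n)) ×ˢ (Finset.univ : Finset (Fin L)),
      (hseq A W (x q.1) q.2.2 ≠ 0 ∧ hseq A W (x q.2.1) q.2.2 ≠ 0) →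
      l2 (unit (hseq A W (x q.1) q.2.2) - unit (hseq A W (x q.2.1) q.2.2)) ^ 2 *
        (max (1 / 2) (1 - 6 * l2 (unit (hseq A W (x q.1) q.2.2) -
          unit (hseq A W (x q.2.1) q.2.2))) - τ) ≤
        l2 (relu (mulVec (Wat W (q.2.2 + 1)) (unit (hseq A W (x q.1) q.2.2))) -
          relu (mulVec (Wat W (q.2.2 + 1)) (unit (hseq A W (x q.2.1) q.2.2)))) ^ 2
  shep : ∀ q ∈ (Finset.univ : Finset (Fin n)) ×ˢ
      (Finset.univ : Finset (Fin n)) ×ˢ (Finset.univ : Finset (Fin L)),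
      (hseq A W (x q.1) q.2.2 ≠ 0 ∧ hseq A W (x q.2.1) q.2.2 ≠ 0) →
      |∑ k, ind (mulVec (Wat W (q.2.2 + 1)) (unit (hseq A W (x q.1) q.2.2)) k) *
          ind (mulVec (Wat W (q.2.2 + 1)) (unit (hseq A W (x q.2.1) q.2.2)) k) -
        m * (1 / 4 + Real.arcsin (dot (unit (hseq A W (x q.1) q.2.2))
          (unit (hseq A W (x q.2.1) q.2.2))) / (2 * Real.pi))| ≤ γ * m
  gram : ∀ q ∈ (Finset.univ : Finset (Fin n)) ×ˢ
      (Finset.univ : Finset (Fin n)) ×ˢ net (Finset.univ : Finset (Fin d)) ×ˢ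
        net (Finset.univ : Finset (Fin d)) ×ˢ ({1, -1} : Finset ℝ),
      |∑ k, (signOf (gseq A W (x q.1) L) * signOf (gseq A W (x q.2.1) L)) k *
        (dot (transpose B k) (q.2.2.1 + q.2.2.2.2 • q.2.2.2.1) ^ 2 -
          l2 (q.2.2.1 + q.2.2.2.2 • q.2.2.2.1) ^ 2 / d)| ≤
        γ * m * (l2 (q.2.2.1 + q.2.2.2.2 • q.2.2.2.1) ^ 2 / d)
  out : ∀ q ∈ (Finset.univ : Finset (Fin n)) ×ˢ
      net (Finset.univ : Finset (Fin d)), l2 (hseq A W (x q.1) L) ≤ 2 →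
        |dot q.2 (mulVec B (hseq A W (x q.1) L))| ≤ Real.log m / 2

lemma whp_and {Ω : Type*} [MeasurableSpace Ω] {μ : Measure Ω} {p q : Ω → Prop} {k : ℕ}
    {e : ENNReal} (hp : μ {z | ¬ p z} ≤ e) (hq : μ {z | ¬ q z} ≤ k * e) :
    μ {z | ¬ (p z ∧ q z)} ≤ (k + 1 : ℕ) * e := by
  have : {z | ¬ (p z ∧ q z)} ⊆ {z | ¬ p z} ∪ {z | ¬ q z} := by
    intro z hz
    simp only [Set.mem_ofPred_eq, Set.mem_union] at hz ⊢
    tauto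
  refine (measure_mono this).trans ((measure_union_le _ _).trans ?_)
  push_cast
  rw [add_mul, one_mul, add_comm]
  exact add_le_add hq hp

/-- All the events collected in `Init` hold together except with probability `exp (-(log m)² / 50)`. -/
lemma init_prob (h : Par n m d L s β τ γ) (x : Fin n → Fin 𝔡 → ℝ) (hx : ∀ i, l2 (x i) = 1)
    (hx0 : ∀ i j, 0 ≤ dot (x i) (x j)) :
    initMeasure 𝔡 m d L {z | ¬ Init z.1 z.2.1 z.2.2 x s β τ γ} ≤
      ENNReal.ofReal (Real.exp (-(Real.log m ^ 2 / 50))) := by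
  have hL : (1:ℝ) ≤ L := by exact_mod_cast h.hL
  have hm : (0:ℝ) < m := by exact_mod_cast h.m0
  have hd : (0:ℝ) < d := by exact_mod_cast h.hd
  have q1 := h.sm'; have q2 := h.lm2; have q3 := h.lmm; have q4 := h.lm; have q5 := h.mNb
  have hsl : 0 ≤ s * Real.log m := by positivity
  have e1 := whp_diag h x (Vs m s) h.cS (by linarith)
  have e2 := whp_diag h x (Vb m (Nb L)) h.cB (by rw [q5]; linarith)
  have e3 := whp_lin h x (Vs m s) (t := Real.sqrt (128 * (s * Real.log m) / m)) h.cS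
    (Real.sqrt_nonneg _) (by
      rw [Real.sq_sqrt (by positivity), div_mul_cancel₀ _ hm.ne']; linarith)
  have e4 := whp_lin h x (Vb m (Nb L)) (t := 1 / (10 * (L:ℝ))) h.cB (by positivity) (by
      have : (1 / (10 * (L:ℝ))) ^ 2 * m / 16 = m / (L:ℝ) ^ 2 / 1600 := by field_simp; norm_num
      rw [this, q5]; linarith)
  have e5 := whp_outS h x (t := Real.sqrt (64 * (s * Real.log m) / d)) (Real.sqrt_nonneg _) (by
      rw [Real.sq_sqrt (by positivity), div_mul_cancel₀ _ hd.ne']; linarith)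
  have e6 := whp_outA (𝔡 := 𝔡) h (t := Real.sqrt (40 * m / d)) (Real.sqrt_nonneg _) (by
      rw [Real.sq_sqrt (by positivity), div_mul_cancel₀ _ hd.ne']; linarith)
  have e7 := whp_op (𝔡 := 𝔡) h
  have e8 := whp_count h x
  have e9 := whp_norm0 h x hx
  have e10 := whp_norm h x
  have e11 := whp_sep0 h x hx hx0
  have e12 := whp_sep h x
  have e13 := whp_sheppard h x
  have e14 := whp_gram h x
  have e15 := whp_out h x
  have E := whp_and e1 (whp_and e2 (whp_and e3 (whp_and e4 (whp_and e5 (whp_and e6 (whp_and e7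
    (whp_and e8 (whp_and e9 (whp_and e10 (whp_and e11 (whp_and e12 (whp_and e13
    (whp_and (k := 1) e14 (le_trans e15 (by rw [Nat.cast_one, one_mul])))))))))))))))
  refine le_trans (measure_mono fun z hz => ?_) (E.trans ?_)
  · intro hc
    obtain ⟨a1, a2, a3, a4, a5, a6, a7, a8, a9, a10, a11, a12, a13, a14, a15⟩ := hc
    exact hz ⟨a1, a2, a3, a4, a5, a6, a7, a8, a9, a10, a11, a12, a13, a14, a15⟩
  · rw [← ENNReal.ofReal_natCast, ← ENNReal.ofReal_mul (Nat.cast_nonneg _)]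
    refine ENNReal.ofReal_le_ofReal ?_
    unfold Lam
    have h1 : Real.log m ^ 2 / 200 + 1 ≤ Real.exp (Real.log m ^ 2 / 200) := Real.add_one_le_exp _
    have h2 : (15:ℝ) ≤ Real.exp (Real.log m ^ 2 / 200) := by linarith
    have e : -(Real.log m ^ 2 / 50) = Real.log m ^ 2 / 200 + -(Real.log m ^ 2 / 40) := by ring
    rw [e, Real.exp_add]
    push_cast
    refine mul_le_mul_of_nonneg_right (le_trans (by norm_num) h2) (Real.exp_pos _).le

end

/-! ### The good event controls the network at initialization -/

lemma res_univ {p : ℕ} (v : Fin p → ℝ) : res Finset.univ v = v := by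
  ext k; simp [res]

lemma l2_res_mono {p : ℕ} {S R : Finset (Fin p)} (h : S ⊆ R) (v : Fin p → ℝ) :
    l2 (res S v) ≤ l2 (res R v) := by
  refine l2_le_of_abs_le fun k => ?_
  by_cases hk : k ∈ S
  · simp [res, hk, h hk]
  · simp [res, hk]

lemma Supp.mono {p : ℕ} {S R : Finset (Fin p)} (h : S ⊆ R) {v : Fin p → ℝ} (hv : Supp S v) :
    Supp R v := fun k hk => hv k fun h' => hk (h h')

section

variable {𝔡 n m d L s : ℕ} {β τ γ : ℝ} {A : Fin m → Fin 𝔡 → ℝ} {W : Fin L → Fin m → Fin m → ℝ}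
  {B : Fin d → Fin m → ℝ} {x : Fin n → Fin 𝔡 → ℝ}

lemma T0_min (y : Fin 𝔡 → ℝ) (a : ℕ) {b : ℕ} (hb : b ≤ L) (v : Fin m → ℝ) :
    T0 A W y a b v = T0 A W y (min a L) b v := by
  rcases le_total a L with h | h
  · rw [min_eq_left h]
  · rw [min_eq_right h, T0, T0, tr_of_le _ _ (hb.trans h), tr_of_le _ _ hb]

/-- A chain of layers, each of which expands squared norms by at most `1 + 1/L`, at most doubles
norms. -/
lemma chain_two (hL : 1 ≤ L) (y : Fin 𝔡 → ℝ) (a : ℕ) (v : Fin m → ℝ)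
    (hd : ∀ k : Fin L, l2 (signOf (gseq A W y (k + 1)) * mulVec (Wat W (k + 1))
          (T0 A W y a k v)) ^ 2 ≤ (1 + 1 / (L:ℝ)) * l2 (T0 A W y a k v) ^ 2)
    {b : ℕ} (hb : b ≤ L) : l2 (T0 A W y a b v) ≤ 2 * l2 v := by
  have hL' : (1:ℝ) ≤ L := by exact_mod_cast hL
  have hq : (1:ℝ) ≤ 1 + 1 / (L:ℝ) := by
    have : (0:ℝ) ≤ 1 / L := by positivity
    linarith
  have h1 : ∀ b, b ≤ L → l2 (T0 A W y a b v) ^ 2 ≤ (1 + 1 / (L:ℝ)) ^ b * l2 v ^ 2 := by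
    intro b
    induction b with
    | zero => intro _; simp [T0, tr]
    | succ b ih =>
      intro hb
      have ih := ih (by omega)
      rcases lt_or_ge b a with hab | hab
      · rw [T0, tr_of_le _ _ (by omega)]
        exact le_mul_of_one_le_left (sq_nonneg _) (one_le_pow₀ hq)
      · have := hd ⟨b, by omega⟩
        rw [T0, tr_succ _ _ hab]
        refine this.trans ?_
        rw [pow_succ (1 + 1 / (L:ℝ)) b, mul_comm ((1 + 1 / (L:ℝ)) ^ b), mul_assoc]
        exact mul_le_mul_of_nonneg_left ih (by linarith)
  have h2 : (1 + 1 / (L:ℝ)) ^ b ≤ 4 := by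
    calc (1 + 1 / (L:ℝ)) ^ b ≤ (1 + 1 / (L:ℝ)) ^ L := pow_le_pow_right₀ hq hb
      _ ≤ (Real.exp (1 / L)) ^ L := by
          refine pow_le_pow_left₀ (by linarith) ?_ _
          linarith [Real.add_one_le_exp (1 / (L:ℝ))]
      _ = Real.exp 1 := by
          rw [← Real.exp_nat_mul]; congr 1; field_simp
      _ ≤ 4 := by linarith [Real.exp_one_lt_d9]
  refine abs_le_of_sq_le_sq' ?_ (by linarith [l2_nonneg v]) |>.2
  calc _ ≤ _ := h1 b hb
    _ ≤ 4 * l2 v ^ 2 := by gcongr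
    _ = _ := by ring

lemma sqrt_Nb : Real.sqrt (Nb L : ℕ) = 400 * L := by
  have : ((Nb L : ℕ) : ℝ) = (400 * L) ^ 2 := by unfold Nb; push_cast; ring
  rw [this, Real.sqrt_sq (by positivity)]

lemma Par.s_le (h : Par n m d L s β τ γ) : s ≤ m := by
  have h1 := h.sm'; have h2 := h.mL; have h3 := h.lm
  have : (s:ℝ) ≤ m := by nlinarith [Nat.cast_nonneg (α := ℝ) s]
  exact_mod_cast this

lemma Par.ext (h : Par n m d L s β τ γ) {S : Finset (Fin m)} (hS : S.card ≤ s) :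
    ∃ R, S ⊆ R ∧ R.card = s :=
  Finset.exists_superset_card_eq hS (by simpa using h.s_le)

lemma Init.norms (h : Par n m d L s β τ γ) (I : Init A W B x s β τ γ)
    (i : Fin n) : ∀ ℓ, ℓ ≤ L → 1 - (ℓ + 1) * τ ≤ l2 (hseq A W (x i) ℓ) ^ 2 ∧
    l2 (hseq A W (x i) ℓ) ^ 2 ≤ 1 + 2 * ((ℓ + 1) * τ) := by
  intro ℓ
  have t0 := h.t0
  induction ℓ with
  | zero =>
    intro _
    have := I.norm0 i (Finset.mem_univ _)
    push_cast
    constructor <;> linarith [this.1, this.2]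
  | succ ℓ ih =>
    intro hℓ
    obtain ⟨h1, h2⟩ := ih (by omega)
    have hb : ((ℓ:ℝ) + 1) * τ ≤ 1 / 200 := by
      refine le_trans ?_ h.tl
      have : (ℓ:ℝ) ≤ L := by exact_mod_cast (by omega : ℓ ≤ L)
      gcongr
    have hne : hseq A W (x i) ℓ ≠ 0 := by
      intro h0; rw [h0, l2_zero] at h1; linarith
    obtain ⟨h3, h4⟩ := I.norm (i, ⟨ℓ, by omega⟩) (by simp) hne
    simp only at h3 h4
    push_cast
    have h0 : 0 ≤ ((ℓ:ℝ) + 1) * τ := by positivity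
    have t1 := h.t1
    constructor
    · nlinarith [mul_le_mul_of_nonneg_left h1 (by linarith : 0 ≤ 1 - τ), mul_nonneg h0 t0.le]
    · nlinarith [mul_le_mul_of_nonneg_left h2 (by linarith : 0 ≤ 1 + τ),
        mul_le_mul_of_nonneg_right hb t0.le]

lemma Init.norms' (h : Par n m d L s β τ γ) (I : Init A W B x s β τ γ)
    (i : Fin n) {ℓ : ℕ} (hℓ : ℓ ≤ L) : 199 / 200 ≤ l2 (hseq A W (x i) ℓ) ^ 2 ∧
    l2 (hseq A W (x i) ℓ) ^ 2 ≤ 101 / 100 := by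
  obtain ⟨h1, h2⟩ := I.norms h i ℓ hℓ
  have hb : ((ℓ:ℝ) + 1) * τ ≤ 1 / 200 := by
    refine le_trans ?_ h.tl
    have : (ℓ:ℝ) ≤ L := by exact_mod_cast hℓ
    have := h.t0
    gcongr
  constructor <;> linarith

lemma Init.ne (h : Par n m d L s β τ γ) (I : Init A W B x s β τ γ)
    (i : Fin n) {ℓ : ℕ} (hℓ : ℓ ≤ L) : hseq A W (x i) ℓ ≠ 0 := by
  intro h0
  have := (I.norms' h i hℓ).1
  rw [h0, l2_zero] at this; norm_num at this

lemma Init.netS (h : Par n m d L s β τ γ) (I : Init A W B x s β τ γ)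
    (i : Fin n) (a : ℕ) {b : ℕ} (hb : b ≤ L) {v : Fin m → ℝ} (hv : v ∈ Vs m s) :
    l2 (T0 A W (x i) a b v) ≤ 2 := by
  rw [T0_min _ _ hb]
  refine (chain_two h.hL (x i) (min a L) v (fun k => ?_) hb).trans (by linarith [l2_Vs hv])
  exact I.diagS (i, min a L, k, v) (by simp [hv]) (I.ne h i k.2.le)

lemma Init.netB (h : Par n m d L s β τ γ) (I : Init A W B x s β τ γ)
    (i : Fin n) (a : ℕ) {b : ℕ} (hb : b ≤ L) {v : Fin m → ℝ} (hv : v ∈ Vb m (Nb L)) :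
    l2 (T0 A W (x i) a b v) ≤ 2 := by
  rw [T0_min _ _ hb]
  refine (chain_two h.hL (x i) (min a L) v (fun k => ?_) hb).trans (by linarith [l2_Vb hv])
  exact I.diagB (i, min a L, k, v) (by simp [hv]) (I.ne h i k.2.le)

/-- The bounds on the nets extend to all sparse vectors and, splitting the coordinates into blocks, to
all vectors; this is what the perturbation argument consumes. -/
lemma Init.chainGood (h : Par n m d L s β τ γ) (I : Init A W B x s β τ γ)
    (hs : 6 * β * m ≤ s) (i : Fin n) :
    ChainGood A W B (x i) s (1600 * L) 160 (4 * Real.sqrt (128 * (s * Real.log m) / m))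
      (4 * Real.sqrt (64 * (s * Real.log m) / d)) (4 * Real.sqrt (40 * m / d)) β where
  op := by
    intro k h1 hk v
    obtain ⟨j, rfl⟩ : ∃ j, k = j + 1 := ⟨k - 1, by omega⟩
    have := net_bound Finset.univ (fun v => l2 (mulVec (Wat W (j + 1)) v))
      (fun u v => by simp only [mulVec_add]; exact l2_add_le _ _)
      (fun c v => by simp only [mulVec_smul, l2_smul]) (c := 15) (fun v hv => ?_) (supp_univ v)
    · linarith
    · have := I.op (⟨j, by omega⟩, v) (by simp [hv])
      simp only at this
      have h2 := net_l2 hv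
      have h3 := l2_nonneg v
      refine abs_le_of_sq_le_sq' ?_ (by norm_num) |>.2
      nlinarith
  opB := by
    intro v
    have := net_bound_bilin Finset.univ Finset.univ (mulVec B) (mulVec_add B)
      (fun c v => mulVec_smul B c v) (t := Real.sqrt (40 * m / d))
      (fun u hu v hv => I.outA (v, u) (by simp [hu, hv])) (supp_univ v)
    rwa [res_univ] at this
  dense := by
    intro a b v hb
    have := blk_bound h.N0 (fun v => l2 (T0 A W (x i) a b v))
      (fun u v => by simp only [T0, tr_add]; exact l2_add_le _ _) (c := 4) (by norm_num)
      (fun j hj v hv => ?_) (by simp [T0, tr_zero, l2_zero]) v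
    · rw [sqrt_Nb] at this; linarith
    · have := net_bound (blk m (Nb L) j) (fun v => l2 (T0 A W (x i) a b v))
        (fun u v => by simp only [T0, tr_add]; exact l2_add_le _ _)
        (fun c v => by simp only [T0, tr_smul, l2_smul]) (c := 2)
        (fun v hv => I.netB h i a hb (mem_Vb hj hv)) hv
      linarith
  sparse := by
    intro a b v S hb hS hv
    obtain ⟨R, hR, hRs⟩ := h.ext hS
    have := net_bound R (fun v => l2 (T0 A W (x i) a b v))
      (fun u v => by simp only [T0, tr_add]; exact l2_add_le _ _)
      (fun c v => by simp only [T0, tr_smul, l2_smul]) (c := 2)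
      (fun v hv => I.netS h i a hb (mem_Vs hRs hv)) (hv.mono hR)
    linarith
  wsp := by
    intro a b S R e hb hS hR he
    obtain ⟨S', hS', hSs⟩ := h.ext hS
    obtain ⟨R', hR', hRs⟩ := h.ext hR
    refine (l2_res_mono hS' _).trans ?_
    refine net_bound_bilin S' R' (fun v => mulVec (Wat W (b + 1)) (T0 A W (x i) a b v))
      (fun u v => by simp only [T0, tr_add, mulVec_add])
      (fun c v => by simp only [T0, tr_smul, mulVec_smul]) (fun u hu v hv => ?_) (he.mono hR')
    have h1 := I.netS h i a (b := b) (by omega) (mem_Vs hRs hv)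
    rw [T0_min _ _ (by omega)] at h1 ⊢
    exact I.linS (i, min a L, ⟨b, by omega⟩, v, u)
      (by simp [mem_Vs hSs hu, mem_Vs hRs hv]) h1
  wde := by
    intro a b S r hb hS
    have hL' : (0:ℝ) < L := by exact_mod_cast h.hL
    obtain ⟨S', hS', hSs⟩ := h.ext hS
    refine (l2_res_mono hS' _).trans ?_
    have := blk_bound h.N0 (fun v => l2 (res S' (mulVec (Wat W (b + 1)) (T0 A W (x i) a b v))))
      (fun u v => by simp only [T0, tr_add, mulVec_add, res_add]; exact l2_add_le _ _)
      (c := 4 * (1 / (10 * (L:ℝ)))) (by positivity)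
      (fun j hj v hv => ?_) (by
        simp only [T0, tr_zero, mulVec_zero]
        have : res S' (0 : Fin m → ℝ) = 0 := by ext k; simp [res]
        rw [this, l2_zero]) r
    · rw [sqrt_Nb] at this
      refine this.trans (le_of_eq ?_)
      field_simp; ring
    · refine net_bound_bilin S' (blk m (Nb L) j)
        (fun v => mulVec (Wat W (b + 1)) (T0 A W (x i) a b v))
        (fun u v => by simp only [T0, tr_add, mulVec_add])
        (fun c v => by simp only [T0, tr_smul, mulVec_smul]) (fun u hu v hv => ?_) hv
      have h1 := I.netB h i a (b := b) (by omega) (mem_Vb hj hv)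
      rw [T0_min _ _ (by omega)] at h1 ⊢
      exact I.linB (i, min a L, ⟨b, by omega⟩, v, u)
        (by simp [mem_Vs hSs hu, mem_Vb hj hv]) h1
  bsp := by
    intro a R e hR he
    obtain ⟨R', hR', hRs⟩ := h.ext hR
    have := net_bound_bilin Finset.univ R' (fun v => mulVec B (T0 A W (x i) a L v))
      (fun u v => by simp only [T0, tr_add, mulVec_add])
      (fun c v => by simp only [T0, tr_smul, mulVec_smul])
      (t := Real.sqrt (64 * (s * Real.log m) / d)) (fun u hu v hv => ?_) (he.mono hR')
    · rwa [res_univ] at this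
    · have h1 := I.netS h i a le_rfl (mem_Vs hRs hv)
      rw [T0_min _ _ le_rfl] at h1 ⊢
      exact I.outS (i, min a L, v, u) (by simp [mem_Vs hRs hv, hu]) h1
  hlo := by
    intro ℓ hℓ
    have := (I.norms' h i hℓ).1
    nlinarith [l2_nonneg (hseq A W (x i) ℓ)]
  hhi := by
    intro ℓ hℓ
    have := (I.norms' h i hℓ).2
    nlinarith [l2_nonneg (hseq A W (x i) ℓ)]
  count := by
    intro ℓ h1 hℓ
    obtain ⟨j, rfl⟩ : ∃ j, ℓ = j + 1 := ⟨ℓ - 1, by omega⟩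
    refine le_trans ?_ (I.count (i, ⟨j, by omega⟩) (by simp) (I.ne h i (by simp; omega)))
    have h2 : 1 / 2 ≤ l2 (hseq A W (x i) j) := by
      have := (I.norms' h i (ℓ := j) (by omega)).1
      nlinarith [l2_nonneg (hseq A W (x i) j)]
    refine Nat.cast_le.2 (Finset.card_le_card fun k hk => ?_)
    simp only [Finset.mem_filter, Finset.mem_univ, true_and] at hk ⊢
    refine hk.trans ?_
    have := h.b0
    nlinarith
  hP := by
    have hL' : (1:ℝ) ≤ L := by exact_mod_cast h.hL
    linarith
  hK := by norm_num
  hσ := by positivity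
  hν := by positivity
  hκ := by positivity
  hβ := h.b0
  hs := hs
  hσL := by
    have hL' : (1:ℝ) ≤ L := by exact_mod_cast h.hL
    have hm : (0:ℝ) < m := by exact_mod_cast h.m0
    have h1 : 128 * (s * Real.log m) / m ≤ (1 / (32 * (L:ℝ))) ^ 2 := by
      rw [div_pow, one_pow, div_le_div_iff₀ hm (by positivity)]
      have := h.sm
      have h0 : 0 ≤ s * Real.log m := le_trans (sq_nonneg _) h.lm2
      have h1 : 0 ≤ s * Real.log m * (L:ℝ) ^ 2 := by positivity
      nlinarith
    have h2 := Real.sqrt_le_sqrt h1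
    rw [Real.sqrt_sq (by positivity)] at h2
    have h3 : ((L:ℝ) + 1) ≤ 2 * L := by linarith
    calc 4 * (((L:ℝ) + 1) * (4 * Real.sqrt (128 * (s * Real.log m) / m)))
        ≤ 4 * ((2 * L) * (4 * (1 / (32 * (L:ℝ))))) := by gcongr
      _ = 1 := by field_simp; norm_num

end

/-! ### Separation of the normalized features -/

lemma l2_sub_unit {p : ℕ} {z : Fin p → ℝ} (hz : z ≠ 0) {τ : ℝ} (h1 : 1 - τ ≤ l2 z ^ 2)
    (h2 : l2 z ^ 2 ≤ 1 + τ) : l2 (z - unit z) ≤ τ := by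
  have hl := l2_pos hz
  have e : z - unit z = (l2 z - 1) • unit z := by
    rw [sub_smul, smul_unit, one_smul]
  rw [e, l2_smul, l2_unit hz, mul_one, abs_le]
  constructor <;> nlinarith

lemma one_sub_sq_le {z : ℝ} (hz0 : 0 ≤ z) (hz1 : z ≤ 1) : (1 - z) ^ 2 ≤ 1 - z := by nlinarith

lemma sep_arith {Y z δ τ y : ℝ} (h5 : Y * z ≤ δ * (12 * δ + τ)) (h6 : δ * τ ≤ 1 / 10000 * τ)
    (hδδ : δ * δ ≤ y / 10000) (hτ : τ = y / 1000) (hy : 0 < y) :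
    Y - 0.01 * y + 2 * τ ≤ Y * (1 - z) := by
  subst hτ
  have e1 : Y * (1 - z) = Y - Y * z := by ring
  have e2 : δ * (12 * δ + y / 1000) = 12 * (δ * δ) + δ * (y / 1000) := by ring
  rw [e1]
  rw [e2] at h5
  generalize Y * z = a at *
  generalize δ * (y / 1000) = b at *
  generalize δ * δ = c at *
  linarith

/-- One layer shrinks the distance between normalized features by at most `0.01 δ / N`. -/
lemma sep_step {p : ℕ} {u w : Fin p → ℝ} {δ N r Y τ : ℝ} (hN : 1 ≤ N) (hδ : 0 < δ)
    (hδN : δ * N ≤ 1 / 10000) (hτ : τ = δ / (1000 * N)) (hu : u ≠ 0) (hw : w ≠ 0)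
    (hu1 : 1 - τ ≤ l2 u ^ 2) (hu2 : l2 u ^ 2 ≤ 1 + τ)
    (hw1 : 1 - τ ≤ l2 w ^ 2) (hw2 : l2 w ^ 2 ≤ 1 + τ) (hr : Y ≤ r) (hY : 0.99 * δ ≤ Y)
    (hY2 : Y ≤ δ) (hs : r ^ 2 * (max (1 / 2) (1 - 6 * r) - τ) ≤ l2 (u - w) ^ 2) :
    Y - 0.01 * (δ / N) ≤ l2 (unit u - unit w) := by
  have hN0 : 0 < N := by linarith
  obtain ⟨y, hy⟩ : ∃ y, y = δ / N := ⟨_, rfl⟩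
  have hy0 : 0 < y := by rw [hy]; positivity
  have hτ' : τ = y / 1000 := by rw [hτ, hy]; field_simp
  have hyδ : y ≤ δ := by rw [hy]; exact div_le_self hδ.le hN
  have hδ1 : δ ≤ 1 / 10000 := by nlinarith
  have hδδ : δ * δ ≤ y / 10000 := by
    rw [hy, div_div, le_div_iff₀ (by positivity)]
    nlinarith
  have htri : l2 (u - w) ≤ l2 (unit u - unit w) + 2 * τ := by
    have e : u - w = (unit u - unit w) + ((u - unit u) - (w - unit w)) := by abel
    calc l2 (u - w) ≤ l2 (unit u - unit w) + l2 ((u - unit u) - (w - unit w)) := by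
          conv_lhs => rw [e]
          exact l2_add_le _ _
      _ ≤ _ := by
          have := l2_sub_le (u - unit u) (w - unit w)
          linarith [l2_sub_unit hu hu1 hu2, l2_sub_unit hw hw1 hw2]
  have hl := l2_nonneg (u - w)
  have hr0 : 0 < r := by linarith
  rcases le_or_gt r (2 * δ) with hr2 | hr2
  · -- nearby pair: the kernel is almost isometric, `√(1 - c) ≥ 1 - c`
    obtain ⟨z, hz⟩ : ∃ z, z = 6 * r + τ := ⟨_, rfl⟩
    have hz0 : 0 ≤ z := by rw [hz, hτ']; positivity
    have hz1 : z ≤ 1 := by rw [hz, hτ']; linarith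
    have h1 : (r * (1 - z)) ^ 2 ≤ l2 (u - w) ^ 2 := by
      refine le_trans ?_ hs
      rw [mul_pow]
      refine mul_le_mul_of_nonneg_left ?_ (sq_nonneg _)
      have := le_max_right (1 / 2) (1 - 6 * r)
      have := one_sub_sq_le hz0 hz1
      linarith
    have h2 : r * (1 - z) ≤ l2 (u - w) := (abs_le_of_sq_le_sq' h1 hl).2
    have h3 : Y * (1 - z) ≤ r * (1 - z) := mul_le_mul_of_nonneg_right hr (by linarith)
    have h4 : z ≤ 12 * δ + τ := by rw [hz]; linarith
    have h5 : Y * z ≤ δ * (12 * δ + τ) := mul_le_mul hY2 h4 hz0 hδ.le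
    have h6 : δ * τ ≤ 1 / 10000 * τ := mul_le_mul_of_nonneg_right hδ1 (by rw [hτ']; positivity)
    have h7 := sep_arith h5 h6 hδδ hτ' hy0
    rw [← hy]
    linarith
  · have h1 : (0.65 * r) ^ 2 ≤ l2 (u - w) ^ 2 := by
      refine le_trans ?_ hs
      have := le_max_left (1 / 2 : ℝ) (1 - 6 * r)
      have h3 : 0.65 ^ 2 ≤ max (1 / 2) (1 - 6 * r) - τ := by
        rw [hτ']; linarith
      calc (0.65 * r) ^ 2 = r ^ 2 * 0.65 ^ 2 := by ring
        _ ≤ _ := mul_le_mul_of_nonneg_left h3 (sq_nonneg _)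
    have h2 : 0.65 * r ≤ l2 (u - w) := (abs_le_of_sq_le_sq' h1 hl).2
    rw [← hy]
    linarith

section

variable {𝔡 n m d L s : ℕ} {β τ γ : ℝ} {A : Fin m → Fin 𝔡 → ℝ} {W : Fin L → Fin m → Fin m → ℝ}
  {B : Fin d → Fin m → ℝ} {x : Fin n → Fin 𝔡 → ℝ}

lemma unit_smul {p : ℕ} {c : ℝ} (hc : 0 < c) (z : Fin p → ℝ) : unit (c • z) = unit z := by
  unfold unit
  rw [l2_smul, abs_of_pos hc, smul_smul, mul_inv]
  congr 1
  field_simp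

lemma hseq_unit (y : Fin 𝔡 → ℝ) {ℓ : ℕ} (hℓ : ℓ + 1 ≤ L) :
    hseq A W y (ℓ + 1) = l2 (hseq A W y ℓ) • relu (mulVec (Wat W (ℓ + 1)) (unit (hseq A W y ℓ))) := by
  rw [← relu_smul (l2_nonneg _), ← mulVec_smul, smul_unit, hseq_succ _ _ _ hℓ]

/-- Induction over the layers: each layer costs at most `0.01 * δ / (L + 1)` of the separation, because
the relative contraction at distance of order `δ` is of order `δ`, and `δ * (L + 1)` is small. -/
lemma Init.separated (h : Par n m d L s β τ γ) (I : Init A W B x s β τ γ) {δ : ℝ} (hδ : 0 < δ)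
    (hδL : δ * ((L:ℝ) + 1) ≤ 1 / 10000) (hτ : τ = δ / (1000 * ((L:ℝ) + 1)))
    (hsep : ∀ i j, i ≠ j → δ ≤ l2 (x i - x j))
    {i j : Fin n} (hij : i ≠ j) : ∀ ℓ, ℓ ≤ L →
    δ - 0.01 * (δ / (L + 1)) * (ℓ + 1) ≤
      l2 (unit (hseq A W (x i) ℓ) - unit (hseq A W (x j) ℓ)) := by
  have hN : (1:ℝ) ≤ (L:ℝ) + 1 := by linarith [Nat.cast_nonneg (α := ℝ) L]
  have hy : 0 < δ / ((L:ℝ) + 1) := by positivity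
  intro ℓ
  induction ℓ with
  | zero =>
    intro _
    have ni := I.norm0 i (Finset.mem_univ _)
    have nj := I.norm0 j (Finset.mem_univ _)
    have := sep_step hN hδ hδL hτ (I.ne h i (Nat.zero_le _)) (I.ne h j (Nat.zero_le _)) ni.1 ni.2
      nj.1 nj.2 (hsep i j hij) (by linarith) le_rfl (I.sep0 (i, j) (by simp))
    simpa using this
  | succ ℓ ih =>
    intro hℓ
    have ih := ih (by omega)
    have hne : ∀ i, hseq A W (x i) ℓ ≠ 0 := fun i => I.ne h i (by omega)
    have key : ∀ i, relu (mulVec (Wat W (ℓ + 1)) (unit (hseq A W (x i) ℓ))) ≠ 0 ∧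
        1 - τ ≤ l2 (relu (mulVec (Wat W (ℓ + 1)) (unit (hseq A W (x i) ℓ)))) ^ 2 ∧
        l2 (relu (mulVec (Wat W (ℓ + 1)) (unit (hseq A W (x i) ℓ)))) ^ 2 ≤ 1 + τ := by
      intro i
      have hl := l2_pos (hne i)
      obtain ⟨h3, h4⟩ := I.norm (i, ⟨ℓ, by omega⟩) (by simp) (hne i)
      simp only at h3 h4
      rw [hseq_unit _ hℓ, l2_smul, abs_of_pos hl, mul_pow, mul_comm (_ ^ 2)] at h3 h4
      have hl2 : 0 < l2 (hseq A W (x i) ℓ) ^ 2 := by positivity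
      refine ⟨fun h0 => ?_, le_of_mul_le_mul_right h3 hl2, le_of_mul_le_mul_right h4 hl2⟩
      have h5 := I.ne h i hℓ
      rw [hseq_unit _ hℓ, h0, smul_zero] at h5
      exact h5 rfl
    have hℓL : (ℓ:ℝ) + 1 ≤ L := by exact_mod_cast hℓ
    have e0 : δ / ((L:ℝ) + 1) * (L + 1) = δ := by field_simp
    have := sep_step hN hδ hδL hτ (key i).1 (key j).1 (key i).2.1 (key i).2.2
      (key j).2.1 (key j).2.2 ih (by nlinarith) (by nlinarith [Nat.cast_nonneg (α := ℝ) ℓ])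
      (I.sep (i, j, ⟨ℓ, by omega⟩) (by simp) ⟨hne i, hne j⟩)
    rw [hseq_unit _ hℓ, hseq_unit _ hℓ, unit_smul (l2_pos (hne i)), unit_smul (l2_pos (hne j))]
    push_cast
    linarith

end

/-! ### The empirical kernel of the last layer -/

section

variable {𝔡 n m d L s : ℕ} {β τ γ : ℝ} {A : Fin m → Fin 𝔡 → ℝ} {W : Fin L → Fin m → Fin m → ℝ}
  {B : Fin d → Fin m → ℝ} {x : Fin n → Fin 𝔡 → ℝ}

lemma innerF_sum_sum {ι : Type*} [Fintype ι] {p q : ℕ} (M : ι → Fin p → Fin q → ℝ) :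
    frob (∑ i, M i) ^ 2 = ∑ i, ∑ j, innerF (M i) (M j) := by
  have e : ∀ a b, (∑ i, M i) a b ^ 2 = ∑ i, ∑ j, M i a b * M j a b := by
    intro a b
    rw [Finset.sum_apply, Finset.sum_apply, sq, Finset.sum_mul_sum]
  rw [frob_sq]
  simp only [e, innerF]
  calc ∑ a, ∑ b, ∑ i, ∑ j, M i a b * M j a b
      = ∑ a, ∑ i, ∑ b, ∑ j, M i a b * M j a b :=
        Finset.sum_congr rfl fun _ _ => Finset.sum_comm
    _ = ∑ i, ∑ a, ∑ b, ∑ j, M i a b * M j a b := Finset.sum_comm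
    _ = ∑ i, ∑ a, ∑ j, ∑ b, M i a b * M j a b :=
        Finset.sum_congr rfl fun _ _ => Finset.sum_congr rfl fun _ _ => Finset.sum_comm
    _ = _ := Finset.sum_congr rfl fun _ _ => Finset.sum_comm

lemma innerF_outer_outer {p q : ℕ} (u u' : Fin p → ℝ) (v v' : Fin q → ℝ) :
    innerF (outer u v) (outer u' v') = dot u u' * dot v v' := by
  rw [innerF_outer, mulVec_outer, dot_smul, dot_comm v' v, mul_comm]

/-- The bilinear form `∑ₖ fₖ (bₖ · u)(bₖ · w)` of the columns `bₖ` of `B`, for weights `f`. -/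
def colForm (B : Fin d → Fin m → ℝ) (f : Fin m → ℝ) (u w : Fin d → ℝ) : ℝ :=
  ∑ k, f k * (dot (transpose B k) u * dot (transpose B k) w)

lemma frob_grad0_sq (l : Fin n → Fin d → ℝ) :
    frob (grad0 B A W x l) ^ 2 = ∑ i, ∑ j,
      colForm B (signOf (gseq A W (x i) L) * signOf (gseq A W (x j) L)) (l i) (l j) *
        dot (hseq A W (x i) (L - 1)) (hseq A W (x j) (L - 1)) := by
  rw [grad0, innerF_sum_sum]
  refine Finset.sum_congr rfl fun i _ => Finset.sum_congr rfl fun j _ => ?_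
  rw [innerF_outer_outer]
  congr 1
  unfold colForm
  rw [dot]
  refine Finset.sum_congr rfl fun k _ => ?_
  simp only [Pi.mul_apply, mulVec_eq_dot]
  ring

/-- Polarization turns the concentration of the quadratic forms on a net into a bound for the
bilinear form on the whole space. -/
lemma Init.colForm_bound (h : Par n m d L s β τ γ) (I : Init A W B x s β τ γ) (i j : Fin n)
    (u w : Fin d → ℝ) :
    |colForm B (signOf (gseq A W (x i) L) * signOf (gseq A W (x j) L)) u w -
      (∑ k, (signOf (gseq A W (x i) L) * signOf (gseq A W (x j) L)) k) / d * dot u w| ≤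
      4 * (γ * m / d) * l2 u * l2 w := by
  have hd : (0:ℝ) < d := by exact_mod_cast h.hd
  have hm : (0:ℝ) < m := by exact_mod_cast h.m0
  have hγ := h.g0
  have G := I.gram
  generalize hf : signOf (gseq A W (x i) L) * signOf (gseq A W (x j) L) = f
  obtain ⟨N, hN⟩ : ∃ N, N = ∑ k, f k := ⟨_, rfl⟩
  rw [← hN]
  have q : ∀ u ∈ net (Finset.univ : Finset (Fin d)), ∀ w ∈ net (Finset.univ : Finset (Fin d)),
      ∀ c ∈ ({1, -1} : Finset ℝ),
      |colForm B f (u + c • w) (u + c • w) - N / d * l2 (u + c • w) ^ 2| ≤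
        γ * m / d * l2 (u + c • w) ^ 2 := by
    intro u hu w hw c hc
    have := G (i, j, u, w, c) (by simp only [Finset.mem_product, Finset.mem_univ, true_and]
                                  exact ⟨hu, hw, hc⟩)
    simp only [hf] at this
    have e : ∑ k, f k * (dot (transpose B k) (u + c • w) ^ 2 - l2 (u + c • w) ^ 2 / d) =
        colForm B f (u + c • w) (u + c • w) - N / d * l2 (u + c • w) ^ 2 := by
      simp only [mul_sub, Finset.sum_sub_distrib, colForm, ← sq]
      rw [← Finset.sum_mul, ← hN]
      ring
    rw [e] at this
    refine this.trans_eq (by ring)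
  set T : (Fin d → ℝ) → (Fin d → ℝ) := fun w =>
    (∑ k, (f k * dot (transpose B k) w) • transpose B k) - (N / d) • w with hT
  have hdT : ∀ u w, dot u (T w) = colForm B f u w - N / d * dot u w := by
    intro u w
    rw [hT, dot_sub, dot_smul]
    congr 1
    unfold colForm
    have : ∀ v : Fin m → Fin d → ℝ, dot u (∑ k, v k) = ∑ k, dot u (v k) := by
      intro v
      unfold dot
      simp only [Finset.sum_apply, Finset.mul_sum]
      exact Finset.sum_comm
    rw [this]
    refine Finset.sum_congr rfl fun k _ => ?_
    rw [dot_smul, dot_comm u]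
    ring
  have bil : ∀ u ∈ net (Finset.univ : Finset (Fin d)), ∀ w ∈ net (Finset.univ : Finset (Fin d)),
      |dot u (T w)| ≤ γ * m / d := by
    intro u hu w hw
    have q1 := q u hu w hw 1 (by simp)
    have q2 := q u hu w hw (-1) (by simp)
    have e1 : colForm B f (u + (1:ℝ) • w) (u + (1:ℝ) • w) -
        colForm B f (u + (-1:ℝ) • w) (u + (-1:ℝ) • w) = 4 * colForm B f u w := by
      unfold colForm
      rw [← Finset.sum_sub_distrib, Finset.mul_sum]
      refine Finset.sum_congr rfl fun k _ => ?_
      simp only [dot_add, dot_smul]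
      ring
    have e2 : l2 (u + (1:ℝ) • w) ^ 2 = l2 u ^ 2 + 2 * dot u w + l2 w ^ 2 := by
      rw [one_smul, l2_add_sq]
    have e3 : l2 (u + (-1:ℝ) • w) ^ 2 = l2 u ^ 2 - 2 * dot u w + l2 w ^ 2 := by
      rw [neg_one_smul, ← sub_eq_add_neg, l2_sub_sq]
    rw [e2] at q1
    rw [e3] at q2
    have hc : 0 ≤ γ * m / d := by positivity
    have hu1 : l2 u ^ 2 ≤ 1 := pow_le_one₀ (l2_nonneg _) (net_l2 hu)
    have hw1 : l2 w ^ 2 ≤ 1 := pow_le_one₀ (l2_nonneg _) (net_l2 hw)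
    have hsum : γ * m / d * (l2 u ^ 2 + l2 w ^ 2) ≤ γ * m / d * 2 :=
      mul_le_mul_of_nonneg_left (by linarith) hc
    rw [hdT]
    rw [abs_le] at q1 q2 ⊢
    generalize γ * m / d = c at *
    generalize N / d = N' at *
    constructor <;> nlinarith
  have key := net_bound_bilin Finset.univ Finset.univ T
    (by
      intro u v
      simp only [hT, dot_add, smul_add, mul_add, add_smul, Finset.sum_add_distrib]
      abel)
    (by
      intro c v
      simp only [hT, dot_smul, smul_sub, Finset.smul_sum, smul_smul]
      congr 1
      · exact Finset.sum_congr rfl fun k _ => by rw [mul_left_comm]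
      · rw [mul_comm])
    bil (supp_univ w)
  rw [res_univ] at key
  rw [← hdT]
  calc |dot u (T w)| ≤ l2 u * l2 (T w) := abs_dot_le _ _
    _ ≤ l2 u * (4 * (γ * m / d) * l2 w) := mul_le_mul_of_nonneg_left key (l2_nonneg _)
    _ = _ := by ring

lemma ind_mul_pos {a c : ℝ} (hc : 0 < c) : ind (c * a) = ind a := by
  unfold ind
  simp only [mul_nonneg_iff_of_pos_left hc]

/-- The overlap of two sign patterns of the last layer is close to the value of Sheppard's formula. -/
lemma Init.overlap (h : Par n m d L s β τ γ) (I : Init A W B x s β τ γ) (i j : Fin n) :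
    |(∑ k, (signOf (gseq A W (x i) L) * signOf (gseq A W (x j) L)) k) -
      m * (1 / 4 + Real.arcsin (dot (unit (hseq A W (x i) (L - 1)))
        (unit (hseq A W (x j) (L - 1)))) / (2 * Real.pi))| ≤ γ * m := by
  have hL := h.hL
  have hi := I.ne h i (ℓ := L - 1) (by omega)
  have hj := I.ne h j (ℓ := L - 1) (by omega)
  have e : ∀ i, hseq A W (x i) (L - 1) ≠ 0 → ∀ k, signOf (gseq A W (x i) L) k =
      ind (mulVec (Wat W (L - 1 + 1)) (unit (hseq A W (x i) (L - 1))) k) := by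
    intro i hi k
    have : gseq A W (x i) L = mulVec (Wat W (L - 1 + 1)) (hseq A W (x i) (L - 1)) := by
      obtain ⟨L', rfl⟩ : ∃ L', L = L' + 1 := ⟨L - 1, by omega⟩
      rfl
    rw [signOf_eq_ind, this]
    conv_lhs => rw [← smul_unit (hseq A W (x i) (L - 1))]
    rw [mulVec_smul, Pi.smul_apply, smul_eq_mul, ind_mul_pos (l2_pos hi)]
  have := I.shep (i, j, ⟨L - 1, by omega⟩) (by simp) ⟨hi, hj⟩
  simp only [Pi.mul_apply, e i hi, e j hj]
  exact this

/-- The kernel of the last layer is bounded below on the initialization event. -/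
lemma Init.kernel (h : Par n m d L s β τ γ) (I : Init A W B x s β τ γ) {δ : ℝ} (hδ : 0 < δ)
    (hδL : δ * ((L:ℝ) + 1) ≤ 1 / 10000) (hτ : τ = δ / (1000 * ((L:ℝ) + 1)))
    (hγ : γ = δ / (1000 * (n:ℝ) ^ 3)) (hsep : ∀ i j, i ≠ j → δ ≤ l2 (x i - x j))
    (l : Fin n → Fin d → ℝ) :
    1.07 * (δ * m / (2 * n ^ 2 * d)) * ∑ i, l2 (l i) ^ 2 ≤ frob (grad0 B A W x l) ^ 2 := by
  have hd : (0:ℝ) < d := by exact_mod_cast h.hd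
  have hm : (0:ℝ) < m := by exact_mod_cast h.m0
  have hn : (0:ℝ) < n := by exact_mod_cast h.hn
  have hL : (1:ℝ) ≤ L := by exact_mod_cast h.hL
  have hL' := h.hL
  set H := fun i => hseq A W (x i) (L - 1) with hH
  have hne : ∀ i, H i ≠ 0 := fun i => I.ne h i (by omega)
  set u := fun i => unit (H i) with hu
  have hnorm : ∀ i, 199 / 200 ≤ l2 (H i) ^ 2 ∧ l2 (H i) ^ 2 ≤ 101 / 100 :=
    fun i => I.norms' h i (by omega)
  have huH : ∀ i j, dot (H i) (H j) = l2 (H i) * l2 (H j) * dot (u i) (u j) := by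
    intro i j
    conv_lhs => rw [← smul_unit (H i), ← smul_unit (H j)]
    rw [dot_smul, smul_dot]
    ring
  set κ := fun i j => 1 / 4 + Real.arcsin (dot (u i) (u j)) / (2 * Real.pi) with hκ
  -- the population kernel
  have pop := ntk_pop (δ := 0.99 * δ) u (by positivity) (by nlinarith) h.hn
    (fun i => l2_unit (hne i))
    (fun i j => unit_dot_nonneg (dot_nonneg (hseq_nonneg _ _ _ _) (hseq_nonneg _ _ _ _)))
    (fun i j hij => by
      have := I.separated h hδ hδL hτ hsep hij (L - 1) (by omega)
      refine le_trans ?_ this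
      have e0 : δ / ((L:ℝ) + 1) * (L + 1) = δ := by field_simp
      have : ((L - 1 : ℕ) : ℝ) + 1 = L := by exact_mod_cast Nat.sub_add_cancel hL'
      rw [this]
      have : 0 < δ / ((L:ℝ) + 1) := by positivity
      nlinarith)
  have pop' : 1.1 * (0.99 * δ / (2 * n ^ 2)) * ∑ i, l2 (H i) ^ 2 * l2 (l i) ^ 2 ≤
      ∑ i, ∑ j, dot (H i) (H j) * κ i j * dot (l i) (l j) := by
    have : ∑ i, l2 (H i) ^ 2 * l2 (l i) ^ 2 = ∑ c, ∑ i, (l2 (H i) * l i c) ^ 2 := by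
      rw [Finset.sum_comm]
      refine Finset.sum_congr rfl fun i _ => ?_
      rw [l2_sq (l i), Finset.mul_sum]
      exact Finset.sum_congr rfl fun c _ => by ring
    rw [this, Finset.mul_sum]
    refine (Finset.sum_le_sum fun c _ => pop fun i => l2 (H i) * l i c).trans_eq ?_
    rw [Finset.sum_comm]
    refine Finset.sum_congr rfl fun i _ => ?_
    rw [Finset.sum_comm]
    refine Finset.sum_congr rfl fun j _ => ?_
    rw [huH]
    have : dot (l i) (l j) = ∑ c, l i c * l j c := rfl
    rw [this, Finset.mul_sum]
    exact Finset.sum_congr rfl fun c _ => by rw [hκ]; ring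
  -- entrywise deviation
  have dev : ∀ i j, m / d * (dot (H i) (H j) * κ i j * dot (l i) (l j)) -
      5.05 * (γ * m / d) * (l2 (l i) * l2 (l j)) ≤
      colForm B (signOf (gseq A W (x i) L) * signOf (gseq A W (x j) L)) (l i) (l j) *
        dot (H i) (H j) := by
    intro i j
    have d1 := I.colForm_bound h i j (l i) (l j)
    have d2 := I.overlap h i j
    generalize colForm B (signOf (gseq A W (x i) L) * signOf (gseq A W (x j) L)) (l i) (l j) = F
      at *
    generalize ∑ k, (signOf (gseq A W (x i) L) * signOf (gseq A W (x j) L)) k = N at *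
    change |N - m * κ i j| ≤ γ * m at d2
    have d3 : |(N / d - m / d * κ i j) * dot (l i) (l j)| ≤
        γ * m / d * (l2 (l i) * l2 (l j)) := by
      rw [abs_mul]
      refine mul_le_mul ?_ (abs_dot_le _ _) (abs_nonneg _) (by have := h.g0; positivity)
      have : N / d - m / d * κ i j = (N - m * κ i j) / d := by ring
      rw [this, abs_div, abs_of_pos hd]
      gcongr
    have d4 : |F - m / d * κ i j * dot (l i) (l j)| ≤ 5 * (γ * m / d) * (l2 (l i) * l2 (l j)) := by
      have e : F - m / d * κ i j * dot (l i) (l j) = (F - N / d * dot (l i) (l j)) +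
        (N / d - m / d * κ i j) * dot (l i) (l j) := by ring
      rw [e]
      refine (abs_add_le _ _).trans ((add_le_add d1 d3).trans_eq (by ring))
    have d5 : |dot (H i) (H j)| ≤ 1.01 := by
      refine (abs_dot_le _ _).trans ?_
      have h1 := (hnorm i).2
      have h2 := (hnorm j).2
      nlinarith [sq_nonneg (l2 (H i) - l2 (H j))]
    have d6 : |(F - m / d * κ i j * dot (l i) (l j)) * dot (H i) (H j)| ≤
        5 * (γ * m / d) * (l2 (l i) * l2 (l j)) * 1.01 := by
      rw [abs_mul]
      exact mul_le_mul d4 d5 (abs_nonneg _) ((abs_nonneg _).trans d4)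
    have d7 := (abs_le.1 d6).1
    have e : (F - m / d * κ i j * dot (l i) (l j)) * dot (H i) (H j) = F * dot (H i) (H j) -
        m / d * (dot (H i) (H j) * κ i j * dot (l i) (l j)) := by ring
    rw [e] at d7
    linarith
  have S1 : 199 / 200 * ∑ i, l2 (l i) ^ 2 ≤ ∑ i, l2 (H i) ^ 2 * l2 (l i) ^ 2 := by
    rw [Finset.mul_sum]
    exact Finset.sum_le_sum fun i _ => mul_le_mul_of_nonneg_right (hnorm i).1 (sq_nonneg _)
  have S2 : ∑ i, ∑ j, l2 (l i) * l2 (l j) ≤ n * ∑ i, l2 (l i) ^ 2 := by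
    rw [← Finset.sum_mul_sum, ← sq]
    have := sq_sum_le_card_mul_sum_sq (s := (Finset.univ : Finset (Fin n)))
      (f := fun i => l2 (l i))
    simpa using this
  have S0 : 0 ≤ ∑ i, l2 (l i) ^ 2 := Finset.sum_nonneg fun _ _ => sq_nonneg _
  rw [frob_grad0_sq]
  refine le_trans ?_ (Finset.sum_le_sum fun i _ => Finset.sum_le_sum fun j _ => dev i j)
  have E : ∑ i, ∑ j, (m / d * (dot (H i) (H j) * κ i j * dot (l i) (l j)) -
      5.05 * (γ * m / d) * (l2 (l i) * l2 (l j))) =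
      m / d * (∑ i, ∑ j, dot (H i) (H j) * κ i j * dot (l i) (l j)) -
      5.05 * (γ * m / d) * ∑ i, ∑ j, l2 (l i) * l2 (l j) := by
    simp only [Finset.mul_sum, Finset.sum_sub_distrib]
  rw [E]
  have hγ0 := h.g0
  have A1 : m / d * (1.1 * (0.99 * δ / (2 * n ^ 2)) * (199 / 200 * ∑ i, l2 (l i) ^ 2)) ≤
      m / d * ∑ i, ∑ j, dot (H i) (H j) * κ i j * dot (l i) (l j) := by
    refine mul_le_mul_of_nonneg_left (le_trans ?_ pop') (by positivity)
    exact mul_le_mul_of_nonneg_left S1 (by positivity)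
  have A2 : 5.05 * (γ * m / d) * ∑ i, ∑ j, l2 (l i) * l2 (l j) ≤
      5.05 * (γ * m / d) * (n * ∑ i, l2 (l i) ^ 2) :=
    mul_le_mul_of_nonneg_left S2 (by positivity)
  have A3 : 5.05 * (γ * m / d) * (n * ∑ i, l2 (l i) ^ 2) =
      0.0101 * (δ * m / (2 * n ^ 2 * d) * ∑ i, l2 (l i) ^ 2) := by
    rw [hγ]; field_simp; ring
  have A4 : m / d * (1.1 * (0.99 * δ / (2 * n ^ 2)) * (199 / 200 * ∑ i, l2 (l i) ^ 2)) =
      1.083555 * (δ * m / (2 * n ^ 2 * d) * ∑ i, l2 (l i) ^ 2) := by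
    field_simp; ring
  have A5 : 0 ≤ δ * m / (2 * n ^ 2 * d) * ∑ i, l2 (l i) ^ 2 := by positivity
  rw [mul_assoc]
  linarith

end

/-! ### Choice of the parameters -/

/-- The size hypotheses of the theorem, with `lm` for `log m`, as a statement about real numbers. -/
structure Reg (n L d lm δ m C : ℝ) : Prop where
  hn : 1 ≤ n
  hL : 2 ≤ L
  hd : 1 ≤ d
  hlm : 1000 ≤ lm
  hδ : 0 < δ
  hC : 10 ^ 100 ≤ C
  hδL : C * (δ * L) ≤ 1
  hm : C * (n ^ 24 * L ^ 12 * d * lm ^ 5) ≤ m * δ ^ 8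

namespace Reg

variable {n L d lm δ m C : ℝ}

lemma C0 (h : Reg n L d lm δ m C) : 0 < C := lt_of_lt_of_le (by positivity) h.hC

lemma δL (h : Reg n L d lm δ m C) : 10 ^ 100 * (δ * L) ≤ 1 :=
  le_trans (mul_le_mul_of_nonneg_right h.hC (mul_nonneg h.hδ.le (by linarith [h.hL]))) h.hδL

lemma δ1 (h : Reg n L d lm δ m C) : 10 ^ 100 * δ ≤ 1 := by
  have := h.δL
  nlinarith [h.hδ, h.hL]

lemma m0 (h : Reg n L d lm δ m C) : 0 < m := by
  have h1 : 0 < m * δ ^ 8 := by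
    refine lt_of_lt_of_le ?_ h.hm
    have := h.C0
    have := h.hn
    have := h.hL
    have := h.hd
    have := h.hlm
    positivity
  exact (pos_iff_pos_of_mul_pos h1).2 (pow_pos h.hδ 8)

/-- The lower bound on `m` dominates every monomial of smaller exponents; one factor of `1/δ` may
be traded for a factor of `L`. -/
lemma mono (h : Reg n L d lm δ m C) (i j k e l : ℕ) (hi : i ≤ 24 := by norm_num)
    (hj : j ≤ 13 := by norm_num) (hk : k ≤ 5 := by norm_num) (he : e ≤ 1 := by norm_num)
    (hl : l ≤ 7 := by norm_num) :
    10 ^ 100 * (n ^ i * L ^ j * lm ^ k * d ^ e) ≤ m * δ ^ l := by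
  have hC := h.C0
  have hn := h.hn
  have hL : 1 ≤ L := by linarith [h.hL]
  have hd := h.hd
  have hlm : 1 ≤ lm := by linarith [h.hlm]
  have hδ := h.hδ
  have hm := h.m0
  have hδ1 : δ ≤ 1 := by linarith [h.δ1]
  have hδL : δ * L ≤ 1 := by
    have := h.δL
    have : 0 < δ * L := by positivity
    linarith
  calc 10 ^ 100 * (n ^ i * L ^ j * lm ^ k * d ^ e)
      ≤ C * (n ^ 24 * L ^ 13 * lm ^ 5 * d ^ 1) := by
        have := h.hC
        gcongr
    _ = C * (n ^ 24 * L ^ 12 * d * lm ^ 5) * L := by ring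
    _ ≤ m * δ ^ 8 * L := mul_le_mul_of_nonneg_right h.hm (by linarith)
    _ = m * δ ^ 7 * (δ * L) := by ring
    _ ≤ m * δ ^ 7 * 1 := by gcongr
    _ ≤ m * δ ^ l := by
        rw [mul_one]
        exact mul_le_mul_of_nonneg_left (pow_le_pow_of_le_one hδ.le hδ1 hl) hm.le

end Reg

/-- Width of the window around zero in which pre-activations may change sign. -/
def betaP (n L lm δ : ℝ) : ℝ := δ / (10 ^ 16 * (lm * n ^ 3 * L ^ 3))

/-- The natural scale `√(δ m / (n² d))` of the kernel's square root. -/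
def qP (n d δ m : ℝ) : ℝ := Real.sqrt (δ * m / (n ^ 2 * d))

/-- Radius of the neighbourhood of the initialization that gradient descent does not leave. -/
def omP (n d lm δ m : ℝ) : ℝ := 6 * lm * Real.sqrt n / qP n d δ m

namespace Reg

variable {n L d lm δ m C : ℝ}

lemma beta_pos (h : Reg n L d lm δ m C) : 0 < betaP n L lm δ := by
  have := h.hn
  have := h.hL
  have := h.hlm
  have := h.hδ
  unfold betaP
  positivity

lemma beta_eq (h : Reg n L d lm δ m C) : betaP n L lm δ * (10 ^ 16 * (lm * n ^ 3 * L ^ 3)) = δ := by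
  have := h.hn
  have := h.hL
  have := h.hlm
  unfold betaP
  field_simp

lemma beta_le (h : Reg n L d lm δ m C) : betaP n L lm δ ≤ δ := by
  have := h.hn
  have := h.hL
  have := h.hlm
  have h1 : 1 ≤ lm * n ^ 3 * L ^ 3 :=
    one_le_mul_of_one_le_of_one_le (one_le_mul_of_one_le_of_one_le (by linarith)
      (one_le_pow₀ h.hn)) (one_le_pow₀ (by linarith))
  exact div_le_self h.hδ.le (by linarith)

lemma beta_m (h : Reg n L d lm δ m C) :
    lm ≤ betaP n L lm δ * m ∧ d ≤ betaP n L lm δ * m * lm ∧ 1 ≤ betaP n L lm δ * m := by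
  have hn := h.hn
  have hL := h.hL
  have hlm := h.hlm
  have h1 := h.mono 3 3 2 0 1
  have h2 := h.mono 3 3 0 1 1
  have hp : 0 < 10 ^ 16 * (lm * n ^ 3 * L ^ 3) := by positivity
  have e : betaP n L lm δ * m = δ * m / (10 ^ 16 * (lm * n ^ 3 * L ^ 3)) := by
    unfold betaP; ring
  have hlm' : lm ≤ betaP n L lm δ * m := by
    rw [e, le_div_iff₀ hp]
    have : 0 ≤ n ^ 3 * L ^ 3 * lm ^ 2 := by positivity
    simp only [pow_zero, pow_one, mul_one] at h1
    nlinarith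
  refine ⟨hlm', ?_, by linarith⟩
  rw [e, div_mul_eq_mul_div, le_div_iff₀ hp]
  have : 0 ≤ n ^ 3 * L ^ 3 * d := by have := h.hd; positivity
  simp only [pow_zero, pow_one, mul_one] at h2
  have h3 : 10 ^ 16 * (n ^ 3 * L ^ 3 * d) ≤ m * δ := by linarith
  nlinarith

lemma beta_b (h : Reg n L d lm δ m C) : 5000 * lm ^ 2 ≤ m * betaP n L lm δ ^ 2 := by
  have hn := h.hn
  have hL := h.hL
  have hlm := h.hlm
  have h1 := h.mono 6 6 4 0 2
  have hp : 0 < (10 ^ 16 * (lm * n ^ 3 * L ^ 3)) ^ 2 := by positivity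
  have e : m * betaP n L lm δ ^ 2 = m * δ ^ 2 / (10 ^ 16 * (lm * n ^ 3 * L ^ 3)) ^ 2 := by
    unfold betaP; rw [div_pow]; ring
  rw [e, le_div_iff₀ hp]
  refine le_trans ?_ h1
  have e2 : 5000 * lm ^ 2 * (10 ^ 16 * (lm * n ^ 3 * L ^ 3)) ^ 2 =
    (5000 * 10 ^ 32) * (n ^ 6 * L ^ 6 * lm ^ 4 * d ^ 0) := by ring
  rw [e2]
  have : 0 ≤ n ^ 6 * L ^ 6 * lm ^ 4 * d ^ 0 := by rw [pow_zero]; positivity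
  exact mul_le_mul_of_nonneg_right (by norm_num) this

lemma L1 (h : Reg n L d lm δ m C) : L + 1 ≤ 1.5 * L := by linarith [h.hL]

lemma tau_b (h : Reg n L d lm δ m C) : 100000 * lm ^ 2 ≤ m * (δ / (1000 * (L + 1))) ^ 2 := by
  have hL := h.hL
  have h1 := h.mono 0 2 2 0 2
  simp only [pow_zero, one_mul, mul_one] at h1
  have e : m * (δ / (1000 * (L + 1))) ^ 2 = m * δ ^ 2 / (1000 * (L + 1)) ^ 2 := by
    rw [div_pow]; ring
  rw [e, le_div_iff₀ (by positivity)]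
  have h2 : (1000 * (L + 1)) ^ 2 ≤ (1500 * L) ^ 2 :=
    pow_le_pow_left₀ (by positivity) (by linarith) 2
  have h3 : 100000 * lm ^ 2 * (1000 * (L + 1)) ^ 2 ≤ 100000 * lm ^ 2 * (1500 * L) ^ 2 :=
    mul_le_mul_of_nonneg_left h2 (by positivity)
  have : 0 ≤ L ^ 2 * lm ^ 2 := by positivity
  nlinarith

lemma gam_b (h : Reg n L d lm δ m C) :
    10000 * (lm ^ 2 + d) ≤ m * (δ / (1000 * n ^ 3)) ^ 2 := by
  have hn := h.hn
  have hd := h.hd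
  have h1 := h.mono 6 0 2 1 2
  simp only [pow_zero, pow_one, mul_one] at h1
  have e : m * (δ / (1000 * n ^ 3)) ^ 2 = m * δ ^ 2 / (1000 * n ^ 3) ^ 2 := by
    rw [div_pow]; ring
  rw [e, le_div_iff₀ (by positivity)]
  refine le_trans ?_ h1
  have hlm2 : 1 ≤ lm ^ 2 := one_le_pow₀ (by linarith [h.hlm])
  have h3 : lm ^ 2 + d ≤ 2 * (lm ^ 2 * d) := by nlinarith
  calc 10000 * (lm ^ 2 + d) * (1000 * n ^ 3) ^ 2
      ≤ 10000 * (2 * (lm ^ 2 * d)) * (1000 * n ^ 3) ^ 2 := by gcongr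
    _ = 2 * 10 ^ 10 * (n ^ 6 * lm ^ 2 * d) := by ring
    _ ≤ _ := mul_le_mul_of_nonneg_right (by norm_num) (by positivity)

lemma s_b (h : Reg n L d lm δ m C) {s : ℝ} (hs : s ≤ 7 * (betaP n L lm δ * m)) :
    s * lm * (10 ^ 15 * (n ^ 3 * L ^ 3)) ≤ 0.7 * (δ * m) := by
  have hn := h.hn
  have hL := h.hL
  have hlm := h.hlm
  have hm := h.m0
  have hb := h.beta_eq
  calc s * lm * (10 ^ 15 * (n ^ 3 * L ^ 3))
      ≤ 7 * (betaP n L lm δ * m) * lm * (10 ^ 15 * (n ^ 3 * L ^ 3)) := by gcongr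
    _ = 0.7 * (betaP n L lm δ * (10 ^ 16 * (lm * n ^ 3 * L ^ 3)) * m) := by ring
    _ = _ := by rw [hb]

lemma q_sq (h : Reg n L d lm δ m C) : qP n d δ m ^ 2 = δ * m / (n ^ 2 * d) := by
  have := h.hδ
  have := h.m0
  have := h.hd
  exact Real.sq_sqrt (by positivity)

lemma q_pos (h : Reg n L d lm δ m C) : 0 < qP n d δ m := by
  have := h.hδ
  have := h.m0
  have := h.hd
  have := h.hn
  exact Real.sqrt_pos.2 (by positivity)

lemma om_sq (h : Reg n L d lm δ m C) :
    omP n d lm δ m ^ 2 = 36 * (lm ^ 2 * n ^ 3 * d) / (δ * m) := by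
  have := h.hδ
  have := h.m0
  have := h.hd
  have := h.hn
  rw [omP, div_pow, h.q_sq, mul_pow, Real.sq_sqrt (by linarith)]
  field_simp
  ring

lemma om_pos (h : Reg n L d lm δ m C) : 0 < omP n d lm δ m := by
  have := h.q_pos
  have := h.hlm
  have := h.hn
  have : 0 < Real.sqrt n := Real.sqrt_pos.2 (by linarith)
  unfold omP
  positivity

lemma om_q (h : Reg n L d lm δ m C) : omP n d lm δ m * qP n d δ m = 6 * lm * Real.sqrt n :=
  div_mul_cancel₀ _ h.q_pos.ne'

lemma om_small (h : Reg n L d lm δ m C) : L ^ 2 * omP n d lm δ m ≤ 1 / 10 ^ 10 := by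
  have hn := h.hn
  have hL := h.hL
  have hlm := h.hlm
  have hm := h.m0
  have hd := h.hd
  have hδ := h.hδ
  have hω := h.om_pos
  have h1 := h.mono 3 4 2 1 1
  refine (abs_le_of_sq_le_sq' ?_ (by positivity)).2
  rw [mul_pow, h.om_sq, mul_div_assoc', div_le_iff₀ (by positivity)]
  simp only [pow_one] at h1
  have : 0 ≤ n ^ 3 * L ^ 4 * lm ^ 2 * d := by positivity
  nlinarith

lemma om_beta (h : Reg n L d lm δ m C) :
    10 ^ 12 * (L ^ 2 * omP n d lm δ m) ^ 2 ≤ betaP n L lm δ ^ 3 := by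
  have hn := h.hn
  have hL := h.hL
  have hlm := h.hlm
  have hm := h.m0
  have hd := h.hd
  have hδ := h.hδ
  have h1 := h.mono 12 13 5 1 4
  rw [mul_pow, h.om_sq, betaP, div_pow, mul_div_assoc', mul_div_assoc',
    div_le_div_iff₀ (by positivity) (by positivity)]
  have e : 10 ^ 12 * ((L ^ 2) ^ 2 * (36 * (lm ^ 2 * n ^ 3 * d))) *
      (10 ^ 16 * (lm * n ^ 3 * L ^ 3)) ^ 3 =
      36 * 10 ^ 60 * (n ^ 12 * L ^ 13 * lm ^ 5 * d ^ 1) := by ring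
  rw [e, show δ ^ 3 * (δ * m) = m * δ ^ 4 by ring]
  refine le_trans (mul_le_mul_of_nonneg_right (by norm_num) (by positivity)) h1

lemma nu_b (h : Reg n L d lm δ m C) {s : ℝ} (hs0 : 0 ≤ s) (hs : s ≤ 7 * (betaP n L lm δ * m)) :
    4 * Real.sqrt (64 * (s * lm) / d) * Real.sqrt n * (L * Real.sqrt L) ≤
      0.0000009 * qP n d δ m := by
  have hn := h.hn
  have hL := h.hL
  have hlm := h.hlm
  have hm := h.m0
  have hd := h.hd
  have hδ := h.hδ
  have hq := h.q_pos
  refine (abs_le_of_sq_le_sq' ?_ (by positivity)).2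
  simp only [mul_pow]
  rw [Real.sq_sqrt (by positivity), Real.sq_sqrt (by positivity), Real.sq_sqrt (by positivity),
    h.q_sq, mul_div_assoc', div_mul_eq_mul_div, div_mul_eq_mul_div, mul_div_assoc',
    div_le_div_iff₀ (by positivity) (by positivity)]
  have h1 := h.s_b hs
  have e : 4 ^ 2 * (64 * (s * lm)) * n * (L ^ 2 * L) * (n ^ 2 * d) =
      1024 / 10 ^ 15 * (s * lm * (10 ^ 15 * (n ^ 3 * L ^ 3))) * d := by ring
  rw [e]
  have h2 : 0 ≤ δ * m := by positivity
  have h3 : 1024 / 10 ^ 15 * (s * lm * (10 ^ 15 * (n ^ 3 * L ^ 3))) ≤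
      0.0000009 ^ 2 * (δ * m) := by
    norm_num at h1 ⊢
    linarith
  exact mul_le_mul_of_nonneg_right h3 (by linarith)

lemma kap_om (h : Reg n L d lm δ m C) :
    4 * Real.sqrt (40 * m / d) * omP n d lm δ m * Real.sqrt n * (L ^ 3 * Real.sqrt L) ≤
      1 / 10 ^ 12 * qP n d δ m := by
  have hn := h.hn
  have hL := h.hL
  have hlm := h.hlm
  have hm := h.m0
  have hd := h.hd
  have hδ := h.hδ
  have hq := h.q_pos
  have h1 := h.mono 6 7 2 1 2
  refine (abs_le_of_sq_le_sq' ?_ (by positivity)).2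
  simp only [mul_pow]
  rw [Real.sq_sqrt (by positivity), Real.sq_sqrt (by positivity), Real.sq_sqrt (by positivity),
    h.q_sq, h.om_sq]
  have e : 4 ^ 2 * (40 * m / d) * (36 * (lm ^ 2 * n ^ 3 * d) / (δ * m)) * n * ((L ^ 3) ^ 2 * L) =
      23040 * (lm ^ 2 * n ^ 4 * L ^ 7) / δ := by
    field_simp; ring
  rw [e, mul_div_assoc', div_le_div_iff₀ (by positivity) (by positivity)]
  have e2 : 23040 * (lm ^ 2 * n ^ 4 * L ^ 7) * (n ^ 2 * d) =
    23040 * (n ^ 6 * L ^ 7 * lm ^ 2 * d ^ 1) := by ring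
  have : 0 ≤ n ^ 6 * L ^ 7 * lm ^ 2 * d ^ 1 := by positivity
  rw [e2, mul_assoc ((1 / 10 ^ 12) ^ 2) (δ * m) δ, show δ * m * δ = m * δ ^ 2 by ring]
  generalize n ^ 6 * L ^ 7 * lm ^ 2 * d ^ 1 = a at *
  generalize m * δ ^ 2 = b at *
  linarith

end Reg

/-! ### Convergence on the initialization event -/

section

variable {𝔡 n m d L : ℕ} {δ C : ℝ}

/-- The sparsity level of the sign changes. -/
def sP (n L m : ℕ) (δ : ℝ) : ℕ := ⌈6 * (betaP n L (Real.log m) δ * m)⌉₊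

lemma Reg.s_le (h : Reg n L d (Real.log m) δ m C) :
    (sP n L m δ : ℝ) ≤ 7 * (betaP n L (Real.log m) δ * m) := by
  have h1 := h.beta_m.2.2
  have := Nat.ceil_lt_add_one (a := 6 * (betaP n L (Real.log m) δ * m)) (by linarith)
  unfold sP
  linarith

lemma le_sP :
    6 * (betaP n L (Real.log m) δ * m) ≤ (sP n L m δ : ℝ) := Nat.le_ceil _

/-- The lower bound on `m` suffices for all the union bounds, with the parameters chosen above. -/
lemma Reg.par (h : Reg n L d (Real.log m) δ m C) :
    Par n m d L (sP n L m δ) (betaP n L (Real.log m) δ) (δ / (1000 * ((L:ℝ) + 1)))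
      (δ / (1000 * (n:ℝ) ^ 3)) := by
  have hn := h.hn
  have hL := h.hL
  have hlm := h.hlm
  have hm := h.m0
  have hd := h.hd
  have hδ := h.hδ
  have hδ1 := h.δ1
  have hb := h.beta_pos
  obtain ⟨b1, b2, b3⟩ := h.beta_m
  have hs := le_sP (n := n) (m := m) (L := L) (δ := δ)
  refine ⟨by exact_mod_cast (by linarith : (1:ℝ) ≤ L), by exact_mod_cast hn, by exact_mod_cast hd,
    hlm, ?_, by linarith, ?_, ?_, h.beta_b, hb, by linarith [h.beta_le], h.tau_b, by positivity,
    ?_, ?_, h.gam_b, by positivity, ?_⟩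
  · have h1 := h.mono 2 2 0 0 0
    simp only [pow_zero, mul_one] at h1
    have h2 : ((L:ℝ) + 1) ^ 2 ≤ (1.5 * L) ^ 2 := pow_le_pow_left₀ (by positivity) h.L1 2
    calc 1000000 * (n:ℝ) ^ 2 * ((L:ℝ) + 1) ^ 2 ≤ 1000000 * (n:ℝ) ^ 2 * (1.5 * L) ^ 2 := by gcongr
      _ = 2250000 * ((n:ℝ) ^ 2 * L ^ 2) := by ring
      _ ≤ 10 ^ 100 * ((n:ℝ) ^ 2 * L ^ 2) :=
          mul_le_mul_of_nonneg_right (by norm_num) (by positivity)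
      _ ≤ _ := h1
  · have h1 := h.s_b h.s_le
    have h2 : (1:ℝ) ≤ n ^ 3 * L := one_le_mul_of_one_le_of_one_le (one_le_pow₀ hn) (by linarith)
    have h3 : 0 ≤ (sP n L m δ : ℝ) * Real.log m := by positivity
    calc 1000000 * (L:ℝ) ^ 2 * (sP n L m δ * Real.log m)
        = 1000000 * (sP n L m δ * Real.log m * L ^ 2) * 1 := by ring
      _ ≤ 10 ^ 15 * (sP n L m δ * Real.log m * L ^ 2) * (n ^ 3 * L) := by
          refine mul_le_mul ?_ h2 zero_le_one (by positivity)
          exact mul_le_mul_of_nonneg_right (by norm_num) (by positivity)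
      _ = sP n L m δ * Real.log m * (10 ^ 15 * (n ^ 3 * L ^ 3)) := by ring
      _ ≤ 0.7 * (δ * m) := h1
      _ ≤ 0.7 * (1 * m) := by gcongr; linarith
      _ ≤ m := by linarith
  · refine b2.trans ?_
    exact mul_le_mul_of_nonneg_right (by linarith) (by linarith)
  · rw [div_le_one (by positivity)]; linarith
  · have : ((L:ℝ) + 1) * (δ / (1000 * ((L:ℝ) + 1))) = δ / 1000 := by field_simp
    rw [this]; linarith
  · rw [div_le_one (by positivity)]
    have : (1:ℝ) ≤ n ^ 3 := one_le_pow₀ hn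
    linarith

lemma Reg.KV_le (h : Reg n L d (Real.log m) δ m C) :
    0 ≤ KV L (1600 * L) 160 ∧ KV L (1600 * L) 160 ≤ 7040 * L := by
  have := h.L1
  have := h.hL
  unfold KV
  constructor
  · positivity
  · linarith

lemma Reg.HB_le (h : Reg n L d (Real.log m) δ m C) {ω : ℝ} (hω : 0 ≤ ω) :
    0 ≤ HB L (1600 * L) 160 ω ∧ HB L (1600 * L) 160 ω ≤ 12960 * (L ^ 2 * ω) := by
  have h1 := h.L1
  have h2 := h.hL
  unfold HB
  constructor
  · positivity
  · calc ((L:ℝ) + 1) * ω * (16 * 160 * (L + 1) + 3 * (1600 * L))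
        ≤ (1.5 * L) * ω * (8640 * L) := by
          refine mul_le_mul ?_ (by linarith) (by positivity) (by positivity)
          exact mul_le_mul_of_nonneg_right h1 hω
      _ = _ := by ring

/-- The radius `omP` is within the range of the perturbation theory. -/
lemma Reg.small (h : Reg n L d (Real.log m) δ m C) :
    Small L (1600 * L) 160 (betaP n L (Real.log m) δ) (omP n d (Real.log m) δ m) := by
  have hω := h.om_pos
  have h1 := h.om_small
  have h2 := h.HB_le hω.le
  have h3 := h.KV_le
  have hL := h.hL
  refine ⟨hω.le, ?_, by linarith, ?_⟩
  · calc ((L:ℝ) + 1) * (omP n d (Real.log m) δ m * KV L (1600 * L) 160)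
        ≤ (1.5 * L) * (omP n d (Real.log m) δ m * (7040 * L)) := by
          have := h.L1
          have := h3.2
          have := h3.1
          gcongr
      _ = 10560 * (L ^ 2 * omP n d (Real.log m) δ m) := by ring
      _ ≤ 1 := by linarith
  · refine le_trans ?_ h.om_beta
    have h4 : (31 * HB L (1600 * L) 160 (omP n d (Real.log m) δ m)) ^ 2 ≤
        (31 * (12960 * (L ^ 2 * omP n d (Real.log m) δ m))) ^ 2 :=
      pow_le_pow_left₀ (by linarith) (by linarith) 2
    have h5 : 0 ≤ ((L:ℝ) ^ 2 * omP n d (Real.log m) δ m) ^ 2 := by positivity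
    have h6 : (31 * (12960 * ((L:ℝ) ^ 2 * omP n d (Real.log m) δ m))) ^ 2 =
      401760 ^ 2 * ((L:ℝ) ^ 2 * omP n d (Real.log m) δ m) ^ 2 := by ring
    rw [h6] at h4
    linarith

variable {A : Fin m → Fin 𝔡 → ℝ} {W : Fin L → Fin m → Fin m → ℝ}
  {B : Fin d → Fin m → ℝ} {x : Fin n → Fin 𝔡 → ℝ} {y : Fin n → Fin d → ℝ}

/-- The initial outputs have norm at most `log m`. -/
lemma Init.objF_le {s : ℕ} {β τ γ : ℝ} (h : Par n m d L s β τ γ) (I : Init A W B x s β τ γ)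
    (hy : ∀ i, l2 (y i) ≤ 1) : objF B A W x y ≤ n * Real.log m ^ 2 := by
  have hlm := h.lm
  have : ∀ i, objFi B A W (x i) (y i) ≤ Real.log m ^ 2 := by
    intro i
    have h2 : l2 (hseq A W (x i) L) ≤ 2 := by
      have := (I.norms' h i (le_refl L)).2
      nlinarith [l2_nonneg (hseq A W (x i) L)]
    set w := mulVec B (hseq A W (x i) L) with hw
    have h3 := net_bound (Finset.univ : Finset (Fin d)) (fun v => |dot v w|)
      (fun u v => by rw [add_dot]; exact abs_add_le _ _)
      (fun c v => by rw [smul_dot, abs_mul])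
      (c := Real.log m / 2) (fun v hv => I.out (i, v) (by simpa using hv) h2) (supp_univ w)
    have h4 : l2 w ≤ Real.log m := by
      refine l2_le_of_dot (by linarith) ((le_abs_self _).trans (h3.trans_eq (by ring)))
    have h5 : l2 (lossVec B A W (x i) (y i)) ≤ Real.log m + 1 := by
      have e : lossVec B A W (x i) (y i) = w - y i := rfl
      rw [e]
      exact (l2_sub_le _ _).trans (add_le_add h4 (hy i))
    have h6 : l2 (lossVec B A W (x i) (y i)) ^ 2 ≤ (Real.log m + 1) ^ 2 :=
      pow_le_pow_left₀ (l2_nonneg _) h5 2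
    unfold objFi
    nlinarith
  calc objF B A W x y ≤ ∑ _i : Fin n, Real.log m ^ 2 := Finset.sum_le_sum fun i _ => this i
    _ = _ := by simp

set_option maxHeartbeats 1600000 in
/-- Linear convergence at the rate of the kernel, on the initialization event. -/
lemma Init.converge (h : Reg n L d (Real.log m) δ m C)
    (I : Init A W B x (sP n L m δ) (betaP n L (Real.log m) δ) (δ / (1000 * ((L:ℝ) + 1)))
      (δ / (1000 * (n:ℝ) ^ 3)))
    (hsep : ∀ i j, i ≠ j → δ ≤ l2 (x i - x j)) (hy : ∀ i, l2 (y i) ≤ 1) {η : ℝ}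
    (hη : η = d * δ / (C * n ^ 4 * L ^ 2 * m))
    {Wseq : ℕ → Fin L → Fin m → Fin m → ℝ} (hW0 : Wseq 0 = W)
    (hWs : ∀ (t : ℕ) (ℓ : Fin L), Wseq (t + 1) ℓ = Wseq t ℓ -
      η • gradF B A (Wseq t) x y ((ℓ : ℕ) + 1)) (t : ℕ) :
    objF B A (Wseq t) x y ≤
      Real.exp (-(δ * m / (n ^ 2 * d) * η * t)) * (n * Real.log m ^ 2) := by
  have P := h.par
  have hn := h.hn
  have hL := h.hL
  have hlm := h.hlm
  have hm := h.m0
  have hd := h.hd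
  have hδ := h.hδ
  have hδ1 := h.δ1
  have hδL := h.δL
  have hC := h.C0
  have hC1 : 1 ≤ C := le_trans (by norm_num) h.hC
  have hq := h.q_pos
  have hqs := h.q_sq
  have hω := h.om_pos
  have hη0 : 0 < η := by rw [hη]; positivity
  set q := qP n d δ m
  have hcg := I.chainGood P (by rw [mul_assoc]; exact le_sP)
  obtain ⟨ν, hν⟩ : ∃ ν, ν = 4 * Real.sqrt (64 * (sP n L m δ * Real.log m) / d) := ⟨_, rfl⟩
  obtain ⟨κ, hκ⟩ : ∃ κ, κ = 4 * Real.sqrt (40 * m / d) := ⟨_, rfl⟩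
  rw [← hν, ← hκ] at hcg
  have hν0 : 0 ≤ ν := by rw [hν]; positivity
  have hκ0 : 0 ≤ κ := by rw [hκ]; positivity
  have hκ2 : κ ^ 2 = 640 * m / d := by
    rw [hκ, mul_pow, Real.sq_sqrt (by positivity)]; ring
  have nub := h.nu_b (Nat.cast_nonneg _) h.s_le
  rw [← hν] at nub
  have kob := h.kap_om
  rw [← hκ] at kob
  have ωq := h.om_q
  have hsm := h.small
  have hHB := h.HB_le hω.le
  have hKV := h.KV_le
  have omL := h.om_small
  set ω := omP n d (Real.log m) δ m
  change ν * Real.sqrt n * (L * Real.sqrt L) ≤ 0.0000009 * q at nub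
  change κ * ω * Real.sqrt n * (L ^ 3 * Real.sqrt L) ≤ 1 / 10 ^ 12 * q at kob
  change ω * q = _ at ωq
  have hsL : 1 ≤ Real.sqrt L := Real.one_le_sqrt.2 (by linarith)
  have hsn : 1 ≤ Real.sqrt n := Real.one_le_sqrt.2 hn
  have hsn2 : Real.sqrt n ^ 2 = n := Real.sq_sqrt (by linarith)
  have hs2 : Real.sqrt 2 ^ 2 = 2 := Real.sq_sqrt (by norm_num)
  have hs2' : Real.sqrt 2 ≤ 1.42 := by
    rw [Real.sqrt_le_left (by norm_num)]; norm_num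
  have hLs : 1 ≤ L * Real.sqrt L := by nlinarith
  -- one step is short compared with the radius `ω`: `η κ q` is of order `δ^{3/2} / (n⁵ L²)`
  have etaBound : η * κ * q * (10000 * (L * Real.sqrt n)) ≤ 1 := by
    refine (abs_le_of_sq_le_sq' ?_ zero_le_one).2
    rw [one_pow]
    have e : (η * κ * q * (10000 * (L * Real.sqrt n))) ^ 2 =
        10 ^ 8 * (η ^ 2 * κ ^ 2 * q ^ 2 * L ^ 2 * n) := by
      linear_combination 10 ^ 8 * (η ^ 2 * κ ^ 2 * q ^ 2 * L ^ 2) * hsn2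
    have e2 : 10 ^ 8 * (η ^ 2 * κ ^ 2 * q ^ 2 * L ^ 2 * n) =
        10 ^ 8 * 640 * δ ^ 3 / (C ^ 2 * n ^ 9 * L ^ 2) := by
      rw [hκ2, hqs, hη]; field_simp
    rw [e, e2]
    refine (div_le_self (by positivity) ?_).trans ?_
    · exact one_le_mul_of_one_le_of_one_le (one_le_mul_of_one_le_of_one_le (one_le_pow₀ hC1)
        (one_le_pow₀ hn)) (one_le_pow₀ (by linarith))
    · have : δ ^ 3 ≤ δ := pow_le_of_le_one hδ.le (by linarith) (by norm_num)
      linarith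
  have hP := gd_decay (r := 0.7264 * q) (r0 := 0.7314 * q) (η := η) (ω := ω)
    (Φ := Real.sqrt 2 * (Real.sqrt n * Real.log m)) (x := x) (y := y) (Wseq := Wseq)
    P.hL hcg P.hn hsm (by positivity) hη0.le
    (by
      intro l
      have k := I.kernel P hδ (by
        have := h.L1
        have h1 : δ * ((L:ℝ) + 1) ≤ δ * (1.5 * L) := mul_le_mul_of_nonneg_left this hδ.le
        have : 0 < δ * L := by positivity
        linarith) rfl rfl hsep l
      refine (abs_le_of_sq_le_sq' ?_ (frob_nonneg _)).2
      refine le_trans ?_ k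
      have S0 : 0 ≤ ∑ i, l2 (l i) ^ 2 := Finset.sum_nonneg fun _ _ => sq_nonneg _
      rw [mul_pow, mul_pow, Real.sq_sqrt S0, hqs]
      refine mul_le_mul_of_nonneg_right ?_ S0
      have e : δ * m / (2 * n ^ 2 * d) = 1 / 2 * (δ * m / (n ^ 2 * d)) := by field_simp
      have : 0 < δ * m / (n ^ 2 * d) := by positivity
      rw [e]
      norm_num
      linarith)
    (by
      have a1 : ν * Real.sqrt n ≤ 0.0000009 * q := by
        refine le_trans ?_ nub
        exact le_mul_of_one_le_right (by positivity) hLs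
      have a2 : κ * HB L (1600 * L) 160 ω * Real.sqrt n ≤ 12960 * (1 / 10 ^ 12 * q) := by
        calc κ * HB L (1600 * L) 160 ω * Real.sqrt n
            ≤ κ * (12960 * (L ^ 2 * ω)) * Real.sqrt n := by gcongr; exact hHB.2
          _ = 12960 * (κ * ω * Real.sqrt n * (L ^ 2)) * 1 := by ring
          _ ≤ 12960 * (κ * ω * Real.sqrt n * (L ^ 2)) * (L * Real.sqrt L) := by gcongr
          _ = 12960 * (κ * ω * Real.sqrt n * (L ^ 3 * Real.sqrt L)) := by ring
          _ ≤ _ := by gcongr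
      have e : (3 * ν + κ * HB L (1600 * L) 160 ω) * Real.sqrt n =
        3 * (ν * Real.sqrt n) + κ * HB L (1600 * L) 160 ω * Real.sqrt n := by ring
      rw [e]
      linarith)
    (by
      have r1 : RH L (1600 * L) 160 ν κ ω ≤
          (1.5 * L) * (ν * (4 * 160) + κ * (1600 * L * (ω * (7040 * L)))) := by
        unfold RH
        have h1 := h.L1
        have h2 := hKV.2
        have h3 := hKV.1
        gcongr
      calc 6 * RH L (1600 * L) 160 ν κ ω * Real.sqrt L * Real.sqrt n
          ≤ 6 * ((1.5 * L) * (ν * (4 * 160) + κ * (1600 * L * (ω * (7040 * L))))) *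
            Real.sqrt L * Real.sqrt n := by gcongr
        _ = 5760 * (ν * Real.sqrt n * (L * Real.sqrt L)) +
            101376000 * (κ * ω * Real.sqrt n * (L ^ 3 * Real.sqrt L)) := by ring
        _ ≤ 5760 * (0.0000009 * q) + 101376000 * (1 / 10 ^ 12 * q) := by gcongr
        _ ≤ 0.7264 * q / 40 := by linarith)
    (by
      calc (n:ℝ) / 2 * (3 * κ * KV L (1600 * L) 160) ^ 2 * η * L
          ≤ n / 2 * (3 * κ * (7040 * L)) ^ 2 * η * L := by
            have h2 := hKV.2
            have h3 := hKV.1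
            gcongr
        _ = 223027200 * (κ ^ 2 * n * L ^ 3 * η) := by ring
        _ = 142737408000 * (δ * L / (C * n ^ 3)) := by
            rw [hκ2, hη]; field_simp; ring
        _ ≤ 142737408000 * (δ * L) := by
            refine mul_le_mul_of_nonneg_left (div_le_self (by positivity) ?_) (by norm_num)
            exact one_le_mul_of_one_le_of_one_le hC1 (one_le_pow₀ hn)
        _ ≤ 1 / 40 := by linarith)
    (by
      calc 2 * η * (0.7264 * q) ^ 2 = 2 * 0.7264 ^ 2 * (η * q ^ 2) := by ring
        _ = 2 * 0.7264 ^ 2 * (δ ^ 2 / (C * n ^ 6 * L ^ 2)) := by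
            rw [hqs, hη]; field_simp
        _ ≤ 2 * 0.7264 ^ 2 * δ ^ 2 := by
            refine mul_le_mul_of_nonneg_left (div_le_self (by positivity) ?_) (by norm_num)
            exact one_le_mul_of_one_le_of_one_le
              (one_le_mul_of_one_le_of_one_le hC1 (one_le_pow₀ hn)) (one_le_pow₀ (by linarith))
        _ ≤ 2 * 0.7264 ^ 2 * δ := by
            refine mul_le_mul_of_nonneg_left ?_ (by norm_num)
            exact pow_le_of_le_one hδ.le (by linarith) two_ne_zero
        _ ≤ 1 := by linarith)
    (by positivity)
    (by
      have := I.objF_le P hy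
      rw [mul_pow, mul_pow, hs2, hsn2]
      linarith)
    (by
      have a0 := etaBound
      have a1 : η * (3 * κ * KV L (1600 * L) 160 * (Real.sqrt n * (Real.sqrt 2 *
          (Real.sqrt n * Real.log m)))) * q ≤ ω / 2 * q := by
        calc _ ≤ η * (3 * κ * (7040 * L) * (Real.sqrt n * (1.42 *
              (Real.sqrt n * Real.log m)))) * q := by
              have h2 := hKV.2
              have h3 := hKV.1
              gcongr
          _ = 3 * 0.99968 * (η * κ * q * (10000 * (L * Real.sqrt n))) *
              (Real.log m * Real.sqrt n) := by ring
          _ ≤ 3 * 0.99968 * 1 * (Real.log m * Real.sqrt n) := by gcongr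
          _ ≤ 3 * (Real.log m * Real.sqrt n) := by
              have : 0 ≤ Real.log m * Real.sqrt n := by positivity
              linarith
          _ = ω / 2 * q := by linear_combination (-1 / 2) * ωq
      exact le_of_mul_le_mul_right a1 hq)
    (by
      have e : 0.95 * (0.7264 * q) * (ω / 2) = 0.34504 * (ω * q) := by ring
      rw [e, ωq]
      have : 0 ≤ Real.sqrt n * Real.log m := by positivity
      nlinarith)
    hW0 hWs t
  have e : Real.exp (-(1.9 * (0.7264 * q) ^ 2 * η * t)) ≤
      Real.exp (-(δ * m / (n ^ 2 * d) * η * t)) := by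
    rw [Real.exp_le_exp, neg_le_neg_iff, mul_pow, hqs]
    have : 0 ≤ δ * m / (n ^ 2 * d) * η * t := by positivity
    have e : 1.9 * (0.7264 ^ 2 * (δ * m / (n ^ 2 * d))) * η * t =
      1.9 * 0.7264 ^ 2 * (δ * m / (n ^ 2 * d) * η * t) := by ring
    rw [e]
    norm_num
    linarith
  have hΦ : (Real.sqrt 2 * (Real.sqrt n * Real.log m)) ^ 2 = 2 * (n * Real.log m ^ 2) := by
    rw [mul_pow, mul_pow, hs2, hsn2]
  rw [hΦ] at hP
  have := mul_le_mul_of_nonneg_right e (by positivity : 0 ≤ 2 * ((n:ℝ) * Real.log m ^ 2))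
  linarith

end

/-! ### Convergence of gradient descent -/

lemma ten_pow_le_exp : (10:ℝ) ^ 100 ≤ Real.exp 1000 := by
  have h1 : (2:ℝ) ≤ Real.exp 1 := by linarith [Real.add_one_le_exp (1:ℝ)]
  have h2 : Real.exp 1000 = Real.exp 1 ^ 1000 := by rw [← Real.exp_nat_mul]; norm_num
  rw [h2]
  rw [show (1000:ℕ) = 10 * 100 from rfl, pow_mul]
  refine pow_le_pow_left₀ (by norm_num) ?_ 100
  calc (10:ℝ) ≤ 2 ^ 10 := by norm_num
    _ ≤ _ := pow_le_pow_left₀ (by norm_num) h1 _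

/-- Unit vectors with the common last coordinate `1/√2` are at an angle of at most `π/2`. -/
lemma dot_nonneg_of_last {p : ℕ} (hp : 0 < p) {u v : Fin p → ℝ} (hu : l2 u = 1) (hv : l2 v = 1)
    (hu' : u ⟨p - 1, by omega⟩ = 1 / Real.sqrt 2) (hv' : v ⟨p - 1, by omega⟩ = 1 / Real.sqrt 2) :
    0 ≤ dot u v := by
  have h1 : 2 ≤ (l2 (u + v)) ^ 2 := by
    have h2 := abs_apply_le_l2 (u + v) ⟨p - 1, by omega⟩
    have h3 : |(u + v) ⟨p - 1, by omega⟩| ^ 2 ≤ l2 (u + v) ^ 2 :=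
      pow_le_pow_left₀ (abs_nonneg _) h2 2
    refine le_trans (le_of_eq ?_) h3
    rw [sq_abs, Pi.add_apply, hu', hv', ← two_mul, mul_pow, div_pow, Real.sq_sqrt (by norm_num)]
    norm_num
  rw [l2_add_sq, hu, hv] at h1
  linarith

/-- Theorem 1, convergence of gradient descent. -/
theorem statement0 :
    ∃ C c : ℝ, 0 < C ∧ 0 < c ∧
      ∀ (𝔡 m d L n : ℕ) (h𝔡 : 0 < 𝔡) (hL : 2 ≤ L) (hm : 0 < m) (hd : 0 < d) (hn : 0 < n)
        (x : Fin n → Fin 𝔡 → ℝ) (y : Fin n → Fin d → ℝ) (ε δ : ℝ),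
        0 < ε → ε ≤ 1 → 0 < δ → δ ≤ 1 / (C * L) →
        (∀ i, l2 (x i) = 1) →
        (∀ i, x i ⟨𝔡 - 1, by omega⟩ = 1 / Real.sqrt 2) →
        (∀ i j, i ≠ j → δ ≤ l2 (x i - x j)) →
        (∀ i, l2 (y i) ≤ 1) →
        C * (n : ℝ) ^ 24 * (L : ℝ) ^ 12 * (d : ℝ) * Real.log m ^ 5 / δ ^ 8 ≤ (m : ℝ) →
        ENNReal.ofReal (1 - Real.exp (-(c * Real.log m ^ 2))) ≤
          initMeasure 𝔡 m d L
            {z | ∀ Wseq : ℕ → Fin L → Fin m → Fin m → ℝ,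
              Wseq 0 = z.2.1 →
              (∀ (t : ℕ) (ℓ : Fin L),
                Wseq (t + 1) ℓ =
                  Wseq t ℓ -
                    ((d : ℝ) * δ / (C * (n : ℝ) ^ 4 * (L : ℝ) ^ 2 * (m : ℝ))) •
                      gradF z.2.2 z.1 (Wseq t) x y ((ℓ : ℕ) + 1)) →
              objF z.2.2 z.1
                  (Wseq ⌈C * ((n : ℝ) ^ 6 * (L : ℝ) ^ 2 / δ ^ 2) *
                      Real.log ((n : ℝ) * Real.log m ^ 2 / ε)⌉₊) x y ≤ ε} := by
  refine ⟨Real.exp 1000, 1 / 50, Real.exp_pos _, by norm_num, ?_⟩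
  intro 𝔡 m d L n h𝔡 hL hm hd hn x y ε δ hε hε1 hδ hδL hx hx' hsep hy hbig
  have hC := ten_pow_le_exp
  have hlogC : Real.log (Real.exp 1000) = 1000 := Real.log_exp _
  generalize Real.exp 1000 = C at *
  have hC0 : 0 < C := lt_of_lt_of_le (by positivity) hC
  have hC1 : 1 ≤ C := le_trans (by norm_num) hC
  have hnR : (1:ℝ) ≤ n := by exact_mod_cast hn
  have hLR : (2:ℝ) ≤ L := by exact_mod_cast hL
  have hdR : (1:ℝ) ≤ d := by exact_mod_cast hd
  have hmR : (0:ℝ) < m := by exact_mod_cast hm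
  -- for `m = 1` the claimed probability is zero
  rcases Nat.lt_or_ge m 2 with hm2 | hm2
  · obtain rfl : m = 1 := by omega
    simp
  have hm2R : (2:ℝ) ≤ m := by exact_mod_cast hm2
  have hδL' : C * (δ * L) ≤ 1 := by
    rw [le_div_iff₀ (by positivity)] at hδL
    linarith
  have hbig' : C * (n ^ 24 * L ^ 12 * d * Real.log m ^ 5) ≤ m * δ ^ 8 := by
    rw [div_le_iff₀ (by positivity)] at hbig
    linarith
  have hl2 : 1 / 2 ≤ Real.log m := by
    have := Real.log_le_log (by norm_num) hm2R
    linarith [Real.log_two_gt_d9]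
  have hlm : 1000 ≤ Real.log m := by
    rw [← hlogC]
    refine Real.log_le_log hC0 ?_
    have hδ1 : δ ≤ 1 / 32 := by
      have : 10 ^ 100 * δ ≤ C * (δ * L) := by
        refine mul_le_mul hC ?_ hδ.le hC0.le
        nlinarith
      linarith
    have hl5 : (1 / 2 : ℝ) ^ 5 ≤ Real.log m ^ 5 := pow_le_pow_left₀ (by norm_num) hl2 5
    have h8 : δ ^ 8 ≤ 1 / 32 := (pow_le_of_le_one hδ.le (by linarith) (by norm_num)).trans hδ1
    have h1 : C * (1 * 1 * 1 * (1 / 2) ^ 5) ≤ C * (n ^ 24 * L ^ 12 * d * Real.log m ^ 5) := by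
      gcongr
      · exact one_le_pow₀ hnR
      · exact one_le_pow₀ (by linarith)
    have h2 : (m:ℝ) * δ ^ 8 ≤ m * (1 / 32) := mul_le_mul_of_nonneg_left h8 hmR.le
    linarith
  have R : Reg n L d (Real.log m) δ m C := ⟨hnR, hLR, hdR, hlm, hδ, hC, hδL', hbig'⟩
  have prob := init_prob R.par x hx fun i j =>
    dot_nonneg_of_last h𝔡 (hx i) (hx j) (hx' i) (hx' j)
  set E : Set ((Fin m → Fin 𝔡 → ℝ) × (Fin L → Fin m → Fin m → ℝ) × (Fin d → Fin m → ℝ)) :=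
    {z | Init z.1 z.2.1 z.2.2 x (sP n L m δ) (betaP n L (Real.log m) δ)
      (δ / (1000 * ((L:ℝ) + 1))) (δ / (1000 * (n:ℝ) ^ 3))} with hE
  have hEE : E ⊆ {z | ∀ Wseq : ℕ → Fin L → Fin m → Fin m → ℝ,
              Wseq 0 = z.2.1 →
              (∀ (t : ℕ) (ℓ : Fin L),
                Wseq (t + 1) ℓ =
                  Wseq t ℓ -
                    ((d : ℝ) * δ / (C * (n : ℝ) ^ 4 * (L : ℝ) ^ 2 * (m : ℝ))) •
                      gradF z.2.2 z.1 (Wseq t) x y ((ℓ : ℕ) + 1)) →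
              objF z.2.2 z.1
                  (Wseq ⌈C * ((n : ℝ) ^ 6 * (L : ℝ) ^ 2 / δ ^ 2) *
                      Real.log ((n : ℝ) * Real.log m ^ 2 / ε)⌉₊) x y ≤ ε} := by
    intro z I Wseq hW0 hWs
    have conv := Init.converge R I hsep hy rfl hW0 hWs
      ⌈C * ((n : ℝ) ^ 6 * (L : ℝ) ^ 2 / δ ^ 2) * Real.log ((n : ℝ) * Real.log m ^ 2 / ε)⌉₊
    refine conv.trans ?_
    have hT := Nat.le_ceil (C * ((n : ℝ) ^ 6 * (L : ℝ) ^ 2 / δ ^ 2) *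
      Real.log ((n : ℝ) * Real.log m ^ 2 / ε))
    generalize (⌈C * ((n : ℝ) ^ 6 * (L : ℝ) ^ 2 / δ ^ 2) *
      Real.log ((n : ℝ) * Real.log m ^ 2 / ε)⌉₊ : ℝ) = T at *
    have hpos : 0 < (n : ℝ) * Real.log m ^ 2 / ε := by positivity
    have h1 : Real.log ((n : ℝ) * Real.log m ^ 2 / ε) ≤
        δ * m / (n ^ 2 * d) * (d * δ / (C * n ^ 4 * L ^ 2 * m)) * T := by
      have e : Real.log ((n : ℝ) * Real.log m ^ 2 / ε) =
        δ * m / (n ^ 2 * d) * (d * δ / (C * n ^ 4 * L ^ 2 * m)) *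
          (C * ((n : ℝ) ^ 6 * (L : ℝ) ^ 2 / δ ^ 2) *
            Real.log ((n : ℝ) * Real.log m ^ 2 / ε)) := by
        field_simp
      rw [e]
      exact mul_le_mul_of_nonneg_left hT (by positivity)
    have h2 : Real.exp (-(δ * m / (n ^ 2 * d) * (d * δ / (C * n ^ 4 * L ^ 2 * m)) * T)) ≤
        ((n : ℝ) * Real.log m ^ 2 / ε)⁻¹ := by
      rw [← Real.exp_log hpos, ← Real.exp_neg, Real.exp_le_exp]
      linarith
    calc _ ≤ ((n : ℝ) * Real.log m ^ 2 / ε)⁻¹ * (n * Real.log m ^ 2) :=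
          mul_le_mul_of_nonneg_right h2 (by positivity)
      _ = ε := by field_simp
  refine le_trans ?_ (measure_mono hEE)
  have : IsProbabilityMeasure (initMeasure 𝔡 m d L) := inferInstance
  -- subadditivity suffices, so the event need not be measurable
  have hone : 1 ≤ initMeasure 𝔡 m d L E + initMeasure 𝔡 m d L Eᶜ := by
    rw [← measure_univ (μ := initMeasure 𝔡 m d L), ← Set.union_compl_self E]
    exact measure_union_le _ _
  have hc : initMeasure 𝔡 m d L Eᶜ ≤ ENNReal.ofReal (Real.exp (-(1 / 50 * Real.log m ^ 2))) := by
    refine le_trans prob (le_of_eq ?_)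
    congr 2
    ring
  rw [ENNReal.ofReal_sub _ (Real.exp_nonneg _), ENNReal.ofReal_one]
  exact tsub_le_iff_right.2 (hone.trans (add_le_add_right hc _))

end DNNPaper
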